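/- Let (u, π, v, θ) be a smooth solution of the 3D stationary tropical climate model on ℝ³. Suppose p ∈ [3, 9/2], q ∈ [1, 6], λ ∈ [1, 2], α ∈ [0, 3/p − 2/3], β ∈ [0, 3/q − 1/2], γ ∈ [0, 3/λ − 3/2]. Assume there exists a strictly increasing sequence R_j → +∞ such that X_{α,p,R_j} → 0 as j → ∞ and the sequences (Y_{β,q,R_j})_j and (Z'_{γ,λ,R_j})_j are bounded. Assume moreover that (with p' = p/(p−1)) one of the following nine conditions holds: (A1)' q ∈ [1,2), λ ∈ [1, 6/5), α + ((4p−6)q)/((6−q)p)·β ≤ 1, α + ((4p−6)λ)/((6−3λ)p)·γ ≤ 1, (2q/(6−q))β + (2λ/(6−3λ))γ ≤ 1; (A2)' q ∈ [1,2), λ ∈ [6/5, 6p/(5p−3)), α + ((4p−6)q)/((6−q)p)·β ≤ 1, α + ((4p−6)λ)/((6−3λ)p)·γ ≤ 1, (2q/(6−q))β + γ ≤ (6−3λ)/(2λ); (A3)' q ∈ [1,2), λ ∈ [6p/(5p−3), 2], α + ((4p−6)q)/((6−q)p)·β ≤ 1, α + 2γ ≤ 3/p + 6/λ − 4, (2q/(6−q))β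 + γ ≤ (6−3λ)/(2λ); (A4)' q ∈ [2, 2p'), λ ∈ [1, 6/5), α + ((4p−6)q)/((6−q)p)·β ≤ 1, α + ((4p−6)λ)/((6−3λ)p)·γ ≤ 1, β + (2λ/(6−3λ))γ ≤ (6−q)/(2q); (A5)' q ∈ [2, 2p'), λ ∈ [6/5, 6p/(5p−3)), α + ((4p−6)q)/((6−q)p)·β ≤ 1, α + ((4p−6)λ)/((6−3λ)p)·γ ≤ 1, β + γ < 3/q + 3/λ − 3; (A6)' q ∈ [2, 2p'), λ ∈ [6p/(5p−3), 2], α + ((4p−6)q)/((6−q)p)·β ≤ 1, α + 2γ ≤ 3/p + 6/λ − 4, β + γ < 3/q + 3/λ − 3; (A7)' q ∈ [2p', 6], λ ∈ [1, 6/5), α + 2β ≤ 3/p + 6/q − 2, α + ((4p−6)λ)/((6−3λ)p)·γ ≤ 1, β + (2λ/(6−3λ))γ ≤ (6−q)/(2q); (A8)' q ∈ [2p', 6], λ ∈ [6/5, 6p/(5p−3)), α + 2β ≤ 3/p + 6/q − 2, α + ((4p−6)λ)/((6−3λ)p)·γ ≤ 1, β + γ < 3/q + 3/λ − 3; (A9)'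 q ∈ [2p', 6], λ ∈ [6p/(5p−3), 2], α + 2β ≤ 3/p + 6/q − 2, α + 2γ ≤ 3/p + 6/λ − 4, β + γ < 3/q + 3/λ − 3. Then u = 0 and v = 0 on ℝ³, and θ is a constant function. -/

import Mathlib

/-!
A Liouville theorem proved by a local energy estimate at scale `R = R_j`, in two passes.

**Scaling.** Replacing `f` by `x ↦ R f(R x)` for `f = u, v, θ` (`SolK.dil`) reduces every estimate to
the unit annulus `1 ≤ |x| < 2`, at the price of a coupling constant `κ = R` in front of `∇θ` and
`div v`. A constant may be subtracted from `θ`, so only `∇θ` matters; the Poincaré–Sobolev inequality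
`poincareSobolev` turns the bound on `∇θ` in `L^λ` into a bound on `θ - c` in `L^r` with
`1/r = 1/λ - 1/3`, after which `θ - c` and `v` play the same role.

**Energy identity without pressure.** Let `Φ = φ^10`, where `φ` is a cutoff whose derivatives live in
the shell `1.06 ≤ |x| ≤ 1.09`. The equations are tested with `Φ u + ∇Φ × ψ`, `Φ v` and `Φ (θ - c)`
(`energy_id`). Since `div (Φ u + ∇Φ × ψ) = ∇Φ · (u - curl ψ)`, the pressure contributes
`∫ π ∇Φ · (u - curl ψ)`, and `pressure` supplies a vector field `ψ` for which this single number is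
zero and `‖ψ‖_p + ‖∇ψ‖_p ≤ C ‖u‖_p`, the last norm being over the annulus. No bound on `π` is needed.
The result is the energy inequality `energy_main`.

**Construction of `ψ`.** By duality, `pressure` amounts to estimating `∫ G · u` for solenoidal `u`,
where `G = π ∇Φ`, by the size of `G` as a functional on curls (`dual_bound`). This follows from the
periodic Helmholtz decomposition of a trigonometric polynomial close to `G`: the solenoidal part of
`G` is small by hypothesis, and the gradient part, being small where `G` vanishes, is integrated by
parts against `u` with Poincaré's inequality inside and outside the shell (`PC_ball`, `PC_shell`).
The bounds for the fields `curl ψ` require that the second-order Riesz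
transforms are bounded in `L^p` uniformly on trigonometric polynomials (`CZ`). This is proved with a
Bellman function `BP.B`: its convexity (`BP.form_ge`) makes
`∫ 4 B(f, g) ± (R_i R_j f) g` non-increasing along the heat flow (`bellman_step`, `bellman_J`), so the
pairing is at most `4 ∫ B(f, g)`, which is controlled by `‖f‖_p^p + ‖g‖_{p'}^{p'}`.

**Two passes.** On the right of the energy inequality stand `‖v‖` and `‖θ - c‖` in `L²` and in
`L^{2p'}` over the shell, with weights `φ^4`. They are interpolated between the norm that is bounded
by hypothesis and `L^6` (`interp`), or estimated by Hölder when the given exponent is already large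
enough; the nine cases of the theorem only record which alternative is used (`est_pp`, `est_pair`), and
their inequalities say exactly that no positive power of `R` is left over. The `L^6` norms are
controlled by the dissipation (`wsob`) and enter with exponents at most `4/5`, so the dissipation is
bounded (`rhs_absorb`) and `∇u, ∇v, ∇θ ∈ L²`, `v ∈ L^6`. The integrals of these quantities over the
annuli then tend to zero, and so does the right-hand side (`rhs_tendsto`). Hence all gradients vanish
(`dens_eq_zero`), and a nonzero constant `u` or `v` is incompatible with the growth hypotheses
(`const_zero`).
-/

open MeasureTheory Metric Filter
open scoped ENNReal NNReal

noncomputable section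

/-- Euclidean `ℝ³`. -/
abbrev E3 := EuclideanSpace ℝ (Fin 3)

/-- The annulus `B_{2R} \ B_R` centered at the origin. -/
def Ann (R : ℝ) : Set E3 := ball (0 : E3) (2 * R) \ ball (0 : E3) R

/-- Mean value of `θ` over the annulus `B_{2R} \ B_R`. -/
def thetaBar (θ : E3 → ℝ) (R : ℝ) : ℝ := ⨍ x in Ann R, θ x

/-- `L^p` norm (with real exponent `p`) of `f` over the set `s`, valued in `ℝ≥0∞`. -/
def LpS {F : Type*} [NormedAddCommGroup F] (f : E3 → F) (p : ℝ) (s : Set E3) : ℝ≥0∞ :=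
  eLpNorm f (ENNReal.ofReal p) (volume.restrict s)

/-- Partial derivative `∂_j f` of a scalar function on `ℝ³`. -/
def pd3 (j : Fin 3) (f : E3 → ℝ) (x : E3) : ℝ :=
  fderiv ℝ f x (EuclideanSpace.single j 1)

/-- Laplacian `Δ f = Σ_j ∂_j ∂_j f` of a scalar function on `ℝ³`. -/
def lap3 (f : E3 → ℝ) (x : E3) : ℝ := ∑ j : Fin 3, pd3 j (pd3 j f) x

/-- `(u, pr, v, θ)` is a smooth solution of the 3D stationary tropical climate model. -/
structure IsTCMSolution (u : E3 → E3) (pr : E3 → ℝ) (v : E3 → E3) (θ : E3 → ℝ) : Prop where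
  smooth_u : ContDiff ℝ (⊤ : ℕ∞) u
  smooth_pr : ContDiff ℝ (⊤ : ℕ∞) pr
  smooth_v : ContDiff ℝ (⊤ : ℕ∞) v
  smooth_θ : ContDiff ℝ (⊤ : ℕ∞) θ
  eq_u : ∀ x : E3, ∀ i : Fin 3,
    -lap3 (fun y => u y i) x + (∑ j : Fin 3, u x j * pd3 j (fun y => u y i) x)
      + pd3 i pr x + (∑ j : Fin 3, pd3 j (fun y => v y j * v y i) x) = 0
  eq_v : ∀ x : E3, ∀ i : Fin 3,
    -lap3 (fun y => v y i) x + (∑ j : Fin 3, u x j * pd3 j (fun y => v y i) x)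
      + pd3 i θ x + (∑ j : Fin 3, v x j * pd3 j (fun y => u y i) x) = 0
  eq_θ : ∀ x : E3,
    -lap3 θ x + (∑ j : Fin 3, u x j * pd3 j θ x) + (∑ j : Fin 3, pd3 j (fun y => v y j) x) = 0
  div_u : ∀ x : E3, ∑ j : Fin 3, pd3 j (fun y => u y j) x = 0

/-- `X_{α,p,R} = R^{-α} ‖u‖_{L^p(B_{2R} \ B_R)}`. -/
def Xn (u : E3 → E3) (α p R : ℝ) : ℝ≥0∞ := ENNReal.ofReal (R ^ (-α)) * LpS u p (Ann R)

/-- `Y_{β,q,R} = R^{-β} ‖v‖_{L^q(B_{2R} \ B_R)}`. -/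
def Yn (v : E3 → E3) (β q R : ℝ) : ℝ≥0∞ := ENNReal.ofReal (R ^ (-β)) * LpS v q (Ann R)

/-- `Z̄_{γ,r,R} = R^{-γ} ‖θ - θ̄_R‖_{L^r(B_{2R} \ B_R)}`. -/
def Zbarn (θ : E3 → ℝ) (γ r R : ℝ) : ℝ≥0∞ :=
  ENNReal.ofReal (R ^ (-γ)) * LpS (fun x => θ x - thetaBar θ R) r (Ann R)

/-- `Z'_{γ,λ,R} = R^{-γ} ‖∇θ‖_{L^λ(B_{2R} \ B_R)}`. -/
def Zgradn (θ : E3 → ℝ) (γ lam R : ℝ) : ℝ≥0∞ :=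
  ENNReal.ofReal (R ^ (-γ)) * LpS (gradient θ) lam (Ann R)

namespace TCM

/-! ### Partial derivatives and integration by parts -/

/-- Smoothness of a scalar function on `ℝ³`. -/
abbrev Sm (f : E3 → ℝ) : Prop := ContDiff ℝ (⊤ : ℕ∞) f

lemma Sm.diff {f : E3 → ℝ} (h : Sm f) : Differentiable ℝ f :=
  ContDiff.differentiable h (by simp)

lemma Sm.cont {f : E3 → ℝ} (h : Sm f) : Continuous f := ContDiff.continuous h

lemma Sm.one {f : E3 → ℝ} (h : Sm f) : ContDiff ℝ 1 f := h.of_le (by simp)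

lemma pd3_add {f g : E3 → ℝ} (hf : Differentiable ℝ f) (hg : Differentiable ℝ g) (j : Fin 3)
    (x : E3) : pd3 j (fun y => f y + g y) x = pd3 j f x + pd3 j g x := by
  simp only [pd3]
  rw [fderiv_fun_add (hf x) (hg x)]; rfl

lemma pd3_sub {f g : E3 → ℝ} (hf : Differentiable ℝ f) (hg : Differentiable ℝ g) (j : Fin 3)
    (x : E3) : pd3 j (fun y => f y - g y) x = pd3 j f x - pd3 j g x := by
  simp only [pd3]
  rw [fderiv_fun_sub (hf x) (hg x)]; rfl

lemma pd3_neg {f : E3 → ℝ} (j : Fin 3)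
    (x : E3) : pd3 j (fun y => - f y) x = - pd3 j f x := by
  simp only [pd3]
  rw [fderiv_fun_neg]; rfl

lemma pd3_mul {f g : E3 → ℝ} (hf : Differentiable ℝ f) (hg : Differentiable ℝ g) (j : Fin 3)
    (x : E3) : pd3 j (fun y => f y * g y) x = f x * pd3 j g x + pd3 j f x * g x := by
  simp only [pd3]
  rw [fderiv_fun_mul (hf x) (hg x)]
  simp only [add_apply, smul_apply, smul_eq_mul]
  ring

lemma pd3_const (c : ℝ) (j : Fin 3) (x : E3) : pd3 j (fun _ => c) x = 0 := by
  simp [pd3]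

lemma pd3_pow {f : E3 → ℝ} (hf : Differentiable ℝ f) (n : ℕ) (j : Fin 3)
    (x : E3) : pd3 j (fun y => f y ^ n) x = n * f x ^ (n - 1) * pd3 j f x := by
  simp only [pd3]
  rw [fderiv_fun_pow n (hf x)]
  simp only [smul_apply, smul_eq_mul, nsmul_eq_mul]

lemma pd3_sum {ι : Type*} (s : Finset ι) {f : ι → E3 → ℝ} (hf : ∀ i, Differentiable ℝ (f i))
    (j : Fin 3) (x : E3) : pd3 j (fun y => ∑ i ∈ s, f i y) x = ∑ i ∈ s, pd3 j (f i) x := by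
  simp only [pd3]
  rw [fderiv_fun_sum (fun i _ => hf i x)]
  simp

lemma Sm.pd {f : E3 → ℝ} (h : Sm f) (j : Fin 3) : Sm (pd3 j f) := by
  have : Sm (fun x => fderiv ℝ f x (EuclideanSpace.single j 1)) :=
    (h.fderiv_right (m := (⊤ : ℕ∞)) (by simp)).clm_apply contDiff_const
  exact this

lemma pd3_comm {f : E3 → ℝ} (h : Sm f) (i j : Fin 3) (x : E3) :
    pd3 i (pd3 j f) x = pd3 j (pd3 i f) x := by
  have hs : IsSymmSndFDerivAt ℝ f x := by
    apply (h.contDiffAt).isSymmSndFDerivAt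
    simp only [minSmoothness_of_isRCLikeNormedField]
    exact WithTop.coe_le_coe.2 (le_top : (2 : ℕ∞) ≤ ⊤)
  have key : ∀ a b : Fin 3, pd3 a (pd3 b f) x = fderiv ℝ (fderiv ℝ f) x
      (EuclideanSpace.single a 1) (EuclideanSpace.single b 1) := by
    intro a b
    have hd : DifferentiableAt ℝ (fderiv ℝ f) x :=
      ((h.fderiv_right (m := (⊤ : ℕ∞)) (by simp)).differentiable (by simp)) x
    simp only [pd3]
    change fderiv ℝ (fun y => fderiv ℝ f y (EuclideanSpace.single b 1)) x _ = _
    rw [fderiv_clm_apply hd (differentiableAt_const _)]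
    simp
  rw [key, key, hs]

lemma hasCompactSupport_pd3 {f : E3 → ℝ} (h : HasCompactSupport f) (j : Fin 3) :
    HasCompactSupport (pd3 j f) := by
  have := h.fderiv_apply (𝕜 := ℝ) (EuclideanSpace.single j (1 : ℝ))
  exact this

lemma integral_pd3_eq_zero {h : E3 → ℝ} (hh : ContDiff ℝ 1 h) (hc : HasCompactSupport h)
    (j : Fin 3) : ∫ x, pd3 j h x = 0 := by
  have hd : Differentiable ℝ h := hh.differentiable (by simp)
  have hcont : Continuous (pd3 j h) := by
    have := (hh.continuous_fderiv (by simp)).clm_apply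
      (continuous_const (y := (EuclideanSpace.single j (1 : ℝ) : E3)))
    exact this
  have hi : Integrable (pd3 j h) :=
    hcont.integrable_of_hasCompactSupport (hasCompactSupport_pd3 hc j)
  have hi2 : Integrable h := hh.continuous.integrable_of_hasCompactSupport hc
  have key := integral_mul_fderiv_eq_neg_fderiv_mul_of_integrable (μ := (volume : Measure E3))
    (f := fun _ : E3 => (1 : ℝ)) (g := h) (v := EuclideanSpace.single j (1 : ℝ))
    (by simp) (by
      have hi' : Integrable (fun x => fderiv ℝ h x (EuclideanSpace.single j 1)) volume := hi
      simpa using hi')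
    (by simpa using hi2) (fun x _ => by fun_prop) (fun x _ => hd x)
  simpa [pd3] using key

/-- Integration by parts against a compactly supported function. -/
lemma ibp {f g : E3 → ℝ} (hf : ContDiff ℝ 1 f) (hg : ContDiff ℝ 1 g)
    (hc : HasCompactSupport f) (j : Fin 3) :
    ∫ x, f x * pd3 j g x = - ∫ x, pd3 j f x * g x := by
  have hcp : ∀ h : E3 → ℝ, ContDiff ℝ 1 h → Continuous (pd3 j h) := by
    intro h hh
    have := (hh.continuous_fderiv (by simp)).clm_apply
      (continuous_const (y := (EuclideanSpace.single j (1 : ℝ) : E3)))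
    exact this
  have h0 := integral_pd3_eq_zero (h := fun y => f y * g y) (hf.mul hg) (hc.mul_right) j
  have e : ∀ x, pd3 j (fun y => f y * g y) x = f x * pd3 j g x + pd3 j f x * g x :=
    pd3_mul (hf.differentiable (by simp)) (hg.differentiable (by simp)) j
  have e' : (∫ x, pd3 j (fun y => f y * g y) x) = ∫ x, (f x * pd3 j g x + pd3 j f x * g x) :=
    integral_congr_ae (Eventually.of_forall e)
  rw [e', integral_add] at h0
  · linarith
  · exact (hf.continuous.mul (hcp g hg)).integrable_of_hasCompactSupport hc.mul_right
  · exact ((hcp f hf).mul hg.continuous).integrable_of_hasCompactSupport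
      (hasCompactSupport_pd3 hc j).mul_right

lemma norm_fderiv_sq (f : E3 → ℝ) (x : E3) :
    ‖fderiv ℝ f x‖ ^ 2 = ∑ j : Fin 3, (pd3 j f x) ^ 2 := by
  have h1 : ‖fderiv ℝ f x‖ = ‖gradient f x‖ := by
    simp [gradient]
  rw [h1, EuclideanSpace.norm_sq_eq]
  refine Finset.sum_congr rfl fun j _ => ?_
  have : gradient f x j = pd3 j f x := by
    have h2 : inner ℝ (gradient f x) (EuclideanSpace.single j (1 : ℝ)) = pd3 j f x := by
      simp [gradient, pd3, InnerProductSpace.toDual_symm_apply]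
    rw [← h2, EuclideanSpace.inner_single_right]
    simp
  rw [this, Real.norm_eq_abs, sq_abs]

lemma norm_gradient (f : E3 → ℝ) (x : E3) : ‖gradient f x‖ = ‖fderiv ℝ f x‖ := by
  simp [gradient]

lemma abs_pd3_le (f : E3 → ℝ) (j : Fin 3) (x : E3) : |pd3 j f x| ≤ ‖fderiv ℝ f x‖ := by
  have := (fderiv ℝ f x).le_opNorm (EuclideanSpace.single j (1 : ℝ))
  simpa [pd3] using this

lemma norm_fderiv_le_sum (f : E3 → ℝ) (x : E3) :
    ‖fderiv ℝ f x‖ ≤ ∑ j : Fin 3, |pd3 j f x| := by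
  have h0 : (0 : ℝ) ≤ ∑ j : Fin 3, |pd3 j f x| := Finset.sum_nonneg fun _ _ => abs_nonneg _
  refine abs_le_of_sq_le_sq' ?_ h0 |>.2
  rw [norm_fderiv_sq]
  simp only [Fin.sum_univ_three]
  have := abs_nonneg (pd3 0 f x); have := abs_nonneg (pd3 1 f x); have := abs_nonneg (pd3 2 f x)
  nlinarith [sq_abs (pd3 0 f x), sq_abs (pd3 1 f x), sq_abs (pd3 2 f x),
    mul_nonneg (abs_nonneg (pd3 0 f x)) (abs_nonneg (pd3 1 f x)),
    mul_nonneg (abs_nonneg (pd3 0 f x)) (abs_nonneg (pd3 2 f x)),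
    mul_nonneg (abs_nonneg (pd3 1 f x)) (abs_nonneg (pd3 2 f x))]

/-- A continuous function is integrable on every bounded set. -/
lemma integrableOn_of_cont {F : Type*} [NormedAddCommGroup F] {f : E3 → F} (hf : Continuous f)
    {S : Set E3} (hS : Bornology.IsBounded S) : IntegrableOn f S := by
  obtain ⟨r, hr⟩ := hS.subset_closedBall (0 : E3)
  exact (hf.continuousOn.integrableOn_compact (isCompact_closedBall (0 : E3) r)).mono_set hr

section

/-! ### Lebesgue norms over bounded sets -/

/-- Bounded measurable sets. -/
def BM (S : Set E3) : Prop := Bornology.IsBounded S ∧ MeasurableSet S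

variable {F G : Type*} [NormedAddCommGroup F] [NormedAddCommGroup G]

/-- Real-valued `L^r` norm over `S`; only used for continuous functions and bounded `S`, where it
is finite. -/
def nm (f : E3 → F) (r : ℝ) (S : Set E3) : ℝ :=
  (eLpNorm f (ENNReal.ofReal r) (volume.restrict S)).toReal

lemma BM.fin {S : Set E3} (hS : BM S) : IsFiniteMeasure (volume.restrict S) :=
  ⟨by simpa using hS.1.measure_lt_top⟩

lemma nm_nonneg (f : E3 → F) (r : ℝ) (S : Set E3) : 0 ≤ nm f r S := ENNReal.toReal_nonneg

lemma memLp_of_cont {f : E3 → F} (hf : Continuous f) {S : Set E3} (hS : BM S) (r : ℝ≥0∞) :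
    MemLp f r (volume.restrict S) := by
  have := hS.fin
  obtain ⟨ρ, hρ⟩ := hS.1.subset_closedBall (0 : E3)
  obtain ⟨C, hC⟩ := (isCompact_closedBall (0 : E3) ρ).exists_bound_of_continuousOn hf.continuousOn
  exact MemLp.of_bound hf.aestronglyMeasurable C
    (ae_restrict_of_forall_mem hS.2 fun x hx => hC x (hρ hx))

lemma nm_ne_top {f : E3 → F} (hf : Continuous f) {S : Set E3} (hS : BM S) (r : ℝ≥0∞) :
    eLpNorm f r (volume.restrict S) ≠ ⊤ := (memLp_of_cont hf hS r).2.ne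

lemma nm_eq {f : E3 → F} (hf : Continuous f) {S : Set E3} (hS : BM S) {r : ℝ} (hr : 0 < r) :
    nm f r S = (∫ x in S, ‖f x‖ ^ r) ^ (1 / r) := by
  have h := (memLp_of_cont hf hS (ENNReal.ofReal r)).eLpNorm_eq_integral_rpow_norm
    (by simpa using hr) (by simp)
  rw [nm, h, ENNReal.toReal_ofReal]
  · rw [ENNReal.toReal_ofReal hr.le, one_div]
  · exact Real.rpow_nonneg (integral_nonneg fun _ => by positivity) _

lemma nm_rpow {f : E3 → F} (hf : Continuous f) {S : Set E3} (hS : BM S) {r : ℝ} (hr : 0 < r) :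
    nm f r S ^ r = ∫ x in S, ‖f x‖ ^ r := by
  rw [nm_eq hf hS hr, ← Real.rpow_mul (integral_nonneg fun _ => by positivity)]
  rw [one_div, inv_mul_cancel₀ hr.ne', Real.rpow_one]

lemma nm_one {f : E3 → F} (hf : Continuous f) {S : Set E3} (hS : BM S) :
    nm f 1 S = ∫ x in S, ‖f x‖ := by
  rw [nm_eq hf hS one_pos]; simp

lemma nm_sq {f : E3 → F} (hf : Continuous f) {S : Set E3} (hS : BM S) :
    nm f 2 S ^ 2 = ∫ x in S, ‖f x‖ ^ 2 := by
  have := nm_rpow hf hS (r := 2) two_pos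
  exact_mod_cast this

lemma nm_add_le {f g : E3 → F} (hf : Continuous f) (hg : Continuous g) {S : Set E3} (hS : BM S)
    {r : ℝ} (hr : 1 ≤ r) : nm (fun x => f x + g x) r S ≤ nm f r S + nm g r S := by
  rw [nm, nm, nm, ← ENNReal.toReal_add (nm_ne_top hf hS _) (nm_ne_top hg hS _)]
  refine ENNReal.toReal_mono (by simp [nm_ne_top hf hS _, nm_ne_top hg hS _]) ?_
  exact eLpNorm_add_le hf.aestronglyMeasurable hg.aestronglyMeasurable (by simpa using hr)

lemma nm_mono {f : E3 → F} {g : E3 → G} (hg : Continuous g) {S : Set E3}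
    (hS : BM S) {r : ℝ} (h : ∀ x ∈ S, ‖f x‖ ≤ ‖g x‖) : nm f r S ≤ nm g r S :=
  ENNReal.toReal_mono (nm_ne_top hg hS _) (eLpNorm_mono_ae (ae_restrict_of_forall_mem hS.2 h))

lemma nm_congr {f : E3 → F} {g : E3 → G} {S : Set E3}
    (hS : BM S) {r : ℝ} (h : ∀ x ∈ S, ‖f x‖ = ‖g x‖) : nm f r S = nm g r S := by
  unfold nm
  rw [eLpNorm_congr_norm_ae (ae_restrict_of_forall_mem hS.2 h)]

lemma nm_mono_set {f : E3 → F} (hf : Continuous f) {S S' : Set E3} (hS' : BM S') {r : ℝ}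
    (h : S ⊆ S') : nm f r S ≤ nm f r S' :=
  ENNReal.toReal_mono (nm_ne_top hf hS' _) (eLpNorm_mono_measure f (Measure.restrict_mono_set _ h))

lemma nm_smul (c : ℝ) (f : E3 → ℝ) (r : ℝ) (S : Set E3) :
    nm (fun x => c * f x) r S = |c| * nm f r S := by
  have := eLpNorm_const_smul c f (ENNReal.ofReal r) (volume.restrict S)
  have h2 : (c • f) = fun x => c * f x := rfl
  rw [nm, ← h2, this, ENNReal.toReal_mul]; simp [nm]

lemma nm_norm (f : E3 → F) (r : ℝ) (S : Set E3) : nm (fun x => ‖f x‖) r S = nm f r S := by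
  simp [nm, eLpNorm_norm]

/-- Hölder's inequality. -/
lemma nm_mul_le {f g : E3 → ℝ} (hf : Continuous f) (hg : Continuous g) {S : Set E3} (hS : BM S)
    {p q r : ℝ} (hp : 0 < p) (hq : 0 < q) (hr : 0 < r) (h : 1 / p + 1 / q = 1 / r) :
    nm (fun x => f x * g x) r S ≤ nm f p S * nm g q S := by
  have ht : ENNReal.HolderTriple (ENNReal.ofReal p) (ENNReal.ofReal q) (ENNReal.ofReal r) := by
    constructor
    rw [← ENNReal.ofReal_inv_of_pos hp, ← ENNReal.ofReal_inv_of_pos hq,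
      ← ENNReal.ofReal_inv_of_pos hr, ← ENNReal.ofReal_add (by positivity) (by positivity)]
    simp only [one_div] at h; rw [h]
  have := eLpNorm_smul_le_mul_eLpNorm (μ := volume.restrict S) (p := ENNReal.ofReal p)
    (q := ENNReal.ofReal q) (r := ENNReal.ofReal r)
    hg.aestronglyMeasurable hf.aestronglyMeasurable
  rw [nm, nm, nm, ← ENNReal.toReal_mul]
  exact ENNReal.toReal_mono (ENNReal.mul_ne_top (nm_ne_top hf hS _) (nm_ne_top hg hS _)) this

lemma integral_mul_le {f g : E3 → ℝ} (hf : Continuous f) (hg : Continuous g) {S : Set E3}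
    (hS : BM S) {p q : ℝ} (hp : 0 < p) (hq : 0 < q) (h : 1 / p + 1 / q = 1) :
    ∫ x in S, |f x * g x| ≤ nm f p S * nm g q S := by
  have := nm_mul_le hf hg hS hp hq one_pos (by simpa using h)
  rw [nm_one (f := fun x => f x * g x) (hf.mul hg) hS] at this
  exact this

lemma nm_exp_le {f : E3 → F} (hf : Continuous f) {S : Set E3} (hS : BM S) {r₁ r₂ : ℝ}
    (h0 : 0 < r₁) (h : r₁ ≤ r₂) :
    nm f r₁ S ≤ nm f r₂ S * (volume S).toReal ^ (1 / r₁ - 1 / r₂) := by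
  have hr : 0 ≤ 1 / r₁ - 1 / r₂ := sub_nonneg.2 (one_div_le_one_div_of_le h0 h)
  have := eLpNorm_le_eLpNorm_mul_rpow_measure_univ (μ := volume.restrict S)
    (ENNReal.ofReal_le_ofReal h) hf.aestronglyMeasurable
  rw [ENNReal.toReal_ofReal h0.le, ENNReal.toReal_ofReal (h0.le.trans h),
    Measure.restrict_apply_univ] at this
  rw [nm, nm, ENNReal.toReal_rpow, ← ENNReal.toReal_mul]
  refine ENNReal.toReal_mono (ENNReal.mul_ne_top (nm_ne_top hf hS _) ?_) this
  exact ENNReal.rpow_ne_top_of_nonneg hr hS.1.measure_lt_top.ne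

lemma nm_le_of_bound {f : E3 → F} {S : Set E3} (hS : BM S) {r ε : ℝ} (hr : 0 < r) (hε : 0 ≤ ε)
    (h : ∀ x ∈ S, ‖f x‖ ≤ ε) : nm f r S ≤ (volume S).toReal ^ (1 / r) * ε := by
  have := eLpNorm_le_of_ae_bound (μ := volume.restrict S) (p := ENNReal.ofReal r) (ae_restrict_of_forall_mem hS.2 h)
  rw [Measure.restrict_apply_univ, ENNReal.toReal_ofReal hr.le] at this
  have h2 := ENNReal.toReal_mono (ENNReal.mul_ne_top
    (ENNReal.rpow_ne_top_of_nonneg (by positivity) hS.1.measure_lt_top.ne) (by simp)) this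
  rw [ENNReal.toReal_mul, ENNReal.toReal_ofReal hε, ← ENNReal.toReal_rpow] at h2
  rw [one_div]; exact h2

lemma abs_setIntegral_le (f : E3 → ℝ) (S : Set E3) :
    |∫ x in S, f x| ≤ ∫ x in S, |f x| := abs_integral_le_integral_abs

lemma nm_sum_le {ι : Type*} (s : Finset ι) {f : ι → E3 → F} (hf : ∀ i, Continuous (f i))
    {S : Set E3} (hS : BM S) {r : ℝ} (hr : 1 ≤ r) :
    nm (fun x => ∑ i ∈ s, f i x) r S ≤ ∑ i ∈ s, nm (f i) r S := by
  classical
  induction s using Finset.induction_on with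
  | empty => simp [nm]
  | insert a s ha ih =>
    simp only [Finset.sum_insert ha]
    exact (nm_add_le (hf a) (continuous_finsetSum _ fun i _ => hf i) hS hr).trans (by linarith)

lemma BM_ball (ρ : ℝ) : BM (ball (0 : E3) ρ) := ⟨isBounded_ball, measurableSet_ball⟩

lemma BM_Ann (R : ℝ) : BM (Ann R) :=
  ⟨isBounded_ball.subset Set.sdiff_subset, measurableSet_ball.diff measurableSet_ball⟩

end

/-! ### Poincaré inequalities -/

/-- The fundamental theorem of calculus along the segment from `y` to `x`, with Jensen's inequality. -/
lemma line_le {η : E3 → ℝ} (hη : ContDiff ℝ 1 η) {s : ℝ} (hs : 1 ≤ s) (x y : E3) :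
    ‖η x - η y‖ₑ ^ s ≤ ‖x - y‖ₑ ^ s *
      ∫⁻ t in Set.Ioc (0 : ℝ) 1, ‖fderiv ℝ η (y + t • (x - y))‖ₑ ^ s := by
  have hs0 : 0 < s := by linarith
  have hd : Differentiable ℝ η := hη.differentiable (by simp)
  have hcf : Continuous (fun t : ℝ => fderiv ℝ η (y + t • (x - y))) :=
    (hη.continuous_fderiv (by simp)).comp (by fun_prop)
  have h1 : ∀ t : ℝ, HasDerivAt (fun t : ℝ => η (y + t • (x - y)))
      (fderiv ℝ η (y + t • (x - y)) (x - y)) t := by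
    intro t
    have h1 : HasDerivAt (fun t : ℝ => y + t • (x - y)) (x - y) t := by
      simpa using ((hasDerivAt_id t).smul_const (x - y)).const_add y
    exact (hd _).hasFDerivAt.comp_hasDerivAt t h1
  have h2 : ∫ t in (0 : ℝ)..1, fderiv ℝ η (y + t • (x - y)) (x - y) = η x - η y := by
    rw [intervalIntegral.integral_eq_sub_of_hasDerivAt (fun t _ => h1 t)
      ((hcf.clm_apply continuous_const).intervalIntegrable _ _)]
    simp
  rw [intervalIntegral.integral_of_le zero_le_one] at h2
  have h3 : ‖η x - η y‖ₑ ≤ ‖x - y‖ₑ *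
      eLpNorm (fun t : ℝ => fderiv ℝ η (y + t • (x - y))) 1 (volume.restrict (Set.Ioc (0 : ℝ) 1)) := by
    rw [← h2, eLpNorm_one_eq_lintegral_enorm, ← lintegral_const_mul _ hcf.enorm.measurable]
    refine (enorm_integral_le_lintegral_enorm _).trans (lintegral_mono fun t => ?_)
    rw [mul_comm]
    exact ContinuousLinearMap.le_opENorm _ _
  have hprob : IsProbabilityMeasure (volume.restrict (Set.Ioc (0 : ℝ) 1)) := ⟨by simp⟩
  have h4 := eLpNorm_le_eLpNorm_of_exponent_le (μ := volume.restrict (Set.Ioc (0 : ℝ) 1))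
    (p := 1) (q := ENNReal.ofReal s) (by simpa using hs) hcf.aestronglyMeasurable
  have h5 := h3.trans (mul_le_mul_right h4 ‖x - y‖ₑ)
  have h6 := ENNReal.rpow_le_rpow h5 hs0.le
  refine h6.trans (le_of_eq ?_)
  rw [ENNReal.mul_rpow_of_nonneg _ _ hs0.le]
  congr 1
  rw [eLpNorm_eq_lintegral_rpow_enorm_toReal (by simpa using hs0) (by simp),
    ENNReal.toReal_ofReal hs0.le, ← ENNReal.rpow_mul, one_div, inv_mul_cancel₀ hs0.ne',
    ENNReal.rpow_one]

/-- Contracting a convex set towards one of its points by a factor `τ ≥ 1/2` costs at most the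
Jacobian `2³`. -/
lemma contract_le {D : Set E3} (hD : Convex ℝ D) (hm : MeasurableSet D) {g : E3 → ℝ≥0∞}
    (hg : Measurable g) {a : E3} (ha : a ∈ D) {τ : ℝ} (h1 : 1 / 2 ≤ τ) (h2 : τ ≤ 1) :
    ∫⁻ x in D, g (a + τ • (x - a)) ≤ 8 * ∫⁻ x in D, g x := by
  have e1 : ∫⁻ x in D, g (a + τ • (x - a)) ≤ ∫⁻ x, (D.indicator g) ((a - τ • a) + τ • x) := by
    rw [← lintegral_indicator hm]
    refine lintegral_mono fun x => ?_
    by_cases hx : x ∈ D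
    · have : a + τ • (x - a) = (a - τ • a) + τ • x := by rw [smul_sub]; abel
      rw [Set.indicator_of_mem hx, ← this, Set.indicator_of_mem]
      exact hD.add_smul_sub_mem ha hx ⟨by linarith, h2⟩
    · rw [Set.indicator_of_notMem hx]; exact zero_le
  refine e1.trans ?_
  have hτ : τ ≠ 0 := by linarith
  have e2 : ∫⁻ x, (D.indicator g) ((a - τ • a) + τ • x)
      = ENNReal.ofReal |(τ ^ 3)⁻¹| * ∫⁻ x, (D.indicator g) x := by
    have hk : Measurable (fun z => (D.indicator g) ((a - τ • a) + z)) :=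
      (hg.indicator hm).comp (by fun_prop)
    have h3 := Measure.map_addHaar_smul (volume : Measure E3) hτ
    have h4 := lintegral_map (μ := (volume : Measure E3)) hk (measurable_const_smul τ)
    rw [← h4, h3, lintegral_smul_measure, lintegral_add_left_eq_self]
    simp
  rw [e2, lintegral_indicator hm]
  gcongr
  rw [show (8 : ℝ≥0∞) = ENNReal.ofReal 8 by simp]
  apply ENNReal.ofReal_le_ofReal
  have : 0 < τ := by linarith
  rw [abs_of_pos (by positivity)]
  refine inv_le_of_inv_le₀ (by norm_num) ?_
  calc (8 : ℝ)⁻¹ = (1 / 2) ^ 3 := by norm_num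
    _ ≤ τ ^ 3 := by gcongr

lemma lint_split {D : Set E3} (hm : BM D) {h1 h2 : E3 → E3 → ℝ≥0∞}
    (m1 : Measurable (Function.uncurry h1)) (m2 : Measurable (Function.uncurry h2)) (c : ℝ≥0∞) :
    ∫⁻ x in D, ∫⁻ y in D, c * (h1 x y + h2 x y) =
      c * ((∫⁻ x in D, ∫⁻ y in D, h1 x y) + ∫⁻ x in D, ∫⁻ y in D, h2 x y) := by
  have := hm.fin
  have a1 : ∀ x, Measurable (h1 x) := fun x => m1.of_uncurry_left
  have a2 : ∀ x, Measurable (h2 x) := fun x => m2.of_uncurry_left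
  have key : ∀ {f g : E3 → ℝ≥0∞}, Measurable f → Measurable g → ∫⁻ y in D, c * (f y + g y) =
      c * ((∫⁻ y in D, f y) + ∫⁻ y in D, g y) := fun {f g} hf hg => by
    rw [← lintegral_add_left hf]
    exact lintegral_const_mul _ (hf.add hg)
  have e1 : ∀ x, ∫⁻ y in D, c * (h1 x y + h2 x y) =
      c * ((∫⁻ y in D, h1 x y) + ∫⁻ y in D, h2 x y) := fun x => key (a1 x) (a2 x)
  simp only [e1]
  have b1 : Measurable fun x => ∫⁻ y in D, h1 x y := m1.lintegral_prod_right
  have b2 : Measurable fun x => ∫⁻ y in D, h2 x y := m2.lintegral_prod_right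
  exact key b1 b2

/-- Integral of `g` along the part of the segment from `y` to `x` with parameter in `J`. -/
def seg (g : E3 → ℝ≥0∞) (J : Set ℝ) (x y : E3) : ℝ≥0∞ := ∫⁻ t in J, g (y + t • (x - y))

lemma seg_meas {g : E3 → ℝ≥0∞} (gm : Measurable g) (J : Set ℝ) :
    Measurable (Function.uncurry (seg g J)) := by
  have m3 : Measurable (Function.uncurry fun (z : E3 × E3) (t : ℝ) => g (z.2 + t • (z.1 - z.2))) :=
    gm.comp (by fun_prop)
  exact m3.lintegral_prod_right (ν := volume.restrict J)

lemma seg_bound {h : E3 → ℝ → ℝ≥0∞} (hh : Measurable (Function.uncurry h)) {D : Set E3}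
    (hm : BM D) {a b : ℝ} (hab : b - a ≤ 1) {I : ℝ≥0∞}
    (h1 : ∀ t ∈ Set.Ioc a b, ∫⁻ y in D, h y t ≤ I) :
    ∫⁻ y in D, ∫⁻ t in Set.Ioc a b, h y t ≤ I := by
  have := hm.fin
  rw [lintegral_lintegral_swap hh.aemeasurable]
  refine (setLIntegral_mono' measurableSet_Ioc h1).trans ?_
  rw [setLIntegral_const, Real.volume_Ioc]
  calc I * ENNReal.ofReal (b - a) ≤ I * ENNReal.ofReal 1 := by gcongr
    _ = I := by simp

lemma seg_b1 {D : Set E3} (hD : Convex ℝ D) (hm : BM D) {g : E3 → ℝ≥0∞} (gm : Measurable g) :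
    ∫⁻ x in D, ∫⁻ y in D, seg g (Set.Ioc 0 (1 / 2)) x y ≤ 8 * (∫⁻ x in D, g x) * volume D := by
  refine (setLIntegral_mono' hm.2 (g := fun _ => 8 * ∫⁻ x in D, g x) fun x hx => ?_).trans
    (le_of_eq (setLIntegral_const _ _))
  refine seg_bound (h := fun y t => g (y + t • (x - y))) (gm.comp (by fun_prop)) hm (by norm_num)
    fun t ht => ?_
  have := contract_le hD hm.2 gm hx (τ := 1 - t) (by linarith [ht.2]) (by linarith [ht.1])
  refine le_trans (le_of_eq ?_) this
  congr 1; funext y; congr 1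
  rw [smul_sub, smul_sub, sub_smul, sub_smul, one_smul, one_smul]; abel

lemma seg_b2 {D : Set E3} (hD : Convex ℝ D) (hm : BM D) {g : E3 → ℝ≥0∞} (gm : Measurable g) :
    ∫⁻ x in D, ∫⁻ y in D, seg g (Set.Ioc (1 / 2) 1) x y ≤ 8 * (∫⁻ x in D, g x) * volume D := by
  have := hm.fin
  rw [lintegral_lintegral_swap (seg_meas gm _).aemeasurable]
  refine (setLIntegral_mono' hm.2 (g := fun _ => 8 * ∫⁻ x in D, g x) fun x hx => ?_).trans
    (le_of_eq (setLIntegral_const _ _))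
  refine seg_bound (h := fun y t => g (x + t • (y - x))) (gm.comp (by fun_prop)) hm (by norm_num)
    fun t ht => contract_le hD hm.2 gm hx ht.1.le ht.2

/-- The double-integral form of Poincaré's inequality on a convex set. Each segment is split at its
midpoint, so that the contraction towards the farther endpoint has factor at least `1/2`. -/
lemma pair_le {D : Set E3} (hD : Convex ℝ D) (hm : BM D) {d : ℝ≥0∞}
    (hd : ∀ x ∈ D, ∀ y ∈ D, ‖x - y‖ₑ ≤ d) {s : ℝ} (hs : 1 ≤ s) {η : E3 → ℝ}
    (hη : ContDiff ℝ 1 η) :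
    ∫⁻ x in D, ∫⁻ y in D, ‖η x - η y‖ₑ ^ s ≤
      d ^ s * (16 * volume D) * ∫⁻ x in D, ‖fderiv ℝ η x‖ₑ ^ s := by
  have hs0 : 0 ≤ s := by linarith
  have hl : ∀ x y, ‖η x - η y‖ₑ ^ s ≤ ‖x - y‖ₑ ^ s *
    (seg (fun z => ‖fderiv ℝ η z‖ₑ ^ s) (Set.Ioc 0 1) x y) := line_le hη hs
  have gm : Measurable fun z => ‖fderiv ℝ η z‖ₑ ^ s :=
    ((hη.continuous_fderiv (by simp)).enorm.measurable).pow_const s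
  revert gm hl
  generalize (fun z => ‖fderiv ℝ η z‖ₑ ^ s) = g
  intro hl gm
  calc ∫⁻ x in D, ∫⁻ y in D, ‖η x - η y‖ₑ ^ s
      ≤ ∫⁻ x in D, ∫⁻ y in D, d ^ s * (seg g (Set.Ioc 0 (1 / 2)) x y + seg g (Set.Ioc (1 / 2) 1) x y) := by
        refine setLIntegral_mono' hm.2 fun x hx => setLIntegral_mono' hm.2 fun y hy => ?_
        refine (hl x y).trans ?_
        have e : Set.Ioc (0 : ℝ) 1 = Set.Ioc 0 (1 / 2) ∪ Set.Ioc (1 / 2) 1 :=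
          (Set.Ioc_union_Ioc_eq_Ioc (by norm_num) (by norm_num)).symm
        unfold seg
        rw [e, lintegral_union measurableSet_Ioc (Set.Ioc_disjoint_Ioc_of_le le_rfl)]
        gcongr
        exact hd x hx y hy
    _ = _ := lint_split hm (seg_meas gm _) (seg_meas gm _) _
    _ ≤ d ^ s * (8 * (∫⁻ x in D, g x) * volume D + 8 * (∫⁻ x in D, g x) * volume D) := by
        gcongr
        · exact seg_b1 hD hm gm
        · exact seg_b2 hD hm gm
    _ = d ^ s * (16 * volume D) * ∫⁻ x in D, g x := by ring

/-- Mean value over `V`. -/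
def mean (V : Set E3) (η : E3 → ℝ) : ℝ := ⨍ x in V, η x

lemma jensen {V : Set E3} (hV : BM V) (h0 : volume V ≠ 0) {s : ℝ} (hs : 1 ≤ s) {η : E3 → ℝ}
    (hη : Continuous η) (a : ℝ) :
    ‖a - mean V η‖ₑ ^ s ≤ (volume V)⁻¹ * ∫⁻ y in V, ‖a - η y‖ₑ ^ s := by
  have hs0 : 0 < s := by linarith
  have hfin := hV.fin
  have hvt : volume V ≠ ⊤ := hV.1.measure_lt_top.ne
  set μ : Measure E3 := (volume V)⁻¹ • volume.restrict V with hμ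
  have hprob : IsProbabilityMeasure μ := ⟨by
    simp [hμ, ENNReal.inv_mul_cancel h0 hvt]⟩
  have hηi : Integrable η μ := by
    refine Integrable.smul_measure ?_ (by simpa using h0)
    exact integrableOn_of_cont hη hV.1
  have e1 : mean V η = ∫ y, η y ∂μ := by
    simp [mean, average, hμ]
  have e2 : a - mean V η = ∫ y, (a - η y) ∂μ := by
    rw [integral_sub (integrable_const _) hηi, e1]; simp
  have h3 : ‖a - mean V η‖ₑ ≤ eLpNorm (fun y => a - η y) 1 μ := by
    rw [e2, eLpNorm_one_eq_lintegral_enorm]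
    exact enorm_integral_le_lintegral_enorm _
  have hc : Continuous fun y => a - η y := by fun_prop
  have h4 := eLpNorm_le_eLpNorm_of_exponent_le (μ := μ)
    (p := 1) (q := ENNReal.ofReal s) (by simpa using hs) hc.aestronglyMeasurable
  refine (ENNReal.rpow_le_rpow (h3.trans h4) hs0.le).trans (le_of_eq ?_)
  rw [eLpNorm_eq_lintegral_rpow_enorm_toReal (by simpa using hs0) (by simp),
    ENNReal.toReal_ofReal hs0.le, ← ENNReal.rpow_mul, one_div, inv_mul_cancel₀ hs0.ne',
    ENNReal.rpow_one, hμ, lintegral_smul_measure, smul_eq_mul]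

lemma nm_le_of_lint {F G : Type*} [NormedAddCommGroup F] [NormedAddCommGroup G] {f : E3 → F}
    {g : E3 → G} (hg : Continuous g) {D A : Set E3} (hA : BM A) {s : ℝ} (hs : 0 < s) {K : ℝ≥0∞}
    (hK : K ≠ ⊤) (h : ∫⁻ x in D, ‖f x‖ₑ ^ s ≤ K * ∫⁻ x in A, ‖g x‖ₑ ^ s) :
    nm f s D ≤ (K ^ (1 / s)).toReal * nm g s A := by
  unfold nm
  rw [← ENNReal.toReal_mul]
  have h1 : K ^ (1 / s) ≠ ⊤ := ENNReal.rpow_ne_top_of_nonneg (by positivity) hK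
  refine ENNReal.toReal_mono (ENNReal.mul_ne_top h1 (nm_ne_top hg hA _)) ?_
  rw [eLpNorm_eq_lintegral_rpow_enorm_toReal (by simpa using hs) (by simp),
    eLpNorm_eq_lintegral_rpow_enorm_toReal (by simpa using hs) (by simp),
    ENNReal.toReal_ofReal hs.le, ← ENNReal.mul_rpow_of_nonneg _ _ (by positivity)]
  exact ENNReal.rpow_le_rpow h (by positivity)

lemma nm_const {s : ℝ} (hs : 0 < s) (k : ℝ) (S : Set E3) :
    nm (fun _ : E3 => k) s S = |k| * (volume S).toReal ^ (1 / s) := by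
  unfold nm
  rw [eLpNorm_const' _ (by simpa using hs) (by simp)]
  simp [ENNReal.toReal_rpow, ENNReal.toReal_ofReal hs.le]

lemma nm_union_le {F : Type*} [NormedAddCommGroup F] {f : E3 → F} (hf : Continuous f)
    {A B : Set E3} (hA : BM A) (hB : BM B) {s : ℝ} (hs : 1 ≤ s) :
    nm f s (A ∪ B) ≤ nm f s A + nm f s B := by
  have hs0 : 0 < s := by linarith
  unfold nm
  rw [← ENNReal.toReal_add (nm_ne_top hf hA _) (nm_ne_top hf hB _)]
  refine ENNReal.toReal_mono
    (ENNReal.add_ne_top.2 ⟨nm_ne_top hf hA _, nm_ne_top hf hB _⟩) ?_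
  simp only [eLpNorm_eq_lintegral_rpow_enorm_toReal (p := ENNReal.ofReal s) (by simpa using hs0) (by simp),
    ENNReal.toReal_ofReal hs0.le]
  refine (ENNReal.rpow_le_rpow (lintegral_union_le _ _ _) (by positivity)).trans ?_
  exact ENNReal.rpow_add_le_add_rpow _ _ (by positivity) (by rw [div_le_one hs0]; exact hs)

/-- `PC c s D A`: the Poincaré inequality `‖η - c η‖_{L^s(D)} ≤ C ‖∇η‖_{L^s(A)}`. -/
def PC (c : (E3 → ℝ) → ℝ) (s : ℝ) (D A : Set E3) : Prop :=
  ∃ C, 0 ≤ C ∧ ∀ η : E3 → ℝ, ContDiff ℝ 1 η →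
    nm (fun x => η x - c η) s D ≤ C * nm (fderiv ℝ η) s A

/-- Poincaré's inequality on a convex set, with the mean value taken over any subset of positive
measure. -/
lemma PC_convex {D V : Set E3} (hD : Convex ℝ D) (hm : BM D) (hV : BM V) (hVD : V ⊆ D)
    (h0 : volume V ≠ 0) {s : ℝ} (hs : 1 ≤ s) : PC (mean V) s D D := by
  obtain ⟨d, hd⟩ := hm.1.exists_norm_le
  have hs0 : 0 < s := by linarith
  set K : ℝ≥0∞ := (volume V)⁻¹ * (ENNReal.ofReal (d + d) ^ s * (16 * volume D)) with hKdef
  have hDt : volume D ≠ ⊤ := hm.1.measure_lt_top.ne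
  have hK : K ≠ ⊤ := by
    refine ENNReal.mul_ne_top (by simpa using h0) (ENNReal.mul_ne_top ?_
      (ENNReal.mul_ne_top (by simp) hDt))
    exact ENNReal.rpow_ne_top_of_nonneg hs0.le (by simp)
  refine ⟨(K ^ (1 / s)).toReal, ENNReal.toReal_nonneg, fun η hη => ?_⟩
  refine nm_le_of_lint (hη.continuous_fderiv (by simp)) hm hs0 hK ?_
  have h1 := pair_le hD hm (d := ENNReal.ofReal (d + d)) (fun x hx y hy => by
    rw [← ofReal_norm]
    refine ENNReal.ofReal_le_ofReal ((norm_sub_le _ _).trans (add_le_add (hd x hx) (hd y hy)))) hs hη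
  calc ∫⁻ x in D, ‖η x - mean V η‖ₑ ^ s
      ≤ ∫⁻ x in D, (volume V)⁻¹ * ∫⁻ y in D, ‖η x - η y‖ₑ ^ s := by
        refine lintegral_mono fun x => (jensen hV h0 hs hη.continuous (η x)).trans ?_
        gcongr
    _ = (volume V)⁻¹ * ∫⁻ x in D, ∫⁻ y in D, ‖η x - η y‖ₑ ^ s :=
        lintegral_const_mul' _ _ (by simpa using h0)
    _ ≤ K * ∫⁻ x in D, ‖fderiv ℝ η x‖ₑ ^ s := by
        rw [hKdef, mul_assoc]; gcongr

lemma PC_mono {c : (E3 → ℝ) → ℝ} {s : ℝ} {D D' A A' : Set E3} (h : PC c s D A) (hD : D' ⊆ D)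
    (hDm : BM D) (hA : A ⊆ A') (hAm : BM A') : PC c s D' A' := by
  obtain ⟨C, hC, H⟩ := h
  refine ⟨C, hC, fun η hη => ?_⟩
  have hc := hη.continuous
  calc _ ≤ nm (fun x => η x - c η) s D := nm_mono_set (by fun_prop) hDm hD
    _ ≤ C * nm (fderiv ℝ η) s A := H η hη
    _ ≤ _ := by
      gcongr
      exact nm_mono_set (hη.continuous_fderiv (by simp)) hAm hA

lemma PC_union {c : (E3 → ℝ) → ℝ} {s : ℝ} (hs : 1 ≤ s) {D D' A : Set E3} (h : PC c s D A)
    (h' : PC c s D' A) (hDm : BM D) (hDm' : BM D') : PC c s (D ∪ D') A := by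
  obtain ⟨C, hC, H⟩ := h
  obtain ⟨C', hC', H'⟩ := h'
  refine ⟨C + C', by positivity, fun η hη => ?_⟩
  have hc := hη.continuous
  refine (nm_union_le (by fun_prop) hDm hDm' hs).trans ?_
  rw [add_mul]
  exact add_le_add (H η hη) (H' η hη)

/-- A Poincaré inequality passes from `D₁` to a convex set `D₂` that overlaps it. -/
lemma PC_chain {c : (E3 → ℝ) → ℝ} {s : ℝ} (hs : 1 ≤ s) {D₁ D₂ A : Set E3} (h : PC c s D₁ A)
    (h1 : BM D₁) (h2 : BM D₂) (hA : BM A) (hD : Convex ℝ D₂) (hDA : D₂ ⊆ A)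
    (h0 : volume (D₁ ∩ D₂) ≠ 0) : PC c s D₂ A := by
  have hs0 : 0 < s := by linarith
  set V := D₁ ∩ D₂ with hV
  have hVm : BM V := ⟨h1.1.subset Set.inter_subset_left, h1.2.inter h2.2⟩
  obtain ⟨C', hC', H'⟩ := PC_mono (PC_convex hD h2 hVm Set.inter_subset_right h0 hs) le_rfl h2 hDA hA
  obtain ⟨C, hC, H⟩ := h
  have hv : 0 < (volume V).toReal ^ (1 / s) :=
    Real.rpow_pos_of_pos (ENNReal.toReal_pos h0 hVm.1.measure_lt_top.ne) _
  set v := (volume V).toReal ^ (1 / s)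
  set w := (volume D₂).toReal ^ (1 / s) with hw
  have hw0 : 0 ≤ w := by positivity
  refine ⟨C' + w / v * (C + C'), by positivity, fun η hη => ?_⟩
  have hc := hη.continuous
  set N := nm (fderiv ℝ η) s A
  set m := mean V η
  have a1 : |m - c η| * v ≤ (C + C') * N := by
    rw [← nm_const hs0]
    calc nm (fun _ : E3 => m - c η) s V = nm (fun x => (η x - c η) + (-1 * (η x - m))) s V := by
          congr 1; funext x; ring
      _ ≤ nm (fun x => η x - c η) s V + nm (fun x => -1 * (η x - m)) s V :=
          nm_add_le (by fun_prop) (by fun_prop) hVm hs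
      _ = nm (fun x => η x - c η) s V + nm (fun x => (η x - m)) s V := by
          rw [nm_smul (-1) (fun x => η x - m)]; simp
      _ ≤ nm (fun x => η x - c η) s D₁ + nm (fun x => (η x - m)) s D₂ :=
          add_le_add (nm_mono_set (by fun_prop) h1 Set.inter_subset_left)
            (nm_mono_set (by fun_prop) h2 Set.inter_subset_right)
      _ ≤ C * N + C' * N := add_le_add (H η hη) (H' η hη)
      _ = _ := by ring
  calc nm (fun x => η x - c η) s D₂ = nm (fun x => (η x - m) + (m - c η)) s D₂ := by
        congr 1; funext x; ring
    _ ≤ nm (fun x => η x - m) s D₂ + nm (fun _ : E3 => m - c η) s D₂ :=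
        nm_add_le (by fun_prop) (by fun_prop) h2 hs
    _ = nm (fun x => η x - m) s D₂ + |m - c η| * w := by rw [nm_const hs0]
    _ ≤ C' * N + (C + C') * N / v * w := by
        refine add_le_add (H' η hη) ?_
        gcongr
        rw [le_div_iff₀ hv]; exact a1
    _ = _ := by ring

/-- The cap `{ρ ≤ σ xᵢ, |x| < 2ρ}`. -/
def cap (ρ : ℝ) (i : Fin 3) (σ : ℝ) : Set E3 := {x | ρ ≤ σ * x i} ∩ ball 0 (2 * ρ)

lemma abs_coord_le (x : E3) (i : Fin 3) : |x i| ≤ ‖x‖ := by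
  simpa using PiLp.norm_apply_le x i

lemma cap_BM (ρ : ℝ) (i : Fin 3) (σ : ℝ) : BM (cap ρ i σ) :=
  ⟨isBounded_ball.subset Set.inter_subset_right,
    (measurableSet_le measurable_const (by fun_prop)).inter measurableSet_ball⟩

lemma cap_convex (ρ : ℝ) (i : Fin 3) (σ : ℝ) : Convex ℝ (cap ρ i σ) := by
  refine Convex.inter ?_ (convex_ball _ _)
  refine convex_halfSpace_ge ⟨fun x y => ?_, fun a x => ?_⟩ ρ
  · simp; ring
  · simp; ring

lemma cap_sub {ρ : ℝ} (i : Fin 3) {σ : ℝ} (hσ : |σ| = 1) : cap ρ i σ ⊆ Ann ρ := by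
  intro x hx
  refine ⟨hx.2, ?_⟩
  have h1 : ρ ≤ σ * x i := hx.1
  have h2 : |σ * x i| = |x i| := by rw [abs_mul, hσ, one_mul]
  have := abs_coord_le x i
  have := le_abs_self (σ * x i)
  simp only [mem_ball, dist_zero_right, not_lt]
  linarith

lemma cap_inter {ρ : ℝ} (hρ : 0 < ρ) {i j : Fin 3} (hij : i ≠ j) {σ τ : ℝ} (hσ : |σ| = 1)
    (hτ : |τ| = 1) : volume (cap ρ i σ ∩ cap ρ j τ) ≠ 0 := by
  have hσ2 : σ ^ 2 = 1 := by rw [← sq_abs, hσ]; norm_num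
  have hτ2 : τ ^ 2 = 1 := by rw [← sq_abs, hτ]; norm_num
  set U : Set E3 := ({x | ρ < σ * x i} ∩ {x | ρ < τ * x j}) ∩ ball 0 (2 * ρ) with hU
  have hUo : IsOpen U := ((isOpen_lt continuous_const (by fun_prop)).inter
    (isOpen_lt continuous_const (by fun_prop))).inter isOpen_ball
  have hne : U.Nonempty := by
    refine ⟨(1.1 * ρ * σ) • EuclideanSpace.single i (1 : ℝ) +
      (1.1 * ρ * τ) • EuclideanSpace.single j (1 : ℝ), ⟨?_, ?_⟩, ?_⟩
    · simp [hij]; nlinarith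
    · simp [hij.symm]; nlinarith
    · rw [mem_ball, dist_zero_right]
      refine lt_of_pow_lt_pow_left₀ 2 (by positivity) ?_
      rw [EuclideanSpace.real_norm_sq_eq, Fin.sum_univ_three]
      fin_cases i <;> fin_cases j <;> simp at hij ⊢ <;> nlinarith [mul_pos hρ hρ]
  have hpos : 0 < volume U := hUo.measure_pos _ hne
  refine (lt_of_lt_of_le hpos (measure_mono ?_)).ne'
  rintro x ⟨⟨h1, h2⟩, h3⟩
  exact ⟨⟨le_of_lt (show ρ < σ * x i from h1), h3⟩, ⟨le_of_lt (show ρ < τ * x j from h2), h3⟩⟩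

/-- The shell `{√3 ρ ≤ |x| < 2ρ}`. -/
def shell (ρ : ℝ) : Set E3 := {x | 3 * ρ ^ 2 ≤ ‖x‖ ^ 2} ∩ ball 0 (2 * ρ)

/-- Poincaré's inequality on the shell, which is covered by six caps `±x_i ≥ ρ`: they are convex, lie
in the annulus, and any two with different axes overlap. -/
lemma PC_shell {ρ : ℝ} (hρ : 0 < ρ) {s : ℝ} (hs : 1 ≤ s) :
    PC (mean (cap ρ 0 1)) s (shell ρ) (Ann ρ) := by
  have p1 : |(1 : ℝ)| = 1 := by simp
  have p2 : |(-1 : ℝ)| = 1 := by simp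
  have v0 : volume (cap ρ 0 1) ≠ 0 := by
    have := cap_inter hρ (i := 0) (j := 1) (by decide) p1 p1
    intro h; exact this (measure_mono_null Set.inter_subset_left h)
  have c0 : PC (mean (cap ρ 0 1)) s (cap ρ 0 1) (Ann ρ) :=
    PC_mono (PC_convex (cap_convex ρ 0 1) (cap_BM _ _ _) (cap_BM _ _ _) le_rfl v0 hs) le_rfl
      (cap_BM _ _ _) (cap_sub _ p1) (BM_Ann _)
  have ch : ∀ {i j : Fin 3} {σ τ : ℝ}, i ≠ j → |σ| = 1 → |τ| = 1 →
      PC (mean (cap ρ 0 1)) s (cap ρ i σ) (Ann ρ) → PC (mean (cap ρ 0 1)) s (cap ρ j τ) (Ann ρ) :=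
    fun hij hσ hτ h => PC_chain hs h (cap_BM _ _ _) (cap_BM _ _ _) (BM_Ann _) (cap_convex _ _ _)
      (cap_sub _ hτ) (cap_inter hρ hij hσ hτ)
  have c1 := ch (by decide : (0 : Fin 3) ≠ 1) p1 p1 c0
  have c1' := ch (by decide : (0 : Fin 3) ≠ 1) p1 p2 c0
  have c2 := ch (by decide : (0 : Fin 3) ≠ 2) p1 p1 c0
  have c2' := ch (by decide : (0 : Fin 3) ≠ 2) p1 p2 c0
  have c0' := ch (by decide : (1 : Fin 3) ≠ 0) p1 p2 c1
  have un : ∀ {S T : Set E3}, BM S → BM T → BM (S ∪ T) := fun h h' =>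
    ⟨h.1.union h'.1, h.2.union h'.2⟩
  have b : ∀ i σ, BM (cap ρ i σ) := cap_BM ρ
  have U := PC_union hs (PC_union hs (PC_union hs c0 c0' (b _ _) (b _ _))
    (PC_union hs c1 c1' (b _ _) (b _ _)) (un (b _ _) (b _ _)) (un (b _ _) (b _ _)))
    (PC_union hs c2 c2' (b _ _) (b _ _)) (un (un (b _ _) (b _ _)) (un (b _ _) (b _ _)))
    (un (b _ _) (b _ _))
  refine PC_mono U ?_ (un (un (un (b _ _) (b _ _)) (un (b _ _) (b _ _))) (un (b _ _) (b _ _)))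
    le_rfl (BM_Ann _)
  rintro x ⟨hx, hx2⟩
  have hx : 3 * ρ ^ 2 ≤ ‖x‖ ^ 2 := hx
  rw [EuclideanSpace.real_norm_sq_eq, Fin.sum_univ_three] at hx
  have key : ∀ i : Fin 3, ρ ^ 2 ≤ x i ^ 2 → x ∈ cap ρ i 1 ∪ cap ρ i (-1) := by
    intro i hi
    have := sq_le_sq.1 hi
    rw [abs_of_pos hρ] at this
    rcases le_abs.1 this with h | h
    · exact Or.inl ⟨by simpa using h, hx2⟩
    · exact Or.inr ⟨by simpa using h, hx2⟩
  by_cases h0 : ρ ^ 2 ≤ x 0 ^ 2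
  · exact Or.inl (Or.inl (key 0 h0))
  by_cases h1 : ρ ^ 2 ≤ x 1 ^ 2
  · exact Or.inl (Or.inr (key 1 h1))
  · exact Or.inr (key 2 (by linarith))

lemma dil_le {N A : Set E3} (hN : MeasurableSet N) (hA : MeasurableSet A) {g : E3 → ℝ≥0∞}
    (hg : Measurable g) {τ : ℝ} (h1 : 1 ≤ τ) (hNA : ∀ x ∈ N, τ • x ∈ A) :
    ∫⁻ x in N, g (τ • x) ≤ ∫⁻ x in A, g x := by
  have e1 : ∫⁻ x in N, g (τ • x) ≤ ∫⁻ x, (A.indicator g) (τ • x) := by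
    rw [← lintegral_indicator hN]
    refine lintegral_mono fun x => ?_
    by_cases hx : x ∈ N
    · rw [Set.indicator_of_mem hx, Set.indicator_of_mem (hNA x hx)]
    · rw [Set.indicator_of_notMem hx]; exact zero_le
  refine e1.trans ?_
  have hτ : τ ≠ 0 := by linarith
  have h3 := Measure.map_addHaar_smul (volume : Measure E3) hτ
  have h4 := lintegral_map (μ := (volume : Measure E3)) (hg.indicator hA) (measurable_const_smul τ)
  rw [← h4, h3, lintegral_smul_measure, lintegral_indicator hA]
  have : ENNReal.ofReal |(τ ^ 3)⁻¹| ≤ 1 := by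
    rw [ENNReal.ofReal_le_one, abs_of_pos (by positivity)]
    exact inv_le_one_of_one_le₀ (one_le_pow₀ h1)
  simp only [finrank_euclideanSpace, Fintype.card_fin, smul_eq_mul]
  calc _ ≤ 1 * ∫⁻ a in A, g a := by gcongr
    _ = _ := one_mul _

/-- The shell `{1.05 ≤ |x| ≤ 1.1}`. -/
def Nsh : Set E3 := {x | 1.05 ≤ ‖x‖ ∧ ‖x‖ ≤ 1.1}

lemma Nsh_BM : BM Nsh := by
  refine ⟨(isBounded_ball (x := (0 : E3)) (r := 2)).subset fun x hx => ?_, ?_⟩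
  · have := hx.2
    simp; linarith
  · exact (measurableSet_le (measurable_const (a := (1.05 : ℝ))) measurable_norm).inter
      (measurableSet_le measurable_norm (measurable_const (a := (1.1 : ℝ))))

lemma shell_BM (ρ : ℝ) : BM (shell ρ) :=
  ⟨isBounded_ball.subset Set.inter_subset_right,
    (measurableSet_le measurable_const (by fun_prop)).inter measurableSet_ball⟩

/-- The inner shell `Nsh` is compared with `shell 1` by the dilation of factor `1.75`, along which the
segments stay in the annulus. -/
lemma PC_dil {s : ℝ} (hs : 1 ≤ s) : PC (mean (cap 1 0 1)) s Nsh (Ann 1) := by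
  have hs0 : 0 < s := by linarith
  obtain ⟨C, hC, H⟩ := PC_shell (ρ := 1) one_pos hs
  have key : ∃ C', 0 ≤ C' ∧ ∀ η : E3 → ℝ, ContDiff ℝ 1 η →
      nm (fun x => η ((1.75 : ℝ) • x) - η x) s Nsh ≤ C' * nm (fderiv ℝ η) s (Ann 1) := by
    refine ⟨((ENNReal.ofReal 1 ^ s) ^ (1 / s)).toReal, ENNReal.toReal_nonneg, fun η hη => ?_⟩
    refine nm_le_of_lint (hη.continuous_fderiv (by simp)) (BM_Ann 1) hs0
      (ENNReal.rpow_ne_top_of_nonneg hs0.le (by simp)) ?_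
    have gm : Measurable fun z => ‖fderiv ℝ η z‖ₑ ^ s :=
      ((hη.continuous_fderiv (by simp)).enorm.measurable).pow_const s
    have hl : ∀ x y, ‖η x - η y‖ₑ ^ s ≤ ‖x - y‖ₑ ^ s *
      (∫⁻ t in Set.Ioc (0 : ℝ) 1, (fun z => ‖fderiv ℝ η z‖ₑ ^ s) (y + t • (x - y))) := line_le hη hs
    revert gm hl
    change _ → _ → ∫⁻ x in Nsh, ‖η ((1.75 : ℝ) • x) - η x‖ₑ ^ s ≤ ENNReal.ofReal 1 ^ s *
      ∫⁻ x in Ann 1, (fun z => ‖fderiv ℝ η z‖ₑ ^ s) x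
    generalize (fun z => ‖fderiv ℝ η z‖ₑ ^ s) = g
    intro gm hl
    calc ∫⁻ x in Nsh, ‖η ((1.75 : ℝ) • x) - η x‖ₑ ^ s
        ≤ ∫⁻ x in Nsh, ENNReal.ofReal 1 ^ s *
            ∫⁻ t in Set.Ioc (0 : ℝ) 1, g ((1 + t * 0.75) • x) := by
          refine setLIntegral_mono' Nsh_BM.2 fun x hx => (hl _ x).trans ?_
          have e : (1.75 : ℝ) • x - x = (0.75 : ℝ) • x := by
            rw [show (1.75 : ℝ) = 0.75 + 1 by norm_num, add_smul, one_smul]; abel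
          have e2 : ∀ t : ℝ, x + t • ((1.75 : ℝ) • x - x) = (1 + t * 0.75) • x := by
            intro t; rw [e, smul_smul, add_smul, one_smul]
          simp only [e2]
          gcongr
          rw [e, ← ofReal_norm, norm_smul]
          refine ENNReal.ofReal_le_ofReal ?_
          have := hx.2
          norm_num; linarith
      _ = ENNReal.ofReal 1 ^ s * ∫⁻ x in Nsh, ∫⁻ t in Set.Ioc (0 : ℝ) 1, g ((1 + t * 0.75) • x) :=
          lintegral_const_mul' _ _ (ENNReal.rpow_ne_top_of_nonneg hs0.le (by simp))
      _ ≤ _ := by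
          refine mul_le_mul_right ?_ _
          refine seg_bound (h := fun x t => g ((1 + t * 0.75) • x)) (gm.comp (by fun_prop)) Nsh_BM
            (a := 0) (b := 1) (by norm_num) fun t ht => ?_
          refine dil_le Nsh_BM.2 (BM_Ann 1).2 gm (by linarith [ht.1]) fun x hx => ?_
          obtain ⟨h1, h2⟩ := hx
          have h3 : ‖(1 + t * 0.75) • x‖ = (1 + t * 0.75) * ‖x‖ := by
            rw [norm_smul, Real.norm_of_nonneg (by linarith [ht.1])]
          have := ht.1; have := ht.2
          refine ⟨?_, ?_⟩ <;> simp only [mem_ball, dist_zero_right, h3, not_lt]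
          · nlinarith
          · nlinarith
  obtain ⟨C', hC', H'⟩ := key
  refine ⟨C + C', by positivity, fun η hη => ?_⟩
  have hc := hη.continuous
  set c := mean (cap 1 0 1) η
  have h1 : nm (fun x => η ((1.75 : ℝ) • x) - c) s Nsh ≤ nm (fun x => η x - c) s (shell 1) := by
    have := nm_le_of_lint (f := fun x => η ((1.75 : ℝ) • x) - c) (g := fun x => η x - c) (D := Nsh)
      (by fun_prop) (shell_BM 1) hs0 (K := 1) (by simp) (by
        rw [one_mul]
        refine dil_le (g := fun x => ‖η x - c‖ₑ ^ s) Nsh_BM.2 (shell_BM 1).2 ?_ (by norm_num)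
          fun x hx => ?_
        · exact ((by fun_prop : Continuous fun x => η x - c).enorm.measurable).pow_const s
        · obtain ⟨h1, h2⟩ := hx
          have h3 : ‖(1.75 : ℝ) • x‖ = 1.75 * ‖x‖ := by
            rw [norm_smul, Real.norm_of_nonneg (by norm_num)]
          refine ⟨?_, ?_⟩ <;> simp only [mem_ball, dist_zero_right, h3, Set.mem_ofPred_eq]
          · nlinarith
          · linarith)
    simpa using this
  calc nm (fun x => η x - c) s Nsh
      = nm (fun x => (η ((1.75 : ℝ) • x) - c) + (-1) * (η ((1.75 : ℝ) • x) - η x)) s Nsh := by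
        congr 1; funext x; ring
    _ ≤ nm (fun x => η ((1.75 : ℝ) • x) - c) s Nsh +
        nm (fun x => (-1) * (η ((1.75 : ℝ) • x) - η x)) s Nsh :=
        nm_add_le (by fun_prop) (by fun_prop) Nsh_BM hs
    _ = nm (fun x => η ((1.75 : ℝ) • x) - c) s Nsh + nm (fun x => η ((1.75 : ℝ) • x) - η x) s Nsh := by
        rw [nm_smul (-1) (fun x => η ((1.75 : ℝ) • x) - η x)]; simp
    _ ≤ C * nm (fderiv ℝ η) s (Ann 1) + C' * nm (fderiv ℝ η) s (Ann 1) :=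
        add_le_add (h1.trans (H η hη)) (H' η hη)
    _ = _ := by ring

lemma PC_ball {ρ : ℝ} (hρ : 0 < ρ) {s : ℝ} (hs : 1 ≤ s) :
    PC (mean (ball 0 ρ)) s (ball 0 ρ) (ball 0 ρ) :=
  PC_convex (convex_ball _ _) (BM_ball _) (BM_ball _) le_rfl
    (isOpen_ball.measure_pos _ (nonempty_ball.2 hρ)).ne' hs

/-! ### Trigonometric polynomials -/

/-- The phase `k · x`. -/
def kdot (k : Fin 3 → ℤ) (x : E3) : ℝ := ∑ j, (k j : ℝ) * x j

/-- The real trigonometric polynomial `x ↦ ∑_{k ∈ s} Re (c_k e^{i k·x})`. -/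
def T (s : Finset (Fin 3 → ℤ)) (c : (Fin 3 → ℤ) → ℂ) (x : E3) : ℝ :=
  ∑ k ∈ s, ((c k).re * Real.cos (kdot k x) - (c k).im * Real.sin (kdot k x))

/-- Coefficients of the partial derivative `∂_j`. -/
def Dc (j : Fin 3) (c : (Fin 3 → ℤ) → ℂ) (k : Fin 3 → ℤ) : ℂ := Complex.I * (k j : ℝ) * c k

/-- Coefficients after applying the real Fourier multiplier `m`. -/
def mc (m : (Fin 3 → ℤ) → ℝ) (c : (Fin 3 → ℤ) → ℂ) (k : Fin 3 → ℤ) : ℂ := (m k : ℂ) * c k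

lemma kdot_smooth (k : Fin 3 → ℤ) : Sm (kdot k) := by
  unfold kdot Sm; fun_prop

lemma T_smooth (s c) : Sm (T s c) := by
  have := kdot_smooth
  unfold T Sm at *; fun_prop

lemma pd3_kdot (k : Fin 3 → ℤ) (j : Fin 3) (x : E3) : pd3 j (kdot k) x = k j := by
  have : HasFDerivAt (kdot k) (∑ j, (k j : ℝ) • (EuclideanSpace.proj j : E3 →L[ℝ] ℝ)) x := by
    have h := (∑ j, (k j : ℝ) • (EuclideanSpace.proj j : E3 →L[ℝ] ℝ)).hasFDerivAt (x := x)
    convert h using 1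
    ext y; simp [kdot]
  rw [pd3, this.fderiv]
  simp

lemma pd3_cos {f : E3 → ℝ} (hf : Differentiable ℝ f) (j : Fin 3) (x : E3) :
    pd3 j (fun y => Real.cos (f y)) x = - Real.sin (f x) * pd3 j f x := by
  simp only [pd3]; rw [fderiv_cos (hf x)]; simp

lemma pd3_sin {f : E3 → ℝ} (hf : Differentiable ℝ f) (j : Fin 3) (x : E3) :
    pd3 j (fun y => Real.sin (f y)) x = Real.cos (f x) * pd3 j f x := by
  simp only [pd3]; rw [fderiv_sin (hf x)]; simp

lemma pd3_T (s c) (j : Fin 3) : pd3 j (T s c) = T s (Dc j c) := by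
  funext x
  have hk := fun k => (kdot_smooth k).diff
  unfold T
  rw [pd3_sum s (fun k => by have := hk k; fun_prop)]
  refine Finset.sum_congr rfl fun k _ => ?_
  rw [pd3_sub (by have := hk k; fun_prop) (by have := hk k; fun_prop),
    pd3_mul (by fun_prop) (by have := hk k; fun_prop),
    pd3_mul (by fun_prop) (by have := hk k; fun_prop), pd3_const, pd3_const,
    pd3_cos (hk k), pd3_sin (hk k), pd3_kdot]
  simp [Dc]; ring

lemma T_add (s c d x) : T s (fun k => c k + d k) x = T s c x + T s d x := by
  simp only [T, ← Finset.sum_add_distrib]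
  exact Finset.sum_congr rfl fun k _ => by simp; ring

lemma T_smul (s) (a : ℝ) (c x) : T s (fun k => (a : ℂ) * c k) x = a * T s c x := by
  simp only [T, Finset.mul_sum]
  exact Finset.sum_congr rfl fun k _ => by simp; ring

lemma T_neg (s c x) : T s (fun k => - c k) x = - T s c x := by
  simp only [T, ← Finset.sum_neg_distrib]
  exact Finset.sum_congr rfl fun k _ => by simp; ring

lemma T_sum {ι : Type*} (u : Finset ι) (s) (c : ι → (Fin 3 → ℤ) → ℂ) (x) :
    T s (fun k => ∑ i ∈ u, c i k) x = ∑ i ∈ u, T s (c i) x := by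
  simp only [T]
  rw [Finset.sum_comm]
  refine Finset.sum_congr rfl fun k _ => ?_
  simp [Finset.sum_mul, Finset.sum_sub_distrib]

lemma T_mono {s s' : Finset (Fin 3 → ℤ)} (h : s ⊆ s') (c) (x : E3) :
    T s' (fun k => if k ∈ s then c k else 0) x = T s c x := by
  classical
  simp only [T]
  rw [← Finset.sum_subset h]
  · exact Finset.sum_congr rfl fun k hk => by simp [hk]
  · intro k _ hk; simp [hk]

/-- `2π`-periodicity in each coordinate. -/
def Per (f : E3 → ℝ) : Prop :=
  ∀ (j : Fin 3) (x : E3), f (x + EuclideanSpace.single j (2 * Real.pi)) = f x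

lemma T_per (s c) : Per (T s c) := by
  intro j x
  simp only [T]
  refine Finset.sum_congr rfl fun k _ => ?_
  have : kdot k (x + EuclideanSpace.single j (2 * Real.pi)) = kdot k x + (k j) * (2 * Real.pi) := by
    simp [kdot, mul_add, Finset.sum_add_distrib]
  rw [this, Real.cos_add_int_mul_two_pi, Real.sin_add_int_mul_two_pi]

/-- The closed period cell `[-π, π]³`. -/
def Q : Set E3 := {x | ∀ i, x i ∈ Set.Icc (-Real.pi) Real.pi}

lemma Q_preimage : Q = (@WithLp.ofLp 2 (Fin 3 → ℝ)) ⁻¹'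
    (Set.Icc (fun _ => -Real.pi) (fun _ => Real.pi)) := by
  ext x; simp [Q, Set.mem_Icc, Pi.le_def, forall_and]

lemma Q_compact : IsCompact Q := by
  have : Q = (EuclideanSpace.equiv (Fin 3) ℝ) ⁻¹'
    (Set.Icc (fun _ => -Real.pi) (fun _ => Real.pi)) := by
    ext x; simp [Q, Set.mem_Icc, Pi.le_def, forall_and]
  rw [this]
  exact (EuclideanSpace.equiv (Fin 3) ℝ).toHomeomorph.isCompact_preimage.2 isCompact_Icc

lemma Q_bdd : Bornology.IsBounded Q := Q_compact.isBounded

lemma Q_meas : MeasurableSet Q := Q_compact.measurableSet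

lemma intQ {f : E3 → ℝ} (hf : Continuous f) : IntegrableOn f Q := integrableOn_of_cont hf Q_bdd

/-- The integral of a derivative of a periodic function over the period cell vanishes. -/
lemma integral_pd3_per {h : E3 → ℝ} (hh : ContDiff ℝ 1 h) (hp : Per h) (j : Fin 3) :
    ∫ x in Q, pd3 j h x = 0 := by
  have hd : Differentiable ℝ h := hh.differentiable (by simp)
  let e := (EuclideanSpace.equiv (Fin 3) ℝ).symm
  have h1 : ∫ x in Q, pd3 j h x =
      ∫ y in Set.Icc (fun _ : Fin 3 => -Real.pi) (fun _ => Real.pi), pd3 j h (e y) := by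
    rw [← (PiLp.volume_preserving_ofLp (Fin 3)).setIntegral_preimage_emb
      ((MeasurableEquiv.toLp 2 (Fin 3 → ℝ)).symm.measurableEmbedding), Q_preimage]
    rfl
  rw [h1]
  have hcont : Continuous (pd3 j h) := by
    have := (hh.continuous_fderiv (by simp)).clm_apply
      (continuous_const (y := (EuclideanSpace.single j (1 : ℝ) : E3)))
    exact this
  have key := integral_divergence_of_hasFDerivAt_off_countable' (n := 2) (E := ℝ)
    (fun _ => -Real.pi) (fun _ => Real.pi) (fun _ => by simp only []; linarith [Real.pi_pos])
    (fun i y => if i = j then h (e y) else 0)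
    (fun i y => if i = j then (fderiv ℝ h (e y)).comp (e : (Fin 3 → ℝ) →L[ℝ] E3) else 0) ∅
    (by simp) ?_ ?_ ?_
  · have e1 : ∀ y, (∑ i : Fin 3, (if i = j then
        (fderiv ℝ h (e y)).comp (e : (Fin 3 → ℝ) →L[ℝ] E3) else 0) (Pi.single i 1))
        = pd3 j h (e y) := by
      intro y
      rw [Finset.sum_eq_single j (fun i _ hi => by simp [hi]) (by simp)]
      simp only [if_true, pd3]
      rfl
    simp only [e1] at key
    rw [key, Finset.sum_eq_single j (fun i _ hi => by simp [hi]) (by simp), sub_eq_zero]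
    refine setIntegral_congr_fun measurableSet_Icc fun y _ => ?_
    simp only [if_true]
    have e2 : e (j.insertNth Real.pi y) = e (j.insertNth (-Real.pi) y)
        + EuclideanSpace.single j (2 * Real.pi) := by
      ext i
      refine Fin.succAboveCases j ?_ ?_ i
      · simp [e]; ring
      · intro i; simp [e]
    rw [e2, hp]
  · intro i
    by_cases hij : i = j
    · simp only [hij, if_true]; have := hh.continuous; fun_prop
    · simp only [hij, if_false]; fun_prop
  · intro y _ i
    by_cases hij : i = j
    · simp only [hij, if_true]
      exact (hd (e y)).hasFDerivAt.comp y e.toContinuousLinearMap.hasFDerivAt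
    · simp only [hij, if_false]; exact hasFDerivAt_const _ _
  · refine ContinuousOn.integrableOn_compact isCompact_Icc (Continuous.continuousOn ?_)
    refine continuous_finsetSum _ fun i _ => ?_
    by_cases hij : i = j
    · simp only [hij, if_true]
      exact hcont.comp e.continuous
    · simp only [hij, if_false]; fun_prop

/-! ### Density of trigonometric polynomials and duality on the period cell -/

lemma BM_Q : BM Q := ⟨Q_bdd, Q_meas⟩

/-- The projection of the period cell onto the torus. -/
def zmap : C(Q, UnitAddTorus (Fin 3)) where
  toFun x i := ((x.1 i / (2 * Real.pi) : ℝ) : UnitAddCircle)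
  continuous_toFun := by
    refine continuous_pi fun i => ?_
    exact (AddCircle.continuous_mk' 1).comp (by fun_prop)

lemma zmap_quot : Topology.IsQuotientMap zmap := by
  have : CompactSpace Q := isCompact_iff_compactSpace.1 Q_compact
  refine IsClosedMap.isQuotientMap zmap.continuous.isClosedMap zmap.continuous ?_
  intro y
  have hs : ∀ i, ∃ a : ℝ, a ∈ Set.Icc (-Real.pi) Real.pi ∧
      ((a / (2 * Real.pi) : ℝ) : UnitAddCircle) = y i := by
    intro i
    obtain ⟨b, hb, hb'⟩ : ∃ b ∈ Set.Ico (-(1/2) : ℝ) (-(1/2) + 1), ((b : ℝ) : UnitAddCircle) = y i :=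
      ⟨AddCircle.equivIco 1 (-(1/2)) (y i), (AddCircle.equivIco 1 (-(1/2)) (y i)).2,
        (AddCircle.equivIco 1 (-(1/2))).symm_apply_apply (y i)⟩
    refine ⟨b * (2 * Real.pi), ⟨?_, ?_⟩, ?_⟩
    · nlinarith [Real.pi_pos, hb.1]
    · nlinarith [Real.pi_pos, hb.2]
    · rw [mul_div_assoc, div_self (by positivity), mul_one, hb']
  choose a ha ha' using hs
  refine ⟨⟨WithLp.toLp 2 a, fun i => by simpa using ha i⟩, ?_⟩
  funext i
  simpa [zmap] using ha' i

lemma mFourier_zmap (k : Fin 3 → ℤ) (x : Q) :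
    UnitAddTorus.mFourier k (zmap x) = Complex.exp ((kdot k x.1 : ℝ) * Complex.I) := by
  simp only [UnitAddTorus.mFourier, ContinuousMap.coe_mk, zmap]
  simp only [fourier_coe_apply, ← Complex.exp_sum]
  congr 1
  simp only [kdot, Complex.ofReal_sum, Finset.sum_mul]
  refine Finset.sum_congr rfl fun i _ => ?_
  have : (Real.pi : ℂ) ≠ 0 := by exact_mod_cast Real.pi_ne_zero
  push_cast
  field_simp

/-- Uniform density of trigonometric polynomials among continuous functions on the cell that are
compatible with the identification of opposite faces. -/
lemma trig_dense {f : E3 → ℝ} (hf : Continuous f)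
    (hper : ∀ x ∈ Q, ∀ y ∈ Q, (∀ i, ∃ n : ℤ, x i = y i + n * (2 * Real.pi)) → f x = f y)
    {ε : ℝ} (hε : 0 < ε) : ∃ s c, ∀ x ∈ Q, |T s c x - f x| ≤ ε := by
  let g : C(Q, ℂ) := ⟨fun x => (f x.1 : ℂ), by fun_prop⟩
  have hfac : Function.FactorsThrough g zmap := by
    intro x y hxy
    have : f x.1 = f y.1 := by
      refine hper _ x.2 _ y.2 fun i => ?_
      have := congrFun hxy i
      simp only [zmap, ContinuousMap.coe_mk] at this
      rw [QuotientAddGroup.eq] at this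
      rw [AddSubgroup.mem_zmultiples_iff] at this
      obtain ⟨n, hn⟩ := this
      refine ⟨-n, ?_⟩
      have hπ := Real.pi_pos
      simp only [zsmul_eq_mul, mul_one] at hn
      push_cast
      field_simp at hn
      linarith
    simp [g, this]
  let G := zmap_quot.lift g hfac
  have hG : ∀ x : Q, G (zmap x) = f x.1 := fun x => by
    have : (G.comp zmap) x = g x := by rw [zmap_quot.lift_comp]
    exact this
  have hmem : G ∈ (Submodule.span ℂ (Set.range
      (UnitAddTorus.mFourier (d := Fin 3)))).topologicalClosure := by
    rw [UnitAddTorus.span_mFourier_closure_eq_top]; trivial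
  obtain ⟨H, hH, hGH⟩ := Metric.mem_closure_iff.1 hmem ε hε
  obtain ⟨c, rfl⟩ := Finsupp.mem_span_range_iff_exists_finsupp.1 hH
  refine ⟨c.support, c, fun x hx => ?_⟩
  have h1 := (ContinuousMap.dist_apply_le_dist (f := G)
    (g := c.sum fun i a => a • UnitAddTorus.mFourier i) (zmap ⟨x, hx⟩)).trans hGH.le
  have h2 : T c.support c x = ((c.sum fun i a => a • UnitAddTorus.mFourier (d := Fin 3) i)
      (zmap ⟨x, hx⟩)).re := by
    simp only [Finsupp.sum, ContinuousMap.coe_sum, Finset.sum_apply, ContinuousMap.smul_apply,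
      mFourier_zmap, Complex.re_sum, T]
    refine Finset.sum_congr rfl fun k _ => ?_
    simp [Complex.exp_ofReal_mul_I_re, Complex.exp_ofReal_mul_I_im]
  rw [hG, dist_comm, Complex.dist_eq] at h1
  refine le_trans ?_ h1
  rw [h2]
  refine le_trans (le_of_eq ?_) (Complex.abs_re_le_norm _)
  simp

lemma T_compat (s c) {x y : E3} (h : ∀ i, ∃ n : ℤ, x i = y i + n * (2 * Real.pi)) :
    T s c x = T s c y := by
  choose n hn using h
  simp only [T]
  refine Finset.sum_congr rfl fun k _ => ?_
  have : kdot k x = kdot k y + ((∑ j, k j * n j : ℤ) : ℝ) * (2 * Real.pi) := by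
    simp only [kdot, Int.cast_sum, Finset.sum_mul, ← Finset.sum_add_distrib]
    refine Finset.sum_congr rfl fun i _ => ?_
    rw [hn i]; push_cast; ring
  rw [this, Real.cos_add_int_mul_two_pi, Real.sin_add_int_mul_two_pi]

/-- The odd power `sign t · |t|^a`, written so that its continuity is evident. -/
def sp (a t : ℝ) : ℝ := (max t 0) ^ a - (max (-t) 0) ^ a

lemma sp_cont {a : ℝ} (ha : 0 < a) : Continuous (sp a) := by
  unfold sp
  exact ((continuous_id.max continuous_const).rpow_const fun _ => Or.inr ha.le).sub
    ((continuous_neg.max continuous_const).rpow_const fun _ => Or.inr ha.le)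

lemma mul_sp {a : ℝ} (ha : 0 < a) (t : ℝ) : t * sp a t = |t| ^ (a + 1) := by
  rcases le_total 0 t with h | h
  · rw [sp, max_eq_left h, max_eq_right (by linarith), Real.zero_rpow ha.ne', abs_of_nonneg h,
      Real.rpow_add_one' h (by linarith)]; ring
  · rw [sp, max_eq_right h, max_eq_left (by linarith), Real.zero_rpow ha.ne', abs_of_nonpos h,
      Real.rpow_add_one' (by linarith) (by linarith)]; ring

lemma abs_sp {a : ℝ} (ha : 0 < a) (t : ℝ) : |sp a t| = |t| ^ a := by
  rcases le_total 0 t with h | h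
  · rw [sp, max_eq_left h, max_eq_right (by linarith), Real.zero_rpow ha.ne', abs_of_nonneg h,
      sub_zero, abs_of_nonneg (by positivity)]
  · rw [sp, max_eq_right h, max_eq_left (by linarith), Real.zero_rpow ha.ne', abs_of_nonpos h,
      zero_sub, abs_neg, abs_of_nonneg (Real.rpow_nonneg (by linarith) _)]

/-- The `L^r` norm of a trigonometric polynomial is attained in duality against trigonometric
polynomials. -/
lemma norming {r r' : ℝ} (hr : r.HolderConjugate r') {M : ℝ} (s c)
    (h : ∀ s' c', |∫ x in Q, T s c x * T s' c' x| ≤ M * nm (T s' c') r' Q) (hM : 0 ≤ M) :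
    nm (T s c) r Q ≤ M := by
  have hr1 := hr.lt
  have hr1' := hr.symm.lt
  have ha : 0 < r - 1 := by linarith
  set f := T s c with hf
  have hfc : Continuous f := (T_smooth s c).cont
  set g := fun x => sp (r - 1) (f x) with hg
  have hgc : Continuous g := (sp_cont ha).comp hfc
  set N := nm f r Q with hN
  have hN0 : 0 ≤ N := nm_nonneg _ _ _
  have hNr : N ^ r = ∫ x in Q, |f x| ^ r := nm_rpow hfc BM_Q (by linarith)
  have hgN : nm g r' Q = N ^ (r - 1) := by
    rw [nm_eq hgc BM_Q (by linarith)]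
    have e : ∀ x, ‖g x‖ ^ r' = |f x| ^ r := fun x => by
      rw [Real.norm_eq_abs, hg]; simp only []
      rw [abs_sp ha, ← Real.rpow_mul (abs_nonneg _), hr.sub_one_mul_conj]
    simp only [e]
    rw [← hNr, ← Real.rpow_mul hN0]
    congr 1
    have := hr.div_conj_eq_sub_one
    rw [mul_one_div]; exact this
  have hfg : ∫ x in Q, f x * g x = N ^ r := by
    rw [hNr]
    refine integral_congr_ae (Eventually.of_forall fun x => ?_)
    simp only [hg]; rw [mul_sp ha]; simp
  have key : N ^ r ≤ M * N ^ (r - 1) := by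
    refine le_of_forall_pos_le_add fun δ hδ => ?_
    set C := M * (volume Q).toReal ^ (1 / r') + ∫ x in Q, |f x| with hC
    have hC0 : 0 ≤ C := add_nonneg (by positivity) (integral_nonneg fun _ => abs_nonneg _)
    obtain ⟨s', c', hε⟩ := trig_dense hgc
      (fun x _ y _ hxy => by simp only [hg]; rw [hf, T_compat s c hxy])
      (ε := δ / (C + 1)) (by positivity)
    set ε := δ / (C + 1) with hεd
    have hε0 : 0 < ε := by positivity
    set w := T s' c' with hw
    have hwc : Continuous w := (T_smooth s' c').cont
    have h1 : ∫ x in Q, f x * g x = (∫ x in Q, f x * w x) - ∫ x in Q, f x * (w x - g x) := by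
      rw [← integral_sub (f := fun x => f x * w x) (g := fun x => f x * (w x - g x))
        (intQ (hfc.mul hwc)) (intQ (hfc.mul (hwc.sub hgc)))]
      refine integral_congr_ae (Eventually.of_forall fun x => ?_)
      simp only []; ring
    have h2 : |∫ x in Q, f x * (w x - g x)| ≤ ε * ∫ x in Q, |f x| := by
      refine (abs_setIntegral_le _ _).trans ?_
      rw [← integral_const_mul]
      refine setIntegral_mono_on (intQ (hfc.mul (hwc.sub hgc)).abs) (intQ (hfc.abs.const_mul ε))
        Q_meas fun x hx => ?_
      rw [abs_mul, mul_comm]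
      exact mul_le_mul_of_nonneg_right (hε x hx) (abs_nonneg _)
    have h3 : nm w r' Q ≤ N ^ (r - 1) + (volume Q).toReal ^ (1 / r') * ε := by
      have e : w = fun x => g x + (w x - g x) := by funext x; ring
      rw [e, ← hgN]
      refine (nm_add_le hgc (hwc.sub hgc) BM_Q hr1'.le).trans ?_
      gcongr
      exact nm_le_of_bound BM_Q (by linarith) hε0.le (fun x hx => hε x hx)
    have h4 := h s' c'
    have h5 : (∫ x in Q, f x * w x) ≤ M * nm w r' Q := (le_abs_self _).trans h4
    have h6 : M * nm w r' Q ≤ M * (N ^ (r - 1) + (volume Q).toReal ^ (1 / r') * ε) := by gcongr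
    have h7 : ε * C ≤ δ := by
      rw [hεd, div_mul_eq_mul_div, div_le_iff₀ (by positivity)]; nlinarith
    have h8 := neg_abs_le (∫ x in Q, f x * (w x - g x))
    rw [← hfg, h1]
    have : ε * C = M * ((volume Q).toReal ^ (1 / r') * ε) + ε * ∫ x in Q, |f x| := by
      rw [hC]; ring
    nlinarith
  rcases hN0.eq_or_lt with h0 | h0
  · rw [← h0]; exact hM
  · have hp : 0 < N ^ (r - 1) := Real.rpow_pos_of_pos h0 _
    have : N ^ r = N * N ^ (r - 1) := by
      rw [Real.rpow_sub_one h0.ne']; field_simp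
    rw [this] at key
    exact le_of_mul_le_mul_right key hp

lemma pd3_cont {f : E3 → ℝ} (hf : ContDiff ℝ 1 f) (j : Fin 3) : Continuous (pd3 j f) := by
  have := (hf.continuous_fderiv (by simp)).clm_apply
    (continuous_const (y := (EuclideanSpace.single j (1 : ℝ) : E3)))
  exact this

lemma ibpQ {f g : E3 → ℝ} (hf : ContDiff ℝ 1 f) (hg : ContDiff ℝ 1 g)
    (pf : Per f) (pg : Per g) (j : Fin 3) :
    ∫ x in Q, f x * pd3 j g x = - ∫ x in Q, pd3 j f x * g x := by
  have h0 := integral_pd3_per (h := fun y => f y * g y) (hf.mul hg)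
    (fun j x => by simp only [pf j x, pg j x]) j
  have e : ∀ x, pd3 j (fun y => f y * g y) x = f x * pd3 j g x + pd3 j f x * g x :=
    pd3_mul (hf.differentiable (by simp)) (hg.differentiable (by simp)) j
  simp only [e] at h0
  rw [integral_add (f := fun x => f x * pd3 j g x) (g := fun x => pd3 j f x * g x)
    (intQ (hf.continuous.mul (pd3_cont hg j)))
    (intQ ((pd3_cont hf j).mul hg.continuous))] at h0
  linarith

section

/-! ### The Bellman function -/

/-- Parameters of the Bellman function: `n = q / 2` where `q` is conjugate to `p ≥ 3`. -/
structure BP where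
  p : ℝ
  n : ℝ
  L : ℝ
  K : ℝ
  e : ℝ
  hp : 3 ≤ p
  hn : 1 / 2 < n
  hn1 : n ≤ 3 / 4
  hpn : (2 * n - 1) * (p / 2 - 1) = 1 - n
  hL : L = 5 * 4 ^ (p / 2 - 1)
  hK : K = 135 / (n * (2 * n - 1))
  he : 0 < e

namespace BP
variable (b : BP)

/-- `y² + ε²`. -/
def r (y : ℝ) : ℝ := y ^ 2 + b.e ^ 2
/-- `(y² + ε²)^{q/2}`. -/
def A (y : ℝ) : ℝ := b.r y ^ b.n
/-- `(y² + ε²)^{1 - q}`. -/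
def S (y : ℝ) : ℝ := b.r y ^ (1 - 2 * b.n)
/-- `(x² + ε²)^{p/2}`. -/
def P (x : ℝ) : ℝ := b.r x ^ (b.p / 2)
/-- The Gaussian factor `exp (-x² (y² + ε²)^{1 - q})`. -/
def E (x y : ℝ) : ℝ := Real.exp (-(x ^ 2 * b.S y))

/-- The Bellman function. -/
def B (x y : ℝ) : ℝ := b.L * b.P x + b.K * b.A y - b.A y * b.E x y
/-- `∂B/∂x`. -/
def Bx (x y : ℝ) : ℝ := b.L * b.p * x * (b.P x / b.r x) + 2 * x * b.A y * b.S y * b.E x y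
/-- `∂B/∂y`. -/
def By (x y : ℝ) : ℝ := 2 * y * (b.A y / b.r y) *
  (b.K * b.n - (b.n + (2 * b.n - 1) * (x ^ 2 * b.S y)) * b.E x y)
/-- `∂²B/∂x²`. -/
def Bxx (x y : ℝ) : ℝ := b.L * b.p * (b.P x / b.r x)
  + b.L * b.p * (b.p - 2) * x ^ 2 * (b.P x / b.r x ^ 2)
  + b.A y * b.S y * (2 - 4 * (x ^ 2 * b.S y)) * b.E x y
/-- `∂²B/∂x∂y`. -/
def Bxy (x y : ℝ) : ℝ := 4 * x * y * (b.A y * b.S y / b.r y) * b.E x y *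
  ((1 - b.n) + (2 * b.n - 1) * (x ^ 2 * b.S y))
/-- `∂²B/∂y²`. -/
def Byy (x y : ℝ) : ℝ := 2 * (b.A y / b.r y) *
    (b.K * b.n - (b.n + (2 * b.n - 1) * (x ^ 2 * b.S y)) * b.E x y)
  + 4 * y ^ 2 * (b.A y / b.r y ^ 2) * (b.K * b.n * (b.n - 1) - b.E x y *
    ((b.n - 1) * (b.n + (2 * b.n - 1) * (x ^ 2 * b.S y)) - (2 * b.n - 1) ^ 2 * (x ^ 2 * b.S y)
      + (b.n + (2 * b.n - 1) * (x ^ 2 * b.S y)) * (2 * b.n - 1) * (x ^ 2 * b.S y)))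

lemma r_pos (y : ℝ) : 0 < b.r y := by
  have := b.he; unfold r; positivity

lemma A_pos (y : ℝ) : 0 < b.A y := Real.rpow_pos_of_pos (b.r_pos y) _
lemma S_pos (y : ℝ) : 0 < b.S y := Real.rpow_pos_of_pos (b.r_pos y) _
lemma P_pos (y : ℝ) : 0 < b.P y := Real.rpow_pos_of_pos (b.r_pos y) _

lemma AAS (y : ℝ) : b.A y ^ 2 * b.S y = b.r y := by
  have h := b.r_pos y
  rw [A, S, ← Real.rpow_natCast, ← Real.rpow_mul h.le, ← Real.rpow_add h]
  conv_rhs => rw [← Real.rpow_one (b.r y)]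
  congr 1; push_cast; ring

section deriv
variable {f g : ℝ → ℝ} {f' g' t : ℝ}

lemma dr (hf : HasDerivAt f f' t) : HasDerivAt (fun t => b.r (f t)) (2 * f t * f') t := by
  have := (hf.pow 2).add_const (b.e ^ 2)
  simpa [r] using this

lemma drpow (hf : HasDerivAt f f' t) (a : ℝ) :
    HasDerivAt (fun t => b.r (f t) ^ a) (a * (b.r (f t) ^ a / b.r (f t)) * (2 * f t * f')) t := by
  have := (b.dr hf).rpow_const (p := a) (Or.inl (b.r_pos _).ne')
  rw [Real.rpow_sub_one (b.r_pos _).ne'] at this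
  convert this using 1; ring

lemma dA (hf : HasDerivAt f f' t) : HasDerivAt (fun t => b.A (f t))
    (b.n * (b.A (f t) / b.r (f t)) * (2 * f t * f')) t := b.drpow hf b.n
lemma dS (hf : HasDerivAt f f' t) : HasDerivAt (fun t => b.S (f t))
    ((1 - 2 * b.n) * (b.S (f t) / b.r (f t)) * (2 * f t * f')) t := b.drpow hf _
lemma dP (hf : HasDerivAt f f' t) : HasDerivAt (fun t => b.P (f t))
    ((b.p / 2) * (b.P (f t) / b.r (f t)) * (2 * f t * f')) t := b.drpow hf _
lemma dE (hf : HasDerivAt f f' t) (hg : HasDerivAt g g' t) :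
    HasDerivAt (fun t => b.E (f t) (g t)) (b.E (f t) (g t) * (-(2 * f t * f' * b.S (g t)
      + f t ^ 2 * ((1 - 2 * b.n) * (b.S (g t) / b.r (g t)) * (2 * g t * g'))))) t := by
  have := (((hf.pow 2).mul (b.dS hg)).neg).exp
  refine HasDerivAt.congr_deriv this ?_
  simp [E]

lemma dB (hf : HasDerivAt f f' t) (hg : HasDerivAt g g' t) :
    HasDerivAt (fun t => b.B (f t) (g t)) (b.Bx (f t) (g t) * f' + b.By (f t) (g t) * g') t := by
  have := (((b.dP hf).const_mul b.L).add ((b.dA hg).const_mul b.K)).sub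
    ((b.dA hg).mul (b.dE hf hg))
  refine HasDerivAt.congr_deriv this ?_
  have h1 := (b.r_pos (g t)).ne'
  have h2 := (b.r_pos (f t)).ne'
  simp only [Bx, By]
  field_simp
  ring

lemma dBx (hf : HasDerivAt f f' t) (hg : HasDerivAt g g' t) :
    HasDerivAt (fun t => b.Bx (f t) (g t)) (b.Bxx (f t) (g t) * f' + b.Bxy (f t) (g t) * g') t := by
  have h1 := (b.r_pos (g t)).ne'
  have h2 := (b.r_pos (f t)).ne'
  have := ((hf.const_mul (b.L * b.p)).mul ((b.dP hf).div (b.dr hf) h2)).add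
    ((((hf.const_mul 2).mul (b.dA hg)).mul (b.dS hg)).mul (b.dE hf hg))
  refine HasDerivAt.congr_deriv this ?_
  simp only [Bxx, Bxy, Pi.mul_apply, Pi.div_apply]
  field_simp
  ring

lemma dBy (hf : HasDerivAt f f' t) (hg : HasDerivAt g g' t) :
    HasDerivAt (fun t => b.By (f t) (g t)) (b.Bxy (f t) (g t) * f' + b.Byy (f t) (g t) * g') t := by
  have h1 := (b.r_pos (g t)).ne'
  have := (((hg.const_mul 2).mul ((b.dA hg).div (b.dr hg) h1))).mul
    ((((((hf.pow 2).mul (b.dS hg)).const_mul (2 * b.n - 1)).const_add b.n).mul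
      (b.dE hf hg)).const_sub (b.K * b.n))
  refine HasDerivAt.congr_deriv this ?_
  simp only [Bxy, Byy, Pi.mul_apply, Pi.div_apply, Pi.pow_apply]
  field_simp
  ring
end deriv

lemma poly_exp {σ : ℝ} (h : 0 ≤ σ) : (1 + σ) ^ 2 * Real.exp (-σ) ≤ 2 := by
  rw [Real.exp_neg, ← div_eq_mul_inv, div_le_iff₀ (Real.exp_pos _)]
  nlinarith [Real.quadratic_le_exp_of_nonneg h]

lemma sig_nonneg (x y : ℝ) : 0 ≤ x ^ 2 * b.S y := mul_nonneg (sq_nonneg _) (b.S_pos y).le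

lemma E_pos (x y : ℝ) : 0 < b.E x y := Real.exp_pos _

lemma L_pos : 0 < b.L := by rw [b.hL]; positivity

lemma K_pos : 0 < b.K := by
  rw [b.hK]; have := b.hn
  exact div_pos (by norm_num) (mul_pos (by linarith) (by linarith))

lemma Bxx_ge (x y : ℝ) : (1 / 2) * (b.A y * b.S y) ≤ b.Bxx x y := by
  have hm : 0 < b.A y * b.S y := mul_pos (b.A_pos y) (b.S_pos y)
  have hs := b.sig_nonneg x y
  have hE := b.E_pos x y
  have hr := b.r_pos x
  have hp := b.hp
  have hLp := b.L_pos
  have hP := b.P_pos x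
  set σ := x ^ 2 * b.S y with hσ
  have hEσ : b.E x y = Real.exp (-σ) := rfl
  have hmid : 0 ≤ b.L * b.p * (b.p - 2) * x ^ 2 * (b.P x / b.r x ^ 2) := by
    have : 0 ≤ b.p - 2 := by linarith
    have : 0 ≤ b.p := by linarith
    positivity
  have h1 : 0 ≤ b.L * b.p * (b.P x / b.r x) := by
    have : 0 ≤ b.p := by linarith
    positivity
  unfold Bxx
  rw [← hσ]
  rcases le_total σ (1 / 4) with h | h
  · have hE2 : 1 / 2 ≤ b.E x y := by
      rw [hEσ]
      linarith [Real.add_one_le_exp (-σ)]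
    have : (1 / 2) ≤ (2 - 4 * σ) * b.E x y := by nlinarith
    have := mul_le_mul_of_nonneg_left this hm.le
    linarith
  · have h2 : σ * b.E x y ≤ 1 := by
      have := poly_exp hs
      rw [← hEσ] at this
      nlinarith [mul_nonneg (sq_nonneg σ) hE.le]
    have h3 : -4 ≤ (2 - 4 * σ) * b.E x y := by nlinarith
    have h4 : b.A y * b.S y / 4 ^ (b.p / 2 - 1) ≤ b.P x / b.r x := by
      have e1 : b.P x / b.r x = b.r x ^ (b.p / 2 - 1) := by
        rw [P, Real.rpow_sub_one hr.ne']
      have hS := b.S_pos y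
      have h5 : (b.S y)⁻¹ / 4 ≤ b.r x := by
        have : (b.S y)⁻¹ / 4 ≤ x ^ 2 := by
          rw [div_le_iff₀ (by norm_num), inv_le_iff_one_le_mul₀ hS]
          linarith
        refine this.trans ?_
        unfold r; linarith [sq_nonneg b.e]
      have h6 := Real.rpow_le_rpow (by positivity) h5 (show 0 ≤ b.p / 2 - 1 by linarith)
      rw [e1]
      refine le_trans (le_of_eq ?_) h6
      rw [Real.div_rpow (by positivity) (by norm_num)]
      congr 1
      have hry := b.r_pos y
      rw [A, S, ← Real.rpow_add hry, ← Real.rpow_neg hry.le, ← Real.rpow_mul hry.le]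
      congr 1
      have := b.hpn
      linarith
    have h7 : 5 * (b.A y * b.S y) ≤ b.L * b.p * (b.P x / b.r x) := by
      have h8 := mul_le_mul_of_nonneg_left h4 (mul_pos hLp (show 0 < b.p by linarith)).le
      refine le_trans ?_ h8
      have e2 : b.L * b.p * (b.A y * b.S y / 4 ^ (b.p / 2 - 1)) = 5 * (b.A y * b.S y) * b.p := by
        rw [b.hL]; field_simp
      rw [e2]; nlinarith
    have := mul_le_mul_of_nonneg_left h3 hm.le
    linarith

lemma Bxy_sq_le (x y : ℝ) : b.Bxy x y ^ 2 ≤ 64 := by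
  have hs := b.sig_nonneg x y
  have hE := b.E_pos x y
  have hn := b.hn
  have hn1 := b.hn1
  have hr := b.r_pos y
  have hA := b.AAS y
  set σ := x ^ 2 * b.S y with hσ
  have hp := poly_exp hs
  have hEσ : b.E x y = Real.exp (-σ) := rfl
  rw [← hEσ] at hp
  have hw : y ^ 2 / b.r y ≤ 1 := by
    rw [div_le_one hr]; unfold r; linarith [sq_nonneg b.e]
  have e1 : b.Bxy x y ^ 2 = 16 * (σ * (y ^ 2 / b.r y)) *
      (b.E x y * ((1 - b.n) + (2 * b.n - 1) * σ)) ^ 2 := by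
    unfold Bxy
    rw [← hσ]
    have : x ^ 2 * (b.A y * b.S y / b.r y) ^ 2 = σ / b.r y := by
      rw [hσ, div_pow, mul_pow]
      have : b.A y ^ 2 * b.S y ^ 2 = b.r y * b.S y := by rw [← hA]; ring
      rw [this]; field_simp
    calc _ = 16 * y ^ 2 * (x ^ 2 * (b.A y * b.S y / b.r y) ^ 2) *
        (b.E x y * ((1 - b.n) + (2 * b.n - 1) * σ)) ^ 2 := by ring
      _ = _ := by rw [this]; ring
  have h1 : (1 - b.n) + (2 * b.n - 1) * σ ≤ 1 + σ := by nlinarith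
  have h1' : 0 ≤ (1 - b.n) + (2 * b.n - 1) * σ := by nlinarith
  have h2 : b.E x y * ((1 - b.n) + (2 * b.n - 1) * σ) ≤ b.E x y * (1 + σ) := by gcongr
  have h3 : (b.E x y * ((1 - b.n) + (2 * b.n - 1) * σ)) ^ 2 ≤ (b.E x y * (1 + σ)) ^ 2 := by
    gcongr
  have h4 : σ * (y ^ 2 / b.r y) ≤ (1 + σ) ^ 2 := by
    have : σ * (y ^ 2 / b.r y) ≤ σ * 1 := by gcongr
    nlinarith
  rw [e1]
  calc _ ≤ 16 * (1 + σ) ^ 2 * (b.E x y * (1 + σ)) ^ 2 := by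
        gcongr
    _ = 16 * ((1 + σ) ^ 2 * b.E x y) ^ 2 := by ring
    _ ≤ 16 * 2 ^ 2 := by gcongr
    _ = 64 := by norm_num

lemma Byy_ge (x y : ℝ) : 258 * (b.A y / b.r y) ≤ b.Byy x y := by
  have hs := b.sig_nonneg x y
  have hE := b.E_pos x y
  have hn := b.hn
  have hn1 := b.hn1
  have hr := b.r_pos y
  set σ := x ^ 2 * b.S y with hσ
  have hp := poly_exp hs
  have hEσ : b.E x y = Real.exp (-σ) := rfl
  rw [← hEσ] at hp
  have hw : y ^ 2 / b.r y ≤ 1 := by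
    rw [div_le_one hr]; unfold r; linarith [sq_nonneg b.e]
  have hw0 : 0 ≤ y ^ 2 / b.r y := by positivity
  set w := y ^ 2 / b.r y with hwd
  have hK : b.K * b.n * (2 * b.n - 1) = 135 := by
    rw [b.hK, mul_assoc]
    have h : 0 < b.n * (2 * b.n - 1) := mul_pos (by linarith) (by linarith)
    exact div_mul_cancel₀ _ h.ne'
  have hKp := b.K_pos
  have e1 : b.Byy x y = (b.A y / b.r y) * (2 * (b.K * b.n - (b.n + (2 * b.n - 1) * σ) * b.E x y)
      + 4 * w * (b.K * b.n * (b.n - 1) - b.E x y *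
    ((b.n - 1) * (b.n + (2 * b.n - 1) * σ) - (2 * b.n - 1) ^ 2 * σ
      + (b.n + (2 * b.n - 1) * σ) * (2 * b.n - 1) * σ))) := by
    unfold Byy
    rw [← hσ, hwd]
    field_simp
  rw [e1, mul_comm]
  refine mul_le_mul_of_nonneg_left ?_ (div_pos (b.A_pos y) hr).le
  set z := b.n + (2 * b.n - 1) * σ with hz
  have hz0 : 0 ≤ z := by nlinarith
  have hz1 : z ≤ 1 + σ := by nlinarith
  have hb : (b.n - 1) * z - (2 * b.n - 1) ^ 2 * σ + z * (2 * b.n - 1) * σ ≤ (1 + σ) ^ 2 := by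
    have : (b.n - 1) * z ≤ 0 := by nlinarith
    have : 0 ≤ (2 * b.n - 1) ^ 2 * σ := by positivity
    have : z * (2 * b.n - 1) * σ ≤ (1 + σ) * 1 * (1 + σ) := by
      exact mul_le_mul (mul_le_mul hz1 (by linarith) (by linarith) (by linarith)) (by linarith)
        hs (by linarith)
    linarith [show (1 + σ) * 1 * (1 + σ) = (1 + σ) ^ 2 by ring]
  have h1 : z * b.E x y ≤ 2 := by
    have : z * b.E x y ≤ (1 + σ) ^ 2 * b.E x y := by
      gcongr; nlinarith
    linarith
  have h2 : b.E x y * ((b.n - 1) * z - (2 * b.n - 1) ^ 2 * σ + z * (2 * b.n - 1) * σ) ≤ 2 := by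
    have := mul_le_mul_of_nonneg_left hb hE.le
    linarith
  clear_value z w
  set Y := b.E x y * ((b.n - 1) * z - (2 * b.n - 1) ^ 2 * σ + z * (2 * b.n - 1) * σ)
  have h3 : w * Y ≤ 2 := by
    rcases le_total 0 Y with h | h
    · nlinarith
    · nlinarith
  have h4 : w * (b.K * b.n * (1 - b.n)) ≤ b.K * b.n * (1 - b.n) := by
    have : 0 ≤ b.K * b.n * (1 - b.n) := by
      have : 0 ≤ 1 - b.n := by linarith
      have : 0 ≤ b.n := by linarith
      positivity
    have := mul_le_mul_of_nonneg_right hw this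
    linarith
  have h5 : 2 * (b.K * b.n) - 4 * (b.K * b.n * (1 - b.n)) = 270 := by linarith
  have h6 : 4 * w * (b.K * b.n * (b.n - 1) - Y)
      = -4 * (w * (b.K * b.n * (1 - b.n))) - 4 * (w * Y) := by ring
  rw [h6]
  linarith

/-- Quantitative convexity of the Bellman function. -/
lemma form_ge (x y : ℝ) : ∃ m : ℝ, 0 < m ∧ ∀ ξ η : ℝ, (1 / 4) * (m * ξ ^ 2 + η ^ 2 / m) ≤
    b.Bxx x y * ξ ^ 2 + 2 * b.Bxy x y * ξ * η + b.Byy x y * η ^ 2 := by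
  have hA := b.A_pos y
  have hS := b.S_pos y
  have hr := b.r_pos y
  have hm : 0 < b.A y * b.S y := mul_pos hA hS
  refine ⟨b.A y * b.S y, hm, fun ξ η => ?_⟩
  have hi : b.A y / b.r y = (b.A y * b.S y)⁻¹ := by
    rw [← b.AAS y]; field_simp
  have h1 := b.Bxx_ge x y
  have h2 := b.Bxy_sq_le x y
  have h3 := b.Byy_ge x y
  rw [hi] at h3
  set m := b.A y * b.S y
  have h4 : |b.Bxy x y| ≤ 8 := abs_le_of_sq_le_sq (by linarith) (by norm_num)
  have h5 := mul_le_mul_of_nonneg_right h1 (sq_nonneg ξ)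
  have h6 := mul_le_mul_of_nonneg_right h3 (sq_nonneg η)
  have h7 : -(16 * (|ξ| * |η|)) ≤ 2 * b.Bxy x y * ξ * η := by
    have : |2 * b.Bxy x y * ξ * η| ≤ 16 * (|ξ| * |η|) := by
      rw [abs_mul, abs_mul, abs_mul, abs_two]
      nlinarith [mul_nonneg (abs_nonneg ξ) (abs_nonneg η)]
    linarith [neg_abs_le (2 * b.Bxy x y * ξ * η)]
  have h8 : 16 * (|ξ| * |η|) ≤ (1 / 4) * (m * ξ ^ 2) + 256 * (m⁻¹ * η ^ 2) := by
    have : 0 ≤ m⁻¹ * (m * |ξ| / 2 - 16 * |η|) ^ 2 := by positivity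
    have e : m⁻¹ * (m * |ξ| / 2 - 16 * |η|) ^ 2 = (1 / 4) * (m * |ξ| ^ 2) - 16 * (|ξ| * |η|)
        + 256 * (m⁻¹ * |η| ^ 2) := by
      field_simp; ring
    rw [e, sq_abs, sq_abs] at this
    linarith
  have h9 : 0 ≤ m⁻¹ * η ^ 2 := by positivity
  rw [show η ^ 2 / m = m⁻¹ * η ^ 2 from div_eq_inv_mul _ _]
  linarith

lemma B_nonneg (x y : ℝ) : 0 ≤ b.B x y := by
  have hE : b.E x y ≤ 1 := Real.exp_le_one_iff.2 (by linarith [b.sig_nonneg x y])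
  have hK : 1 ≤ b.K := by
    have hn := b.hn
    have hn1 := b.hn1
    rw [b.hK, le_div_iff₀ (mul_pos (by linarith) (by linarith))]
    nlinarith
  have := b.A_pos y
  have := mul_pos b.L_pos (b.P_pos x)
  unfold B; nlinarith

lemma B_le (x y : ℝ) : b.B x y ≤ b.L * b.P x + b.K * b.A y := by
  have := mul_pos (b.A_pos y) (b.E_pos x y)
  unfold B; linarith

variable {X : Type*} [NormedAddCommGroup X] [NormedSpace ℝ X] {f g : X → ℝ} {k : WithTop ℕ∞}

lemma cd_r (hf : ContDiff ℝ k f) : ContDiff ℝ k (fun x => b.r (f x)) := by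
  unfold r; fun_prop

lemma cd_rpow (hf : ContDiff ℝ k f) (a : ℝ) : ContDiff ℝ k (fun x => b.r (f x) ^ a) :=
  (b.cd_r hf).rpow_const_of_ne fun _ => (b.r_pos _).ne'

lemma cd_E (hf : ContDiff ℝ k f) (hg : ContDiff ℝ k g) :
    ContDiff ℝ k (fun x => b.E (f x) (g x)) := by
  have : ContDiff ℝ k (fun x => b.S (g x)) := b.cd_rpow hg _
  unfold E; fun_prop

lemma cd_B (hf : ContDiff ℝ k f) (hg : ContDiff ℝ k g) :
    ContDiff ℝ k (fun x => b.B (f x) (g x)) := by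
  have h2 : ContDiff ℝ k (fun x => b.A (g x)) := b.cd_rpow hg _
  have h3 : ContDiff ℝ k (fun x => b.P (f x)) := b.cd_rpow hf _
  have h4 := b.cd_E hf hg
  unfold B; fun_prop

lemma cd_Bx (hf : ContDiff ℝ k f) (hg : ContDiff ℝ k g) :
    ContDiff ℝ k (fun x => b.Bx (f x) (g x)) := by
  have h1 : ContDiff ℝ k (fun x => b.S (g x)) := b.cd_rpow hg _
  have h2 : ContDiff ℝ k (fun x => b.A (g x)) := b.cd_rpow hg _
  have h3 : ContDiff ℝ k (fun x => b.P (f x) / b.r (f x)) :=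
    (b.cd_rpow hf _).div (b.cd_r hf) fun _ => (b.r_pos _).ne'
  have h4 := b.cd_E hf hg
  unfold Bx; fun_prop

lemma cd_By (hf : ContDiff ℝ k f) (hg : ContDiff ℝ k g) :
    ContDiff ℝ k (fun x => b.By (f x) (g x)) := by
  have h1 : ContDiff ℝ k (fun x => b.S (g x)) := b.cd_rpow hg _
  have h3 : ContDiff ℝ k (fun x => b.A (g x) / b.r (g x)) :=
    (b.cd_rpow hg _).div (b.cd_r hg) fun _ => (b.r_pos _).ne'
  have h4 := b.cd_E hf hg
  unfold By; fun_prop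

end BP

end

/-! ### Heat flow on trigonometric polynomials -/

/-- `|k|²` for a frequency `k ∈ ℤ³`. -/
def ksq (k : Fin 3 → ℤ) : ℝ := ∑ j, (k j : ℝ) ^ 2

/-- The symbol `k_i k_j / |k|²` of a second-order Riesz transform (zero at `k = 0`). -/
def mij (i j : Fin 3) (k : Fin 3 → ℤ) : ℝ := (k i : ℝ) * k j / ksq k

/-- The heat semigroup acting on Fourier coefficients. -/
def heat (t : ℝ) (c : (Fin 3 → ℤ) → ℂ) : (Fin 3 → ℤ) → ℂ := mc (fun k => Real.exp (-(t * ksq k))) c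

lemma ksq_nonneg (k : Fin 3 → ℤ) : 0 ≤ ksq k := Finset.sum_nonneg fun _ _ => sq_nonneg _

lemma ksq_ge_one {k : Fin 3 → ℤ} (h : k ≠ 0) : 1 ≤ ksq k := by
  obtain ⟨j, hj⟩ : ∃ j, k j ≠ 0 := by
    by_contra! h'; exact h (funext h')
  have h1 : (1 : ℝ) ≤ (k j : ℝ) ^ 2 := by
    have : (1 : ℤ) ≤ (k j) ^ 2 := by
      have := sq_pos_of_ne_zero hj
      omega
    exact_mod_cast this
  exact h1.trans (Finset.single_le_sum (f := fun j => (k j : ℝ) ^ 2)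
    (fun _ _ => sq_nonneg _) (Finset.mem_univ j))

lemma mij_zero (i j : Fin 3) : mij i j 0 = 0 := by simp [mij]

lemma ksq_mul_mij (i j : Fin 3) (k : Fin 3 → ℤ) : ksq k * mij i j k = k i * k j := by
  rcases eq_or_ne k 0 with rfl | h
  · simp [mij]
  · have := ksq_ge_one h
    unfold mij; field_simp

lemma T_abs_le (s c x) : |T s c x| ≤ ∑ k ∈ s, 2 * ‖c k‖ := by
  unfold T
  refine (Finset.abs_sum_le_sum_abs _ _).trans (Finset.sum_le_sum fun k _ => ?_)
  have h1 := Complex.abs_re_le_norm (c k)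
  have h2 := Complex.abs_im_le_norm (c k)
  have h3 := Real.abs_cos_le_one (kdot k x)
  have h4 := Real.abs_sin_le_one (kdot k x)
  calc _ ≤ |(c k).re * Real.cos (kdot k x)| + |(c k).im * Real.sin (kdot k x)| := abs_sub _ _
    _ ≤ ‖c k‖ * 1 + ‖c k‖ * 1 := by
      rw [abs_mul, abs_mul]
      gcongr
    _ = _ := by ring

lemma T_heat_expand (s c m t x) : T s (mc m (heat t c)) x = ∑ k ∈ s, Real.exp (-(t * ksq k)) *
    (m k * ((c k).re * Real.cos (kdot k x) - (c k).im * Real.sin (kdot k x))) := by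
  simp only [T, mc, heat]
  refine Finset.sum_congr rfl fun k _ => ?_
  rw [← mul_assoc, ← Complex.ofReal_mul, Complex.re_ofReal_mul, Complex.im_ofReal_mul]
  ring

lemma T_heat_cont (s c m) : Continuous (fun z : ℝ × E3 => T s (mc m (heat z.1 c)) z.2) := by
  simp only [T_heat_expand]
  have := fun k => (kdot_smooth k).cont
  fun_prop

lemma mc_one (c) : mc (fun _ => 1) c = c := by funext k; simp [mc]

lemma T_heat_deriv (s c m t x) : HasDerivAt (fun t => T s (mc m (heat t c)) x)
    (T s (mc (fun k => - ksq k * m k) (heat t c)) x) t := by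
  simp only [T_heat_expand]
  refine HasDerivAt.fun_sum fun k _ => ?_
  have h : HasDerivAt (fun t => Real.exp (-(t * ksq k))) (Real.exp (-(t * ksq k)) * -(1 * ksq k)) t :=
    (((hasDerivAt_id t).mul_const (ksq k)).neg).exp
  refine HasDerivAt.congr_deriv (h.mul_const _) ?_
  ring

lemma T_DD (s c i j) : T s (Dc i (Dc j c)) = T s (mc (fun k => - ((k i : ℝ) * k j)) c) := by
  congr 1; funext k
  simp only [Dc, mc]
  push_cast
  linear_combination (k i : ℂ) * (k j) * c k * Complex.I_sq

lemma T_lap (s c x) : ∑ l, pd3 l (pd3 l (T s c)) x = T s (mc (fun k => - ksq k) c) x := by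
  simp only [pd3_T, T_DD]
  rw [← T_sum]
  congr 1; funext k
  simp only [mc, ← Finset.sum_mul, ksq]
  push_cast
  rw [← Finset.sum_neg_distrib]
  simp [sq]

lemma mc_mc (m m' c) : mc m (mc m' c) = mc (fun k => m k * m' k) c := by
  funext k; simp [mc, mul_assoc]

/-- Differentiation under the integral over the period cell. -/
lemma param_deriv {φ φ' : ℝ → E3 → ℝ} (h1 : Continuous (fun z : ℝ × E3 => φ z.1 z.2))
    (h2 : Continuous (fun z : ℝ × E3 => φ' z.1 z.2))
    (h : ∀ t x, HasDerivAt (fun t => φ t x) (φ' t x) t) (t : ℝ) :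
    HasDerivAt (fun t => ∫ x in Q, φ t x) (∫ x in Q, φ' t x) t := by
  have hc : ∀ t, Continuous (φ t) := fun t => h1.comp (by fun_prop : Continuous fun x => (t, x))
  have hc' : ∀ t, Continuous (φ' t) := fun t => h2.comp (by fun_prop : Continuous fun x => (t, x))
  obtain ⟨M, hM⟩ := ((isCompact_Icc (a := t - 1) (b := t + 1)).prod Q_compact).exists_bound_of_continuousOn
    h2.continuousOn
  have := BM_Q.fin
  refine (hasDerivAt_integral_of_dominated_loc_of_deriv_le (μ := volume.restrict Q)
    (s := Set.Icc (t - 1) (t + 1)) (F := φ) (F' := φ') (bound := fun _ => M)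
    (Icc_mem_nhds (by linarith) (by linarith)) (Eventually.of_forall fun t => ?_) (intQ (hc t))
    ?_ ?_ (integrable_const M) ?_).2
  · exact (hc t).aestronglyMeasurable
  · exact (hc' t).aestronglyMeasurable
  · exact ae_restrict_of_forall_mem Q_meas fun x hx s hs => hM (s, x) ⟨hs, hx⟩
  · exact Eventually.of_forall fun x s _ => h s x

lemma pd3_line {f : E3 → ℝ} (hf : Differentiable ℝ f) (j : Fin 3) (x : E3) :
    HasDerivAt (fun t : ℝ => f (x + t • EuclideanSpace.single j (1 : ℝ))) (pd3 j f x) 0 := by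
  have h1 : HasDerivAt (fun t : ℝ => x + t • (EuclideanSpace.single j (1 : ℝ) : E3))
      (EuclideanSpace.single j (1 : ℝ)) 0 := by
    have := ((hasDerivAt_id (0 : ℝ)).smul_const (EuclideanSpace.single j (1 : ℝ) : E3)).const_add x
    simpa using this
  have h2 : HasFDerivAt f (fderiv ℝ f x) (x + (0 : ℝ) • (EuclideanSpace.single j (1 : ℝ) : E3)) := by
    simpa using (hf x).hasFDerivAt
  exact h2.comp_hasDerivAt 0 h1

lemma pd3_Bx (b : BP) {f g : E3 → ℝ} (hf : ContDiff ℝ 1 f) (hg : ContDiff ℝ 1 g) (j x) :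
    pd3 j (fun y => b.Bx (f y) (g y)) x
      = b.Bxx (f x) (g x) * pd3 j f x + b.Bxy (f x) (g x) * pd3 j g x := by
  have h1 := pd3_line ((b.cd_Bx hf hg).differentiable (by simp)) j x
  have h2 := b.dBx (pd3_line (hf.differentiable (by simp)) j x)
    (pd3_line (hg.differentiable (by simp)) j x)
  have := h1.unique h2
  simpa using this

lemma pd3_By (b : BP) {f g : E3 → ℝ} (hf : ContDiff ℝ 1 f) (hg : ContDiff ℝ 1 g) (j x) :
    pd3 j (fun y => b.By (f y) (g y)) x
      = b.Bxy (f x) (g x) * pd3 j f x + b.Byy (f x) (g x) * pd3 j g x := by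
  have h1 := pd3_line ((b.cd_By hf hg).differentiable (by simp)) j x
  have h2 := b.dBy (pd3_line (hf.differentiable (by simp)) j x)
    (pd3_line (hg.differentiable (by simp)) j x)
  have := h1.unique h2
  simpa using this

lemma integral_comb4 {μ : Measure E3} {f1 f2 f3 f4 : E3 → ℝ} (h1 : Integrable f1 μ)
    (h2 : Integrable f2 μ) (h3 : Integrable f3 μ) (h4 : Integrable f4 μ) (a1 a2 a3 a4 : ℝ) :
    ∫ x, (a1 * f1 x + a2 * f2 x + a3 * f3 x + a4 * f4 x) ∂μ =
      a1 * (∫ x, f1 x ∂μ) + a2 * (∫ x, f2 x ∂μ) + a3 * (∫ x, f3 x ∂μ) + a4 * (∫ x, f4 x ∂μ) := by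
  rw [integral_add (f := fun x => a1 * f1 x + a2 * f2 x + a3 * f3 x) (g := fun x => a4 * f4 x)
      (((h1.const_mul a1).add (h2.const_mul a2)).add (h3.const_mul a3)) (h4.const_mul a4),
    integral_add (f := fun x => a1 * f1 x + a2 * f2 x) (g := fun x => a3 * f3 x)
      ((h1.const_mul a1).add (h2.const_mul a2)) (h3.const_mul a3),
    integral_add (f := fun x => a1 * f1 x) (g := fun x => a2 * f2 x)
      (h1.const_mul a1) (h2.const_mul a2)]
  simp only [integral_const_mul]

/-- Green's formula on the period cell. -/
lemma greenQ {f g : E3 → ℝ} (hf : ContDiff ℝ 1 f) (hg : Sm g) (pf : Per f)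
    (pg : ∀ l, Per (pd3 l g)) :
    ∫ x in Q, f x * ∑ l, pd3 l (pd3 l g) x = - ∫ x in Q, ∑ l, pd3 l f x * pd3 l g x := by
  simp only [Finset.mul_sum]
  rw [integral_finsetSum, integral_finsetSum, ← Finset.sum_neg_distrib]
  · exact Finset.sum_congr rfl fun l _ => ibpQ hf (hg.pd l).one pf (pg l) l
  · exact fun l _ => intQ ((pd3_cont hf l).mul (hg.pd l).cont)
  · exact fun l _ => intQ (hf.continuous.mul ((hg.pd l).pd l).cont)

lemma Per_pd_T (s c l) : Per (pd3 l (T s c)) := by rw [pd3_T]; exact T_per _ _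

/-- The dissipation inequality along the heat flow. -/
lemma bellman_step (b : BP) (s c s' c') (i j : Fin 3) (σ : ℝ) (hσ : |σ| = 1) :
    ∫ x in Q, (4 * (b.Bx (T s c x) (T s' c' x) * T s (mc (fun k => - ksq k) c) x
      + b.By (T s c x) (T s' c' x) * T s' (mc (fun k => - ksq k) c') x)
      + σ * (T s (mc (fun k => - ksq k) (mc (mij i j) c)) x * T s' c' x
        + T s (mc (mij i j) c) x * T s' (mc (fun k => - ksq k) c') x)) ≤ 0 := by
  set F := T s c with hF
  set G := T s' c' with hG
  set U := T s (mc (mij i j) c) with hU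
  have sF : Sm F := T_smooth _ _
  have sG : Sm G := T_smooth _ _
  have sU : Sm U := T_smooth _ _
  have cBx := b.cd_Bx sF.one sG.one
  have cBy := b.cd_By sF.one sG.one
  have pF : Per F := T_per _ _
  have pG : Per G := T_per _ _
  have pU : Per U := T_per _ _
  have e1 : ∫ x in Q, b.Bx (F x) (G x) * ∑ l, pd3 l (pd3 l F) x = _ :=
    greenQ cBx sF (fun j x => by simp only [pF j x, pG j x]) (Per_pd_T s c)
  have e2 : ∫ x in Q, b.By (F x) (G x) * ∑ l, pd3 l (pd3 l G) x = _ :=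
    greenQ cBy sG (fun j x => by simp only [pF j x, pG j x]) (Per_pd_T s' c')
  have e3 : ∫ x in Q, U x * ∑ l, pd3 l (pd3 l G) x = _ :=
    greenQ sU.one sG pU (Per_pd_T s' c')
  have e4 : ∫ x in Q, G x * ∑ l, pd3 l (pd3 l U) x = _ :=
    greenQ sG.one sU pG (Per_pd_T s _)
  have hUF : ∀ x, ∑ l, pd3 l (pd3 l U) x = pd3 j (pd3 i F) x := by
    intro x
    rw [hU, T_lap, mc_mc, hF, pd3_T, pd3_T, T_DD]
    congr 2; funext k
    have := ksq_mul_mij i j k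
    linarith
  have e5 : ∫ x in Q, G x * pd3 j (pd3 i F) x = - ∫ x in Q, pd3 j G x * pd3 i F x :=
    ibpQ sG.one (sF.pd i).one pG (Per_pd_T s c i) j
  have e34 : ∫ x in Q, U x * ∑ l, pd3 l (pd3 l G) x = ∫ x in Q, G x * ∑ l, pd3 l (pd3 l U) x := by
    rw [e3, e4]; congr 2; funext x
    exact Finset.sum_congr rfl fun l _ => mul_comm _ _
  simp only [hF, hG, hU, ← T_lap]
  simp only [← hF, ← hG, ← hU]
  have cl : ∀ {f : E3 → ℝ}, Sm f → Continuous (fun x => ∑ l, pd3 l (pd3 l f) x) := fun hf =>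
    continuous_finsetSum _ fun l _ => ((hf.pd l).pd l).cont
  have i1 := intQ (cBx.continuous.mul (cl sF))
  have i2 := intQ (cBy.continuous.mul (cl sG))
  have i3 := intQ (sU.cont.mul (cl sG))
  have i4 := intQ (sG.cont.mul (cl sU))
  have split : ∫ x in Q, (4 * (b.Bx (F x) (G x) * ∑ l, pd3 l (pd3 l F) x
      + b.By (F x) (G x) * ∑ l, pd3 l (pd3 l G) x)
      + σ * ((∑ l, pd3 l (pd3 l U) x) * G x + U x * ∑ l, pd3 l (pd3 l G) x))
      = 4 * (∫ x in Q, b.Bx (F x) (G x) * ∑ l, pd3 l (pd3 l F) x)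
      + 4 * (∫ x in Q, b.By (F x) (G x) * ∑ l, pd3 l (pd3 l G) x)
      + σ * (∫ x in Q, G x * ∑ l, pd3 l (pd3 l U) x)
      + σ * (∫ x in Q, U x * ∑ l, pd3 l (pd3 l G) x) := by
    refine Eq.trans ?_ (integral_comb4 i1 i2 i4 i3 4 4 σ σ)
    congr 1; funext x
    simp only [Pi.mul_apply]
    ring
  rw [split, e34, e1, e2]
  simp only [hUF]
  rw [e5]
  simp only [pd3_Bx b sF.one sG.one, pd3_By b sF.one sG.one]
  have c1 : Continuous fun x => ∑ l, pd3 l (fun y => b.Bx (F y) (G y)) x * pd3 l F x :=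
    continuous_finsetSum _ fun l _ => (pd3_cont cBx l).mul (sF.pd l).cont
  have c2 : Continuous fun x => ∑ l, pd3 l (fun y => b.By (F y) (G y)) x * pd3 l G x :=
    continuous_finsetSum _ fun l _ => (pd3_cont cBy l).mul (sG.pd l).cont
  simp only [pd3_Bx b sF.one sG.one, pd3_By b sF.one sG.one] at c1 c2
  have c3 : Continuous fun x => pd3 j G x * pd3 i F x := (sG.pd j).cont.mul (sF.pd i).cont
  have key : ∫ x in Q, (2 * |pd3 j G x * pd3 i F x|) ≤ ∫ x in Q,
      4 * ((∑ l, (b.Bxx (F x) (G x) * pd3 l F x + b.Bxy (F x) (G x) * pd3 l G x) * pd3 l F x) +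
      (∑ l, (b.Bxy (F x) (G x) * pd3 l F x + b.Byy (F x) (G x) * pd3 l G x) * pd3 l G x)) := by
    refine integral_mono (intQ (by fun_prop)) (intQ (by fun_prop)) fun x => ?_
    simp only
    obtain ⟨m, hm, hform⟩ := b.form_ge (F x) (G x)
    rw [← Finset.sum_add_distrib]
    have h1 : ∀ l, (1 / 4) * (m * pd3 l F x ^ 2 + pd3 l G x ^ 2 / m) ≤
      (b.Bxx (F x) (G x) * pd3 l F x + b.Bxy (F x) (G x) * pd3 l G x) * pd3 l F x +
      (b.Bxy (F x) (G x) * pd3 l F x + b.Byy (F x) (G x) * pd3 l G x) * pd3 l G x := fun l => by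
      have := hform (pd3 l F x) (pd3 l G x)
      nlinarith
    have h2 := Finset.sum_le_sum fun l (_ : l ∈ Finset.univ) => h1 l
    rw [← Finset.mul_sum, Finset.sum_add_distrib] at h2
    have h3 : m * pd3 i F x ^ 2 ≤ ∑ l, m * pd3 l F x ^ 2 :=
      Finset.single_le_sum (f := fun l => m * pd3 l F x ^ 2) (fun l _ => by positivity) (Finset.mem_univ i)
    have h4 : pd3 j G x ^ 2 / m ≤ ∑ l, pd3 l G x ^ 2 / m :=
      Finset.single_le_sum (f := fun l => pd3 l G x ^ 2 / m) (fun l _ => by positivity) (Finset.mem_univ j)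
    have h5 : 2 * (|pd3 j G x * pd3 i F x|) ≤ m * pd3 i F x ^ 2 + pd3 j G x ^ 2 / m := by
      have h6 : 0 ≤ m⁻¹ * (m * |pd3 i F x| - |pd3 j G x|) ^ 2 := by positivity
      have e : m⁻¹ * (m * |pd3 i F x| - |pd3 j G x|) ^ 2 = m * |pd3 i F x| ^ 2
        - 2 * (|pd3 j G x| * |pd3 i F x|) + |pd3 j G x| ^ 2 / m := by field_simp; ring
      rw [e, sq_abs, sq_abs] at h6
      rw [abs_mul]; linarith
    linarith
  rw [integral_const_mul, integral_const_mul, integral_add (intQ c1) (intQ c2)] at key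
  have h7 := abs_setIntegral_le (fun x => pd3 j G x * pd3 i F x) Q
  have h8 : -(σ * ∫ x in Q, pd3 j G x * pd3 i F x) ≤ |∫ x in Q, pd3 j G x * pd3 i F x| := by
    have := neg_abs_le (σ * ∫ x in Q, pd3 j G x * pd3 i F x)
    rw [abs_mul, hσ, one_mul] at this
    linarith
  linarith

/-! ### Monotonicity along the heat flow -/

lemma heat_zero (c) : heat 0 c = c := by funext k; simp [heat, mc]

lemma T_heat_deriv0 (s c t x) : HasDerivAt (fun t => T s (heat t c) x)
    (T s (mc (fun k => - ksq k) (heat t c)) x) t := by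
  have := T_heat_deriv s c (fun _ => 1) t x
  simpa only [mc_one, mul_one] using this

lemma T_heat_cont0 (s c) : Continuous (fun z : ℝ × E3 => T s (heat z.1 c) z.2) := by
  have := T_heat_cont s c (fun _ => 1)
  simpa only [mc_one] using this

lemma heat_norm_le (t : ℝ) (ht : 0 ≤ t) (c k) : ‖heat t c k‖ ≤ ‖c k‖ := by
  simp only [heat, mc, norm_mul, Complex.norm_real, Real.norm_eq_abs, abs_of_pos (Real.exp_pos _)]
  have : Real.exp (-(t * ksq k)) ≤ 1 := Real.exp_le_one_iff.2 (by
    have := mul_nonneg ht (ksq_nonneg k); linarith)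
  nlinarith [norm_nonneg (c k)]

lemma heat_mij_norm_le (i j) (t : ℝ) (ht : 0 ≤ t) (c k) :
    ‖mc (mij i j) (heat t c) k‖ ≤ Real.exp (-t) * (|mij i j k| * ‖c k‖) := by
  simp only [heat, mc, norm_mul, Complex.norm_real, Real.norm_eq_abs, abs_of_pos (Real.exp_pos _)]
  rcases eq_or_ne k 0 with rfl | h
  · simp [mij_zero]
  · have : Real.exp (-(t * ksq k)) ≤ Real.exp (-t) := Real.exp_le_exp.2 (by
      have := mul_le_mul_of_nonneg_left (ksq_ge_one h) ht; linarith)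
    have := mul_le_mul_of_nonneg_right this (show 0 ≤ |mij i j k| * ‖c k‖ by positivity)
    linarith

/-- A quantity whose integral decreases in time and which is asymptotically nonnegative starts with
a nonnegative integral. -/
lemma flow_limit {φ φ' : ℝ → E3 → ℝ} (hc : Continuous (fun z : ℝ × E3 => φ z.1 z.2))
    (hc' : Continuous (fun z : ℝ × E3 => φ' z.1 z.2))
    (hd : ∀ t x, HasDerivAt (fun t => φ t x) (φ' t x) t) (hn : ∀ t, ∫ x in Q, φ' t x ≤ 0)
    {M : ℝ} (hlow : ∀ t, 0 ≤ t → ∀ x, -(Real.exp (-t) * M) ≤ φ t x) : 0 ≤ ∫ x in Q, φ 0 x := by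
  have hΨ := param_deriv hc hc' hd
  have hanti : Antitone (fun t => ∫ x in Q, φ t x) := by
    refine antitone_of_deriv_nonpos (fun t => (hΨ t).differentiableAt) fun t => ?_
    rw [(hΨ t).deriv]
    exact hn t
  have hl : ∀ t, 0 ≤ t → -(Real.exp (-t) * (M * (volume Q).toReal)) ≤ ∫ x in Q, φ t x := by
    intro t ht
    have hfin := BM_Q.fin
    have hci : IntegrableOn (φ t) Q := intQ (hc.comp (by fun_prop : Continuous fun x : E3 => (t, x)))
    have hcc : IntegrableOn (fun _ : E3 => -(Real.exp (-t) * M)) Q := integrable_const _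
    have := integral_mono hcc hci (fun x => hlow t ht x)
    rw [integral_const, smul_eq_mul] at this
    simp only [Measure.real, Measure.restrict_apply_univ] at this
    linarith
  have hlim : Tendsto (fun t : ℝ => -(Real.exp (-t) * (M * (volume Q).toReal))) atTop (nhds 0) := by
    have := (Real.tendsto_exp_neg_atTop_nhds_zero.mul_const (M * (volume Q).toReal)).neg
    simpa using this
  refine le_of_tendsto (x := atTop) hlim ?_
  filter_upwards [eventually_ge_atTop (0 : ℝ)] with t ht
  exact (hl t ht).trans (hanti ht)

/-- `∫ 4 B(f, g) + σ (R_i R_j f) g` does not increase along the heat flow, and its Riesz part decays,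
while `B ≥ 0`. -/
lemma bellman_J0 (b : BP) (s c s' c') (i j : Fin 3) (σ : ℝ) (hσ : |σ| = 1) :
    0 ≤ ∫ x in Q, (4 * b.B (T s c x) (T s' c' x) + σ * (T s (mc (mij i j) c) x * T s' c' x)) := by
  let φ : ℝ → E3 → ℝ := fun t x => 4 * b.B (T s (heat t c) x) (T s' (heat t c') x)
    + σ * (T s (mc (mij i j) (heat t c)) x * T s' (heat t c') x)
  let φ' : ℝ → E3 → ℝ := fun t x => 4 * (b.Bx (T s (heat t c) x) (T s' (heat t c') x) *
        T s (mc (fun k => - ksq k) (heat t c)) x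
      + b.By (T s (heat t c) x) (T s' (heat t c') x) * T s' (mc (fun k => - ksq k) (heat t c')) x)
      + σ * (T s (mc (fun k => - ksq k) (mc (mij i j) (heat t c))) x * T s' (heat t c') x
        + T s (mc (mij i j) (heat t c)) x * T s' (mc (fun k => - ksq k) (heat t c')) x)
  have c0 := T_heat_cont0 s c
  have c0' := T_heat_cont0 s' c'
  have cU := T_heat_cont s c (mij i j)
  have hc : Continuous (fun z : ℝ × E3 => φ z.1 z.2) := by
    have h1 := (b.cd_B (contDiff_zero.2 c0) (contDiff_zero.2 c0')).continuous
    have := (h1.const_mul 4).add ((cU.mul c0').const_mul σ)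
    exact this
  have hc' : Continuous (fun z : ℝ × E3 => φ' z.1 z.2) := by
    have h1 := (b.cd_Bx (contDiff_zero.2 c0) (contDiff_zero.2 c0')).continuous
    have h2 := (b.cd_By (contDiff_zero.2 c0) (contDiff_zero.2 c0')).continuous
    have h3 := T_heat_cont s c (fun k => - ksq k)
    have h4 := T_heat_cont s' c' (fun k => - ksq k)
    have h5 := T_heat_cont s c (fun k => - ksq k * mij i j k)
    simp only [φ', mc_mc]
    exact (((h1.mul h3).add (h2.mul h4)).const_mul 4).add (((h5.mul c0').add (cU.mul h4)).const_mul σ)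
  have hd : ∀ t x, HasDerivAt (fun t => φ t x) (φ' t x) t := by
    intro t x
    have h1 := b.dB (T_heat_deriv0 s c t x) (T_heat_deriv0 s' c' t x)
    have h2 := T_heat_deriv s c (mij i j) t x
    have h3 := (h1.const_mul 4).add ((h2.mul (T_heat_deriv0 s' c' t x)).const_mul σ)
    simp only [φ', mc_mc]
    exact h3
  let C := ∑ k ∈ s, 2 * (|mij i j k| * ‖c k‖)
  let C' := ∑ k ∈ s', 2 * ‖c' k‖
  have hC : 0 ≤ C := Finset.sum_nonneg fun _ _ => by positivity
  have hC' : 0 ≤ C' := Finset.sum_nonneg fun _ _ => by positivity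
  have h0 := flow_limit hc hc' hd (fun t => bellman_step b s (heat t c) s' (heat t c') i j σ hσ)
    (M := C * C') (fun t ht x => by
      have h1 : |T s (mc (mij i j) (heat t c)) x| ≤ Real.exp (-t) * C := by
        refine (T_abs_le _ _ _).trans ?_
        rw [Finset.mul_sum]
        refine Finset.sum_le_sum fun k _ => ?_
        have := heat_mij_norm_le i j t ht c k
        linarith
      have h2 : |T s' (heat t c') x| ≤ C' := by
        refine (T_abs_le _ _ _).trans ?_
        refine Finset.sum_le_sum fun k _ => ?_
        have := heat_norm_le t ht c' k
        linarith
      have h3 := mul_le_mul h1 h2 (abs_nonneg _) (by positivity)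
      have h4 : |σ * (T s (mc (mij i j) (heat t c)) x * T s' (heat t c') x)|
          ≤ Real.exp (-t) * C * C' := by
        rw [abs_mul, hσ, one_mul, abs_mul]; exact h3
      have h5 := neg_abs_le (σ * (T s (mc (mij i j) (heat t c)) x * T s' (heat t c') x))
      have h6 := b.B_nonneg (T s (heat t c) x) (T s' (heat t c') x)
      change _ ≤ 4 * b.B (T s (heat t c) x) (T s' (heat t c') x)
    + σ * (T s (mc (mij i j) (heat t c)) x * T s' (heat t c') x)
      linarith)
  have e : φ 0 = fun x => 4 * b.B (T s c x) (T s' c' x)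
      + σ * (T s (mc (mij i j) c) x * T s' c' x) := by
    funext x; simp only [φ, heat_zero]
  rw [e] at h0
  exact h0

lemma bellman_J (b : BP) (s c s' c') (i j : Fin 3) :
    |∫ x in Q, T s (mc (mij i j) c) x * T s' c' x| ≤ 4 * ∫ x in Q, b.B (T s c x) (T s' c' x) := by
  have hB := intQ (b.cd_B (T_smooth s c).one (T_smooth s' c').one).continuous
  have hJ := intQ ((T_smooth s (mc (mij i j) c)).cont.mul (T_smooth s' c').cont)
  have hs : ∀ σ : ℝ, ∫ x in Q, (4 * b.B (T s c x) (T s' c' x)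
      + σ * (T s (mc (mij i j) c) x * T s' c' x)) = 4 * (∫ x in Q, b.B (T s c x) (T s' c' x))
      + σ * ∫ x in Q, T s (mc (mij i j) c) x * T s' c' x := by
    intro σ
    rw [← integral_const_mul, ← integral_const_mul]
    exact integral_add (hB.const_mul 4) (hJ.const_mul σ)
  have h1 := bellman_J0 b s c s' c' i j 1 (by simp)
  have h2 := bellman_J0 b s c s' c' i j (-1) (by simp)
  rw [hs] at h1 h2
  rw [abs_le]; constructor <;> linarith

/-! ### Riesz transforms in `L^p` -/

/-- The Bellman parameters attached to an exponent `p ≥ 3` and a regularisation `ε > 0`. -/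
def mkBP (p : ℝ) (hp : 3 ≤ p) (e : ℝ) (he : 0 < e) : BP where
  p := p
  n := p / (p - 1) / 2
  L := 5 * 4 ^ (p / 2 - 1)
  K := 135 / (p / (p - 1) / 2 * (2 * (p / (p - 1) / 2) - 1))
  e := e
  hp := hp
  hn := by
    have : 0 < p - 1 := by linarith
    rw [lt_div_iff₀ two_pos, lt_div_iff₀ this]; linarith
  hn1 := by
    have : 0 < p - 1 := by linarith
    rw [div_le_iff₀ two_pos, div_le_iff₀ this]; linarith
  hpn := by
    have : p - 1 ≠ 0 := by linarith
    field_simp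
    ring
  hL := rfl
  hK := rfl
  he := he

lemma int_reg_le {f : E3 → ℝ} (hf : Continuous f) {a e : ℝ} (ha : 1 ≤ a) (he : 0 < e) :
    ∫ x in Q, (f x ^ 2 + e ^ 2) ^ (a / 2) ≤ (nm f a Q + (volume Q).toReal ^ (1 / a) * e) ^ a := by
  have h0 : 0 < a := by linarith
  have c1 : Continuous (fun x => (f x ^ 2 + e ^ 2) ^ (a / 2)) :=
    (by fun_prop : Continuous fun x => f x ^ 2 + e ^ 2).rpow_const fun x => Or.inr (by positivity)
  have c2 : Continuous (fun x => |f x| + e) := by fun_prop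
  have h1 : ∫ x in Q, (f x ^ 2 + e ^ 2) ^ (a / 2) ≤ ∫ x in Q, ‖|f x| + e‖ ^ a := by
    refine integral_mono (intQ c1) (intQ (c2.norm.rpow_const fun x => Or.inr h0.le)) fun x => ?_
    simp only
    have e1 : ‖|f x| + e‖ = |f x| + e := by
      rw [Real.norm_eq_abs, abs_of_nonneg (by positivity)]
    rw [e1]
    calc (f x ^ 2 + e ^ 2) ^ (a / 2) ≤ ((|f x| + e) ^ 2) ^ (a / 2) := by
          refine Real.rpow_le_rpow (by positivity) ?_ (by positivity)
          have := sq_abs (f x)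
          nlinarith [abs_nonneg (f x)]
      _ = (|f x| + e) ^ a := by
          rw [← Real.rpow_natCast, ← Real.rpow_mul (by positivity)]
          congr 1; push_cast; ring
  refine h1.trans ?_
  rw [← nm_rpow c2 BM_Q h0]
  refine Real.rpow_le_rpow (nm_nonneg _ _ _) ?_ h0.le
  refine (nm_add_le (f := fun x => |f x|) (g := fun _ => e) hf.abs continuous_const BM_Q ha).trans ?_
  gcongr
  · exact (nm_norm f a Q).le
  · exact nm_le_of_bound BM_Q h0 he.le fun x _ => by simp [abs_of_pos he]

/-- The duality estimate before homogenisation. -/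
lemma J_le_add (p : ℝ) (hp : 3 ≤ p) : ∃ C, 0 < C ∧ ∀ s c s' c' i j,
    |∫ x in Q, T s (mc (mij i j) c) x * T s' c' x| ≤
      C * (nm (T s c) p Q ^ p + nm (T s' c') (p / (p - 1)) Q ^ (p / (p - 1))) := by
  set q := p / (p - 1) with hq
  have hq1 : 1 ≤ q := by rw [hq, le_div_iff₀ (by linarith)]; linarith
  set L : ℝ := (mkBP p hp 1 one_pos).L
  set K : ℝ := (mkBP p hp 1 one_pos).K
  have hL : 0 < L := BP.L_pos _
  have hK : 0 < K := BP.K_pos _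
  refine ⟨4 * (L + K), by positivity, fun s c s' c' i j => ?_⟩
  set J := |∫ x in Q, T s (mc (mij i j) c) x * T s' c' x|
  set V := (volume Q).toReal
  have key : ∀ e : ℝ, 0 < e → J ≤ 4 * (L * (nm (T s c) p Q + V ^ (1 / p) * e) ^ p
      + K * (nm (T s' c') q Q + V ^ (1 / q) * e) ^ q) := by
    intro e he
    set b := mkBP p hp e he
    have h1 := bellman_J b s c s' c' i j
    have sF := T_smooth s c
    have sG := T_smooth s' c'
    have cP : Continuous fun x => b.P (T s c x) := (b.cd_rpow sF _).continuous
    have cA : Continuous fun x => b.A (T s' c' x) := (b.cd_rpow sG _).continuous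
    have h2 : ∫ x in Q, b.B (T s c x) (T s' c' x) ≤
        ∫ x in Q, (L * b.P (T s c x) + K * b.A (T s' c' x)) :=
      integral_mono (intQ (b.cd_B sF.one sG.one).continuous)
        (intQ ((cP.const_mul _).add (cA.const_mul _))) fun x => b.B_le _ _
    rw [integral_add (f := fun x => L * b.P (T s c x)) (g := fun x => K * b.A (T s' c' x))
      ((intQ cP).const_mul _) ((intQ cA).const_mul _), integral_const_mul, integral_const_mul] at h2
    have h3 : ∫ x in Q, b.P (T s c x) ≤ (nm (T s c) p Q + V ^ (1 / p) * e) ^ p :=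
      int_reg_le sF.cont (a := p) (by linarith) he
    have h4 : ∫ x in Q, b.A (T s' c' x) ≤ (nm (T s' c') q Q + V ^ (1 / q) * e) ^ q :=
      int_reg_le sG.cont (a := q) hq1 he
    have h5 := mul_le_mul_of_nonneg_left h3 hL.le
    have h6 := mul_le_mul_of_nonneg_left h4 hK.le
    linarith
  have hlim : Tendsto (fun e : ℝ => 4 * (L * (nm (T s c) p Q + V ^ (1 / p) * e) ^ p
      + K * (nm (T s' c') q Q + V ^ (1 / q) * e) ^ q)) (nhdsWithin 0 (Set.Ioi 0))
      (nhds (4 * (L * (nm (T s c) p Q + V ^ (1 / p) * 0) ^ p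
      + K * (nm (T s' c') q Q + V ^ (1 / q) * 0) ^ q))) := by
    refine Tendsto.mono_left (Continuous.tendsto ?_ 0) nhdsWithin_le_nhds
    have h1 : Continuous fun e : ℝ => (nm (T s c) p Q + V ^ (1 / p) * e) ^ p :=
      (by fun_prop : Continuous fun e : ℝ => nm (T s c) p Q + V ^ (1 / p) * e).rpow_const
        fun _ => Or.inr (by linarith)
    have h2 : Continuous fun e : ℝ => (nm (T s' c') q Q + V ^ (1 / q) * e) ^ q :=
      (by fun_prop : Continuous fun e : ℝ => nm (T s' c') q Q + V ^ (1 / q) * e).rpow_const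
        fun _ => Or.inr (by linarith)
    fun_prop
  have := ge_of_tendsto hlim (b := J) (by
    filter_upwards [self_mem_nhdsWithin] with e he
    exact key e he)
  simp only [mul_zero, add_zero] at this
  refine this.trans ?_
  have hF : 0 ≤ nm (T s c) p Q ^ p := Real.rpow_nonneg (nm_nonneg _ _ _) _
  have hG : 0 ≤ nm (T s' c') q Q ^ q := Real.rpow_nonneg (nm_nonneg _ _ _) _
  nlinarith [mul_nonneg hL.le hG, mul_nonneg hK.le hF]

/-- `L^p` boundedness of the second-order Riesz transforms on trigonometric polynomials. -/
theorem CZ (p : ℝ) (hp : 3 ≤ p) : ∃ C, 0 < C ∧ ∀ s c i j,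
    nm (T s (mc (mij i j) c)) p Q ≤ C * nm (T s c) p Q := by
  obtain ⟨C, hC, h⟩ := J_le_add p hp
  have hconj : p.HolderConjugate (p / (p - 1)) := Real.HolderConjugate.conjExponent (by linarith)
  refine ⟨C * 2, by positivity, fun s c i j => ?_⟩
  refine norming hconj _ _ (fun s' c' => ?_) (mul_nonneg (by positivity) (nm_nonneg _ _ _))
  set q := p / (p - 1)
  set J := ∫ x in Q, T s (mc (mij i j) c) x * T s' c' x with hJ
  have hq0 : 0 < q := hconj.symm.pos
  have key : ∀ η : ℝ, 0 < η → |J| ≤ C * 2 * ((nm (T s c) p Q + η) * (nm (T s' c') q Q + η)) := by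
    intro η hη
    set a := nm (T s c) p Q + η with ha
    set b := nm (T s' c') q Q + η with hb
    have ha0 : 0 < a := by have := nm_nonneg (T s c) p Q; positivity
    have hb0 : 0 < b := by have := nm_nonneg (T s' c') q Q; positivity
    have h1 := h s (fun k => ((a⁻¹ : ℝ) : ℂ) * c k) s' (fun k => ((b⁻¹ : ℝ) : ℂ) * c' k) i j
    have e1 : mc (mij i j) (fun k => ((a⁻¹ : ℝ) : ℂ) * c k)
        = fun k => ((a⁻¹ : ℝ) : ℂ) * mc (mij i j) c k := by
      funext k; simp only [mc]; ring
    have e2 : T s (fun k => ((a⁻¹ : ℝ) : ℂ) * c k) = fun x => a⁻¹ * T s c x :=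
      funext fun x => T_smul _ _ _ _
    have e3 : T s' (fun k => ((b⁻¹ : ℝ) : ℂ) * c' k) = fun x => b⁻¹ * T s' c' x :=
      funext fun x => T_smul _ _ _ _
    have e4 : T s (fun k => ((a⁻¹ : ℝ) : ℂ) * mc (mij i j) c k)
        = fun x => a⁻¹ * T s (mc (mij i j) c) x := funext fun x => T_smul _ _ _ _
    rw [e1, e4, e3, e2, nm_smul, nm_smul] at h1
    have e5 : ∫ x in Q, a⁻¹ * T s (mc (mij i j) c) x * (b⁻¹ * T s' c' x) = (a * b)⁻¹ * J := by
      rw [hJ, ← integral_const_mul]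
      congr 1; funext x; rw [mul_inv]; ring
    rw [e5, abs_mul, abs_of_pos (inv_pos.2 (mul_pos ha0 hb0)), abs_of_pos (inv_pos.2 ha0),
      abs_of_pos (inv_pos.2 hb0)] at h1
    have h2 : (a⁻¹ * nm (T s c) p Q) ^ p ≤ 1 := by
      refine Real.rpow_le_one (mul_nonneg (by positivity) (nm_nonneg _ _ _)) ?_ (by linarith)
      rw [inv_mul_le_iff₀ ha0]; linarith
    have h3 : (b⁻¹ * nm (T s' c') q Q) ^ q ≤ 1 := by
      refine Real.rpow_le_one (mul_nonneg (by positivity) (nm_nonneg _ _ _)) ?_ hq0.le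
      rw [inv_mul_le_iff₀ hb0]; linarith
    have h4 : (a * b)⁻¹ * |J| ≤ C * 2 := h1.trans (by nlinarith)
    rw [inv_mul_le_iff₀ (mul_pos ha0 hb0)] at h4
    linarith
  have hlim : Tendsto (fun η : ℝ => C * 2 * ((nm (T s c) p Q + η) * (nm (T s' c') q Q + η)))
      (nhdsWithin 0 (Set.Ioi 0))
      (nhds (C * 2 * ((nm (T s c) p Q + 0) * (nm (T s' c') q Q + 0)))) :=
    Tendsto.mono_left (Continuous.tendsto (by fun_prop) 0) nhdsWithin_le_nhds
  have := ge_of_tendsto hlim (b := |J|) (by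
    filter_upwards [self_mem_nhdsWithin] with e he
    exact key e he)
  simp only [add_zero] at this
  linarith

/-! ### Leray projection and vector potentials -/

lemma cTT (s c s' c') : Continuous fun x => T s c x * T s' c' x :=
  (T_smooth s c).cont.mul (T_smooth s' c').cont

lemma cT (s c) : Continuous fun x => T s c x := (T_smooth s c).cont

lemma Sm.cmul {f : E3 → ℝ} (hf : Sm f) (a : ℝ) : Sm (fun x => a * f x) := contDiff_const.mul hf

lemma ibp2 (s c s' c') (i j : Fin 3) :
    ∫ x in Q, T s (mc (fun k => (k i : ℝ) * k j) c) x * T s' c' x =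
      ∫ x in Q, T s c x * T s' (mc (fun k => (k i : ℝ) * k j) c') x := by
  have e : ∀ s c i j x, T s (mc (fun k => (k i : ℝ) * k j) c) x = - pd3 i (pd3 j (T s c)) x := by
    intro s c i j x
    rw [pd3_T, pd3_T, T_DD, ← T_neg]
    congr 1; funext k; simp [mc]
  have hs : ∀ s c j, ContDiff ℝ 1 (pd3 j (T s c)) := fun s c j => ((T_smooth s c).pd j).one
  have h0 : ∀ s c, ContDiff ℝ 1 (T s c) := fun s c => (T_smooth s c).one
  have hp : ∀ s c j, Per (pd3 j (T s c)) := fun s c j => by rw [pd3_T]; exact T_per _ _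
  calc _ = - ∫ x in Q, T s' c' x * pd3 i (pd3 j (T s c)) x := by
        rw [← integral_neg]; congr 1; funext x; rw [e]; ring
    _ = - ∫ x in Q, pd3 j (pd3 i (T s' c')) x * T s c x := by
        rw [ibpQ (h0 _ _) (hs _ _ _) (T_per _ _) (hp _ _ _),
          ibpQ (hs _ _ _) (h0 _ _) (hp _ _ _) (T_per _ _)]
        simp
    _ = _ := by
        rw [← integral_neg]; congr 1; funext x; rw [e, pd3_comm (T_smooth _ _)]; ring

/-- Coefficients of the potential `(-Δ)⁻¹`. -/
def pot (c : (Fin 3 → ℤ) → ℂ) : (Fin 3 → ℤ) → ℂ := mc (fun k => (ksq k)⁻¹) c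

/-- The constant mode of a trigonometric polynomial. -/
def T0 (s : Finset (Fin 3 → ℤ)) (c : (Fin 3 → ℤ) → ℂ) : ℝ := if (0 : Fin 3 → ℤ) ∈ s then (c 0).re else 0

lemma mc_pot (i j c) : mc (fun k => (k i : ℝ) * k j) (pot c) = mc (mij i j) c := by
  rw [pot, mc_mc]; rfl

lemma T_ksq_pot (s c x) : T s (mc ksq (pot c)) x = T s c x - T0 s c := by
  have h : T0 s c = T s (fun k => if k = 0 then c k else 0) x := by
    unfold T T0
    rw [Finset.sum_congr rfl (g := fun k => if k = 0 then (c k).re else 0)]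
    · rw [Finset.sum_ite_eq']
    · intro k _
      by_cases hk : k = 0
      · simp [hk, kdot]
      · simp [hk]
  rw [h, eq_sub_iff_add_eq, ← T_add]
  congr 1; funext k
  by_cases hk : k = 0
  · simp [hk, mc, pot, ksq]
  · have := ksq_ge_one hk
    have h2 : (ksq k : ℂ) ≠ 0 := by
      rw [Complex.ofReal_ne_zero]; linarith
    simp only [hk, mc, pot, if_false, add_zero]
    push_cast
    field_simp

lemma mij_mean (s c i j) : ∫ x in Q, T s (mc (mij i j) c) x = 0 := by
  have e : ∀ x, T s (mc (mij i j) c) x = pd3 i (fun y => - pd3 j (T s (pot c)) y) x := by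
    intro x
    rw [pd3_neg, pd3_T, pd3_T, T_DD, ← mc_pot, ← T_neg]
    congr 1; funext k; simp [mc]
  simp only [e]
  refine integral_pd3_per (Sm.one (ContDiff.neg ((T_smooth s (pot c)).pd j))) (fun l x => ?_) i
  simp only [pd3_T, T_per s _ l x]

lemma mij_adj (s c s' c') (i j : Fin 3) :
    ∫ x in Q, T s (mc (mij i j) c) x * T s' c' x = ∫ x in Q, T s c x * T s' (mc (mij i j) c') x := by
  have hk : ∀ s c x, T s (mc ksq c) x = ∑ l : Fin 3, T s (mc (fun k => (k l : ℝ) * k l) c) x := by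
    intro s c x
    rw [← T_sum]
    congr 1; funext k
    simp only [mc, ksq, ← Finset.sum_mul]
    push_cast
    simp [sq]
  have e1 : ∫ x in Q, T s (pot c) x * T s' (mc ksq (mc (mij i j) c')) x =
      ∫ x in Q, T s (mc ksq (pot c)) x * T s' (mc (mij i j) c') x := by
    simp only [hk, Finset.mul_sum, Finset.sum_mul]
    rw [integral_finsetSum _ fun l _ => intQ (cTT _ _ _ _),
      integral_finsetSum _ fun l _ => intQ (cTT _ _ _ _)]
    exact Finset.sum_congr rfl fun l _ => (ibp2 _ _ _ _ l l).symm
  calc _ = ∫ x in Q, T s (pot c) x * T s' (mc (fun k => (k i : ℝ) * k j) c') x := by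
        rw [← mc_pot, ibp2]
    _ = ∫ x in Q, T s (pot c) x * T s' (mc ksq (mc (mij i j) c')) x := by
        congr 1; funext x; congr 2; rw [mc_mc]; congr 1; funext k; exact (ksq_mul_mij i j k).symm
    _ = ∫ x in Q, T s (mc ksq (pot c)) x * T s' (mc (mij i j) c') x := e1
    _ = ∫ x in Q, (T s c x * T s' (mc (mij i j) c') x - T0 s c * T s' (mc (mij i j) c') x) := by
        congr 1; funext x; rw [T_ksq_pot]; ring
    _ = _ := by
        refine (integral_sub (intQ (cTT _ _ _ _)) (intQ ((T_smooth _ _).cmul _).cont)).trans ?_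
        rw [integral_const_mul, mij_mean]; simp

/-- The symbol `δ_il - k_i k_l / |k|²` of the Leray projection, set to zero at `k = 0`. -/
def Pil (i l : Fin 3) (k : Fin 3 → ℤ) : ℝ := (if i = l then ∑ j, mij j j k else 0) - mij i l k

lemma T_Pil (i l s c x) : T s (mc (Pil i l) c) x =
    (if i = l then ∑ j, T s (mc (mij j j) c) x else 0) - T s (mc (mij i l) c) x := by
  have : mc (Pil i l) c = fun k => (if i = l then ∑ j, mc (mij j j) c k else 0) + -mc (mij i l) c k := by
    funext k
    simp only [mc, Pil]
    split_ifs
    · rw [← Finset.sum_mul]; push_cast; ring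
    · push_cast; ring
  rw [this, T_add, T_neg, sub_eq_add_neg]
  split_ifs
  · rw [T_sum]
  · simp [T]

lemma Pil_adj (s c s' c') (i l : Fin 3) :
    ∫ x in Q, T s (mc (Pil i l) c) x * T s' c' x = ∫ x in Q, T s c x * T s' (mc (Pil i l) c') x := by
  simp only [T_Pil, sub_mul, mul_sub]
  split_ifs with h
  · simp only [Finset.sum_mul, Finset.mul_sum]
    rw [integral_sub, integral_sub, integral_finsetSum _ fun l _ => intQ (cTT _ _ _ _),
      integral_finsetSum _ fun l _ => intQ (cTT _ _ _ _), mij_adj]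
    · congr 1
      exact Finset.sum_congr rfl fun j _ => mij_adj _ _ _ _ _ _
    · exact intQ (continuous_finsetSum _ fun l _ => (cTT _ _ _ _))
    · exact intQ (cTT _ _ _ _)
    · exact intQ (continuous_finsetSum _ fun l _ => (cTT _ _ _ _))
    · exact intQ (cTT _ _ _ _)
  · simp only [zero_mul, mul_zero, zero_sub, integral_neg, mij_adj]

/-- `L^p` boundedness of the Leray projection. -/
lemma Pil_bound {p : ℝ} (hp : 3 ≤ p) : ∃ C, 0 < C ∧ ∀ s c i l,
    nm (T s (mc (Pil i l) c)) p Q ≤ C * nm (T s c) p Q := by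
  obtain ⟨C, hC, H⟩ := CZ p hp
  refine ⟨4 * C, by positivity, fun s c i l => ?_⟩
  have h0 := nm_nonneg (T s c) p Q
  have e : T s (mc (Pil i l) c) = fun x => (if i = l then ∑ j, T s (mc (mij j j) c) x else 0) +
      (-1) * T s (mc (mij i l) c) x := by
    funext x; rw [T_Pil]; ring
  rw [e]
  refine (nm_add_le ?_ (by have := cT s (mc (mij i l) c); fun_prop) BM_Q (by linarith)).trans ?_
  · split_ifs
    · exact continuous_finsetSum _ fun j _ => cT _ _
    · fun_prop
  rw [nm_smul (-1) (T s (mc (mij i l) c))]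
  have h1 : nm (fun x => if i = l then ∑ j, T s (mc (mij j j) c) x else 0) p Q ≤ 3 * (C * nm (T s c) p Q) := by
    split_ifs
    · refine (nm_sum_le _ (fun j => cT _ _) BM_Q (by linarith)).trans ?_
      refine (Finset.sum_le_sum fun j _ => H s c j j).trans ?_
      simp
    · have : nm (fun _ : E3 => (0 : ℝ)) p Q = 0 := by simp [nm]
      rw [this]; positivity
  have h2 := H s c i l
  simp only [abs_neg, abs_one, one_mul]
  linarith

/-- The curl, with components indexed cyclically by `Fin 3`. -/
def curl (ψ : Fin 3 → E3 → ℝ) (i : Fin 3) (x : E3) : ℝ :=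
  pd3 (i + 1) (ψ (i + 2)) x - pd3 (i + 2) (ψ (i + 1)) x

lemma curl_smooth {ψ : Fin 3 → E3 → ℝ} (h : ∀ i, Sm (ψ i)) (i : Fin 3) : Sm (curl ψ i) :=
  ((h _).pd _).sub ((h _).pd _)

lemma curl_curl {F : Fin 3 → E3 → ℝ} (h : ∀ i, Sm (F i)) (l : Fin 3) (x : E3) :
    curl (curl F) l x = pd3 l (fun y => ∑ j, pd3 j (F j) y) x - ∑ j, pd3 j (pd3 j (F l)) x := by
  have d : ∀ i j, Differentiable ℝ (pd3 i (F j)) := fun i j => ((h j).pd i).diff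
  have e : ∀ i j, pd3 i (curl F j) x = pd3 i (pd3 (j + 1) (F (j + 2))) x -
      pd3 i (pd3 (j + 2) (F (j + 1))) x := fun i j => pd3_sub (d _ _) (d _ _) i x
  rw [curl, e, e, pd3_sum _ (fun j => d j j)]
  simp only [Fin.sum_univ_three]
  have cm : ∀ i j k, pd3 i (pd3 j (F k)) x = pd3 j (pd3 i (F k)) x := fun i j k => pd3_comm (h k) i j x
  fin_cases l <;> simp [cm 1 0, cm 2 0, cm 2 1] <;> ring

/-- The vector potential `curl (b eᵢ)` with `b = (-Δ)⁻¹ f`. -/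
def vp (i : Fin 3) (s : Finset (Fin 3 → ℤ)) (c : (Fin 3 → ℤ) → ℂ) : Fin 3 → E3 → ℝ :=
  curl (fun m x => (if m = i then 1 else 0) * T s (pot c) x)

lemma vp_smooth (i s c m) : Sm (vp i s c m) :=
  curl_smooth (fun _ => (T_smooth _ _).cmul _) _

lemma pd3_const_mul {f : E3 → ℝ} (hf : Differentiable ℝ f) (a : ℝ) (j : Fin 3) (x : E3) :
    pd3 j (fun y => a * f y) x = a * pd3 j f x := by
  rw [pd3_mul (differentiable_const a) hf, pd3_const]; ring

/-- `curl curl (b eᵢ) = ∇ ∂ᵢ b - Δ b eᵢ`, so the curl of the vector potential is the `i`-th column of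
the Leray projection. -/
lemma curl_vp (i s c l x) : curl (vp i s c) l x = T s (mc (Pil i l) c) x := by
  have hT := T_smooth s (pot c)
  have e : ∀ s c i j x, pd3 i (pd3 j (T s (pot c))) x = - T s (mc (mij i j) c) x := by
    intro s c i j x
    rw [pd3_T, pd3_T, T_DD, ← mc_pot, ← T_neg]
    congr 1; funext k; simp [mc]
  unfold vp
  rw [curl_curl (fun _ => hT.cmul _), T_Pil]
  have e1 : ∀ (m j : Fin 3), pd3 j (fun x => (if m = i then 1 else 0) * T s (pot c) x) =
      fun x => (if m = i then 1 else 0) * pd3 j (T s (pot c)) x := fun m j => by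
    funext x; exact pd3_const_mul hT.diff _ _ _
  simp only [e1]
  have e2 : (fun y => ∑ j, (if j = i then 1 else 0) * pd3 j (T s (pot c)) y) = pd3 i (T s (pot c)) := by
    funext y; simp
  rw [e2, e]
  simp only [pd3_const_mul (hT.pd _).diff, e]
  by_cases h : i = l
  · subst h; simp; ring
  · have : mij l i = mij i l := by funext k; simp [mij, mul_comm]
    simp [h, Ne.symm h, this]

lemma nm_pd_vp {p C : ℝ} (hp : 3 ≤ p) (hC : ∀ s c i j,
    nm (T s (mc (mij i j) c)) p Q ≤ C * nm (T s c) p Q) (i s c m j) :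
    nm (pd3 j (vp i s c m)) p Q ≤ 2 * C * nm (T s c) p Q := by
  have hT := T_smooth s (pot c)
  have e : ∀ i j x, pd3 i (pd3 j (T s (pot c))) x = - T s (mc (mij i j) c) x := by
    intro i j x
    rw [pd3_T, pd3_T, T_DD, ← mc_pot, ← T_neg]
    congr 1; funext k; simp [mc]
  have e1 : ∀ (m j : Fin 3), pd3 j (fun x => (if m = i then 1 else 0) * T s (pot c) x) =
      fun x => (if m = i then 1 else 0) * pd3 j (T s (pot c)) x := fun m j => by
    funext x; exact pd3_const_mul hT.diff _ _ _
  have e3 : pd3 j (vp i s c m) = fun x => (-if m + 2 = i then 1 else 0) * T s (mc (mij j (m + 1)) c) x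
      + (if m + 1 = i then 1 else 0) * T s (mc (mij j (m + 2)) c) x := by
    funext x
    unfold vp curl
    simp only [e1]
    rw [pd3_sub ((hT.pd _).cmul _).diff ((hT.pd _).cmul _).diff,
      pd3_const_mul (hT.pd _).diff, pd3_const_mul (hT.pd _).diff, e, e]
    ring
  rw [e3]
  refine (nm_add_le ((T_smooth _ _).cmul _).cont ((T_smooth _ _).cmul _).cont BM_Q (by linarith)).trans ?_
  rw [nm_smul _ (T s (mc (mij j (m + 1)) c)), nm_smul _ (T s (mc (mij j (m + 2)) c))]
  have b : ∀ P : Prop, [Decidable P] → |(if P then (1 : ℝ) else 0)| ≤ 1 := by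
    intro P _; split_ifs <;> simp
  have n1 := hC s c j (m + 1)
  have n2 := hC s c j (m + 2)
  have z1 := nm_nonneg (T s (mc (mij j (m + 1)) c)) p Q
  have z2 := nm_nonneg (T s (mc (mij j (m + 2)) c)) p Q
  rw [abs_neg]
  nlinarith [b (m + 2 = i), b (m + 1 = i)]

/-! ### Cutoffs -/

/-- `φ` is a smooth cutoff, equal to `1` on the ball of radius `a` and to `0` off the ball of
radius `b`, with first and second derivatives bounded by `K`. -/
structure Cut (a b : ℝ) (φ : E3 → ℝ) (K : ℝ) : Prop where
  sm : Sm φ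
  nonneg : ∀ x, 0 ≤ φ x
  le_one : ∀ x, φ x ≤ 1
  one : ∀ x, ‖x‖ ≤ a → φ x = 1
  zero : ∀ x, b ≤ ‖x‖ → φ x = 0
  supp : HasCompactSupport φ
  K_nonneg : 0 ≤ K
  dz : ∀ j x, (‖x‖ < a ∨ b < ‖x‖) → pd3 j φ x = 0
  dK : ∀ j x, |pd3 j φ x| ≤ K
  ddz : ∀ i j x, (‖x‖ < a ∨ b < ‖x‖) → pd3 i (pd3 j φ) x = 0
  ddK : ∀ i j x, |pd3 i (pd3 j φ) x| ≤ K

lemma pd3_eq_zero_of {f : E3 → ℝ} {k : ℝ} {x : E3} (h : f =ᶠ[nhds x] fun _ => k) (j : Fin 3) :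
    pd3 j f x = 0 := by
  rw [pd3, h.fderiv_eq]; simp

lemma exists_cut {a b : ℝ} (ha : 0 < a) (hab : a < b) : ∃ φ K, Cut a b φ K := by
  let φ : ContDiffBump (0 : E3) := ⟨a, b, ha, hab⟩
  have sm : Sm φ := φ.contDiff
  have supp : HasCompactSupport φ := φ.hasCompactSupport
  have one : ∀ x : E3, ‖x‖ ≤ a → φ x = 1 := fun x hx => φ.one_of_mem_closedBall (by simpa using hx)
  have zero : ∀ x : E3, b ≤ ‖x‖ → φ x = 0 := fun x hx => φ.zero_of_le_dist (by simpa using hx)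
  have dz : ∀ j x, (‖x‖ < a ∨ b < ‖x‖) → pd3 j φ x = 0 := by
    rintro j x (hx | hx)
    · refine pd3_eq_zero_of (k := 1) ?_ j
      filter_upwards [(isOpen_lt continuous_norm continuous_const).mem_nhds hx] with y hy
      exact one y (le_of_lt hy)
    · refine pd3_eq_zero_of (k := 0) ?_ j
      filter_upwards [(isOpen_lt continuous_const continuous_norm).mem_nhds hx] with y hy
      exact zero y (le_of_lt hy)
  have ddz : ∀ i j x, (‖x‖ < a ∨ b < ‖x‖) → pd3 i (pd3 j φ) x = 0 := by
    rintro i j x (hx | hx)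
    · refine pd3_eq_zero_of (k := 0) ?_ i
      filter_upwards [(isOpen_lt continuous_norm continuous_const).mem_nhds hx] with y hy
      exact dz j y (Or.inl hy)
    · refine pd3_eq_zero_of (k := 0) ?_ i
      filter_upwards [(isOpen_lt continuous_const continuous_norm).mem_nhds hx] with y hy
      exact dz j y (Or.inr hy)
  have b1 : ∀ j, ∃ C, ∀ x, ‖pd3 j φ x‖ ≤ C := fun j =>
    (sm.pd j).cont.bounded_above_of_compact_support (hasCompactSupport_pd3 supp j)
  have b2 : ∀ i j, ∃ C, ∀ x, ‖pd3 i (pd3 j φ) x‖ ≤ C := fun i j =>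
    ((sm.pd j).pd i).cont.bounded_above_of_compact_support
      (hasCompactSupport_pd3 (hasCompactSupport_pd3 supp j) i)
  choose C hC using b1
  choose C' hC' using b2
  have n1 : ∀ j, 0 ≤ C j := fun j => (norm_nonneg _).trans (hC j 0)
  have n2 : ∀ i j, 0 ≤ C' i j := fun i j => (norm_nonneg _).trans (hC' i j 0)
  refine ⟨φ, (∑ j, C j) + ∑ i, ∑ j, C' i j, sm, fun x => φ.nonneg, fun x => φ.le_one, one, zero, supp,
    ?_, dz, ?_, ddz, ?_⟩
  · exact add_nonneg (Finset.sum_nonneg fun j _ => n1 j)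
      (Finset.sum_nonneg fun i _ => Finset.sum_nonneg fun j _ => n2 i j)
  · intro j x
    have h1 : C j ≤ ∑ j, C j := Finset.single_le_sum (fun j _ => n1 j) (Finset.mem_univ j)
    have h2 : 0 ≤ ∑ i, ∑ j, C' i j := Finset.sum_nonneg fun i _ => Finset.sum_nonneg fun j _ => n2 i j
    have := hC j x
    rw [Real.norm_eq_abs] at this
    linarith
  · intro i j x
    have h1 : C' i j ≤ ∑ j, C' i j := Finset.single_le_sum (fun j _ => n2 i j) (Finset.mem_univ j)
    have h3 : ∑ j, C' i j ≤ ∑ i, ∑ j, C' i j := Finset.single_le_sum (f := fun i => ∑ j, C' i j)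
      (fun i _ => Finset.sum_nonneg fun j _ => n2 i j) (Finset.mem_univ i)
    have h2 : 0 ≤ ∑ j, C j := Finset.sum_nonneg fun j _ => n1 j
    have := hC' i j x
    rw [Real.norm_eq_abs] at this
    linarith

lemma nm_supp {F : Type*} [NormedAddCommGroup F] {f : E3 → F} (hf : Continuous f) {S S' : Set E3}
    (hS : BM S) (hS' : BM S') {r : ℝ} (h : ∀ x ∈ S, x ∉ S' → f x = 0) : nm f r S ≤ nm f r S' := by
  have h1 : nm f r S = nm (S'.indicator f) r S := nm_congr hS fun x hx => by
    by_cases hx' : x ∈ S'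
    · rw [Set.indicator_of_mem hx']
    · rw [Set.indicator_of_notMem hx', h x hx hx']
  rw [h1]
  unfold nm
  refine ENNReal.toReal_mono (nm_ne_top hf hS' _) ?_
  rw [eLpNorm_indicator_eq_eLpNorm_restrict hS'.2, Measure.restrict_restrict hS'.2]
  exact eLpNorm_mono_measure _ (Measure.restrict_mono_set _ Set.inter_subset_left)

/-- The closed shell `{a ≤ |x| ≤ b}`. -/
def csh (a b : ℝ) : Set E3 := {x | a ≤ ‖x‖ ∧ ‖x‖ ≤ b}

lemma csh_BM (a b : ℝ) : BM (csh a b) := by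
  refine ⟨(isBounded_closedBall (x := (0 : E3)) (r := b)).subset fun x hx => ?_, ?_⟩
  · simpa using hx.2
  · exact (measurableSet_le (measurable_const (a := a)) measurable_norm).inter
      (measurableSet_le measurable_norm (measurable_const (a := b)))

lemma int_eq_set {f : E3 → ℝ} {S : Set E3} (h : ∀ x, x ∉ S → f x = 0) :
    ∫ x, f x = ∫ x in S, f x := (setIntegral_eq_integral_of_forall_compl_eq_zero h).symm

/-- A gradient integrated against a cut-off solenoidal field is controlled, through Poincaré's
inequality, by its own norm on `A`. -/
lemma grad_cut {p p' : ℝ} (hpp : p.HolderConjugate p') {a b K : ℝ} {φ : E3 → ℝ}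
    (hφ : Cut a b φ K) {D A : Set E3} (hD : BM D) (h1 : csh a b ⊆ D) (h2 : csh a b ⊆ Ann 1)
    {c : (E3 → ℝ) → ℝ} (hP : PC c p' D A) : ∃ C, 0 ≤ C ∧ ∀ (U : Fin 3 → E3 → ℝ) (η : E3 → ℝ),
      (∀ i, Sm (U i)) → (∀ x, ∑ j, pd3 j (U j) x = 0) → Sm η →
      |∫ x, ∑ i, pd3 i η x * (φ x * U i x)| ≤
        C * (∑ i, nm (U i) p (Ann 1)) * nm (fderiv ℝ η) p' A := by
  obtain ⟨C, hC, H⟩ := hP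
  refine ⟨K * C, mul_nonneg hφ.K_nonneg hC, fun U η hU hdiv hη => ?_⟩
  have hS := csh_BM a b
  have hg : Sm (fun x => η x - c η) := hη.sub contDiff_const
  have hfU : ∀ i, Sm (fun x => φ x * U i x) := fun i => hφ.sm.mul (hU i)
  have cs : ∀ i, HasCompactSupport (fun x => φ x * U i x) := fun i => hφ.supp.mul_right
  have ci : ∀ {f : E3 → ℝ}, Continuous f → HasCompactSupport f → Integrable f volume :=
    fun hf hc => hf.integrable_of_hasCompactSupport hc
  have e1 : ∫ x, ∑ i, pd3 i η x * (φ x * U i x) = - ∫ x, ∑ i, (η x - c η) * (pd3 i φ x * U i x) := by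
    calc _ = ∑ i, ∫ x, (φ x * U i x) * pd3 i (fun y => η y - c η) x := by
          rw [← integral_finsetSum]
          · congr 1; funext x
            refine Finset.sum_congr rfl fun i _ => ?_
            rw [pd3_sub hη.diff (differentiable_const _), pd3_const]; ring
          · intro i _
            exact ci ((hfU i).cont.mul (hg.pd i).cont) (cs i).mul_right
      _ = ∑ i, - ∫ x, pd3 i (fun y => φ y * U i y) x * (η x - c η) :=
          Finset.sum_congr rfl fun i _ => ibp (hfU i).one hg.one (cs i) i
      _ = - ∫ x, ∑ i, pd3 i (fun y => φ y * U i y) x * (η x - c η) := by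
          rw [Finset.sum_neg_distrib, integral_finsetSum]
          intro i _
          exact ci (((hfU i).pd i).cont.mul hg.cont) (hasCompactSupport_pd3 (cs i) i).mul_right
      _ = _ := by
          congr 2; funext x
          have : ∀ i, pd3 i (fun y => φ y * U i y) x * (η x - c η) =
              (φ x * (η x - c η)) * pd3 i (U i) x + (η x - c η) * (pd3 i φ x * U i x) := by
            intro i; rw [pd3_mul hφ.sm.diff (hU i).diff]; ring
          simp only [this]
          rw [Finset.sum_add_distrib, ← Finset.mul_sum, hdiv]; simp
  have e2 : ∫ x, ∑ i, (η x - c η) * (pd3 i φ x * U i x) =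
      ∫ x in csh a b, ∑ i, (η x - c η) * (pd3 i φ x * U i x) := by
    refine int_eq_set fun x hx => ?_
    have : ‖x‖ < a ∨ b < ‖x‖ := by
      by_contra! h; exact hx h
    refine Finset.sum_eq_zero fun i _ => ?_
    rw [hφ.dz i x this]; ring
  have cc : ∀ i, Continuous fun x => pd3 i φ x * U i x := fun i => (hφ.sm.pd i).cont.mul (hU i).cont
  have hp1 := hpp.lt
  have hp1' := hpp.symm.lt
  have e3 : ∫ x in csh a b, ∑ i, (η x - c η) * (pd3 i φ x * U i x) =
      ∑ i, ∫ x in csh a b, (η x - c η) * (pd3 i φ x * U i x) :=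
    integral_finsetSum _ fun i _ => integrableOn_of_cont (hg.cont.mul (cc i)) hS.1
  rw [e1, abs_neg, e2, e3]
  calc |∑ i, ∫ x in csh a b, (η x - c η) * (pd3 i φ x * U i x)|
      ≤ ∑ i, (C * nm (fderiv ℝ η) p' A) * (K * nm (U i) p (Ann 1)) := by
        refine (Finset.abs_sum_le_sum_abs _ _).trans (Finset.sum_le_sum fun i _ => ?_)
        refine (abs_setIntegral_le _ _).trans ?_
        refine (integral_mul_le hg.cont (cc i) hS (p := p') (q := p) (by linarith) (by linarith)
          (by have := hpp.inv_add_inv_eq_one; simp only [one_div]; linarith)).trans ?_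
        refine mul_le_mul ((nm_mono_set hg.cont hD h1).trans (H η hη.one)) ?_ (nm_nonneg _ _ _)
          (mul_nonneg hC (nm_nonneg _ _ _))
        have : nm (fun x => pd3 i φ x * U i x) p (csh a b) ≤ nm (fun x => K * U i x) p (csh a b) := by
          refine nm_mono (by have := (hU i).cont; fun_prop) hS fun x _ => ?_
          rw [norm_mul, norm_mul, Real.norm_eq_abs, Real.norm_of_nonneg hφ.K_nonneg]
          exact mul_le_mul_of_nonneg_right (hφ.dK i x) (norm_nonneg _)
        refine this.trans ?_
        rw [nm_smul, abs_of_nonneg hφ.K_nonneg]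
        exact mul_le_mul_of_nonneg_left (nm_mono_set (hU i).cont (BM_Ann 1) h2) hφ.K_nonneg
    _ = _ := by rw [← Finset.mul_sum, ← Finset.mul_sum]; ring

/-! ### Periodic Helmholtz decomposition -/

lemma T_tr (s c x) : ∑ j, T s (mc (mij j j) c) x = T s c x - T0 s c := by
  rw [← T_ksq_pot, ← T_sum]
  congr 1; funext k
  rw [Finset.sum_congr rfl fun j _ => by rw [← mc_pot]]
  simp only [mc, ksq, ← Finset.sum_mul]
  congr 1; push_cast
  exact Finset.sum_congr rfl fun l _ => by ring

lemma pd3_coord (i l : Fin 3) (x : E3) : pd3 i (fun y => y l) x = if i = l then 1 else 0 := by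
  have : HasFDerivAt (fun y : E3 => y l) (EuclideanSpace.proj l : E3 →L[ℝ] ℝ) x :=
    (EuclideanSpace.proj l : E3 →L[ℝ] ℝ).hasFDerivAt
  rw [pd3, this.fderiv]
  simp [eq_comm]

/-- The scalar part of the periodic Helmholtz decomposition, the mean included. -/
def hpot (s : Finset (Fin 3 → ℤ)) (g : Fin 3 → (Fin 3 → ℤ) → ℂ) (x : E3) : ℝ :=
  ∑ l, (- pd3 l (T s (pot (g l))) x + T0 s (g l) * x l)

lemma coord_smooth (l : Fin 3) : Sm (fun y : E3 => y l) := by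
  unfold Sm; fun_prop

lemma hpot_term (s) (c : (Fin 3 → ℤ) → ℂ) (l : Fin 3) :
    Sm (fun x => - pd3 l (T s (pot c)) x + T0 s c * x l) :=
  ContDiff.add (ContDiff.neg ((T_smooth s (pot c)).pd l)) ((coord_smooth l).cmul _)

lemma hpot_smooth (s g) : Sm (hpot s g) :=
  ContDiff.sum fun l _ => hpot_term s (g l) l

/-- The periodic Helmholtz decomposition of the field with components `T s (g i)`. -/
lemma helmholtz (s g) (i : Fin 3) (x : E3) :
    (∑ l, T s (mc (Pil i l) (g l)) x) + pd3 i (hpot s g) x = T s (g i) x := by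
  have e : pd3 i (hpot s g) x =
      ∑ l, (T s (mc (mij i l) (g l)) x + if i = l then T0 s (g l) else 0) := by
    unfold hpot
    rw [pd3_sum _ (fun l => (hpot_term s (g l) l).diff)]
    refine Finset.sum_congr rfl fun l _ => ?_
    have d1 : Differentiable ℝ (pd3 l (T s (pot (g l)))) := ((T_smooth s (pot (g l))).pd l).diff
    rw [pd3_add (f := fun x => - pd3 l (T s (pot (g l))) x) d1.neg ((coord_smooth l).cmul _).diff, pd3_neg, pd3_const_mul (coord_smooth l).diff,
      pd3_coord, pd3_T, pd3_T, T_DD, ← mc_pot, ← T_neg]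
    congr 1
    · congr 1; funext k; simp [mc]
    · split_ifs <;> simp
  rw [e, ← Finset.sum_add_distrib]
  simp only [T_Pil]
  have : ∀ l, ((if i = l then ∑ j, T s (mc (mij j j) (g l)) x else 0) - T s (mc (mij i l) (g l)) x +
      (T s (mc (mij i l) (g l)) x + if i = l then T0 s (g l) else 0)) =
      if i = l then T s (g l) x else 0 := by
    intro l
    split_ifs
    · rw [T_tr]; ring
    · ring
  simp only [this]
  simp

/-- A field supported well inside the cell whose solenoidal part is small in the dual sense is
nearly a gradient, up to a small error field. -/
lemma decomp {p p' : ℝ} (hp : 3 ≤ p) (hpp : p.HolderConjugate p') : ∃ K, 0 ≤ K ∧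
    ∀ (G : Fin 3 → E3 → ℝ) (M : ℝ), (∀ i, Continuous (G i)) →
    (∀ i x, (‖x‖ < 1.06 ∨ 1.09 < ‖x‖) → G i x = 0) → 0 ≤ M →
    (∀ i s c, |∫ x in Q, ∑ l, G l x * T s (mc (Pil i l) c) x| ≤ M * nm (T s c) p Q) →
    ∀ ε, 0 < ε → ∃ (E : Fin 3 → E3 → ℝ) (η : E3 → ℝ), (∀ i, Continuous (E i)) ∧ Sm η ∧
      (∀ i, ∀ x ∈ Q, |E i x + pd3 i η x - G i x| ≤ ε) ∧ ∀ i, nm (E i) p' Q ≤ M + ε * K := by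
  classical
  obtain ⟨C, hC, HC⟩ := Pil_bound hp
  set V := (volume Q).toReal ^ (1 / p') with hV
  have hV0 : 0 ≤ V := by positivity
  have hp1 := hpp.lt
  have hp1' := hpp.symm.lt
  refine ⟨3 * (V * C), by positivity, fun G M hG hsupp hM H ε hε => ?_⟩
  have hper : ∀ l, ∀ x ∈ Q, ∀ y ∈ Q, (∀ i, ∃ n : ℤ, x i = y i + n * (2 * Real.pi)) →
      G l x = G l y := by
    intro l x hx y hy h
    by_cases hxy : x = y
    · rw [hxy]
    have : ∃ i, x i ≠ y i := by
      by_contra! h'; exact hxy (by ext i; exact h' i)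
    obtain ⟨i, hi⟩ := this
    obtain ⟨n, hn⟩ := h i
    have hx1 := (hx i).1
    have hx2 := (hx i).2
    have hy1 := (hy i).1
    have hy2 := (hy i).2
    have hpi := Real.pi_gt_three
    have hn0 : n ≠ 0 := by rintro rfl; simp at hn; exact hi hn
    have key : Real.pi ≤ |x i| ∧ Real.pi ≤ |y i| := by
      rcases lt_or_gt_of_ne hn0 with h0 | h0
      · have : (n : ℝ) ≤ -1 := by exact_mod_cast (by omega : n ≤ -1)
        have h2 : x i ≤ y i - 2 * Real.pi := by nlinarith
        exact ⟨le_abs.2 (Or.inr (by linarith)), le_abs.2 (Or.inl (by linarith))⟩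
      · have : (1 : ℝ) ≤ n := by exact_mod_cast (by omega : 1 ≤ n)
        have h2 : y i + 2 * Real.pi ≤ x i := by nlinarith
        exact ⟨le_abs.2 (Or.inl (by linarith)), le_abs.2 (Or.inr (by linarith))⟩
    have n1 := abs_coord_le x i
    have n2 := abs_coord_le y i
    rw [hsupp l x (Or.inr (by linarith [key.1])), hsupp l y (Or.inr (by linarith [key.2]))]
  choose S c hc using fun l => trig_dense (hG l) (hper l) hε
  let s : Finset (Fin 3 → ℤ) := Finset.univ.biUnion S
  let g : Fin 3 → (Fin 3 → ℤ) → ℂ := fun l k => if k ∈ S l then c l k else 0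
  have hg : ∀ l x, T s (g l) x = T (S l) (c l) x := fun l x =>
    T_mono (Finset.subset_biUnion_of_mem S (Finset.mem_univ l)) (c l) x
  have hgb : ∀ l, ∀ x ∈ Q, |T s (g l) x - G l x| ≤ ε := fun l x hx => by rw [hg]; exact hc l x hx
  clear_value s g
  have hE : ∀ i x, ∑ l, T s (mc (Pil i l) (g l)) x = T s (fun k => ∑ l, mc (Pil i l) (g l) k) x :=
    fun i x => (T_sum _ _ _ _).symm
  refine ⟨fun i => T s (fun k => ∑ l, mc (Pil i l) (g l) k), hpot s g, fun i => cT _ _,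
    hpot_smooth s g, ?_, ?_⟩
  · intro i x hx
    beta_reduce
    rw [← hE, helmholtz]
    exact hgb i x hx
  · intro i
    refine norming hpp.symm _ _ (fun s' c' => ?_) (by positivity)
    have e1 : ∫ x in Q, T s (fun k => ∑ l, mc (Pil i l) (g l) k) x * T s' c' x =
        ∑ l, ∫ x in Q, T s (g l) x * T s' (mc (Pil i l) c') x := by
      simp only [← hE, Finset.sum_mul]
      rw [integral_finsetSum _ fun l _ => intQ (cTT _ _ _ _)]
      exact Finset.sum_congr rfl fun l _ => Pil_adj _ _ _ _ _ _
    have cGT : ∀ l, Continuous fun x => G l x * T s' (mc (Pil i l) c') x := fun l =>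
      (hG l).mul (cT _ _)
    have cD : ∀ l, Continuous fun x => T s (g l) x - G l x := fun l => (cT _ _).sub (hG l)
    have cDT : ∀ l, Continuous fun x => (T s (g l) x - G l x) * T s' (mc (Pil i l) c') x := fun l =>
      (cD l).mul (cT _ _)
    have e2 : ∑ l, ∫ x in Q, T s (g l) x * T s' (mc (Pil i l) c') x =
        (∫ x in Q, ∑ l, G l x * T s' (mc (Pil i l) c') x) +
        ∑ l, ∫ x in Q, (T s (g l) x - G l x) * T s' (mc (Pil i l) c') x := by
      rw [integral_finsetSum _ fun l _ => intQ (cGT l), ← Finset.sum_add_distrib]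
      refine Finset.sum_congr rfl fun l _ => ?_
      rw [← integral_add (intQ (cGT l)) (intQ (cDT l))]
      congr 1; funext x; ring
    have hb : ∀ l, |∫ x in Q, (T s (g l) x - G l x) * T s' (mc (Pil i l) c') x| ≤
        (V * ε) * (C * nm (T s' c') p Q) := by
      intro l
      refine (abs_setIntegral_le _ _).trans ?_
      refine (integral_mul_le (cD l) (cT _ _) BM_Q (p := p') (q := p) (by linarith) (by linarith)
        (by have := hpp.inv_add_inv_eq_one; simp only [one_div]; linarith)).trans ?_
      refine mul_le_mul (nm_le_of_bound BM_Q (by linarith) hε.le fun x hx => hgb l x hx) (HC _ _ _ _)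
        (nm_nonneg _ _ _) (by positivity)
    rw [e1, e2]
    refine (abs_add_le _ _).trans ?_
    have h3 : |∑ l, ∫ x in Q, (T s (g l) x - G l x) * T s' (mc (Pil i l) c') x| ≤
        ∑ l : Fin 3, (V * ε) * (C * nm (T s' c') p Q) :=
      (Finset.abs_sum_le_sum_abs _ _).trans (Finset.sum_le_sum fun l _ => hb l)
    have h4 := H i s' c'
    simp only [Finset.sum_const, Finset.card_univ, Fintype.card_fin, nsmul_eq_mul] at h3
    push_cast at h3
    nlinarith [h3, h4]

/-! ### The dual estimate -/

lemma mem_Q_of_norm {x : E3} (hx : ‖x‖ ≤ 3) : x ∈ Q := fun i => by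
  have h1 := abs_le.1 ((abs_coord_le x i).trans hx)
  have := Real.pi_gt_three
  exact ⟨by linarith, by linarith⟩

/-- The gradient of the potential is controlled where the decomposed field vanishes. -/
lemma grad_small {p' : ℝ} (hp' : 1 ≤ p') {A : Set E3} (hA : BM A) (hAQ : A ⊆ Q)
    {G E : Fin 3 → E3 → ℝ} {η : E3 → ℝ} {ε N : ℝ} (hε : 0 ≤ ε) (hE : ∀ i, Continuous (E i)) (hη : Sm η)
    (hG : ∀ i, ∀ x ∈ A, G i x = 0) (h : ∀ i, ∀ x ∈ Q, |E i x + pd3 i η x - G i x| ≤ ε)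
    (hN : ∀ i, nm (E i) p' Q ≤ N) :
    nm (fderiv ℝ η) p' A ≤ 3 * (N + (volume Q).toReal ^ (1 / p') * ε) := by
  have c : ∀ i, Continuous fun x => |pd3 i η x| := fun i => (hη.pd i).cont.abs
  have h1 : nm (fderiv ℝ η) p' A ≤ nm (fun x => ∑ i, |pd3 i η x|) p' A := by
    refine nm_mono (continuous_finsetSum _ fun i _ => c i) hA fun x _ => ?_
    rw [Real.norm_of_nonneg (Finset.sum_nonneg fun i _ => abs_nonneg _)]
    exact norm_fderiv_le_sum _ _
  have h2 : ∀ i, nm (fun x => |pd3 i η x|) p' A ≤ N + (volume Q).toReal ^ (1 / p') * ε := by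
    intro i
    have ce : Continuous fun x => |E i x| := (hE i).abs
    have ce' : Continuous fun x => |E i x| + ε := ce.add continuous_const
    have hε' : nm (fun _ : E3 => ε) p' Q ≤ (volume Q).toReal ^ (1 / p') * ε :=
      nm_le_of_bound BM_Q (by linarith) hε fun x _ => (Real.norm_of_nonneg hε).le
    calc nm (fun x => |pd3 i η x|) p' A ≤ nm (fun x => |E i x| + ε) p' A := by
          refine nm_mono ce' hA fun x hx => ?_
          have := h i x (hAQ hx)
          rw [hG i x hx, sub_zero] at this
          rw [Real.norm_eq_abs, abs_abs, Real.norm_of_nonneg (by positivity)]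
          have h3 := abs_sub (E i x + pd3 i η x) (E i x)
          rw [add_sub_cancel_left] at h3
          linarith
      _ ≤ nm (fun x => |E i x| + ε) p' Q := nm_mono_set ce' BM_Q hAQ
      _ ≤ nm (fun x => |E i x|) p' Q + nm (fun _ => ε) p' Q := nm_add_le ce continuous_const BM_Q hp'
      _ ≤ _ := by
          refine add_le_add ?_ hε'
          have : nm (fun x => |E i x|) p' Q = nm (E i) p' Q := nm_norm (E i) p' Q
          rw [this]; exact hN i
  calc _ ≤ _ := h1
    _ ≤ ∑ i, nm (fun x => |pd3 i η x|) p' A := nm_sum_le _ c hA hp'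
    _ ≤ ∑ i : Fin 3, (N + (volume Q).toReal ^ (1 / p') * ε) := Finset.sum_le_sum fun i _ => h2 i
    _ = _ := by simp; ring

/-- A field `G` supported in the shell `1.06 ≤ |x| ≤ 1.09` pairs with a solenoidal field `U` at most
as strongly as it pairs with the columns of the Leray projection. -/
lemma dual_bound {p p' : ℝ} (hp : 3 ≤ p) (hpp : p.HolderConjugate p') : ∃ C, 0 < C ∧
    ∀ (G : Fin 3 → E3 → ℝ) (M : ℝ), (∀ i, Continuous (G i)) →
    (∀ i x, (‖x‖ < 1.06 ∨ 1.09 < ‖x‖) → G i x = 0) → 0 ≤ M →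
    (∀ i s c, |∫ x in Q, ∑ l, G l x * T s (mc (Pil i l) c) x| ≤ M * nm (T s c) p Q) →
    ∀ U : Fin 3 → E3 → ℝ, (∀ i, Sm (U i)) → (∀ x, ∑ j, pd3 j (U j) x = 0) →
      |∫ x in Q, ∑ i, G i x * U i x| ≤ C * (∑ i, nm (U i) p (Ann 1)) * M := by
  obtain ⟨K, hK, HD⟩ := decomp hp hpp
  have hp1 := hpp.lt
  have hp1' := hpp.symm.lt
  obtain ⟨χ1, K1, h1⟩ := exists_cut (a := 1.01) (b := 1.04) (by norm_num) (by norm_num)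
  obtain ⟨χ2, K2, h2⟩ := exists_cut (a := 1.91) (b := 1.99) (by norm_num) (by norm_num)
  have sA : ∀ {a b : ℝ}, 1 ≤ a → b < 2 → csh a b ⊆ Ann 1 := by
    intro a b ha hb x hx
    constructor
    · simp; linarith [hx.2]
    · simp; linarith [hx.1]
  obtain ⟨C1, hC1, g1⟩ := grad_cut hpp h1 (BM_ball 1.05) (fun x hx => by
    have := hx.2; rw [mem_ball_zero_iff]; linarith) (sA (by norm_num) (by norm_num))
    (PC_ball (ρ := 1.05) (by norm_num) hp1'.le)
  obtain ⟨C2, hC2, g2⟩ := grad_cut hpp h2 (shell_BM 1.1) (fun x hx => by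
    have h1 := hx.1
    have h2 := hx.2
    refine ⟨?_, ?_⟩
    · show 3 * (1.1:ℝ) ^ 2 ≤ ‖x‖ ^ 2
      nlinarith
    · rw [mem_ball_zero_iff]; linarith) (sA (by norm_num) (by norm_num))
    (PC_shell (ρ := 1.1) (by norm_num) hp1'.le)
  obtain ⟨V, hV⟩ : ∃ V, V = (volume Q).toReal ^ (1 / p') := ⟨_, rfl⟩
  have hV0 : 0 ≤ V := by rw [hV]; positivity
  refine ⟨1 + 3 * (C1 + C2), by positivity, fun G M hG hsupp hM H U hU hdiv => ?_⟩
  set a := ∑ i, nm (U i) p (Ann 1) with ha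
  have ha0 : 0 ≤ a := Finset.sum_nonneg fun i _ => nm_nonneg _ _ _
  have key : ∀ ε, 0 < ε → |∫ x in Q, ∑ i, G i x * U i x| ≤
      (1 + 3 * (C1 + C2)) * a * (M + ε * (K + V)) := by
    intro ε hε
    obtain ⟨E, η, hE, hη, hb, hN⟩ := HD G M hG hsupp hM H ε hε
    have e1 := g1 U η hU hdiv hη
    have e2 := g2 U η hU hdiv hη
    have n1 : nm (fderiv ℝ η) p' (ball 0 1.05) ≤ 3 * (M + ε * K + V * ε) := by
      rw [hV]
      exact grad_small hp1'.le (BM_ball _) (fun x hx => mem_Q_of_norm (by rw [mem_ball_zero_iff] at hx; linarith))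
        hε.le hE hη (fun i x hx => hsupp i x (Or.inl (by rw [mem_ball_zero_iff] at hx; linarith))) hb hN
    have n2 : nm (fderiv ℝ η) p' (Ann 1.1) ≤ 3 * (M + ε * K + V * ε) := by
      rw [hV]
      exact grad_small hp1'.le (BM_Ann _) (fun x hx => mem_Q_of_norm (by
          have := hx.1; rw [mem_ball_zero_iff] at this; linarith))
        hε.le hE hη (fun i x hx => hsupp i x (Or.inr (by
          have := hx.2; rw [mem_ball_zero_iff, not_lt] at this; linarith))) hb hN
    let χ : E3 → ℝ := fun x => χ2 x - χ1 x
    have cχ : Continuous χ := h2.sm.cont.sub h1.sm.cont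
    have χb : ∀ x, |χ x| ≤ 1 := fun x => abs_le.2
      ⟨by show -1 ≤ χ2 x - χ1 x; linarith [h2.nonneg x, h1.le_one x],
        by show χ2 x - χ1 x ≤ 1; linarith [h2.le_one x, h1.nonneg x]⟩
    have cχU : ∀ i, Continuous fun x => χ x * U i x := fun i => cχ.mul (hU i).cont
    have χU : ∀ i, nm (fun x => χ x * U i x) p Q ≤ nm (U i) p (Ann 1) := by
      intro i
      refine (nm_supp (cχU i) BM_Q (BM_Ann 1) fun x _ hx => ?_).trans
        (nm_mono (hU i).cont (BM_Ann 1) fun x _ => ?_)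
      · have : ‖x‖ < 1 ∨ 2 ≤ ‖x‖ := by
          by_contra! h
          exact hx ⟨by simpa using h.2, by simpa using h.1⟩
        have : χ x = 0 := by
          show χ2 x - χ1 x = 0
          rcases this with h | h
          · rw [h1.one x (by linarith), h2.one x (by linarith)]; ring
          · rw [h1.zero x (by linarith), h2.zero x (by linarith)]; ring
        rw [this]; ring
      · rw [norm_mul]
        exact mul_le_of_le_one_left (norm_nonneg _) (χb x)
    have cη : ∀ i, Continuous (pd3 i η) := fun i => (hη.pd i).cont
    have cr : ∀ i, Continuous fun x => G i x - E i x - pd3 i η x := fun i => ((hG i).sub (hE i)).sub (cη i)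
    have c1 : ∀ i, Continuous fun x => (χ x * U i x) * (G i x - E i x - pd3 i η x) := fun i =>
      (cχU i).mul (cr i)
    have c2 : ∀ i, Continuous fun x => (χ x * U i x) * E i x := fun i => (cχU i).mul (hE i)
    have c3 : ∀ {χ : E3 → ℝ}, Continuous χ → ∀ i, Continuous fun x => pd3 i η x * (χ x * U i x) :=
      fun h i => (cη i).mul (h.mul (hU i).cont)
    have c3' : ∀ {χ : E3 → ℝ}, Continuous χ → Continuous fun x => ∑ i, pd3 i η x * (χ x * U i x) :=
      fun h => continuous_finsetSum _ fun i _ => c3 h i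
    have c12 : Continuous fun x => (∑ i, (χ x * U i x) * (G i x - E i x - pd3 i η x)) +
        ∑ i, (χ x * U i x) * E i x :=
      (continuous_finsetSum _ fun i _ => c1 i).add (continuous_finsetSum _ fun i _ => c2 i)
    have split : ∫ x in Q, ∑ i, G i x * U i x =
        (∑ i, ∫ x in Q, (χ x * U i x) * (G i x - E i x - pd3 i η x)) +
        (∑ i, ∫ x in Q, (χ x * U i x) * E i x) + ∫ x in Q, ∑ i, pd3 i η x * (χ x * U i x) := by
      rw [← integral_finsetSum _ fun i _ => intQ (c1 i), ← integral_finsetSum _ fun i _ => intQ (c2 i),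
        ← integral_add (intQ (continuous_finsetSum _ fun i _ => c1 i))
          (intQ (continuous_finsetSum _ fun i _ => c2 i)),
        ← integral_add (intQ c12) (intQ (c3' cχ))]
      congr 1; funext x
      rw [← Finset.sum_add_distrib, ← Finset.sum_add_distrib]
      refine Finset.sum_congr rfl fun i _ => ?_
      by_cases hx : ‖x‖ < 1.06 ∨ 1.09 < ‖x‖
      · rw [hsupp i x hx]; ring
      · push Not at hx
        have : χ x = 1 := by
          show χ2 x - χ1 x = 1
          rw [h1.zero x (by linarith), h2.one x (by linarith)]; ring
        rw [this]; ring
    have third : ∫ x in Q, ∑ i, pd3 i η x * (χ x * U i x) =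
        (∫ x, ∑ i, pd3 i η x * (χ2 x * U i x)) - ∫ x, ∑ i, pd3 i η x * (χ1 x * U i x) := by
      have z : ∀ {χ : E3 → ℝ}, (∀ x, 2 ≤ ‖x‖ → χ x = 0) →
          ∫ x, ∑ i, pd3 i η x * (χ x * U i x) = ∫ x in Q, ∑ i, pd3 i η x * (χ x * U i x) := by
        intro χ h
        refine int_eq_set fun x hx => Finset.sum_eq_zero fun i _ => ?_
        rw [h x (by by_contra! h'; exact hx (mem_Q_of_norm (by linarith)))]; ring
      rw [z (fun x hx => h2.zero x (by linarith)),
        z (fun x hx => h1.zero x (by linarith)),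
        ← integral_sub (intQ (c3' h2.sm.cont)) (intQ (c3' h1.sm.cont))]
      congr 1; funext x
      rw [← Finset.sum_sub_distrib]
      refine Finset.sum_congr rfl fun i _ => ?_
      show pd3 i η x * ((χ2 x - χ1 x) * U i x) = _
      ring
    have hol : ∀ (f : Fin 3 → E3 → ℝ) (B : ℝ), (∀ i, Continuous (f i)) → (∀ i, nm (f i) p' Q ≤ B) →
        |∑ i, ∫ x in Q, (χ x * U i x) * f i x| ≤ a * B := by
      intro f B hf hB
      refine (Finset.abs_sum_le_sum_abs _ _).trans ?_
      rw [ha, Finset.sum_mul]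
      refine Finset.sum_le_sum fun i _ => ?_
      refine (abs_setIntegral_le _ _).trans ?_
      refine (integral_mul_le (cχU i) (hf i) BM_Q (p := p) (q := p') (by linarith) (by linarith)
          (by have := hpp.inv_add_inv_eq_one; simp only [one_div]; linarith)).trans ?_
      exact mul_le_mul (χU i) (hB i) (nm_nonneg _ _ _) (nm_nonneg _ _ _)
    have t1 := hol (fun i x => G i x - E i x - pd3 i η x) (V * ε) cr fun i => by
      rw [hV]
      exact nm_le_of_bound BM_Q (by linarith) hε.le fun x hx => by
        have := hb i x hx
        rw [← abs_neg] at this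
        rw [Real.norm_eq_abs]
        refine le_trans (le_of_eq ?_) this
        congr 1; ring
    have t2 := hol E (M + ε * K) hE hN
    have t3 : |∫ x in Q, ∑ i, pd3 i η x * (χ x * U i x)| ≤
        (C2 + C1) * a * (3 * (M + ε * K + V * ε)) := by
      rw [third]
      refine (abs_sub _ _).trans ?_
      have l1 := mul_le_mul_of_nonneg_left n1 (mul_nonneg hC1 ha0)
      have l2 := mul_le_mul_of_nonneg_left n2 (mul_nonneg hC2 ha0)
      linarith
    rw [split]
    refine (abs_add_le _ _).trans ?_
    have t4 := abs_add_le (∑ i, ∫ x in Q, (χ x * U i x) * (G i x - E i x - pd3 i η x))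
        (∑ i, ∫ x in Q, (χ x * U i x) * E i x)
    beta_reduce at t1
    linarith
  have lim : Tendsto (fun ε : ℝ => (1 + 3 * (C1 + C2)) * a * (M + ε * (K + V))) (nhdsWithin 0 (Set.Ioi 0))
      (nhds ((1 + 3 * (C1 + C2)) * a * (M + 0 * (K + V)))) := by
    have : Continuous fun ε : ℝ => (1 + 3 * (C1 + C2)) * a * (M + ε * (K + V)) := by fun_prop
    exact (this.tendsto 0).mono_left nhdsWithin_le_nhds
  have := ge_of_tendsto lim (Filter.eventually_of_mem self_mem_nhdsWithin fun ε hε => key ε hε)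
  simpa using this

/-! ### Removing the pressure -/

/-- `L^r` norm of a full derivative through partial derivatives. -/
lemma nm_fderiv_le {f : E3 → ℝ} (hf : Sm f) {S : Set E3} (hS : BM S) {r B : ℝ} (hr : 1 ≤ r)
    (h : ∀ i, nm (pd3 i f) r S ≤ B) : nm (fderiv ℝ f) r S ≤ 3 * B := by
  have c : ∀ i, Continuous fun x => |pd3 i f x| := fun i => (hf.pd i).cont.abs
  have h1 : nm (fderiv ℝ f) r S ≤ nm (fun x => ∑ i, |pd3 i f x|) r S := by
    refine nm_mono (continuous_finsetSum _ fun i _ => c i) hS fun x _ => ?_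
    rw [Real.norm_of_nonneg (Finset.sum_nonneg fun i _ => abs_nonneg _)]
    exact norm_fderiv_le_sum _ _
  calc _ ≤ _ := h1
    _ ≤ ∑ i, nm (fun x => |pd3 i f x|) r S := nm_sum_le _ c hS hr
    _ ≤ ∑ i : Fin 3, B := Finset.sum_le_sum fun i _ => by
        have : nm (fun x => |pd3 i f x|) r S = nm (pd3 i f) r S := nm_norm (pd3 i f) r S
        rw [this]; exact h i
    _ = _ := by simp

/-- Replacing a solenoidal field `U` by the curl of a potential `ψ` of comparable size, in such a way
that `U - curl ψ` is orthogonal to a single prescribed field `G` supported in a thin shell. -/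
lemma pressure {p : ℝ} (hp : 3 ≤ p) : ∃ C, 0 ≤ C ∧
    ∀ (G : Fin 3 → E3 → ℝ), (∀ i, Continuous (G i)) →
    (∀ i x, (‖x‖ < 1.06 ∨ 1.09 < ‖x‖) → G i x = 0) →
    ∀ U : Fin 3 → E3 → ℝ, (∀ i, Sm (U i)) → (∀ x, ∑ j, pd3 j (U j) x = 0) →
    ∃ ψ : Fin 3 → E3 → ℝ, (∀ i, Sm (ψ i)) ∧ (∫ x, ∑ l, G l x * (U l x - curl ψ l x) = 0) ∧
      (∀ i, nm (ψ i) p (ball 0 1.1) ≤ C * ∑ i, nm (U i) p (Ann 1)) ∧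
      ∀ i j, nm (pd3 j (ψ i)) p (ball 0 1.1) ≤ C * ∑ i, nm (U i) p (Ann 1) := by
  have hpp : p.HolderConjugate (p / (p - 1)) := Real.HolderConjugate.conjExponent (by linarith)
  obtain ⟨C1, hC1, HD⟩ := dual_bound hp hpp
  obtain ⟨C2, hC2, HC⟩ := CZ p hp
  obtain ⟨C3, hC3, HP⟩ := PC_ball (ρ := 1.1) (s := p) (by norm_num) (by linarith)
  refine ⟨4 * C1 * C2 * (1 + 3 * C3), by positivity, fun G hG hsupp U hU hdiv => ?_⟩
  obtain ⟨a, ha⟩ : ∃ a, a = ∑ i, nm (U i) p (Ann 1) := ⟨_, rfl⟩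
  have ha0 : 0 ≤ a := ha ▸ Finset.sum_nonneg fun i _ => nm_nonneg _ _ _
  rw [← ha]
  have cGU : ∀ i, Continuous fun x => G i x * U i x := fun i => (hG i).mul (hU i).cont
  have toQ : ∀ W : Fin 3 → E3 → ℝ, ∫ x, ∑ l, G l x * W l x = ∫ x in Q, ∑ l, G l x * W l x := by
    intro W
    refine int_eq_set fun x hx => Finset.sum_eq_zero fun i _ => ?_
    rw [hsupp i x (Or.inr (by by_contra! h'; exact hx (mem_Q_of_norm (by linarith)))), zero_mul]
  obtain ⟨I, hI⟩ : ∃ I, I = ∫ x in Q, ∑ i, G i x * U i x := ⟨_, rfl⟩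
  by_cases hI0 : I = 0
  · have z : ∀ j, pd3 j (fun _ : E3 => (0 : ℝ)) = fun _ => 0 := fun j => by
      funext x; exact pd3_const _ _ _
    have n0 : ∀ S, nm (fun _ : E3 => (0 : ℝ)) p S = 0 := fun S => by simp [nm]
    refine ⟨fun _ _ => 0, fun i => contDiff_const, ?_, fun i => ?_, fun i j => ?_⟩
    · simp only [curl, z, sub_zero]
      rw [toQ, ← hI, hI0]
    · rw [n0]; positivity
    · rw [z, n0]; positivity
  have hapos : 0 < a := by
    rcases ha0.lt_or_eq with h | h
    · exact h
    exfalso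
    apply hI0
    have hz : ∀ i, nm (U i) p (Ann 1) = 0 := fun i =>
      (Finset.sum_eq_zero_iff_of_nonneg fun i _ => nm_nonneg _ _ _).1 (ha ▸ h.symm) i (Finset.mem_univ i)
    have e : I = ∑ i, ∫ x in Ann 1, G i x * U i x := by
      rw [hI, ← toQ, ← integral_finsetSum _ fun i _ => integrableOn_of_cont (cGU i) (BM_Ann 1).1]
      refine int_eq_set fun x hx => Finset.sum_eq_zero fun i _ => ?_
      have : ‖x‖ < 1 ∨ 2 ≤ ‖x‖ := by
        by_contra! h
        exact hx ⟨by simpa using h.2, by simpa using h.1⟩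
      rw [hsupp i x (by rcases this with h | h; exacts [Or.inl (by linarith), Or.inr (by linarith)]),
        zero_mul]
    rw [e]
    refine Finset.sum_eq_zero fun i _ => ?_
    have := (abs_setIntegral_le _ _).trans (integral_mul_le (hG i) (hU i).cont (BM_Ann 1)
      (p := p / (p - 1)) (q := p) (by linarith [hpp.symm.lt]) (by linarith)
        (by have := hpp.inv_add_inv_eq_one; simp only [one_div]; linarith))
    rw [hz i, mul_zero] at this
    exact abs_nonpos_iff.1 this
  have hIpos : 0 < |I| := abs_pos.2 hI0
  obtain ⟨M, hM⟩ : ∃ M, M = |I| / (2 * C1 * a) := ⟨_, rfl⟩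
  have hM0 : 0 < M := by rw [hM]; positivity
  have neg : ∃ i s c, M * nm (T s c) p Q < |∫ x in Q, ∑ l, G l x * T s (mc (Pil i l) c) x| := by
    by_contra! h
    have := HD G M hG hsupp hM0.le h U hU hdiv
    rw [← hI, ← ha, hM] at this
    have e : C1 * a * (|I| / (2 * C1 * a)) = |I| / 2 := by field_simp
    rw [e] at this
    linarith
  obtain ⟨i, s, c, hJ⟩ := neg
  obtain ⟨J, hJd⟩ : ∃ J, J = ∫ x in Q, ∑ l, G l x * T s (mc (Pil i l) c) x := ⟨_, rfl⟩
  rw [← hJd] at hJ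
  have hn0 := nm_nonneg (T s c) p Q
  have hJpos : 0 < |J| := lt_of_le_of_lt (by positivity) hJ
  have hJ0 : J ≠ 0 := abs_pos.1 hJpos
  obtain ⟨κ, hκ⟩ : ∃ κ, κ = I / J := ⟨_, rfl⟩
  have hκb : |κ| * nm (T s c) p Q ≤ 2 * C1 * a := by
    rw [hκ, abs_div, div_mul_eq_mul_div, div_le_iff₀ hJpos]
    have : |I| = 2 * C1 * a * M := by rw [hM]; field_simp
    rw [this]
    have := mul_le_mul_of_nonneg_left hJ.le (mul_pos (mul_pos two_pos hC1) hapos).le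
    linarith
  have hvs := vp_smooth i s c
  have hB : ball (0 : E3) 1.1 ⊆ Q := fun x hx =>
    mem_Q_of_norm (by rw [mem_ball_zero_iff] at hx; linarith)
  have hd : ∀ m j, nm (pd3 j (vp i s c m)) p (ball 0 1.1) ≤ 2 * C2 * nm (T s c) p Q := fun m j =>
    (nm_mono_set ((hvs m).pd j).cont BM_Q hB).trans (nm_pd_vp hp HC i s c m j)
  have hsm : ∀ m k, Sm (fun x => vp i s c m x - k) := fun m k => ContDiff.sub (hvs m) contDiff_const
  have hpd : ∀ m j k, pd3 j (fun x => κ * (vp i s c m x - k)) = fun x => κ * pd3 j (vp i s c m) x := by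
    intro m j k; funext x
    rw [pd3_const_mul (hsm m k).diff, pd3_sub (hvs m).diff (differentiable_const _), pd3_const, sub_zero]
  refine ⟨fun m x => κ * (vp i s c m x - mean (ball 0 1.1) (vp i s c m)), fun m => (hsm m _).cmul κ,
    ?_, fun m => ?_, fun m j => ?_⟩
  · have e : ∀ l x, curl (fun m x => κ * (vp i s c m x - mean (ball 0 1.1) (vp i s c m))) l x =
        κ * T s (mc (Pil i l) c) x := by
      intro l x
      rw [← curl_vp]
      simp only [curl, hpd]; ring
    simp only [e]
    rw [toQ fun l x => U l x - κ * T s (mc (Pil i l) c) x]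
    have cT' : ∀ l, Continuous fun x => G l x * T s (mc (Pil i l) c) x := fun l => (hG l).mul (cT _ _)
    have : ∫ x in Q, ∑ l, G l x * (U l x - κ * T s (mc (Pil i l) c) x) = I - κ * J := by
      rw [hI, hJd, ← integral_const_mul, ← integral_sub (intQ (continuous_finsetSum _ fun i _ => cGU i))
        ((intQ (continuous_finsetSum _ fun i _ => cT' i)).const_mul κ)]
      congr 1; funext x
      rw [Finset.mul_sum, ← Finset.sum_sub_distrib]
      exact Finset.sum_congr rfl fun l _ => by ring
    rw [this, hκ]; field_simp; ring
  · rw [nm_smul]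
    have h1 := (HP _ (hvs m).one).trans (mul_le_mul_of_nonneg_left
      (nm_fderiv_le (hvs m) (BM_ball _) (by linarith) (hd m)) hC3)
    have h2 := mul_le_mul_of_nonneg_left h1 (abs_nonneg κ)
    have h3 := mul_le_mul_of_nonneg_left hκb (show 0 ≤ 6 * C3 * C2 by positivity)
    have h4 : 0 ≤ 4 * C1 * C2 * a := by positivity
    linarith
  · rw [hpd, nm_smul]
    have h2 := mul_le_mul_of_nonneg_left (hd m j) (abs_nonneg κ)
    have h3 := mul_le_mul_of_nonneg_left hκb (show 0 ≤ 2 * C2 by positivity)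
    have h4 : 0 ≤ 4 * C1 * C2 * C3 * a := by positivity
    linarith

/-! ### Sobolev inequalities and interpolation -/

/-- The Gagliardo–Nirenberg–Sobolev inequality in terms of `nm`. -/
lemma sobolev {l r : ℝ} (hl : 1 ≤ l) (hr : 0 < r) (h : 1 / r = 1 / l - 1 / 3) : ∃ C, 0 ≤ C ∧
    ∀ (F : E3 → ℝ) (S S' : Set E3), ContDiff ℝ 1 F → HasCompactSupport F → BM S' →
      (∀ x, x ∉ S' → fderiv ℝ F x = 0) → nm F r S ≤ C * nm (fderiv ℝ F) l S' := by
  refine ⟨SNormLESNormFDerivOfEqConst ℝ (volume : Measure E3) l, NNReal.coe_nonneg _,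
    fun F S S' hF hc hS' hz => ?_⟩
  have key := eLpNorm_le_eLpNorm_fderiv_of_eq (μ := (volume : Measure E3)) hF hc
    (p := l.toNNReal) (p' := r.toNNReal) (by simpa using hl) (by simp)
    (by rw [Real.coe_toNNReal _ hr.le]; simp only [finrank_euclideanSpace, Fintype.card_fin]
        rw [NNReal.coe_inv, Real.coe_toNNReal _ (by linarith)]
        simpa using h)
  rw [Real.coe_toNNReal _ (by linarith)] at key
  have e : eLpNorm (fderiv ℝ F) (l.toNNReal : ℝ≥0∞) volume =
      eLpNorm (fderiv ℝ F) (l.toNNReal : ℝ≥0∞) (volume.restrict S') := by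
    refine Eq.trans ?_ (eLpNorm_indicator_eq_eLpNorm_restrict (f := fderiv ℝ F) hS'.2)
    congr 1; funext x
    by_cases hx : x ∈ S'
    · rw [Set.indicator_of_mem hx]
    · rw [Set.indicator_of_notMem hx, hz x hx]
  rw [e] at key
  have k2 := (eLpNorm_mono_measure F (Measure.restrict_le_self (s := S))).trans key
  have fin := nm_ne_top (hF.continuous_fderiv (by simp)) hS' (l.toNNReal : ℝ≥0∞)
  have := ENNReal.toReal_mono (ENNReal.mul_ne_top (by simp) fin) k2
  rw [ENNReal.toReal_mul] at this
  exact this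

lemma nm_rpow_fun {f : E3 → ℝ} (hf : Continuous f) (h0 : ∀ x, 0 ≤ f x) {S : Set E3} (hS : BM S)
    {r s : ℝ} (hr : 0 < r) (hs : 0 < s) :
    nm (fun x => f x ^ s) r S = nm f (r * s) S ^ s := by
  have hfs : Continuous fun x => f x ^ s := hf.rpow_const fun _ => Or.inr hs.le
  rw [nm_eq hfs hS hr, nm_eq hf hS (by positivity),
    ← Real.rpow_mul (integral_nonneg fun _ => by positivity)]
  have : ∀ x, ‖f x ^ s‖ ^ r = ‖f x‖ ^ (r * s) := fun x => by
    rw [Real.norm_of_nonneg (Real.rpow_nonneg (h0 x) _), Real.norm_of_nonneg (h0 x),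
      ← Real.rpow_mul (h0 x), mul_comm]
  simp only [this]
  congr 1; field_simp

/-- Interpolation between `L^q` and a weighted `L^6` norm; the loss of one power of the weight is
harmless as long as `t ≤ 4/5`. -/
lemma interp {f φ : E3 → ℝ} (hf : Continuous f) (hφ : Continuous φ) (h0 : ∀ x, 0 ≤ φ x)
    (h1 : ∀ x, φ x ≤ 1) {N : Set E3} (hN : BM N) {q σ t : ℝ} (hq : 0 < q) (hσ : 0 < σ) (ht : 0 < t)
    (ht' : t ≤ 4 / 5) (h : 1 / σ = (1 - t) / q + t / 6) :
    nm (fun x => φ x ^ 4 * f x) σ N ≤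
      nm f q N ^ (1 - t) * nm (fun x => φ x ^ 5 * f x) 6 N ^ t := by
  have c1 : Continuous fun x => |f x| := hf.abs
  have c2 : Continuous fun x => φ x ^ 5 * |f x| := (hφ.pow 5).mul c1
  have c1' : Continuous fun x => |f x| ^ (1 - t) := c1.rpow_const fun _ => Or.inr (by linarith)
  have c2' : Continuous fun x => (φ x ^ 5 * |f x|) ^ t := c2.rpow_const fun _ => Or.inr ht.le
  have c12 : Continuous fun x => |f x| ^ (1 - t) * (φ x ^ 5 * |f x|) ^ t := c1'.mul c2'
  have n2 : ∀ x, 0 ≤ φ x ^ 5 * |f x| := fun x => mul_nonneg (pow_nonneg (h0 x) _) (abs_nonneg _)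
  have e1 : nm f q N = nm (fun x => |f x|) q N := (nm_norm f q N).symm
  have e2 : nm (fun x => φ x ^ 5 * f x) 6 N = nm (fun x => φ x ^ 5 * |f x|) 6 N :=
    nm_congr hN fun x _ => by rw [norm_mul, norm_mul, Real.norm_eq_abs (|f x|), abs_abs, Real.norm_eq_abs (f x)]
  have p1 : 0 < q / (1 - t) := div_pos hq (by linarith)
  have p2 : 0 < 6 / t := div_pos (by norm_num) ht
  calc nm (fun x => φ x ^ 4 * f x) σ N
      ≤ nm (fun x => |f x| ^ (1 - t) * (φ x ^ 5 * |f x|) ^ t) σ N := by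
        refine nm_mono c12 hN fun x _ => ?_
        have hx := h0 x
        have e : |f x| ^ (1 - t) * (φ x ^ 5 * |f x|) ^ t = (φ x ^ 5) ^ t * |f x| := by
          rw [Real.mul_rpow (by positivity) (abs_nonneg _)]
          have : |f x| ^ (1 - t) * |f x| ^ t = |f x| := by
            rcases (abs_nonneg (f x)).eq_or_lt with hz | hz
            · rw [← hz, Real.zero_rpow ht.ne', mul_zero]
            · rw [← Real.rpow_add hz]; simp
          calc _ = (φ x ^ 5) ^ t * (|f x| ^ (1 - t) * |f x| ^ t) := by ring
            _ = _ := by rw [this]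
        rw [e, norm_mul, norm_mul, Real.norm_eq_abs (|f x|), abs_abs, Real.norm_eq_abs (f x)]
        refine mul_le_mul_of_nonneg_right ?_ (abs_nonneg _)
        rw [Real.norm_of_nonneg (by positivity), Real.norm_of_nonneg (by positivity)]
        rw [← Real.rpow_natCast, ← Real.rpow_natCast, ← Real.rpow_mul hx]
        rcases hx.eq_or_lt with hz | hz
        · rw [← hz, Real.zero_rpow (by norm_num), Real.zero_rpow (by push_cast; positivity)]
        · exact Real.rpow_le_rpow_of_exponent_ge hz (h1 x) (by push_cast; linarith)
    _ ≤ nm (fun x => |f x| ^ (1 - t)) (q / (1 - t)) N * nm (fun x => (φ x ^ 5 * |f x|) ^ t) (6 / t) N :=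
        nm_mul_le c1' c2' hN p1 p2 hσ (by rw [one_div_div, one_div_div, h])
    _ = _ := by
        rw [nm_rpow_fun c1 (fun x => abs_nonneg _) hN p1 (by linarith), nm_rpow_fun c2 n2 hN p2 ht,
          div_mul_cancel₀ _ (by linarith), div_mul_cancel₀ _ ht.ne', e1, e2]

/-- Absorption of a sublinear term. -/
lemma absorb {t : ℝ} (ht : 0 < t) (ht1 : t < 1) {C : ℝ} (hC : 0 ≤ C) : ∃ C', 0 ≤ C' ∧
    ∀ S E b : ℝ, 0 ≤ S → 0 ≤ E → 0 ≤ b → S ≤ C * (E + b ^ (1 - t) * S ^ t) → S ≤ C' * (E + b) := by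
  refine ⟨2 * C + (2 * C) ^ (1 / (1 - t)), by positivity, fun S E b hS hE hb h => ?_⟩
  have hk : 0 ≤ (2 * C) ^ (1 / (1 - t)) := by positivity
  rcases le_total (C * E) (C * (b ^ (1 - t) * S ^ t)) with h1 | h1
  · rcases hS.eq_or_lt with hz | hz
    · rw [← hz]; positivity
    have h2 : S ≤ (2 * C) * b ^ (1 - t) * S ^ t := by linarith
    have h3 : S ^ (1 - t) ≤ (2 * C) * b ^ (1 - t) := by
      rw [Real.rpow_sub hz, Real.rpow_one, div_le_iff₀ (by positivity)]; exact h2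
    have h4 : S ≤ (2 * C) ^ (1 / (1 - t)) * b := by
      have := Real.rpow_le_rpow (by positivity) h3 (show 0 ≤ 1 / (1 - t) by
        have : 0 < 1 - t := by linarith
        positivity)
      have hne : (1 - t) ≠ 0 := by linarith
      rw [← Real.rpow_mul hS, mul_one_div_cancel hne, Real.rpow_one,
        Real.mul_rpow (by positivity) (by positivity), ← Real.rpow_mul hb, mul_one_div_cancel hne,
        Real.rpow_one] at this
      exact this
    have : 0 ≤ 2 * C * b + 2 * C * E + (2 * C) ^ (1 / (1 - t)) * E := by positivity
    linarith
  · have h2 : S ≤ 2 * C * E := by linarith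
    have : 0 ≤ 2 * C * b + (2 * C) ^ (1 / (1 - t)) * E + (2 * C) ^ (1 / (1 - t)) * b := by positivity
    linarith

/-- The shell in which the derivatives of the main cutoff live. -/
abbrev N0 : Set E3 := csh 1.06 1.09

/-- Weighted Sobolev inequality for the cutoff `φ ^ 5`. -/
lemma wsob {φ : E3 → ℝ} {K : ℝ} (hφ : Cut 1.06 1.09 φ K) : ∃ C, 0 ≤ C ∧ ∀ f : E3 → ℝ, Sm f →
    nm (fun x => φ x ^ 5 * f x) 6 (ball 0 2) ≤
      C * (nm (fun x => φ x ^ 5 * ‖fderiv ℝ f x‖) 2 (ball 0 2) + nm f 1 N0) := by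
  obtain ⟨C, hC, H⟩ := sobolev (l := 2) (r := 6) (by norm_num) (by norm_num) (by norm_num)
  obtain ⟨C', hC', H'⟩ := absorb (t := 3 / 5) (by norm_num) (by norm_num)
    (C := C * (1 + 15 * K)) (mul_nonneg hC (by linarith [hφ.K_nonneg]))
  refine ⟨C', hC', fun f hf => ?_⟩
  have hK := hφ.K_nonneg
  have cφ := hφ.sm.cont
  have cF : Continuous fun x => φ x ^ 5 * f x := (cφ.pow 5).mul hf.cont
  have cd : Continuous fun x => ‖fderiv ℝ f x‖ := (hf.one.continuous_fderiv (by simp)).norm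
  have c1 : Continuous fun x => φ x ^ 5 * ‖fderiv ℝ f x‖ := (cφ.pow 5).mul cd
  have hN : BM N0 := csh_BM _ _
  have c2 : Continuous fun x => φ x ^ 4 * f x := (cφ.pow 4).mul hf.cont
  have hFs : Sm (fun x => φ x ^ 5 * f x) := ContDiff.mul (ContDiff.pow hφ.sm 5) hf
  have dF : ∀ x, fderiv ℝ (fun x => φ x ^ 5 * f x) x =
      (φ x ^ 5) • fderiv ℝ f x + (5 * (φ x ^ 4 * f x)) • fderiv ℝ φ x := by
    intro x
    have h1 := ((hφ.sm.diff x).hasFDerivAt.pow 5).mul (hf.diff x).hasFDerivAt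
    refine (h1.congr_fderiv ?_).fderiv
    ext y
    simp
    ring
  have zφ : ∀ x, x ∉ N0 → fderiv ℝ φ x = 0 := by
    intro x hx
    have : ‖x‖ < 1.06 ∨ 1.09 < ‖x‖ := by
      by_contra! h; exact hx h
    have h2 := norm_fderiv_le_sum φ x
    rw [Finset.sum_eq_zero fun j _ => by rw [hφ.dz j x this, abs_zero]] at h2
    exact norm_le_zero_iff.1 h2
  have bφ : ∀ x, ‖fderiv ℝ φ x‖ ≤ 3 * K := fun x => by
    refine (norm_fderiv_le_sum φ x).trans ((Finset.sum_le_sum fun j _ => hφ.dK j x).trans ?_)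
    simp
  have cφ' : Continuous fun x => ‖fderiv ℝ φ x‖ := (hφ.sm.one.continuous_fderiv (by simp)).norm
  have c3 : Continuous fun x => (φ x ^ 4 * f x) * (5 * ‖fderiv ℝ φ x‖) := c2.mul (cφ'.const_mul 5)
  have c3a : Continuous fun x => |(φ x ^ 4 * f x) * (5 * ‖fderiv ℝ φ x‖)| := c3.abs
  have c13 : Continuous fun x => φ x ^ 5 * ‖fderiv ℝ f x‖ +
      |(φ x ^ 4 * f x) * (5 * ‖fderiv ℝ φ x‖)| := c1.add c3a
  have zF : ∀ x, x ∉ ball (0 : E3) 2 → fderiv ℝ (fun x => φ x ^ 5 * f x) x = 0 := by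
    intro x hx
    rw [mem_ball_zero_iff, not_lt] at hx
    rw [dF, hφ.zero x (by linarith)]; simp
  have hI : nm (fun x => φ x ^ 4 * f x) 2 N0 ≤
      nm f 1 N0 ^ (1 - 3 / 5 : ℝ) * nm (fun x => φ x ^ 5 * f x) 6 N0 ^ (3 / 5 : ℝ) :=
    interp hf.cont cφ hφ.nonneg hφ.le_one hN one_pos two_pos (by norm_num) (by norm_num) (by norm_num)
  have hNB : N0 ⊆ ball (0 : E3) 2 := fun x hx => by
    rw [mem_ball_zero_iff]; linarith [hx.2]
  have hS : nm (fun x => φ x ^ 5 * f x) 6 N0 ≤ nm (fun x => φ x ^ 5 * f x) 6 (ball 0 2) :=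
    nm_mono_set cF (BM_ball 2) hNB
  have hS0 := nm_nonneg (fun x => φ x ^ 5 * f x) 6 (ball 0 2)
  have hE0 := nm_nonneg (fun x => φ x ^ 5 * ‖fderiv ℝ f x‖) 2 (ball 0 2)
  have hb0 := nm_nonneg f 1 N0
  refine H' _ _ _ hS0 hE0 hb0 ?_
  have k1 := H _ (ball 0 2) (ball 0 2) hFs.one
    (hφ.supp.comp_left (g := fun t : ℝ => t ^ 5) (by simp)).mul_right (BM_ball 2) zF
  have k2 : nm (fderiv ℝ (fun x => φ x ^ 5 * f x)) 2 (ball 0 2) ≤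
      nm (fun x => φ x ^ 5 * ‖fderiv ℝ f x‖) 2 (ball 0 2) +
        15 * K * nm (fun x => φ x ^ 4 * f x) 2 N0 := by
    calc _ ≤ nm (fun x => φ x ^ 5 * ‖fderiv ℝ f x‖ + |(φ x ^ 4 * f x) * (5 * ‖fderiv ℝ φ x‖)|) 2 (ball 0 2) := by
          refine nm_mono c13 (BM_ball 2) fun x _ => ?_
          have hx := hφ.nonneg x
          rw [dF, Real.norm_of_nonneg (by positivity)]
          refine (norm_add_le _ _).trans ?_
          rw [norm_smul, norm_smul, Real.norm_of_nonneg (show 0 ≤ φ x ^ 5 by positivity)]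
          refine add_le_add le_rfl (le_of_eq ?_)
          rw [Real.norm_eq_abs, abs_mul, abs_mul (φ x ^ 4 * f x), abs_mul 5, abs_norm]
          ring
      _ ≤ nm (fun x => φ x ^ 5 * ‖fderiv ℝ f x‖) 2 (ball 0 2) +
          nm (fun x => |(φ x ^ 4 * f x) * (5 * ‖fderiv ℝ φ x‖)|) 2 (ball 0 2) :=
          nm_add_le c1 c3a (BM_ball 2) (by norm_num)
      _ ≤ _ := by
          refine add_le_add le_rfl ?_
          refine (nm_supp c3a (BM_ball 2) hN fun x _ hx => by rw [zφ x hx]; simp).trans ?_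
          have : nm (fun x => |(φ x ^ 4 * f x) * (5 * ‖fderiv ℝ φ x‖)|) 2 N0 ≤
              nm (fun x => (15 * K) * (φ x ^ 4 * f x)) 2 N0 := by
            refine nm_mono (c2.const_mul _) hN fun x _ => ?_
            rw [Real.norm_eq_abs, abs_abs, abs_mul, Real.norm_eq_abs, abs_mul (15 * K),
              abs_of_nonneg (show 0 ≤ 15 * K by positivity), mul_comm]
            refine mul_le_mul_of_nonneg_right ?_ (abs_nonneg _)
            rw [abs_of_nonneg (by positivity)]
            linarith [bφ x]
          refine this.trans (le_of_eq ?_)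
          rw [nm_smul, abs_of_nonneg (show 0 ≤ 15 * K by positivity)]
  have k3 : nm f 1 N0 ^ (1 - 3 / 5 : ℝ) * nm (fun x => φ x ^ 5 * f x) 6 N0 ^ (3 / 5 : ℝ) ≤
      nm f 1 N0 ^ (1 - 3 / 5 : ℝ) * nm (fun x => φ x ^ 5 * f x) 6 (ball 0 2) ^ (3 / 5 : ℝ) :=
    mul_le_mul_of_nonneg_left (Real.rpow_le_rpow (nm_nonneg _ _ _) hS (by norm_num)) (by positivity)
  set X := nm f 1 N0 ^ (1 - 3 / 5 : ℝ) * nm (fun x => φ x ^ 5 * f x) 6 (ball 0 2) ^ (3 / 5 : ℝ)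
  have hX0 : 0 ≤ X := by positivity
  refine k1.trans ?_
  rw [mul_assoc]
  refine mul_le_mul_of_nonneg_left (k2.trans ?_) hC
  have k4 := mul_le_mul_of_nonneg_left (hI.trans k3) (show 0 ≤ 15 * K by positivity)
  have : 0 ≤ 15 * K * nm (fun x => φ x ^ 5 * ‖fderiv ℝ f x‖) 2 (ball 0 2) := by positivity
  linarith

/-- Poincaré–Sobolev inequality from the annulus to the shell `N0`; the subtracted mean value does
not depend on the exponent. -/
lemma poincareSobolev {l r : ℝ} (hl : 1 ≤ l) (hr : 0 < r) (h : 1 / r = 1 / l - 1 / 3) : ∃ C, 0 ≤ C ∧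
    ∀ f : E3 → ℝ, Sm f →
      nm (fun x => f x - mean (cap 1 0 1) f) r N0 ≤ C * nm (fderiv ℝ f) l (Ann 1) := by
  obtain ⟨C, hC, H⟩ := sobolev hl hr h
  obtain ⟨P, hP, HP⟩ := PC_dil (s := l) hl
  obtain ⟨χ₁, K₁, h₁⟩ := exists_cut (a := 1.095) (b := 1.1) (by norm_num) (by norm_num)
  obtain ⟨χ₂, K₂, h₂⟩ := exists_cut (a := 1.05) (b := 1.055) (by norm_num) (by norm_num)
  have hK1 := h₁.K_nonneg
  have hK2 := h₂.K_nonneg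
  obtain ⟨L, hL⟩ : ∃ L, L = 3 * (K₁ + K₂) := ⟨_, rfl⟩
  have hL0 : 0 ≤ L := by rw [hL]; positivity
  refine ⟨C * (1 + L * P), by positivity, fun f hf => ?_⟩
  obtain ⟨c, hc⟩ : ∃ c, c = mean (cap 1 0 1) f := ⟨_, rfl⟩
  rw [← hc]
  have hP1 : nm (fun x => f x - c) l Nsh ≤ P * nm (fderiv ℝ f) l (Ann 1) := by
    rw [hc]; exact HP f hf.one
  have sg : Sm (fun x => f x - c) := ContDiff.sub hf contDiff_const
  have sχ : Sm (fun x => χ₁ x - χ₂ x) := ContDiff.sub h₁.sm h₂.sm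
  have sF : Sm (fun x => (χ₁ x - χ₂ x) * (f x - c)) := ContDiff.mul sχ sg
  have dF : ∀ x, fderiv ℝ (fun x => (χ₁ x - χ₂ x) * (f x - c)) x =
      (χ₁ x - χ₂ x) • fderiv ℝ f x + (f x - c) • fderiv ℝ (fun x => χ₁ x - χ₂ x) x := by
    intro x
    have h1 := (sχ.diff x).hasFDerivAt.mul ((hf.diff x).hasFDerivAt.sub_const c)
    exact h1.fderiv
  have hout : ∀ x : E3, x ∉ Nsh → ‖x‖ < 1.05 ∨ 1.1 < ‖x‖ := by
    intro x hx
    by_contra! h'; exact hx h'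
  have zχ : ∀ x, x ∉ Nsh → χ₁ x - χ₂ x = 0 := by
    intro x hx
    rcases hout x hx with h' | h'
    · rw [h₁.one x (by linarith), h₂.one x (by linarith), sub_self]
    · rw [h₁.zero x (by linarith), h₂.zero x (by linarith), sub_self]
  have dχ : ∀ x, ‖fderiv ℝ (fun x => χ₁ x - χ₂ x) x‖ ≤ ∑ j, (|pd3 j χ₁ x| + |pd3 j χ₂ x|) := by
    intro x
    refine (norm_fderiv_le_sum _ x).trans (Finset.sum_le_sum fun j _ => ?_)
    rw [pd3_sub h₁.sm.diff h₂.sm.diff]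
    exact abs_sub _ _
  have zdχ : ∀ x, x ∉ Nsh → fderiv ℝ (fun x => χ₁ x - χ₂ x) x = 0 := by
    intro x hx
    have h2 := dχ x
    rw [Finset.sum_eq_zero fun j _ => by
      rcases hout x hx with h' | h'
      · rw [h₁.dz j x (Or.inl (by linarith)), h₂.dz j x (Or.inl h'), abs_zero, add_zero]
      · rw [h₁.dz j x (Or.inr h'), h₂.dz j x (Or.inr (by linarith)), abs_zero, add_zero]] at h2
    exact norm_le_zero_iff.1 h2
  have bdχ : ∀ x, ‖fderiv ℝ (fun x => χ₁ x - χ₂ x) x‖ ≤ L := by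
    intro x
    refine (dχ x).trans ((Finset.sum_le_sum fun j _ => add_le_add (h₁.dK j x) (h₂.dK j x)).trans ?_)
    rw [hL]; simp [mul_add]
  have bχ : ∀ x, |χ₁ x - χ₂ x| ≤ 1 := fun x => by
    rw [abs_le]
    exact ⟨by linarith [h₁.nonneg x, h₂.le_one x], by linarith [h₂.nonneg x, h₁.le_one x]⟩
  have hcs : HasCompactSupport (fun x => (χ₁ x - χ₂ x) * (f x - c)) :=
    (h₁.supp.sub h₂.supp).mul_right
  have k1 := H _ N0 Nsh sF.one hcs Nsh_BM fun x hx => by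
    rw [dF, zχ x hx, zdχ x hx]; simp
  have e1 : nm (fun x => (χ₁ x - χ₂ x) * (f x - c)) r N0 = nm (fun x => f x - c) r N0 :=
    nm_congr (csh_BM _ _) fun x hx => by
      have h3 := hx.1
      have h4 := hx.2
      rw [h₁.one x (by linarith), h₂.zero x (by linarith), sub_zero, one_mul]
  have cd : Continuous fun x => ‖fderiv ℝ f x‖ := (hf.one.continuous_fderiv (by simp)).norm
  have cg : Continuous fun x => L * |f x - c| := sg.cont.abs.const_mul L
  have cdg : Continuous fun x => ‖fderiv ℝ f x‖ + L * |f x - c| := cd.add cg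
  have hNA : Nsh ⊆ Ann 1 := fun x hx => by
    have h3 := hx.1
    have h4 := hx.2
    refine ⟨?_, ?_⟩
    · rw [mem_ball_zero_iff]; linarith
    · rw [mem_ball_zero_iff]; linarith
  have k2 : nm (fderiv ℝ (fun x => (χ₁ x - χ₂ x) * (f x - c))) l Nsh ≤
      (1 + L * P) * nm (fderiv ℝ f) l (Ann 1) := by
    calc _ ≤ nm (fun x => ‖fderiv ℝ f x‖ + L * |f x - c|) l Nsh := by
          refine nm_mono cdg Nsh_BM fun x _ => ?_
          rw [dF, Real.norm_of_nonneg (by positivity)]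
          refine (norm_add_le _ _).trans ?_
          rw [norm_smul, norm_smul, Real.norm_eq_abs, Real.norm_eq_abs]
          refine add_le_add (mul_le_of_le_one_left (norm_nonneg _) (bχ x)) ?_
          rw [mul_comm]
          exact mul_le_mul_of_nonneg_right (bdχ x) (abs_nonneg _)
      _ ≤ nm (fun x => ‖fderiv ℝ f x‖) l Nsh + nm (fun x => L * |f x - c|) l Nsh :=
          nm_add_le cd cg Nsh_BM hl
      _ ≤ _ := by
          rw [nm_smul, abs_of_nonneg hL0, nm_norm (fderiv ℝ f) l Nsh]
          have e2 : nm (fun x => |f x - c|) l Nsh = nm (fun x => f x - c) l Nsh :=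
            nm_norm (fun x => f x - c) l Nsh
          rw [e2]
          have k3 := mul_le_mul_of_nonneg_left hP1 hL0
          have k4 : nm (fderiv ℝ f) l Nsh ≤ nm (fderiv ℝ f) l (Ann 1) :=
            nm_mono_set (hf.one.continuous_fderiv (by simp)) (BM_Ann 1) hNA
          linarith
  rw [← e1, mul_assoc]
  exact k1.trans (mul_le_mul_of_nonneg_left k2 hC)

/-! ### Integrals of divergences -/

/-- Integrable with vanishing integral. -/
def Z (f : E3 → ℝ) : Prop := Integrable f ∧ ∫ x, f x = 0

lemma Z.add {f g : E3 → ℝ} (hf : Z f) (hg : Z g) : Z fun x => f x + g x :=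
  ⟨hf.1.add hg.1, by rw [integral_add hf.1 hg.1, hf.2, hg.2, add_zero]⟩

lemma Z.sub {f g : E3 → ℝ} (hf : Z f) (hg : Z g) : Z fun x => f x - g x :=
  ⟨hf.1.sub hg.1, by rw [integral_sub hf.1 hg.1, hf.2, hg.2, sub_zero]⟩

lemma Z.cmul {f : E3 → ℝ} (hf : Z f) (c : ℝ) : Z fun x => c * f x :=
  ⟨hf.1.const_mul c, by rw [integral_const_mul, hf.2, mul_zero]⟩

lemma Z.sum {ι : Type*} (s : Finset ι) {f : ι → E3 → ℝ} (hf : ∀ i, Z (f i)) :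
    Z fun x => ∑ i ∈ s, f i x :=
  ⟨integrable_finsetSum _ fun i _ => (hf i).1, by
    rw [integral_finsetSum _ fun i _ => (hf i).1]; simp [fun i => (hf i).2]⟩

lemma Z_pd {f : E3 → ℝ} (hf : Sm f) (hc : HasCompactSupport f) (j : Fin 3) : Z (pd3 j f) :=
  ⟨(hf.pd j).cont.integrable_of_hasCompactSupport (hasCompactSupport_pd3 hc j),
    integral_pd3_eq_zero hf.one hc j⟩

lemma Z_div {F : Fin 3 → E3 → ℝ} (hF : ∀ j, Sm (F j)) (hc : ∀ j, HasCompactSupport (F j)) :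
    Z fun x => ∑ j, pd3 j (F j) x := Z.sum _ fun j => Z_pd (hF j) (hc j) j

lemma Sm.mul' {f g : E3 → ℝ} (hf : Sm f) (hg : Sm g) : Sm fun x => f x * g x := ContDiff.mul hf hg

lemma Sm.add' {f g : E3 → ℝ} (hf : Sm f) (hg : Sm g) : Sm fun x => f x + g x := ContDiff.add hf hg

lemma Sm.sub' {f g : E3 → ℝ} (hf : Sm f) (hg : Sm g) : Sm fun x => f x - g x := ContDiff.sub hf hg

/-- Energy identity for a scalar transported by a solenoidal field. -/
lemma Z_energy {Φ f : E3 → ℝ} {u : Fin 3 → E3 → ℝ} (hΦ : Sm Φ) (hc : HasCompactSupport Φ)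
    (hf : Sm f) (hu : ∀ i, Sm (u i)) (hdiv : ∀ x, ∑ j, pd3 j (u j) x = 0) :
    Z fun x => Φ x * ∑ j, pd3 j f x ^ 2 - (1 / 2 * lap3 Φ x * f x ^ 2) -
      (1 / 2 * f x ^ 2 * ∑ j, u j x * pd3 j Φ x) -
      Φ x * f x * (-lap3 f x + ∑ j, u j x * pd3 j f x) := by
  have h1 := Z_div (F := fun j x => Φ x * (f x * pd3 j f x))
    (fun j => hΦ.mul' (hf.mul' (hf.pd j))) (fun j => hc.mul_right)
  have h2 := Z_div (F := fun j x => pd3 j Φ x * (f x * f x))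
    (fun j => (hΦ.pd j).mul' (hf.mul' hf)) (fun j => (hasCompactSupport_pd3 hc j).mul_right)
  have h3 := Z_div (F := fun j x => Φ x * (f x * f x * u j x))
    (fun j => hΦ.mul' ((hf.mul' hf).mul' (hu j))) (fun j => hc.mul_right)
  have h := (h1.sub (h2.cmul (1 / 2))).sub (h3.cmul (1 / 2))
  convert h using 2 with x
  have d := hdiv x
  have e1 : ∀ j, pd3 j (fun x => Φ x * (f x * pd3 j f x)) x =
      Φ x * (f x * pd3 j (pd3 j f) x + pd3 j f x * pd3 j f x) + pd3 j Φ x * (f x * pd3 j f x) := by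
    intro j
    rw [pd3_mul hΦ.diff (hf.mul' (hf.pd j)).diff, pd3_mul hf.diff (hf.pd j).diff]
  have e2 : ∀ j, pd3 j (fun x => pd3 j Φ x * (f x * f x)) x =
      pd3 j Φ x * (f x * pd3 j f x + pd3 j f x * f x) + pd3 j (pd3 j Φ) x * (f x * f x) := by
    intro j
    rw [pd3_mul (hΦ.pd j).diff (hf.mul' hf).diff, pd3_mul hf.diff hf.diff]
  have e3 : ∀ j, pd3 j (fun x => Φ x * (f x * f x * u j x)) x =
      Φ x * (f x * f x * pd3 j (u j) x + (f x * pd3 j f x + pd3 j f x * f x) * u j x) +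
        pd3 j Φ x * (f x * f x * u j x) := by
    intro j
    rw [pd3_mul hΦ.diff ((hf.mul' hf).mul' (hu j)).diff, pd3_mul (hf.mul' hf).diff (hu j).diff,
      pd3_mul hf.diff hf.diff]
  simp only [e1, e2, e3, lap3, Fin.sum_univ_three] at d ⊢
  linear_combination (1 / 2 * Φ x * f x * f x) * d

lemma Z_flux {Φ f : E3 → ℝ} {v : Fin 3 → E3 → ℝ} (hΦ : Sm Φ) (hc : HasCompactSupport Φ)
    (hf : Sm f) (hv : ∀ i, Sm (v i)) :
    Z fun x => f x * ∑ j, v j x * pd3 j Φ x + Φ x * ∑ j, v j x * pd3 j f x +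
      Φ x * f x * ∑ j, pd3 j (v j) x := by
  have h := Z_div (F := fun j x => Φ x * (f x * v j x))
    (fun j => hΦ.mul' (hf.mul' (hv j))) (fun j => hc.mul_right)
  convert h using 2 with x
  have e1 : ∀ j, pd3 j (fun x => Φ x * (f x * v j x)) x =
      Φ x * (f x * pd3 j (v j) x + pd3 j f x * v j x) + pd3 j Φ x * (f x * v j x) := by
    intro j
    rw [pd3_mul hΦ.diff (hf.mul' (hv j)).diff, pd3_mul hf.diff (hv j).diff]
  simp only [e1, Fin.sum_univ_three]
  ring

lemma Z_cross {Φ : E3 → ℝ} {u v : Fin 3 → E3 → ℝ} (hΦ : Sm Φ) (hc : HasCompactSupport Φ)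
    (hu : ∀ i, Sm (u i)) (hv : ∀ i, Sm (v i)) :
    Z fun x => (∑ j, pd3 j Φ x * v j x) * ∑ i, v i x * u i x +
      Φ x * ∑ i, u i x * ∑ j, pd3 j (fun y => v j y * v i y) x +
      Φ x * ∑ i, v i x * ∑ j, v j x * pd3 j (u i) x := by
  have h := Z.sum Finset.univ fun i => Z_div (F := fun j x => Φ x * ((v j x * v i x) * u i x))
    (fun j => hΦ.mul' (((hv j).mul' (hv i)).mul' (hu i))) (fun j => hc.mul_right)
  convert h using 2 with x
  have e1 : ∀ i j, pd3 j (fun x => Φ x * ((v j x * v i x) * u i x)) x =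
      Φ x * ((v j x * v i x) * pd3 j (u i) x + pd3 j (fun y => v j y * v i y) x * u i x) +
        pd3 j Φ x * ((v j x * v i x) * u i x) := by
    intro i j
    rw [pd3_mul hΦ.diff (((hv j).mul' (hv i)).mul' (hu i)).diff,
      pd3_mul ((hv j).mul' (hv i)).diff (hu i).diff]
  simp only [e1, Fin.sum_univ_three]
  ring

/-- The field `∇Φ × ψ`. -/
def crs (Φ : E3 → ℝ) (ψ : Fin 3 → E3 → ℝ) (i : Fin 3) (x : E3) : ℝ :=
  pd3 (i + 1) Φ x * ψ (i + 2) x - pd3 (i + 2) Φ x * ψ (i + 1) x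

lemma crs_sm {Φ : E3 → ℝ} {ψ : Fin 3 → E3 → ℝ} (hΦ : Sm Φ) (hψ : ∀ i, Sm (ψ i)) (i : Fin 3) :
    Sm (crs Φ ψ i) :=
  ((hΦ.pd _).mul' (hψ _)).sub' ((hΦ.pd _).mul' (hψ _))

lemma crs_supp {Φ : E3 → ℝ} (ψ : Fin 3 → E3 → ℝ) (hc : HasCompactSupport Φ) (i : Fin 3) :
    HasCompactSupport (crs Φ ψ i) :=
  ((hasCompactSupport_pd3 hc _).mul_right).sub ((hasCompactSupport_pd3 hc _).mul_right)

lemma pd3_crs {Φ : E3 → ℝ} {ψ : Fin 3 → E3 → ℝ} (hΦ : Sm Φ) (hψ : ∀ i, Sm (ψ i)) (i j : Fin 3)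
    (x : E3) : pd3 j (crs Φ ψ i) x =
      (pd3 (i + 1) Φ x * pd3 j (ψ (i + 2)) x + pd3 j (pd3 (i + 1) Φ) x * ψ (i + 2) x) -
      (pd3 (i + 2) Φ x * pd3 j (ψ (i + 1)) x + pd3 j (pd3 (i + 2) Φ) x * ψ (i + 1) x) := by
  have : crs Φ ψ i = fun x => pd3 (i + 1) Φ x * ψ (i + 2) x - pd3 (i + 2) Φ x * ψ (i + 1) x := rfl
  rw [this, pd3_sub ((hΦ.pd _).mul' (hψ _)).diff ((hΦ.pd _).mul' (hψ _)).diff,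
    pd3_mul (hΦ.pd _).diff (hψ _).diff, pd3_mul (hΦ.pd _).diff (hψ _).diff]

lemma Z_crs {Φ π : E3 → ℝ} {ψ : Fin 3 → E3 → ℝ} (hΦ : Sm Φ) (hc : HasCompactSupport Φ)
    (hψ : ∀ i, Sm (ψ i)) (hπ : Sm π) :
    Z fun x => ∑ j, crs Φ ψ j x * pd3 j π x - π x * ∑ l, pd3 l Φ x * curl ψ l x := by
  have h := Z_div (F := fun j x => crs Φ ψ j x * π x)
    (fun j => (crs_sm hΦ hψ j).mul' hπ) (fun j => (crs_supp ψ hc j).mul_right)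
  convert h using 2 with x
  have e1 : ∀ j, pd3 j (fun x => crs Φ ψ j x * π x) x =
      crs Φ ψ j x * pd3 j π x + pd3 j (crs Φ ψ j) x * π x := by
    intro j
    rw [pd3_mul (crs_sm hΦ hψ j).diff hπ.diff]
  have a1 := pd3_comm hΦ 0 1 x
  have a2 := pd3_comm hΦ 0 2 x
  have a3 := pd3_comm hΦ 1 2 x
  have i1 : (1 : Fin 3) + 2 = 0 := rfl
  have i2 : (2 : Fin 3) + 1 = 0 := rfl
  have i3 : (1 : Fin 3) + 1 = 2 := rfl
  have i4 : (2 : Fin 3) + 2 = 1 := rfl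
  simp only [e1, pd3_crs hΦ hψ, curl, Fin.sum_univ_three, zero_add, i1, i2, i3, i4]
  linear_combination π x * (- ψ 2 x * a1 + ψ 1 x * a2 - ψ 0 x * a3)

lemma Z_stress {w f : E3 → ℝ} {u v : Fin 3 → E3 → ℝ} {i : Fin 3} (hw : Sm w)
    (hc : HasCompactSupport w) (hf : Sm f) (hu : ∀ i, Sm (u i)) (hv : ∀ i, Sm (v i))
    (hdiv : ∀ x, ∑ j, pd3 j (u j) x = 0) :
    Z fun x => ∑ j, pd3 j w x * (pd3 j f x - u j x * f x - v j x * v i x) +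
      w x * (lap3 f x - (∑ j, u j x * pd3 j f x) - ∑ j, pd3 j (fun y => v j y * v i y) x) := by
  have s1 : ∀ j, Sm fun x => pd3 j f x - u j x * f x := fun j => (hf.pd j).sub' ((hu j).mul' hf)
  have s2 : ∀ j, Sm fun x => v j x * v i x := fun j => (hv j).mul' (hv i)
  have h := Z_div (F := fun j x => w x * (pd3 j f x - u j x * f x - v j x * v i x))
    (fun j => hw.mul' ((s1 j).sub' (s2 j))) (fun j => hc.mul_right)
  convert h using 2 with x
  have d := hdiv x
  have e1 : ∀ j, pd3 j (fun x => w x * (pd3 j f x - u j x * f x - v j x * v i x)) x =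
      w x * (pd3 j (pd3 j f) x - (u j x * pd3 j f x + pd3 j (u j) x * f x) -
        pd3 j (fun y => v j y * v i y) x) +
      pd3 j w x * (pd3 j f x - u j x * f x - v j x * v i x) := by
    intro j
    rw [pd3_mul hw.diff ((s1 j).sub' (s2 j)).diff, pd3_sub (s1 j).diff (s2 j).diff,
      pd3_sub (hf.pd j).diff ((hu j).mul' hf).diff, pd3_mul (hu j).diff hf.diff]
  simp only [e1, lap3, Fin.sum_univ_three] at d ⊢
  linear_combination (w x * f x) * d

/-! ### The local energy identity -/

/-- The tropical climate system in components, with coupling constant `κ` in front of the two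
linear terms; dilating a solution by `R` produces `κ = R`. -/
structure SolK (κ : ℝ) (u : Fin 3 → E3 → ℝ) (π : E3 → ℝ) (v : Fin 3 → E3 → ℝ) (θ : E3 → ℝ) :
    Prop where
  su : ∀ i, Sm (u i)
  sπ : Sm π
  sv : ∀ i, Sm (v i)
  sθ : Sm θ
  eu : ∀ x i, -lap3 (u i) x + (∑ j, u j x * pd3 j (u i) x) + pd3 i π x +
    (∑ j, pd3 j (fun y => v j y * v i y) x) = 0
  ev : ∀ x i, -lap3 (v i) x + (∑ j, u j x * pd3 j (v i) x) + κ * pd3 i θ x +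
    (∑ j, v j x * pd3 j (u i) x) = 0
  eθ : ∀ x, -lap3 θ x + (∑ j, u j x * pd3 j θ x) + κ * (∑ j, pd3 j (v j) x) = 0
  div : ∀ x, ∑ j, pd3 j (u j) x = 0

lemma pd3_sub_const (f : E3 → ℝ) (c : ℝ) (j : Fin 3) : pd3 j (fun x => f x - c) = pd3 j f := by
  funext x; simp only [pd3]; rw [fderiv_sub_const]

lemma SolK.shift {κ : ℝ} {u v : Fin 3 → E3 → ℝ} {π θ : E3 → ℝ} (h : SolK κ u π v θ) (c : ℝ) :
    SolK κ u π v (fun x => θ x - c) where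
  su := h.su
  sπ := h.sπ
  sv := h.sv
  sθ := h.sθ.sub' contDiff_const
  eu := h.eu
  ev := by simpa only [pd3_sub_const] using h.ev
  eθ := by simpa only [pd3_sub_const, lap3] using h.eθ
  div := h.div

/-- The Dirichlet density of a solution. -/
def dens (u v : Fin 3 → E3 → ℝ) (θ : E3 → ℝ) (x : E3) : ℝ :=
  (∑ i, ∑ j, pd3 j (u i) x ^ 2) + (∑ i, ∑ j, pd3 j (v i) x ^ 2) + ∑ j, pd3 j θ x ^ 2

/-- The local energy identity, tested with `Φ u + ∇Φ × ψ`, `Φ v` and `Φ θ`. -/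
lemma energy_id {κ : ℝ} {u v ψ : Fin 3 → E3 → ℝ} {π θ Φ : E3 → ℝ} (h : SolK κ u π v θ)
    (hΦ : Sm Φ) (hc : HasCompactSupport Φ) (hψ : ∀ i, Sm (ψ i)) :
    Z fun x => Φ x * dens u v θ x -
      (1 / 2 * lap3 Φ x * ((∑ i, u i x ^ 2) + (∑ i, v i x ^ 2) + θ x ^ 2) +
       1 / 2 * ((∑ i, u i x ^ 2) + (∑ i, v i x ^ 2) + θ x ^ 2) * (∑ j, u j x * pd3 j Φ x) +
       (∑ j, v j x * pd3 j Φ x) * (∑ i, v i x * u i x) +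
       κ * (θ x * ∑ j, v j x * pd3 j Φ x) +
       π x * (∑ l, pd3 l Φ x * (u l x - curl ψ l x)) -
       ∑ i, ∑ j, pd3 j (crs Φ ψ i) x * (pd3 j (u i) x - u j x * u i x - v j x * v i x)) := by
  have A1 := Z.sum Finset.univ fun i => Z_energy hΦ hc (h.su i) h.su h.div
  have A2 := Z.sum Finset.univ fun i => Z_energy hΦ hc (h.sv i) h.su h.div
  have A3 := Z_energy hΦ hc h.sθ h.su h.div
  have B := Z_cross hΦ hc h.su h.sv
  have C := (Z_flux hΦ hc h.sθ h.sv).cmul κ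
  have D := Z_flux hΦ hc h.sπ h.su
  have E := Z_crs hΦ hc hψ h.sπ
  have F := Z.sum Finset.univ fun i =>
    Z_stress (i := i) (crs_sm hΦ hψ i) (crs_supp ψ hc i) (h.su i) h.su h.sv h.div
  have H := ((((((A1.add A2).add A3).sub B).sub C).sub D).sub E).add F
  convert H using 2 with x
  have d := h.div x
  have u0 := h.eu x 0
  have u1 := h.eu x 1
  have u2 := h.eu x 2
  have v0 := h.ev x 0
  have v1 := h.ev x 1
  have v2 := h.ev x 2
  have t0 := h.eθ x
  simp only [dens, Fin.sum_univ_three] at *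
  linear_combination (Φ x * u 0 x + crs Φ ψ 0 x) * u0 + (Φ x * u 1 x + crs Φ ψ 1 x) * u1 +
    (Φ x * u 2 x + crs Φ ψ 2 x) * u2 + Φ x * v 0 x * v0 + Φ x * v 1 x * v1 + Φ x * v 2 x * v2 +
    Φ x * θ x * t0 + Φ x * π x * d

lemma abs_sum_mul_le {a b : Fin 3 → ℝ} {m : ℝ} (h : ∀ j, |b j| ≤ m) :
    |∑ j, a j * b j| ≤ m * ∑ j, |a j| := by
  refine (Finset.abs_sum_le_sum_abs _ _).trans ?_
  rw [Finset.mul_sum]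
  refine Finset.sum_le_sum fun j _ => ?_
  rw [abs_mul, mul_comm]
  exact mul_le_mul_of_nonneg_right (h j) (abs_nonneg _)

lemma sum_sq_le (a : Fin 3 → ℝ) : ∑ j, a j ^ 2 ≤ (∑ j, |a j|) ^ 2 := by
  have := fun j => abs_nonneg (a j)
  have e : ∀ j, a j ^ 2 = |a j| ^ 2 := fun j => (sq_abs _).symm
  simp only [e, Fin.sum_univ_three]
  nlinarith [mul_nonneg (this 0) (this 1), mul_nonneg (this 0) (this 2), mul_nonneg (this 1) (this 2)]

/-- `|ψ| + |∇ψ|` in components. -/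
def hh (ψ : Fin 3 → E3 → ℝ) (x : E3) : ℝ := (∑ i, |ψ i x|) + ∑ i, ∑ j, |pd3 j (ψ i) x|

lemma hh_nonneg (ψ : Fin 3 → E3 → ℝ) (x : E3) : 0 ≤ hh ψ x := by
  unfold hh; positivity

lemma abs_pd3_crs_le {Φ : E3 → ℝ} {ψ : Fin 3 → E3 → ℝ} (hΦ : Sm Φ) (hψ : ∀ i, Sm (ψ i)) {m : ℝ}
    {x : E3} (h1 : ∀ j, |pd3 j Φ x| ≤ m) (h2 : ∀ i j, |pd3 i (pd3 j Φ) x| ≤ m) (i j : Fin 3) :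
    |pd3 j (crs Φ ψ i) x| ≤ m * hh ψ x := by
  have hm : 0 ≤ m := (abs_nonneg _).trans (h1 0)
  rw [pd3_crs hΦ hψ]
  have k : ∀ a b : Fin 3, |pd3 a Φ x * pd3 j (ψ b) x + pd3 j (pd3 a Φ) x * ψ b x| ≤
      m * (|pd3 j (ψ b) x| + |ψ b x|) := by
    intro a b
    refine (abs_add_le _ _).trans ?_
    rw [abs_mul, abs_mul, mul_add]
    exact add_le_add (mul_le_mul_of_nonneg_right (h1 a) (abs_nonneg _))
      (mul_le_mul_of_nonneg_right (h2 j a) (abs_nonneg _))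
  refine (abs_sub _ _).trans ((add_le_add (k _ _) (k _ _)).trans ?_)
  rw [← mul_add]
  refine mul_le_mul_of_nonneg_left ?_ hm
  have p1 := fun i => abs_nonneg (ψ i x)
  have p2 := fun i j => abs_nonneg (pd3 j (ψ i) x)
  have s1 : ∀ i, |pd3 j (ψ i) x| ≤ ∑ j, |pd3 j (ψ i) x| := fun i =>
    Finset.single_le_sum (f := fun j => |pd3 j (ψ i) x|) (fun k _ => p2 i k) (Finset.mem_univ j)
  unfold hh
  have q0 := s1 0
  have q1 := s1 1
  have q2 := s1 2
  rw [Fin.sum_univ_three, Fin.sum_univ_three (f := fun i => ∑ j, |pd3 j (ψ i) x|)]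
  have z0 := (p2 0 j).trans q0
  have z1 := (p2 1 j).trans q1
  have z2 := (p2 2 j).trans q2
  fin_cases i
  · change |pd3 j (ψ 2) x| + |ψ 2 x| + (|pd3 j (ψ 1) x| + |ψ 1 x|) ≤ _
    linarith [p1 0]
  · change |pd3 j (ψ 0) x| + |ψ 0 x| + (|pd3 j (ψ 2) x| + |ψ 2 x|) ≤ _
    linarith [p1 1]
  · change |pd3 j (ψ 1) x| + |ψ 1 x| + (|pd3 j (ψ 0) x| + |ψ 0 x|) ≤ _
    linarith [p1 2]

/-! ### Pointwise bounds for the energy identity -/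

/-- The integrand that controls the energy, in terms of `U = |u|`, `H = |ψ| + |∇ψ|` and the weighted
quantities `P`, `Q` for `v` and `θ`. -/
def bnd (κ U H P Q : ℝ) : ℝ :=
  U ^ 2 + U ^ 3 + H ^ 2 + H * U ^ 2 + P ^ 2 + Q ^ 2 + (U + H) * (P ^ 2 + Q ^ 2) + κ * (P * Q)

lemma bnd_alg {κ U H V T w M X : ℝ} (hκ : 0 ≤ κ) (hU : 0 ≤ U) (hH : 0 ≤ H) (hV : 0 ≤ V) (hT : 0 ≤ T)
    (hw : 0 ≤ w) (hw1 : w ≤ 1) (hM : 0 ≤ M)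
    (hX : X ≤ 1 / 2 * (3 * (M * w ^ 8)) * (U ^ 2 + V ^ 2 + T ^ 2) +
      1 / 2 * (U ^ 2 + V ^ 2 + T ^ 2) * (M * w ^ 8 * U) + (M * w ^ 8 * V) * (V * U) +
      κ * (T * (M * w ^ 8 * V)) + M * w ^ 8 * H * (U ^ 2 + V ^ 2) + 9 / 2 * M ^ 2 * H ^ 2) :
    X ≤ (2 * M + 5 * M ^ 2) * bnd κ U H (w ^ 4 * V) (w ^ 4 * T) := by
  refine hX.trans ?_
  have e8 : w ^ 8 = w ^ 4 * w ^ 4 := by ring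
  have h8 : w ^ 8 ≤ 1 := pow_le_one₀ hw hw1
  have h80 : 0 ≤ w ^ 8 := by positivity
  unfold bnd
  have i1 : w ^ 8 * (U ^ 2 + U ^ 3 + H * U ^ 2) ≤ 1 * (U ^ 2 + U ^ 3 + H * U ^ 2) :=
    mul_le_mul_of_nonneg_right h8 (by positivity)
  have i2 : M * (w ^ 8 * (U ^ 2 + U ^ 3 + H * U ^ 2)) ≤ M * (1 * (U ^ 2 + U ^ 3 + H * U ^ 2)) :=
    mul_le_mul_of_nonneg_left i1 hM
  have i3 : M * w ^ 8 * U ^ 2 ≤ M * U ^ 2 := by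
    have := mul_le_mul_of_nonneg_right h8 (show 0 ≤ M * U ^ 2 by positivity)
    linarith
  have i4 : M * w ^ 8 * U ^ 3 ≤ M * U ^ 3 := by
    have := mul_le_mul_of_nonneg_right h8 (show 0 ≤ M * U ^ 3 by positivity)
    linarith
  have i5 : M * w ^ 8 * (H * U ^ 2) ≤ M * (H * U ^ 2) := by
    have := mul_le_mul_of_nonneg_right h8 (show 0 ≤ M * (H * U ^ 2) by positivity)
    linarith
  have p1 : 0 ≤ M * w ^ 8 * V ^ 2 := by positivity
  have p2 : 0 ≤ M * w ^ 8 * T ^ 2 := by positivity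
  have p3 : 0 ≤ M * w ^ 8 * V ^ 2 * U := by positivity
  have p4 : 0 ≤ M * w ^ 8 * T ^ 2 * U := by positivity
  have p5 : 0 ≤ M * w ^ 8 * V ^ 2 * H := by positivity
  have p6 : 0 ≤ M * w ^ 8 * T ^ 2 * H := by positivity
  have p7 : 0 ≤ M * w ^ 8 * (κ * (T * V)) := by positivity
  have p8 : 0 ≤ M * H ^ 2 := by positivity
  have p9 : 0 ≤ M * U ^ 2 := by positivity
  have p10 : 0 ≤ M * U ^ 3 := by positivity
  have p11 : 0 ≤ M * (H * U ^ 2) := by positivity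
  have q : 0 ≤ 5 * M ^ 2 * (U ^ 2 + U ^ 3 + H * U ^ 2 + (w ^ 4 * V) ^ 2 + (w ^ 4 * T) ^ 2 +
    (U + H) * ((w ^ 4 * V) ^ 2 + (w ^ 4 * T) ^ 2) + κ * ((w ^ 4 * V) * (w ^ 4 * T))) := by positivity
  have q2 : 0 ≤ M ^ 2 * H ^ 2 := by positivity
  nlinarith

lemma dbl_sum_le {f d : Fin 3 → Fin 3 → ℝ} {a b : Fin 3 → ℝ} {P K L : ℝ}
    (h : ∀ i j, -f i j ≤ 1 / 2 * (P * d i j) + 1 / 2 * K + L * (a j * a i + b j * b i)) :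
    -∑ i, ∑ j, f i j ≤ 1 / 2 * (P * ∑ i, ∑ j, d i j) + 9 / 2 * K + L * ((∑ i, a i) ^ 2 + (∑ i, b i) ^ 2) := by
  calc -∑ i, ∑ j, f i j = ∑ i, ∑ j, -f i j := by simp only [Finset.sum_neg_distrib]
    _ ≤ ∑ i, ∑ j, (1 / 2 * (P * d i j) + 1 / 2 * K + L * (a j * a i + b j * b i)) :=
        Finset.sum_le_sum fun i _ => Finset.sum_le_sum fun j _ => h i j
    _ = _ := by simp only [Fin.sum_univ_three]; ring

/-- Pointwise estimate of the right-hand side of the energy identity; half of the dissipation of `u`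
is used to absorb the term with `∂w ∂u`. -/
lemma energy_pt {κ : ℝ} {u v ψ : Fin 3 → E3 → ℝ} {θ Φ φ : E3 → ℝ} (hκ : 0 ≤ κ)
    (hΦ : Sm Φ) (hψ : ∀ i, Sm (ψ i)) {M : ℝ} {x : E3} (hM : 0 ≤ M) (h0 : 0 ≤ φ x) (hφ1 : φ x ≤ 1)
    (hp : Φ x = φ x ^ 10)
    (h1 : ∀ j, |pd3 j Φ x| ≤ M * φ x ^ 8) (h2 : ∀ i j, |pd3 i (pd3 j Φ) x| ≤ M * φ x ^ 8) :
    (1 / 2 * lap3 Φ x * ((∑ i, u i x ^ 2) + (∑ i, v i x ^ 2) + θ x ^ 2) +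
       1 / 2 * ((∑ i, u i x ^ 2) + (∑ i, v i x ^ 2) + θ x ^ 2) * (∑ j, u j x * pd3 j Φ x) +
       (∑ j, v j x * pd3 j Φ x) * (∑ i, v i x * u i x) +
       κ * (θ x * ∑ j, v j x * pd3 j Φ x) -
       ∑ i, ∑ j, pd3 j (crs Φ ψ i) x * (pd3 j (u i) x - u j x * u i x - v j x * v i x)) ≤
    1 / 2 * (Φ x * dens u v θ x) + (2 * M + 5 * M ^ 2) *
      bnd κ (∑ i, |u i x|) (hh ψ x) (φ x ^ 4 * ∑ i, |v i x|) (φ x ^ 4 * |θ x|) := by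
  obtain ⟨m, hm⟩ : ∃ m, m = M * φ x ^ 8 := ⟨_, rfl⟩
  rw [← hm] at h1 h2
  have hm0 : 0 ≤ m := (abs_nonneg _).trans (h1 0)
  obtain ⟨U, hU⟩ : ∃ U, U = ∑ i, |u i x| := ⟨_, rfl⟩
  obtain ⟨V, hV⟩ : ∃ V, V = ∑ i, |v i x| := ⟨_, rfl⟩
  obtain ⟨H, hH⟩ : ∃ H, H = hh ψ x := ⟨_, rfl⟩
  have hU0 : 0 ≤ U := by rw [hU]; positivity
  have hV0 : 0 ≤ V := by rw [hV]; positivity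
  have hH0 : 0 ≤ H := by rw [hH]; exact hh_nonneg _ _
  have su : ∑ i, u i x ^ 2 ≤ U ^ 2 := hU ▸ sum_sq_le _
  have sv : ∑ i, v i x ^ 2 ≤ V ^ 2 := hV ▸ sum_sq_le _
  have su0 : 0 ≤ ∑ i, u i x ^ 2 := by positivity
  have sv0 : 0 ≤ ∑ i, v i x ^ 2 := by positivity
  have bl : |lap3 Φ x| ≤ 3 * m := by
    refine (Finset.abs_sum_le_sum_abs _ _).trans ((Finset.sum_le_sum fun j _ => h2 j j).trans ?_)
    simp
  have b1 : |∑ j, u j x * pd3 j Φ x| ≤ m * U := hU ▸ abs_sum_mul_le h1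
  have b2 : |∑ j, v j x * pd3 j Φ x| ≤ m * V := hV ▸ abs_sum_mul_le h1
  have le1 : ∀ i, |u i x| ≤ U := fun i => hU ▸
    Finset.single_le_sum (f := fun i => |u i x|) (fun k _ => abs_nonneg _) (Finset.mem_univ i)
  have b3 : |∑ i, v i x * u i x| ≤ V * U := by
    rw [mul_comm, hV]; exact abs_sum_mul_le le1
  have bw : ∀ i j, |pd3 j (crs Φ ψ i) x| ≤ m * H := fun i j => hH ▸ abs_pd3_crs_le hΦ hψ h1 h2 i j
  obtain ⟨S, hS⟩ : ∃ S, S = (∑ i, u i x ^ 2) + (∑ i, v i x ^ 2) + θ x ^ 2 := ⟨_, rfl⟩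
  have hS0 : 0 ≤ S := by rw [hS]; positivity
  have hSle : S ≤ U ^ 2 + V ^ 2 + |θ x| ^ 2 := by rw [hS, sq_abs]; linarith
  rw [← hS]
  -- the term containing `∂w`
  have tw : ∀ i j, -(pd3 j (crs Φ ψ i) x * (pd3 j (u i) x - u j x * u i x - v j x * v i x)) ≤
      1 / 2 * (Φ x * pd3 j (u i) x ^ 2) + 1 / 2 * (M ^ 2 * H ^ 2) +
        m * H * (|u j x| * |u i x| + |v j x| * |v i x|) := by
    intro i j
    have w1 := bw i j
    have a1 : -(pd3 j (crs Φ ψ i) x * pd3 j (u i) x) ≤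
        1 / 2 * (Φ x * pd3 j (u i) x ^ 2) + 1 / 2 * (M ^ 2 * H ^ 2) := by
      have w2 : |pd3 j (crs Φ ψ i) x| ≤ φ x ^ 5 * (M * H) := by
        refine w1.trans ?_
        have : φ x ^ 8 ≤ φ x ^ 5 := pow_le_pow_of_le_one h0 hφ1 (by norm_num)
        have := mul_le_mul_of_nonneg_right this (show 0 ≤ M * H by positivity)
        rw [hm]; linarith
      have w3 : -(pd3 j (crs Φ ψ i) x * pd3 j (u i) x) ≤ φ x ^ 5 * (M * H) * |pd3 j (u i) x| := by
        refine (neg_le_abs _).trans ?_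
        rw [abs_mul]; exact mul_le_mul_of_nonneg_right w2 (abs_nonneg _)
      have w4 := sq_nonneg (φ x ^ 5 * |pd3 j (u i) x| - M * H)
      rw [hp, ← sq_abs (pd3 j (u i) x)]
      nlinarith
    have a2 : pd3 j (crs Φ ψ i) x * (u j x * u i x + v j x * v i x) ≤
        m * H * (|u j x| * |u i x| + |v j x| * |v i x|) := by
      refine (le_abs_self _).trans ?_
      rw [abs_mul]
      refine mul_le_mul w1 ?_ (abs_nonneg _) (by positivity)
      refine (abs_add_le _ _).trans ?_
      rw [abs_mul, abs_mul]
    linarith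
  have tws : -∑ i, ∑ j, pd3 j (crs Φ ψ i) x * (pd3 j (u i) x - u j x * u i x - v j x * v i x) ≤
      1 / 2 * (Φ x * ∑ i, ∑ j, pd3 j (u i) x ^ 2) + 9 / 2 * (M ^ 2 * H ^ 2) +
        m * H * (U ^ 2 + V ^ 2) := by
    rw [hU, hV]
    exact dbl_sum_le tw
  have hΦ0 : 0 ≤ Φ x := by rw [hp]; positivity
  have dd : Φ x * ∑ i, ∑ j, pd3 j (u i) x ^ 2 ≤ Φ x * dens u v θ x := by
    refine mul_le_mul_of_nonneg_left ?_ hΦ0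
    have e1 : 0 ≤ ∑ i, ∑ j, pd3 j (v i) x ^ 2 := by positivity
    have e2 : 0 ≤ ∑ j, pd3 j θ x ^ 2 := by positivity
    unfold dens; linarith
  have t1 : 1 / 2 * lap3 Φ x * S ≤ 1 / 2 * (3 * m) * (U ^ 2 + V ^ 2 + |θ x| ^ 2) := by
    have : lap3 Φ x * S ≤ (3 * m) * (U ^ 2 + V ^ 2 + |θ x| ^ 2) :=
      mul_le_mul ((le_abs_self _).trans bl) hSle hS0 (by positivity)
    linarith
  have t2 : 1 / 2 * S * (∑ j, u j x * pd3 j Φ x) ≤ 1 / 2 * (U ^ 2 + V ^ 2 + |θ x| ^ 2) * (m * U) := by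
    have a1 : S * (∑ j, u j x * pd3 j Φ x) ≤ S * (m * U) :=
      mul_le_mul_of_nonneg_left ((le_abs_self _).trans b1) hS0
    have a2 : S * (m * U) ≤ (U ^ 2 + V ^ 2 + |θ x| ^ 2) * (m * U) :=
      mul_le_mul_of_nonneg_right hSle (by positivity)
    linarith
  have t3 : (∑ j, v j x * pd3 j Φ x) * (∑ i, v i x * u i x) ≤ (m * V) * (V * U) := by
    refine (le_abs_self _).trans ?_
    rw [abs_mul]; exact mul_le_mul b2 b3 (abs_nonneg _) (by positivity)
  have t4 : κ * (θ x * ∑ j, v j x * pd3 j Φ x) ≤ κ * (|θ x| * (m * V)) := by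
    refine mul_le_mul_of_nonneg_left ((le_abs_self _).trans ?_) hκ
    rw [abs_mul]; exact mul_le_mul_of_nonneg_left b2 (abs_nonneg _)
  rw [← hU, ← hV, ← hH]
  have key := bnd_alg (κ := κ) (U := U) (H := H) (V := V) (T := |θ x|) (w := φ x) (M := M)
    (X := 1 / 2 * (3 * m) * (U ^ 2 + V ^ 2 + |θ x| ^ 2) +
      1 / 2 * (U ^ 2 + V ^ 2 + |θ x| ^ 2) * (m * U) + (m * V) * (V * U) +
      κ * (|θ x| * (m * V)) + m * H * (U ^ 2 + V ^ 2) + 9 / 2 * M ^ 2 * H ^ 2)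
    hκ hU0 hH0 hV0 (abs_nonneg _) h0 hφ1 hM (by rw [hm])
  linarith

/-! ### The integrated energy inequality -/

lemma pow10_bounds {φ : E3 → ℝ} {K : ℝ} (hφ : Cut 1.06 1.09 φ K) :
    (∀ j x, |pd3 j (fun y => φ y ^ 10) x| ≤ (10 * K + 90 * K ^ 2) * φ x ^ 8) ∧
    (∀ i j x, |pd3 i (pd3 j fun y => φ y ^ 10) x| ≤ (10 * K + 90 * K ^ 2) * φ x ^ 8) ∧
    (∀ j x, (‖x‖ < 1.06 ∨ 1.09 < ‖x‖) → pd3 j (fun y => φ y ^ 10) x = 0) ∧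
    (∀ i j x, (‖x‖ < 1.06 ∨ 1.09 < ‖x‖) → pd3 i (pd3 j fun y => φ y ^ 10) x = 0) := by
  have hK := hφ.K_nonneg
  have e1 : ∀ j x, pd3 j (fun y => φ y ^ 10) x = 10 * φ x ^ 9 * pd3 j φ x := fun j x => by
    rw [pd3_pow hφ.sm.diff]; norm_num
  have e2 : ∀ i j x, pd3 i (pd3 j fun y => φ y ^ 10) x =
      10 * φ x ^ 9 * pd3 i (pd3 j φ) x + 90 * φ x ^ 8 * pd3 i φ x * pd3 j φ x := by
    intro i j x
    have s9 : Sm fun y => φ y ^ 9 := ContDiff.pow hφ.sm 9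
    have : (pd3 j fun y => φ y ^ 10) = fun x => 10 * (φ x ^ 9 * pd3 j φ x) := by
      funext x; rw [e1]; ring
    rw [this, pd3_const_mul (s9.mul' (hφ.sm.pd j)).diff, pd3_mul s9.diff (hφ.sm.pd j).diff,
      pd3_pow hφ.sm.diff]
    norm_num; ring
  have a9 : ∀ x, φ x ^ 9 ≤ φ x ^ 8 := fun x =>
    pow_le_pow_of_le_one (hφ.nonneg x) (hφ.le_one x) (by norm_num)
  have n8 : ∀ x, 0 ≤ φ x ^ 8 := fun x => pow_nonneg (hφ.nonneg x) _
  have n9 : ∀ x, 0 ≤ φ x ^ 9 := fun x => pow_nonneg (hφ.nonneg x) _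
  have m9 : ∀ x y, |y| ≤ K → |10 * φ x ^ 9 * y| ≤ 10 * K * φ x ^ 8 := by
    intro x y hy
    rw [abs_mul, abs_of_nonneg (by linarith [n9 x] : 0 ≤ 10 * φ x ^ 9)]
    have k1 : φ x ^ 9 * |y| ≤ φ x ^ 8 * K := mul_le_mul (a9 x) hy (abs_nonneg _) (n8 x)
    linarith
  refine ⟨fun j x => ?_, fun i j x => ?_, fun j x h => ?_, fun i j x h => ?_⟩
  · rw [e1]
    have := m9 x _ (hφ.dK j x)
    have : 0 ≤ 90 * K ^ 2 * φ x ^ 8 := mul_nonneg (by positivity) (n8 x)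
    linarith
  · rw [e2]
    refine (abs_add_le _ _).trans ?_
    have k1 := m9 x _ (hφ.ddK i j x)
    have k2 : |90 * φ x ^ 8 * pd3 i φ x * pd3 j φ x| ≤ 90 * K ^ 2 * φ x ^ 8 := by
      rw [mul_assoc, abs_mul, abs_of_nonneg (by linarith [n8 x] : 0 ≤ 90 * φ x ^ 8), abs_mul]
      have := mul_le_mul (hφ.dK i x) (hφ.dK j x) (abs_nonneg _) hK
      have := mul_le_mul_of_nonneg_left this (n8 x)
      linarith
    linarith
  · rw [e1, hφ.dz j x h, mul_zero]
  · rw [e2, hφ.ddz i j x h, hφ.dz j x h, mul_zero, mul_zero, add_zero]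

lemma hh_cont {ψ : Fin 3 → E3 → ℝ} (hψ : ∀ i, Sm (ψ i)) : Continuous (hh ψ) := by
  have a : ∀ i, Continuous fun x => |ψ i x| := fun i => (hψ i).cont.abs
  have b : ∀ i j, Continuous fun x => |pd3 j (ψ i) x| := fun i j => ((hψ i).pd j).cont.abs
  exact (continuous_finsetSum _ fun i _ => a i).add
    (continuous_finsetSum _ fun i _ => continuous_finsetSum _ fun j _ => b i j)

lemma dens_cont {u v : Fin 3 → E3 → ℝ} {θ : E3 → ℝ} (hu : ∀ i, Sm (u i)) (hv : ∀ i, Sm (v i))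
    (hθ : Sm θ) : Continuous (dens u v θ) := by
  have a : ∀ {f : E3 → ℝ}, Sm f → ∀ j, Continuous fun x => pd3 j f x ^ 2 := fun hf j =>
    (hf.pd j).cont.pow 2
  exact ((continuous_finsetSum _ fun i _ => continuous_finsetSum _ fun j _ => a (hu i) j).add
    (continuous_finsetSum _ fun i _ => continuous_finsetSum _ fun j _ => a (hv i) j)).add
    (continuous_finsetSum _ fun j _ => a hθ j)

lemma dens_nonneg (u v : Fin 3 → E3 → ℝ) (θ : E3 → ℝ) (x : E3) : 0 ≤ dens u v θ x := by
  unfold dens; positivity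

lemma bnd_cont {κ : ℝ} {U H P Q : E3 → ℝ} (hU : Continuous U) (hH : Continuous H)
    (hP : Continuous P) (hQ : Continuous Q) : Continuous fun x => bnd κ (U x) (H x) (P x) (Q x) := by
  unfold bnd; fun_prop

/-- Integrated form of the energy estimate. -/
lemma energy_int {κ : ℝ} {u v ψ : Fin 3 → E3 → ℝ} {π θ φ : E3 → ℝ} {K : ℝ} (hκ : 0 ≤ κ)
    (h : SolK κ u π v θ) (hφ : Cut 1.06 1.09 φ K) (hψ : ∀ i, Sm (ψ i))
    (hG : ∫ x, ∑ l, (π x * pd3 l (fun y => φ y ^ 10) x) * (u l x - curl ψ l x) = 0) :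
    ∫ x, φ x ^ 10 * dens u v θ x ≤ 2 * ((2 * (10 * K + 90 * K ^ 2) + 5 * (10 * K + 90 * K ^ 2) ^ 2) *
      ∫ x in N0, bnd κ (∑ i, |u i x|) (hh ψ x) (φ x ^ 4 * ∑ i, |v i x|) (φ x ^ 4 * |θ x|)) := by
  obtain ⟨p1, p2, z1, z2⟩ := pow10_bounds hφ
  have hK := hφ.K_nonneg
  have hM : 0 ≤ 10 * K + 90 * K ^ 2 := by positivity
  obtain ⟨M, hM'⟩ : ∃ M, M = 10 * K + 90 * K ^ 2 := ⟨_, rfl⟩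
  rw [← hM'] at p1 p2 hM ⊢
  have sΦ : Sm fun y => φ y ^ 10 := ContDiff.pow hφ.sm 10
  have cΦ : HasCompactSupport fun y => φ y ^ 10 :=
    hφ.supp.comp_left (g := fun t : ℝ => t ^ 10) (by simp)
  have pt := fun x => energy_pt (κ := κ) (u := u) (v := v) (ψ := ψ) (θ := θ) (x := x)
    (Φ := fun y => φ y ^ 10) (φ := φ) hκ sΦ hψ hM (hφ.nonneg x) (hφ.le_one x) rfl (fun j => p1 j x) (fun i j => p2 i j x)
  have Zid := energy_id h sΦ cΦ hψ
  have hGs : ∀ l, Sm fun x => (π x * pd3 l (fun y => φ y ^ 10) x) * (u l x - curl ψ l x) := fun l =>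
    (h.sπ.mul' (sΦ.pd l)).mul' ((h.su l).sub' (curl_smooth hψ l))
  have iG : Integrable fun x => ∑ l, (π x * pd3 l (fun y => φ y ^ 10) x) * (u l x - curl ψ l x) :=
    integrable_finsetSum _ fun l _ => (hGs l).cont.integrable_of_hasCompactSupport
      (((hasCompactSupport_pd3 cΦ l).mul_left).mul_right)
  have cU : Continuous fun x => ∑ i, |u i x| := continuous_finsetSum _ fun i _ => (h.su i).cont.abs
  have cV : Continuous fun x => φ x ^ 4 * ∑ i, |v i x| :=
    (hφ.sm.cont.pow 4).mul (continuous_finsetSum _ fun i _ => (h.sv i).cont.abs)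
  have cT : Continuous fun x => φ x ^ 4 * |θ x| := (hφ.sm.cont.pow 4).mul h.sθ.cont.abs
  have cB := bnd_cont (κ := κ) cU (hh_cont hψ) cV cT
  obtain ⟨B, hB⟩ : ∃ B : E3 → ℝ, B = fun x => bnd κ (∑ i, |u i x|) (hh ψ x) (φ x ^ 4 * ∑ i, |v i x|)
    (φ x ^ 4 * |θ x|) := ⟨_, rfl⟩
  rw [← hB] at cB
  have hN : BM N0 := csh_BM _ _
  have iB : Integrable (N0.indicator B) := (integrableOn_of_cont cB hN.1).integrable_indicator hN.2
  have iD : Integrable fun x => φ x ^ 10 * dens u v θ x :=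
    ((hφ.sm.cont.pow 10).mul (dens_cont h.su h.sv h.sθ)).integrable_of_hasCompactSupport cΦ.mul_right
  obtain ⟨L, hL⟩ : ∃ L, L = 2 * M + 5 * M ^ 2 := ⟨_, rfl⟩
  rw [← hL] at pt ⊢
  have mono := integral_mono_ae (iD.const_mul (1 / 2)) ((Zid.add ⟨iG, hG⟩).1.add (iB.const_mul L))
    (Eventually.of_forall fun x => by
      have hp := pt x
      have e : ∑ l, (π x * pd3 l (fun y => φ y ^ 10) x) * (u l x - curl ψ l x) =
          π x * (∑ l, pd3 l (fun y => φ y ^ 10) x * (u l x - curl ψ l x)) := by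
        rw [Finset.mul_sum]; exact Finset.sum_congr rfl fun l _ => by ring
      simp only [Pi.add_apply]
      rw [e]
      by_cases hx : x ∈ N0
      · rw [Set.indicator_of_mem hx]
        have : B x = bnd κ (∑ i, |u i x|) (hh ψ x) (φ x ^ 4 * ∑ i, |v i x|) (φ x ^ 4 * |θ x|) := by
          rw [hB]
        rw [this]
        linarith
      · have ho : ‖x‖ < 1.06 ∨ 1.09 < ‖x‖ := by
          by_contra! h'; exact hx h'
        have d0 : 0 ≤ φ x ^ 10 * dens u v θ x :=
          mul_nonneg (pow_nonneg (hφ.nonneg x) _) (dens_nonneg _ _ _ _)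
        have zl : lap3 (fun y => φ y ^ 10) x = 0 := Finset.sum_eq_zero fun j _ => z2 j j x ho
        have zw : ∀ i j, pd3 j (crs (fun y => φ y ^ 10) ψ i) x = 0 := fun i j => by
          rw [pd3_crs sΦ hψ]; simp [z1 _ x ho, z2 _ _ x ho]
        simp only [Set.indicator_of_notMem hx, zl, zw, z1 _ x ho, mul_zero, zero_mul,
          Finset.sum_const_zero, add_zero, sub_zero]
        linarith)
  have e2 := integral_add (Zid.add ⟨iG, hG⟩).1 (iB.const_mul L)
  have e3 : ∫ x, (N0.indicator B) x = ∫ x in N0, B x := integral_indicator hN.2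
  rw [integral_const_mul] at mono
  rw [(Zid.add ⟨iG, hG⟩).2, integral_const_mul, e3, zero_add] at e2
  have := mono.trans_eq e2
  rw [hB] at this
  linarith

/-! ### The energy inequality at unit scale -/

lemma bnd_le {κ U H P Q : ℝ} (hU : 0 ≤ U) (hH : 0 ≤ H) :
    bnd κ U H P Q ≤ (U + H) ^ 2 + (U + H) ^ 3 + P ^ 2 + Q ^ 2 + ((U + H) * P ^ 2 + (U + H) * Q ^ 2) +
      κ * (P * Q) := by
  unfold bnd
  have h1 : 0 ≤ U * H := by positivity
  have h2 : 0 ≤ U ^ 2 * H := by positivity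
  have h3 : 0 ≤ U * H ^ 2 := by positivity
  have h4 : 0 ≤ H ^ 3 := by positivity
  nlinarith

lemma nm_sq_fun {f : E3 → ℝ} (hf : Continuous f) (h0 : ∀ x, 0 ≤ f x) {S : Set E3} (hS : BM S)
    {r : ℝ} (hr : 0 < r) : nm (fun x => f x ^ 2) r S = nm f (2 * r) S ^ 2 := by
  have := nm_rpow_fun hf h0 hS hr (s := 2) two_pos
  rw [mul_comm 2 r]
  exact_mod_cast this

lemma setInt_sq {f : E3 → ℝ} (hf : Continuous f) {S : Set E3} (hS : BM S) :
    ∫ x in S, f x ^ 2 = nm f 2 S ^ 2 := by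
  rw [nm_sq hf hS]; simp

lemma setInt_cube {f : E3 → ℝ} (hf : Continuous f) (h0 : ∀ x, 0 ≤ f x) {S : Set E3} (hS : BM S) :
    ∫ x in S, f x ^ 3 = nm f 3 S ^ 3 := by
  have := nm_rpow hf hS (r := 3) (by norm_num)
  have h3 : nm f 3 S ^ 3 = nm f 3 S ^ (3 : ℝ) := by norm_cast
  rw [h3, this]
  congr 1; funext x
  rw [Real.norm_of_nonneg (h0 x)]; norm_cast

/-- The energy inequality at unit scale. -/
lemma energy_main {p : ℝ} (hp : 3 ≤ p) {φ : E3 → ℝ} {K : ℝ} (hφ : Cut 1.06 1.09 φ K) : ∃ C, 0 ≤ C ∧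
    ∀ (κ : ℝ) (u : Fin 3 → E3 → ℝ) (π : E3 → ℝ) (v : Fin 3 → E3 → ℝ) (θ : E3 → ℝ), 0 ≤ κ →
      SolK κ u π v θ → ∫ x, φ x ^ 10 * dens u v θ x ≤ C *
        ((∑ i, nm (u i) p (Ann 1)) ^ 2 + (∑ i, nm (u i) p (Ann 1)) ^ 3 +
          nm (fun x => φ x ^ 4 * ∑ i, |v i x|) 2 N0 ^ 2 + nm (fun x => φ x ^ 4 * |θ x|) 2 N0 ^ 2 +
          (∑ i, nm (u i) p (Ann 1)) * (nm (fun x => φ x ^ 4 * ∑ i, |v i x|) (2 * (p / (p - 1))) N0 ^ 2 +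
            nm (fun x => φ x ^ 4 * |θ x|) (2 * (p / (p - 1))) N0 ^ 2) +
          κ * ∫ x in N0, (φ x ^ 4 * ∑ i, |v i x|) * (φ x ^ 4 * |θ x|)) := by
  obtain ⟨C0, hC0, HP⟩ := pressure hp
  have hN : BM N0 := csh_BM _ _
  have hK := hφ.K_nonneg
  obtain ⟨L, hL⟩ : ∃ L, L = 2 * (10 * K + 90 * K ^ 2) + 5 * (10 * K + 90 * K ^ 2) ^ 2 := ⟨_, rfl⟩
  have hL0 : 0 ≤ L := by rw [hL]; positivity
  obtain ⟨w2, hw2⟩ : ∃ w, w = (volume N0).toReal ^ (1 / 2 - 1 / p) := ⟨_, rfl⟩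
  obtain ⟨w3, hw3⟩ : ∃ w, w = (volume N0).toReal ^ (1 / 3 - 1 / p) := ⟨_, rfl⟩
  have hw20 : 0 ≤ w2 := by rw [hw2]; positivity
  have hw30 : 0 ≤ w3 := by rw [hw3]; positivity
  obtain ⟨c, hc⟩ : ∃ c, c = 1 + 12 * C0 := ⟨_, rfl⟩
  have hc0 : 0 ≤ c := by rw [hc]; positivity
  refine ⟨2 * (L * ((c * w2) ^ 2 + (c * w3) ^ 3 + 1 + c)), by positivity,
    fun κ u π v θ hκ h => ?_⟩
  have sΦ : Sm fun y => φ y ^ 10 := ContDiff.pow hφ.sm 10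
  obtain ⟨-, -, z1, -⟩ := pow10_bounds hφ
  obtain ⟨ψ, hψ, hG, b1, b2⟩ := HP (fun l x => π x * pd3 l (fun y => φ y ^ 10) x)
    (fun l => (h.sπ.mul' (sΦ.pd l)).cont) (fun l x hx => by rw [z1 l x hx, mul_zero]) u h.su h.div
  have key := energy_int hκ h hφ hψ hG
  rw [← hL] at key
  obtain ⟨a, ha⟩ : ∃ a, a = ∑ i, nm (u i) p (Ann 1) := ⟨_, rfl⟩
  have ha0 : 0 ≤ a := by rw [ha]; exact Finset.sum_nonneg fun i _ => nm_nonneg _ _ _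
  rw [← ha] at b1 b2 ⊢
  have cU : Continuous fun x => ∑ i, |u i x| := continuous_finsetSum _ fun i _ => (h.su i).cont.abs
  have cH := hh_cont hψ
  have cG : Continuous fun x => (∑ i, |u i x|) + hh ψ x := cU.add cH
  have cV : Continuous fun x => φ x ^ 4 * ∑ i, |v i x| :=
    (hφ.sm.cont.pow 4).mul (continuous_finsetSum _ fun i _ => (h.sv i).cont.abs)
  have cT : Continuous fun x => φ x ^ 4 * |θ x| := (hφ.sm.cont.pow 4).mul h.sθ.cont.abs
  have nV : ∀ x, 0 ≤ φ x ^ 4 * ∑ i, |v i x| := fun x =>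
    mul_nonneg (pow_nonneg (hφ.nonneg x) _) (by positivity)
  have nT : ∀ x, 0 ≤ φ x ^ 4 * |θ x| := fun x =>
    mul_nonneg (pow_nonneg (hφ.nonneg x) _) (by positivity)
  have nG : ∀ x, 0 ≤ (∑ i, |u i x|) + hh ψ x := fun x => add_nonneg (by positivity) (hh_nonneg _ _)
  have hNA : N0 ⊆ Ann 1 := fun x hx => by
    have h3 := hx.1
    have h4 := hx.2
    refine ⟨?_, ?_⟩
    · rw [mem_ball_zero_iff]; linarith
    · rw [mem_ball_zero_iff]; linarith
  have hNB : N0 ⊆ ball (0 : E3) 1.1 := fun x hx => by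
    have h4 := hx.2
    rw [mem_ball_zero_iff]; linarith
  have hp1 : 1 ≤ p := by linarith
  -- the `L^p` norm of `|u| + |ψ| + |∇ψ|`
  have gle : nm (fun x => (∑ i, |u i x|) + hh ψ x) p N0 ≤ c * a := by
    have k1 : nm (fun x => ∑ i, |u i x|) p N0 ≤ a := by
      refine (nm_sum_le (f := fun i x => |u i x|) _ (fun i => (h.su i).cont.abs) hN hp1).trans ?_
      rw [ha]
      refine Finset.sum_le_sum fun i _ => ?_
      exact (nm_norm (u i) p N0).le.trans (nm_mono_set (h.su i).cont (BM_Ann 1) hNA)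
    have ca : ∀ i, Continuous fun x => |ψ i x| := fun i => (hψ i).cont.abs
    have cb : ∀ i j, Continuous fun x => |pd3 j (ψ i) x| := fun i j => ((hψ i).pd j).cont.abs
    have cs : Continuous fun x => ∑ i, |ψ i x| := continuous_finsetSum _ fun i _ => ca i
    have cb' : ∀ i, Continuous fun x => ∑ j, |pd3 j (ψ i) x| := fun i =>
      continuous_finsetSum _ fun j _ => cb i j
    have cs' : Continuous fun x => ∑ i, ∑ j, |pd3 j (ψ i) x| :=
      continuous_finsetSum _ fun i _ => cb' i
    have k2 : nm (fun x => ∑ i, |ψ i x|) p N0 ≤ 3 * (C0 * a) := by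
      refine (nm_sum_le (f := fun i x => |ψ i x|) _ ca hN hp1).trans ?_
      refine (Finset.sum_le_sum (g := fun _ => C0 * a) fun i _ => ?_).trans (by simp)
      exact (nm_norm (ψ i) p N0).le.trans ((nm_mono_set (hψ i).cont (BM_ball _) hNB).trans (b1 i))
    have k3 : nm (fun x => ∑ i, ∑ j, |pd3 j (ψ i) x|) p N0 ≤ 9 * (C0 * a) := by
      refine (nm_sum_le (f := fun i x => ∑ j, |pd3 j (ψ i) x|) _ cb' hN hp1).trans ?_
      refine (Finset.sum_le_sum (g := fun _ => 3 * (C0 * a)) fun i _ => ?_).trans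
        (by simp; linarith)
      refine (nm_sum_le (f := fun j x => |pd3 j (ψ i) x|) _ (cb i) hN hp1).trans ?_
      refine (Finset.sum_le_sum (g := fun _ => C0 * a) fun j _ => ?_).trans (by simp)
      exact (nm_norm (pd3 j (ψ i)) p N0).le.trans
        ((nm_mono_set ((hψ i).pd j).cont (BM_ball _) hNB).trans (b2 i j))
    have k4 : nm (hh ψ) p N0 ≤ 12 * (C0 * a) := by
      have : nm (hh ψ) p N0 ≤ _ := nm_add_le cs cs' hN hp1
      linarith
    refine (nm_add_le cU cH hN hp1).trans ?_
    rw [hc]; linarith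
  have g0 := nm_nonneg (fun x => (∑ i, |u i x|) + hh ψ x) p N0
  obtain ⟨G, hGdef⟩ : ∃ G : E3 → ℝ, G = fun x => (∑ i, |u i x|) + hh ψ x := ⟨_, rfl⟩
  obtain ⟨P, hPdef⟩ : ∃ P : E3 → ℝ, P = fun x => φ x ^ 4 * ∑ i, |v i x| := ⟨_, rfl⟩
  obtain ⟨Q, hQdef⟩ : ∃ Q : E3 → ℝ, Q = fun x => φ x ^ 4 * |θ x| := ⟨_, rfl⟩
  have hGx : ∀ x, (∑ i, |u i x|) + hh ψ x = G x := fun x => by rw [hGdef]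
  have hPx : ∀ x, φ x ^ 4 * ∑ i, |v i x| = P x := fun x => by rw [hPdef]
  have hQx : ∀ x, φ x ^ 4 * |θ x| = Q x := fun x => by rw [hQdef]
  have bn := fun x => bnd_le (κ := κ) (U := ∑ i, |u i x|) (H := hh ψ x) (P := P x) (Q := Q x)
    (by positivity) (hh_nonneg _ _)
  simp only [hGx] at bn
  simp only [hPx, hQx] at key ⊢
  rw [← hGdef] at cG gle g0
  rw [← hPdef] at cV
  rw [← hQdef] at cT
  simp only [hGx] at nG
  simp only [hPx] at nV
  simp only [hQx] at nT
  have i1 : IntegrableOn (fun x => G x ^ 2) N0 := integrableOn_of_cont (cG.pow 2) hN.1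
  have i2 : IntegrableOn (fun x => G x ^ 3) N0 := integrableOn_of_cont (cG.pow 3) hN.1
  have i3 : IntegrableOn (fun x => P x ^ 2) N0 := integrableOn_of_cont (cV.pow 2) hN.1
  have i4 : IntegrableOn (fun x => Q x ^ 2) N0 := integrableOn_of_cont (cT.pow 2) hN.1
  have i5 : IntegrableOn (fun x => G x * P x ^ 2) N0 := integrableOn_of_cont (cG.mul (cV.pow 2)) hN.1
  have i6 : IntegrableOn (fun x => G x * Q x ^ 2) N0 := integrableOn_of_cont (cG.mul (cT.pow 2)) hN.1
  have i7 : IntegrableOn (fun x => P x * Q x) N0 := integrableOn_of_cont (cV.mul cT) hN.1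
  have iB : IntegrableOn (fun x => bnd κ (∑ i, |u i x|) (hh ψ x) (P x) (Q x)) N0 :=
    integrableOn_of_cont (bnd_cont cU cH cV cT) hN.1
  have mono : ∫ x in N0, bnd κ (∑ i, |u i x|) (hh ψ x) (P x) (Q x) ≤
      (∫ x in N0, G x ^ 2) + (∫ x in N0, G x ^ 3) + (∫ x in N0, P x ^ 2) + (∫ x in N0, Q x ^ 2) +
        ((∫ x in N0, G x * P x ^ 2) + ∫ x in N0, G x * Q x ^ 2) + κ * ∫ x in N0, P x * Q x := by
    have j1 : IntegrableOn (fun x => G x ^ 2 + G x ^ 3) N0 := i1.add i2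
    have j2 : IntegrableOn (fun x => G x ^ 2 + G x ^ 3 + P x ^ 2) N0 := j1.add i3
    have j3 : IntegrableOn (fun x => G x ^ 2 + G x ^ 3 + P x ^ 2 + Q x ^ 2) N0 := j2.add i4
    have j5 : IntegrableOn (fun x => G x * P x ^ 2 + G x * Q x ^ 2) N0 := i5.add i6
    have j6 : IntegrableOn (fun x => G x ^ 2 + G x ^ 3 + P x ^ 2 + Q x ^ 2 +
      (G x * P x ^ 2 + G x * Q x ^ 2)) N0 := j3.add j5
    have j7 : IntegrableOn (fun x => κ * (P x * Q x)) N0 := i7.const_mul κ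
    have j8 : IntegrableOn (fun x => G x ^ 2 + G x ^ 3 + P x ^ 2 + Q x ^ 2 +
      (G x * P x ^ 2 + G x * Q x ^ 2) + κ * (P x * Q x)) N0 := j6.add j7
    rw [← integral_const_mul, ← integral_add i5 i6, ← integral_add i1 i2,
      ← integral_add j1 i3, ← integral_add j2 i4, ← integral_add j3 j5, ← integral_add j6 j7]
    exact setIntegral_mono_on iB j8 hN.2 fun x _ => bn x
  have hpp : 0 < p / (p - 1) := div_pos (by linarith) (by linarith)
  have hol : ∀ f : E3 → ℝ, Continuous f → (∀ x, 0 ≤ f x) →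
      ∫ x in N0, G x * f x ^ 2 ≤ c * a * nm f (2 * (p / (p - 1))) N0 ^ 2 := by
    intro f cf nf
    have k := integral_mul_le cG (cf.pow 2) hN (p := p) (q := p / (p - 1)) (by linarith) hpp (by
      have : p - 1 ≠ 0 := by linarith
      have : p ≠ 0 := by linarith
      field_simp; ring)
    have k' : nm (f ^ 2) (p / (p - 1)) N0 = nm f (2 * (p / (p - 1))) N0 ^ 2 :=
      nm_sq_fun cf nf hN hpp
    calc ∫ x in N0, G x * f x ^ 2 ≤ |∫ x in N0, G x * f x ^ 2| := le_abs_self _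
      _ ≤ ∫ x in N0, |G x * f x ^ 2| := abs_setIntegral_le _ _
      _ ≤ nm G p N0 * nm f (2 * (p / (p - 1))) N0 ^ 2 := by rw [← k']; exact k
      _ ≤ _ := mul_le_mul_of_nonneg_right gle (by positivity)
  have m1 : ∫ x in N0, G x ^ 2 ≤ (c * w2) ^ 2 * a ^ 2 := by
    rw [setInt_sq cG hN]
    have k := nm_exp_le cG hN (r₁ := 2) (r₂ := p) two_pos (by linarith)
    rw [← hw2] at k
    calc _ ≤ (c * a * w2) ^ 2 := pow_le_pow_left₀ (nm_nonneg _ _ _)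
          (k.trans (mul_le_mul_of_nonneg_right gle hw20)) 2
      _ = _ := by ring
  have m2 : ∫ x in N0, G x ^ 3 ≤ (c * w3) ^ 3 * a ^ 3 := by
    rw [setInt_cube cG nG hN]
    have k := nm_exp_le cG hN (r₁ := 3) (r₂ := p) (by norm_num) hp
    rw [← hw3] at k
    calc _ ≤ (c * a * w3) ^ 3 := pow_le_pow_left₀ (nm_nonneg _ _ _)
          (k.trans (mul_le_mul_of_nonneg_right gle hw30)) 3
      _ = _ := by ring
  have m3 := setInt_sq cV hN
  have m4 := setInt_sq cT hN
  have m5 := hol P cV nV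
  have m6 := hol Q cT nT
  have n7 : 0 ≤ ∫ x in N0, P x * Q x := integral_nonneg fun x => mul_nonneg (nV x) (nT x)
  refine key.trans ?_
  rw [mul_assoc 2, mul_assoc L]
  refine mul_le_mul_of_nonneg_left (mul_le_mul_of_nonneg_left ?_ hL0) zero_le_two
  obtain ⟨I, hI⟩ : ∃ I, I = ∫ x in N0, P x * Q x := ⟨_, rfl⟩
  obtain ⟨e1, he1⟩ : ∃ e, e = (c * w2) ^ 2 := ⟨_, rfl⟩
  obtain ⟨e2, he2⟩ : ∃ e, e = (c * w3) ^ 3 := ⟨_, rfl⟩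
  have he10 : 0 ≤ e1 := by rw [he1]; positivity
  have he20 : 0 ≤ e2 := by rw [he2]; positivity
  rw [← hI] at mono n7
  rw [← he1] at m1
  rw [← he2] at m2
  rw [← hI, ← he1, ← he2]
  obtain ⟨x1, hx1⟩ : ∃ e, e = nm P 2 N0 ^ 2 := ⟨_, rfl⟩
  obtain ⟨x2, hx2⟩ : ∃ e, e = nm Q 2 N0 ^ 2 := ⟨_, rfl⟩
  obtain ⟨x3, hx3⟩ : ∃ e, e = nm P (2 * (p / (p - 1))) N0 ^ 2 := ⟨_, rfl⟩
  obtain ⟨x4, hx4⟩ : ∃ e, e = nm Q (2 * (p / (p - 1))) N0 ^ 2 := ⟨_, rfl⟩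
  have z1 : nm (fun x => P x) 2 N0 ^ 2 = x1 := hx1.symm
  have z2 : nm (fun x => Q x) 2 N0 ^ 2 = x2 := hx2.symm
  have z3 : nm (fun x => P x) (2 * (p / (p - 1))) N0 ^ 2 = x3 := hx3.symm
  have z4 : nm (fun x => Q x) (2 * (p / (p - 1))) N0 ^ 2 = x4 := hx4.symm
  rw [z1, z2, z3, z4]
  rw [← hx1] at m3
  rw [← hx2] at m4
  rw [← hx3] at m5
  rw [← hx4] at m6
  have y1 : 0 ≤ x1 := by rw [hx1]; positivity
  have y2 : 0 ≤ x2 := by rw [hx2]; positivity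
  have y3 : 0 ≤ a * x3 := by rw [hx3]; positivity
  have y4 : 0 ≤ a * x4 := by rw [hx4]; positivity
  have y5 : 0 ≤ κ * I := by positivity
  have y6 : 0 ≤ a ^ 2 := by positivity
  have y7 : 0 ≤ a ^ 3 := by positivity
  refine mono.trans ?_
  rw [m3, m4]
  have s0 : 0 ≤ a ^ 2 + a ^ 3 + x1 + x2 + (a * x3 + a * x4) + κ * I := by positivity
  have r1 := mul_nonneg he10 (show 0 ≤ a ^ 3 + x1 + x2 + (a * x3 + a * x4) + κ * I by positivity)
  have r2 := mul_nonneg he20 (show 0 ≤ a ^ 2 + x1 + x2 + (a * x3 + a * x4) + κ * I by positivity)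
  have r3 := mul_nonneg hc0 (show 0 ≤ a ^ 2 + a ^ 3 + x1 + x2 + κ * I by positivity)
  linarith

/-! ### Scaled interpolation estimates -/

/-- `Est φ r β σ e t`: an interpolation estimate for `‖φ⁴ f‖_{L^σ(N0)}` in terms of the scaled sizes
`M` of `‖f‖_{L^r(N0)}` (natural power `R^{1-3/r+β}`) and `s` of `‖φ⁵ f‖_{L^6(N0)}` (natural power
`R^{1/2}`), with resulting power `R^e` and with exponent `t` on `s`. -/
def Est (φ : E3 → ℝ) (r β σ e t : ℝ) : Prop :=
  ∃ C, 0 ≤ C ∧ ∀ f : E3 → ℝ, Continuous f → ∀ R M s : ℝ, 1 ≤ R → 0 ≤ M → 0 ≤ s →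
    nm f r N0 ≤ R ^ (1 - 3 / r + β) * M →
    nm (fun x => φ x ^ 5 * f x) 6 N0 ≤ R ^ (1 / 2 : ℝ) * s →
    nm (fun x => φ x ^ 4 * f x) σ N0 ≤ C * (R ^ e * ((1 + M) * s ^ t))

lemma N0_BM : BM N0 := csh_BM _ _

lemma est_mono {φ : E3 → ℝ} {r β σ e e' t : ℝ} (h : Est φ r β σ e t) (he : e ≤ e') :
    Est φ r β σ e' t := by
  obtain ⟨C, hC, H⟩ := h
  refine ⟨C, hC, fun f hf R M s hR hM hs h1 h2 => (H f hf R M s hR hM hs h1 h2).trans ?_⟩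
  have : R ^ e ≤ R ^ e' := Real.rpow_le_rpow_of_exponent_le hR he
  gcongr

/-- The estimate obtained from interpolation between `L^r` and `L^6`. -/
lemma est_interp {φ : E3 → ℝ} {K : ℝ} (hφ : Cut 1.06 1.09 φ K) {r β σ t : ℝ} (hr : 0 < r)
    (hσ : 0 < σ) (ht : 0 < t) (ht' : t ≤ 4 / 5) (h : 1 / σ = (1 - t) / r + t / 6) :
    Est φ r β σ ((1 - t) * (1 - 3 / r + β) + t / 2) t := by
  refine ⟨1, zero_le_one, fun f hf R M s hR hM hs h1 h2 => ?_⟩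
  have hR0 : 0 < R := by linarith
  refine (interp hf hφ.sm.cont hφ.nonneg hφ.le_one N0_BM hr hσ ht ht' h).trans ?_
  have k1 : nm f r N0 ^ (1 - t) ≤ R ^ ((1 - t) * (1 - 3 / r + β)) * (1 + M) := by
    refine (Real.rpow_le_rpow (nm_nonneg _ _ _) h1 (by linarith)).trans ?_
    rw [Real.mul_rpow (by positivity) hM, ← Real.rpow_mul hR0.le, mul_comm (1 - t)]
    refine mul_le_mul_of_nonneg_left ?_ (by positivity)
    refine (Real.rpow_le_rpow hM (show M ≤ 1 + M by linarith) (by linarith)).trans ?_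
    have := Real.rpow_le_rpow_of_exponent_le (show 1 ≤ 1 + M by linarith) (show 1 - t ≤ 1 by linarith)
    rwa [Real.rpow_one] at this
  have k2 : nm (fun x => φ x ^ 5 * f x) 6 N0 ^ t ≤ R ^ (t / 2) * s ^ t := by
    refine (Real.rpow_le_rpow (nm_nonneg _ _ _) h2 ht.le).trans ?_
    rw [Real.mul_rpow (by positivity) hs, ← Real.rpow_mul hR0.le]
    rw [show 1 / 2 * t = t / 2 by ring]
  refine (mul_le_mul k1 k2 (Real.rpow_nonneg (nm_nonneg _ _ _) _) (by positivity)).trans ?_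
  rw [Real.rpow_add hR0]
  apply le_of_eq; ring

lemma nm_cut_le {φ : E3 → ℝ} {K : ℝ} (hφ : Cut 1.06 1.09 φ K) {f : E3 → ℝ} (hf : Continuous f)
    (n : ℕ) (r : ℝ) {S : Set E3} (hS : BM S) : nm (fun x => φ x ^ n * f x) r S ≤ nm f r S := by
  refine nm_mono hf hS fun x _ => ?_
  rw [norm_mul, Real.norm_of_nonneg (pow_nonneg (hφ.nonneg x) n)]
  exact mul_le_of_le_one_left (norm_nonneg _) (pow_le_one₀ (hφ.nonneg x) (hφ.le_one x))

/-- The estimate obtained from Hölder's inequality alone; the dissipation does not enter. -/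
lemma est_hold {φ : E3 → ℝ} {K : ℝ} (hφ : Cut 1.06 1.09 φ K) {r β σ : ℝ} (hσ : 0 < σ)
    (h : σ ≤ r) : Est φ r β σ (1 - 3 / r + β) 0 := by
  refine ⟨(volume N0).toReal ^ (1 / σ - 1 / r), by positivity, fun f hf R M s hR hM hs h1 _ => ?_⟩
  have hR0 : 0 < R := by linarith
  refine (nm_cut_le hφ hf 4 σ N0_BM).trans ((nm_exp_le hf N0_BM hσ h).trans ?_)
  rw [Real.rpow_zero, mul_one, mul_comm]
  refine mul_le_mul_of_nonneg_left (h1.trans ?_) (by positivity)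
  exact mul_le_mul_of_nonneg_left (by linarith) (by positivity)

/-- The `L²` estimate through `L¹`, valid for every admissible `β`; it serves the terms with `ΔΦ`. -/
lemma est_low {φ : E3 → ℝ} {K : ℝ} (hφ : Cut 1.06 1.09 φ K) {r β : ℝ} (hr : 1 ≤ r)
    (hβ : β ≤ 3 / r - 1 / 2) : Est φ r β 2 (1 / 2) (3 / 5) := by
  obtain ⟨C, hC, H⟩ := est_interp hφ (r := 1) (β := 5 / 2) (σ := 2) (t := 3 / 5) one_pos two_pos
    (by norm_num) (by norm_num) (by norm_num)
  obtain ⟨c, hc⟩ : ∃ c, c = (volume N0).toReal ^ (1 / 1 - 1 / r) := ⟨_, rfl⟩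
  have hc0 : 0 ≤ c := by rw [hc]; positivity
  refine ⟨C * (1 + c), by positivity, fun f hf R M s hR hM hs h1 h2 => ?_⟩
  have hR0 : 0 < R := by linarith
  have k := H f hf R (c * M) s hR (by positivity) hs ?_ h2
  · refine k.trans ?_
    rw [mul_assoc C]
    refine mul_le_mul_of_nonneg_left ?_ hC
    norm_num
    have : 1 + c * M ≤ (1 + c) * (1 + M) := by nlinarith
    calc R ^ (1 / 2 : ℝ) * ((1 + c * M) * s ^ (3 / 5 : ℝ))
        ≤ R ^ (1 / 2 : ℝ) * (((1 + c) * (1 + M)) * s ^ (3 / 5 : ℝ)) := by gcongr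
      _ = _ := by ring
  · have h3 := nm_exp_le hf N0_BM (r₁ := 1) (r₂ := r) one_pos hr
    rw [← hc] at h3
    refine h3.trans ((mul_le_mul_of_nonneg_right h1 hc0).trans ?_)
    have : R ^ (1 - 3 / r + β) ≤ R ^ (1 - 3 / 1 + 5 / 2 : ℝ) :=
      Real.rpow_le_rpow_of_exponent_le hR (by linarith)
    calc _ ≤ R ^ (1 - 3 / 1 + 5 / 2 : ℝ) * M * c := by gcongr
      _ = _ := by ring

/-! ### Dilations -/

lemma smul_Ann {R : ℝ} (hR : 0 < R) (x : E3) : R • x ∈ Ann R ↔ x ∈ Ann 1 := by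
  simp only [Ann, Set.mem_sdiff, mem_ball_zero_iff, norm_smul, Real.norm_of_nonneg hR.le, mul_one]
  rw [mul_comm 2 R, mul_lt_mul_iff_right₀ hR, mul_lt_iff_lt_one_right hR]

open scoped Pointwise in
lemma nm_dil {F : Type*} [NormedAddCommGroup F] {f : E3 → F} (hf : Continuous f) {R r : ℝ}
    (hR : 0 < R) (hr : 0 < r) {S T : Set E3} (hS : BM S) (hT : BM T)
    (h : ∀ x : E3, R • x ∈ T ↔ x ∈ S) :
    nm (fun x => f (R • x)) r S = R ^ (-3 / r) * nm f r T := by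
  have hT' : T = R • S := by
    ext y
    rw [Set.mem_smul_set_iff_inv_smul_mem₀ hR.ne', ← h, smul_inv_smul₀ hR.ne']
  have cf : Continuous fun x => f (R • x) := hf.comp (continuous_const_smul R)
  rw [nm_eq cf hS hr, nm_eq hf hT hr, hT',
    Measure.setIntegral_comp_smul_of_pos (μ := volume) (fun x => ‖f x‖ ^ r) S hR]
  rw [smul_eq_mul, Real.mul_rpow (by positivity) (integral_nonneg fun _ => by positivity)]
  congr 1
  simp only [finrank_euclideanSpace, Fintype.card_fin]
  rw [← Real.rpow_natCast, ← Real.rpow_neg hR.le, ← Real.rpow_mul hR.le]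
  congr 1; push_cast; ring

lemma fderiv_dil {f : E3 → ℝ} (hf : Sm f) (c R : ℝ) (x : E3) :
    fderiv ℝ (fun y => c * f (R • y)) x = (c * R) • fderiv ℝ f (R • x) := by
  have h1 : HasFDerivAt (fun y : E3 => R • y) (R • ContinuousLinearMap.id ℝ E3) x :=
    (hasFDerivAt_id x).const_smul R
  have h2 := ((hf.diff (R • x)).hasFDerivAt.comp x h1).const_mul c
  rw [show (fun y => c * f (R • y)) = fun y => c * (f ∘ fun y => R • y) y from rfl, h2.fderiv]
  ext y; simp; ring

lemma pd3_dil {f : E3 → ℝ} (hf : Sm f) (c R : ℝ) (j : Fin 3) :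
    pd3 j (fun y => c * f (R • y)) = fun x => (c * R) * pd3 j f (R • x) := by
  funext x
  rw [pd3, fderiv_dil hf]; rfl

lemma sm_dil {f : E3 → ℝ} (hf : Sm f) (c R : ℝ) : Sm fun y => c * f (R • y) :=
  ContDiff.mul contDiff_const (hf.comp (contDiff_const_smul R))

lemma lap3_dil {f : E3 → ℝ} (hf : Sm f) (c R : ℝ) (x : E3) :
    lap3 (fun y => c * f (R • y)) x = (c * R * R) * lap3 f (R • x) := by
  simp only [lap3]
  rw [Finset.mul_sum]
  refine Finset.sum_congr rfl fun j _ => ?_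
  rw [pd3_dil hf, pd3_dil (hf.pd j)]

/-! ### Scaling of the system -/

/-- The scaling symmetry: dilating by `R` turns the coupling constant `1` into `R`. -/
lemma SolK.dil {u v : Fin 3 → E3 → ℝ} {π θ : E3 → ℝ} (h : SolK 1 u π v θ) (R : ℝ) :
    SolK R (fun i x => R * u i (R • x)) (fun x => R ^ 2 * π (R • x)) (fun i x => R * v i (R • x))
      (fun x => R * θ (R • x)) where
  su i := sm_dil (h.su i) R R
  sπ := sm_dil h.sπ _ R
  sv i := sm_dil (h.sv i) R R
  sθ := sm_dil h.sθ R R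
  eu x i := by
    have hvv : ∀ j, Sm fun y => v j y * v i y := fun j => (h.sv j).mul' (h.sv i)
    have e : ∀ j, (fun y => R * v j (R • y) * (R * v i (R • y))) =
        fun y => R ^ 2 * (fun z => v j z * v i z) (R • y) := fun j => by funext y; ring
    simp only [e]
    simp only [lap3_dil (h.su i), pd3_dil (h.su i), pd3_dil h.sπ, pd3_dil (hvv _)]
    have k := h.eu (R • x) i
    have e1 : ∑ j, R * u j (R • x) * (R * R * pd3 j (u i) (R • x)) =
        R ^ 3 * ∑ j, u j (R • x) * pd3 j (u i) (R • x) := by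
      rw [Finset.mul_sum]; exact Finset.sum_congr rfl fun j _ => by ring
    rw [e1, ← Finset.mul_sum]
    linear_combination R ^ 3 * k
  ev x i := by
    simp only [lap3_dil (h.sv i), pd3_dil (h.sv i), pd3_dil (h.su i), pd3_dil h.sθ]
    have k := h.ev (R • x) i
    have e1 : ∑ j, R * u j (R • x) * (R * R * pd3 j (v i) (R • x)) =
        R ^ 3 * ∑ j, u j (R • x) * pd3 j (v i) (R • x) := by
      rw [Finset.mul_sum]; exact Finset.sum_congr rfl fun j _ => by ring
    have e2 : ∑ j, R * v j (R • x) * (R * R * pd3 j (u i) (R • x)) =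
        R ^ 3 * ∑ j, v j (R • x) * pd3 j (u i) (R • x) := by
      rw [Finset.mul_sum]; exact Finset.sum_congr rfl fun j _ => by ring
    rw [e1, e2]
    linear_combination R ^ 3 * k
  eθ x := by
    simp only [lap3_dil h.sθ, pd3_dil (h.sv _), pd3_dil h.sθ]
    have k := h.eθ (R • x)
    have e1 : ∑ j, R * u j (R • x) * (R * R * pd3 j θ (R • x)) =
        R ^ 3 * ∑ j, u j (R • x) * pd3 j θ (R • x) := by
      rw [Finset.mul_sum]; exact Finset.sum_congr rfl fun j _ => by ring
    rw [e1, ← Finset.mul_sum]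
    linear_combination R ^ 3 * k
  div x := by
    simp only [pd3_dil (h.su _)]
    rw [← Finset.mul_sum, h.div, mul_zero]

lemma dens_dil {u v : Fin 3 → E3 → ℝ} {π θ : E3 → ℝ} (h : SolK 1 u π v θ) (R c : ℝ) (x : E3) :
    dens (fun i x => R * u i (R • x)) (fun i x => R * v i (R • x)) (fun x => R * θ (R • x) - c) x =
      R ^ 4 * dens u v θ (R • x) := by
  simp only [dens, pd3_sub_const, pd3_dil (h.su _), pd3_dil (h.sv _), pd3_dil h.sθ]
  simp only [mul_pow, ← Finset.mul_sum]
  ring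

open scoped Pointwise in
/-- `∫ φ(x)^10 R⁴ dens(Rx) dx` dominates `R ∫_{B_R} dens`. -/
lemma dens_ball_le {u v : Fin 3 → E3 → ℝ} {π θ : E3 → ℝ} (h : SolK 1 u π v θ) {φ : E3 → ℝ} {K : ℝ}
    (hφ : Cut 1.06 1.09 φ K) {R c : ℝ} (hR : 0 < R) :
    R * ∫ x in ball (0 : E3) R, dens u v θ x ≤
      ∫ x, φ x ^ 10 * dens (fun i x => R * u i (R • x)) (fun i x => R * v i (R • x))
        (fun x => R * θ (R • x) - c) x := by
  have cd := dens_cont h.su h.sv h.sθ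
  simp only [dens_dil h]
  have c1 : Continuous fun x => φ x ^ 10 * (R ^ 4 * dens u v θ (R • x)) :=
    (hφ.sm.cont.pow 10).mul (continuous_const.mul (cd.comp (continuous_const_smul R)))
  have s1 : HasCompactSupport fun x => φ x ^ 10 * (R ^ 4 * dens u v θ (R • x)) :=
    (hφ.supp.comp_left (g := fun t => t ^ 10) (by norm_num)).mul_right
  have i1 := c1.integrable_of_hasCompactSupport (μ := volume) s1
  have hb : R • ball (0 : E3) 1 = ball 0 R := by
    rw [smul_unitBall hR.ne', Real.norm_of_nonneg hR.le]
  have e1 : ∫ x in ball (0 : E3) 1, φ x ^ 10 * (R ^ 4 * dens u v θ (R • x)) =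
      R * ∫ x in ball (0 : E3) R, dens u v θ x := by
    rw [setIntegral_congr_fun (g := fun x => R ^ 4 * dens u v θ (R • x)) measurableSet_ball]
    · rw [integral_const_mul, Measure.setIntegral_comp_smul_of_pos (μ := volume) _ _ hR, hb]
      simp only [finrank_euclideanSpace, Fintype.card_fin, smul_eq_mul]
      field_simp
    · intro x hx
      have := mem_ball_zero_iff.1 hx
      simp [hφ.one x (by linarith)]
  rw [← e1]
  refine setIntegral_le_integral i1 (Eventually.of_forall fun x => ?_)
  have := dens_nonneg u v θ (R • x)
  have := hφ.nonneg x
  change 0 ≤ φ x ^ 10 * (R ^ 4 * dens u v θ (R • x))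
  positivity

/-! ### The energy inequality at scale R -/

lemma fderiv_sq_le_v (u v : Fin 3 → E3 → ℝ) (θ : E3 → ℝ) (i : Fin 3) (x : E3) :
    ‖fderiv ℝ (v i) x‖ ^ 2 ≤ dens u v θ x := by
  rw [norm_fderiv_sq, dens]
  have h1 : ∑ j, pd3 j (v i) x ^ 2 ≤ ∑ i, ∑ j, pd3 j (v i) x ^ 2 :=
    Finset.single_le_sum (f := fun i => ∑ j, pd3 j (v i) x ^ 2) (fun i _ => by positivity)
      (Finset.mem_univ i)
  have h2 : 0 ≤ ∑ i, ∑ j, pd3 j (u i) x ^ 2 := by positivity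
  have h3 : 0 ≤ ∑ j, pd3 j θ x ^ 2 := by positivity
  linarith

lemma fderiv_sq_le_u (u v : Fin 3 → E3 → ℝ) (θ : E3 → ℝ) (i : Fin 3) (x : E3) :
    ‖fderiv ℝ (u i) x‖ ^ 2 ≤ dens u v θ x := by
  have h := fderiv_sq_le_v v u θ i x
  rw [dens] at h ⊢
  linarith

lemma fderiv_sq_le_t (u v : Fin 3 → E3 → ℝ) (θ : E3 → ℝ) (x : E3) :
    ‖fderiv ℝ θ x‖ ^ 2 ≤ dens u v θ x := by
  rw [norm_fderiv_sq, dens]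
  have h1 : 0 ≤ ∑ i, ∑ j, pd3 j (v i) x ^ 2 := by positivity
  have h2 : 0 ≤ ∑ i, ∑ j, pd3 j (u i) x ^ 2 := by positivity
  linarith

/-- The weighted Sobolev inequality, with the gradient measured by the weighted dissipation. -/
lemma six_le {φ : E3 → ℝ} {K : ℝ} (hφ : Cut 1.06 1.09 φ K) : ∃ C, 0 ≤ C ∧
    ∀ (u v : Fin 3 → E3 → ℝ) (θ f : E3 → ℝ), (∀ i, Sm (u i)) → (∀ i, Sm (v i)) → Sm θ → Sm f →
      (∀ x, ‖fderiv ℝ f x‖ ^ 2 ≤ dens u v θ x) →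
      nm (fun x => φ x ^ 5 * |f x|) 6 (ball 0 2) ≤
        C * (√(∫ x, φ x ^ 10 * dens u v θ x) + nm f 1 N0) := by
  obtain ⟨C, hC, H⟩ := wsob hφ
  refine ⟨C, hC, fun u v θ f hu hv hθ hf hd => ?_⟩
  have hB := BM_ball 2
  have c0 : Continuous fun x => φ x ^ 5 * f x := (hφ.sm.cont.pow 5).mul hf.cont
  have e : nm (fun x => φ x ^ 5 * |f x|) 6 (ball 0 2) ≤ nm (fun x => φ x ^ 5 * f x) 6 (ball 0 2) :=
    nm_mono c0 hB fun x _ => by rw [norm_mul, norm_mul, Real.norm_eq_abs |f x|, abs_abs]; rfl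
  refine e.trans ((H f hf).trans (mul_le_mul_of_nonneg_left (add_le_add_left ?_ _) hC))
  have c1 : Continuous fun x => φ x ^ 5 * ‖fderiv ℝ f x‖ :=
    (hφ.sm.cont.pow 5).mul (hf.one.continuous_fderiv (by simp)).norm
  refine Real.le_sqrt_of_sq_le ?_
  rw [nm_sq c1 hB]
  have c2 : Continuous fun x => φ x ^ 10 * dens u v θ x :=
    (hφ.sm.cont.pow 10).mul (dens_cont hu hv hθ)
  have s2 : HasCompactSupport fun x => φ x ^ 10 * dens u v θ x :=
    (hφ.supp.comp_left (g := fun t => t ^ 10) (by norm_num)).mul_right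
  have i2 := c2.integrable_of_hasCompactSupport (μ := volume) s2
  have n2 : ∀ x, 0 ≤ φ x ^ 10 * dens u v θ x := fun x =>
    mul_nonneg (pow_nonneg (hφ.nonneg x) _) (dens_nonneg _ _ _ _)
  refine le_trans ?_ (setIntegral_le_integral (s := ball 0 2) i2 (Eventually.of_forall n2))
  refine setIntegral_mono_on (integrableOn_of_cont (c1.norm.pow 2) hB.1) i2.integrableOn hB.2
    fun x _ => ?_
  calc ‖φ x ^ 5 * ‖fderiv ℝ f x‖‖ ^ 2 = φ x ^ 10 * ‖fderiv ℝ f x‖ ^ 2 := by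
        rw [norm_mul, norm_norm, norm_pow, Real.norm_of_nonneg (hφ.nonneg x)]; ring
    _ ≤ _ := mul_le_mul_of_nonneg_left (hd x) (pow_nonneg (hφ.nonneg x) _)

/-- The weighted Sobolev inequality for `|v₁| + |v₂| + |v₃|`. -/
lemma six_le_v {φ : E3 → ℝ} {K : ℝ} (hφ : Cut 1.06 1.09 φ K) : ∃ C, 0 ≤ C ∧
    ∀ (u v : Fin 3 → E3 → ℝ) (θ : E3 → ℝ), (∀ i, Sm (u i)) → (∀ i, Sm (v i)) → Sm θ →
      nm (fun x => φ x ^ 5 * ∑ i, |v i x|) 6 (ball 0 2) ≤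
        C * (√(∫ x, φ x ^ 10 * dens u v θ x) + nm (fun x => ∑ i, |v i x|) 1 N0) := by
  obtain ⟨C, hC, H⟩ := six_le hφ
  refine ⟨3 * C, by positivity, fun u v θ hu hv hθ => ?_⟩
  have ca : ∀ i, Continuous fun x => φ x ^ 5 * |v i x| := fun i =>
    (hφ.sm.cont.pow 5).mul (hv i).cont.abs
  have cs : Continuous fun x => ∑ i, |v i x| := continuous_finsetSum _ fun i _ => (hv i).cont.abs
  simp only [Finset.mul_sum]
  refine (nm_sum_le (f := fun i x => φ x ^ 5 * |v i x|) _ ca (BM_ball 2) (by norm_num)).trans ?_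
  refine (Finset.sum_le_sum (g := fun _ => C * (√(∫ x, φ x ^ 10 * dens u v θ x) +
    nm (fun x => ∑ i, |v i x|) 1 N0)) fun i _ => ?_).trans (le_of_eq (by simp; ring))
  refine (H u v θ (v i) hu hv hθ (hv i) (fderiv_sq_le_v u v θ i)).trans ?_
  refine mul_le_mul_of_nonneg_left (add_le_add_right ?_ _) hC
  refine nm_mono cs N0_BM fun x _ => ?_
  rw [Real.norm_eq_abs, Real.norm_of_nonneg (by positivity)]
  exact Finset.single_le_sum (f := fun i => |v i x|) (fun i _ => abs_nonneg _) (Finset.mem_univ i)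

/-- The energy inequality at scale `R` in terms of scale-invariant sizes. -/
lemma energy_scaled {φ : E3 → ℝ} {K : ℝ} (hφ : Cut 1.06 1.09 φ K) {p q r α β γ : ℝ} (hp : 3 ≤ p)
    (hα : α ≤ 3 / p - 2 / 3) {ev τv eθ τθ e₁ t₁ e₂ t₂ : ℝ}
    (Lv : Est φ q β 2 (1 / 2) (3 / 5)) (Lθ : Est φ r γ 2 (1 / 2) (3 / 5))
    (Ev : Est φ q β 2 ev τv) (Eθ : Est φ r γ 2 eθ τθ)
    (Fv : Est φ q β (2 * (p / (p - 1))) e₁ t₁) (Fθ : Est φ r γ (2 * (p / (p - 1))) e₂ t₂)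
    (c₁ : 1 - 3 / p + α + 2 * e₁ ≤ 1) (c₂ : 1 - 3 / p + α + 2 * e₂ ≤ 1) :
    ∃ C, 0 ≤ C ∧ ∀ (R : ℝ) (u : Fin 3 → E3 → ℝ) (π : E3 → ℝ) (v : Fin 3 → E3 → ℝ) (θ : E3 → ℝ),
      1 ≤ R → SolK R u π v θ → ∀ X M s s' : ℝ, 0 ≤ X → 0 ≤ M → 0 ≤ s → 0 ≤ s' →
      ∑ i, nm (u i) p (Ann 1) ≤ R ^ (1 - 3 / p + α) * X →
      nm (fun x => ∑ i, |v i x|) q N0 ≤ R ^ (1 - 3 / q + β) * M →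
      nm (fun x => |θ x|) r N0 ≤ R ^ (1 - 3 / r + γ) * M →
      nm (fun x => φ x ^ 5 * ∑ i, |v i x|) 6 N0 ≤ R ^ (1 / 2 : ℝ) * s →
      nm (fun x => φ x ^ 5 * |θ x|) 6 N0 ≤ R ^ (1 / 2 : ℝ) * s' →
      ∫ x, φ x ^ 10 * dens u v θ x ≤ C * R * (X ^ 2 + X ^ 3 + ((1 + M) * s ^ (3 / 5 : ℝ)) ^ 2 +
        ((1 + M) * s' ^ (3 / 5 : ℝ)) ^ 2 +
        X * (((1 + M) * s ^ t₁) ^ 2 + ((1 + M) * s' ^ t₂) ^ 2) +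
        R ^ (ev + eθ) * (((1 + M) * s ^ τv) * ((1 + M) * s' ^ τθ))) := by
  obtain ⟨C, hC, H⟩ := energy_main hp hφ
  obtain ⟨l₁, hl₁, L1⟩ := Lv
  obtain ⟨l₂, hl₂, L2⟩ := Lθ
  obtain ⟨k₁, hk₁, K1⟩ := Ev
  obtain ⟨k₂, hk₂, K2⟩ := Eθ
  obtain ⟨f₁, hf₁, F1⟩ := Fv
  obtain ⟨f₂, hf₂, F2⟩ := Fθ
  obtain ⟨B, hB⟩ : ∃ B, B = 1 + l₁ ^ 2 + l₂ ^ 2 + f₁ ^ 2 + f₂ ^ 2 + k₁ * k₂ := ⟨_, rfl⟩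
  have q1 : 0 ≤ l₁ ^ 2 := by positivity
  have q2 : 0 ≤ l₂ ^ 2 := by positivity
  have q3 : 0 ≤ f₁ ^ 2 := by positivity
  have q4 : 0 ≤ f₂ ^ 2 := by positivity
  have q5 : 0 ≤ k₁ * k₂ := by positivity
  refine ⟨C * B, by rw [hB]; positivity, ?_⟩
  intro R u π v θ hR hsol X M s s' hX hM hs hs' ha hv hθ hsv hsθ
  have hR0 : 0 < R := by linarith
  have cv : Continuous fun x => ∑ i, |v i x| :=
    continuous_finsetSum _ fun i _ => (hsol.sv i).cont.abs
  have cθ : Continuous fun x => |θ x| := hsol.sθ.cont.abs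
  have cV : Continuous fun x => φ x ^ 4 * ∑ i, |v i x| := (hφ.sm.cont.pow 4).mul cv
  have cT : Continuous fun x => φ x ^ 4 * |θ x| := (hφ.sm.cont.pow 4).mul cθ
  have key := H R u π v θ hR0.le hsol
  have a1 := L1 _ cv R M s hR hM hs hv hsv
  have a2 := L2 _ cθ R M s' hR hM hs' hθ hsθ
  have a3 := K1 _ cv R M s hR hM hs hv hsv
  have a4 := K2 _ cθ R M s' hR hM hs' hθ hsθ
  have a5 := F1 _ cv R M s hR hM hs hv hsv
  have a6 := F2 _ cθ R M s' hR hM hs' hθ hsθ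
  have a7 : ∫ x in N0, (φ x ^ 4 * ∑ i, |v i x|) * (φ x ^ 4 * |θ x|) ≤
      nm (fun x => φ x ^ 4 * ∑ i, |v i x|) 2 N0 * nm (fun x => φ x ^ 4 * |θ x|) 2 N0 :=
    (le_abs_self _).trans ((abs_setIntegral_le _ _).trans
      (integral_mul_le cV cT N0_BM two_pos two_pos (by norm_num)))
  have n1 := nm_nonneg (fun x => φ x ^ 4 * ∑ i, |v i x|) 2 N0
  have n2 := nm_nonneg (fun x => φ x ^ 4 * |θ x|) 2 N0
  have n3 := nm_nonneg (fun x => φ x ^ 4 * ∑ i, |v i x|) (2 * (p / (p - 1))) N0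
  have n4 := nm_nonneg (fun x => φ x ^ 4 * |θ x|) (2 * (p / (p - 1))) N0
  have n5 : 0 ≤ ∑ i, nm (u i) p (Ann 1) := Finset.sum_nonneg fun i _ => nm_nonneg _ _ _
  revert key a1 a2 a3 a4 a5 a6 a7 n1 n2 n3 n4 n5 ha
  generalize (∑ i, nm (u i) p (Ann 1)) = a
  generalize nm (fun x => φ x ^ 4 * ∑ i, |v i x|) 2 N0 = V2
  generalize nm (fun x => φ x ^ 4 * |θ x|) 2 N0 = T2
  generalize nm (fun x => φ x ^ 4 * ∑ i, |v i x|) (2 * (p / (p - 1))) N0 = Vs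
  generalize nm (fun x => φ x ^ 4 * |θ x|) (2 * (p / (p - 1))) N0 = Ts
  generalize (∫ x in N0, (φ x ^ 4 * ∑ i, |v i x|) * (φ x ^ 4 * |θ x|)) = I
  intro ha key a1 a2 a3 a4 a5 a6 a7 n1 n2 n3 n4 n5
  obtain ⟨y₁, hy₁⟩ : ∃ y, y = (1 + M) * s ^ (3 / 5 : ℝ) := ⟨_, rfl⟩
  obtain ⟨y₂, hy₂⟩ : ∃ y, y = (1 + M) * s' ^ (3 / 5 : ℝ) := ⟨_, rfl⟩
  obtain ⟨y₃, hy₃⟩ : ∃ y, y = (1 + M) * s ^ τv := ⟨_, rfl⟩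
  obtain ⟨y₄, hy₄⟩ : ∃ y, y = (1 + M) * s' ^ τθ := ⟨_, rfl⟩
  obtain ⟨y₅, hy₅⟩ : ∃ y, y = (1 + M) * s ^ t₁ := ⟨_, rfl⟩
  obtain ⟨y₆, hy₆⟩ : ∃ y, y = (1 + M) * s' ^ t₂ := ⟨_, rfl⟩
  rw [← hy₁] at a1 ⊢
  rw [← hy₂] at a2 ⊢
  rw [← hy₃] at a3 ⊢
  rw [← hy₄] at a4 ⊢
  rw [← hy₅] at a5 ⊢
  rw [← hy₆] at a6 ⊢
  have z1 : 0 ≤ y₁ := by rw [hy₁]; positivity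
  have z2 : 0 ≤ y₂ := by rw [hy₂]; positivity
  have z3 : 0 ≤ y₃ := by rw [hy₃]; positivity
  have z4 : 0 ≤ y₄ := by rw [hy₄]; positivity
  have z5 : 0 ≤ y₅ := by rw [hy₅]; positivity
  have z6 : 0 ≤ y₆ := by rw [hy₆]; positivity
  -- `a ≤ R^{1/3} X`
  obtain ⟨ρ, hρ⟩ : ∃ ρ, ρ = R ^ (1 / 3 : ℝ) := ⟨_, rfl⟩
  have hρ1 : 1 ≤ ρ := by rw [hρ]; exact Real.one_le_rpow hR (by norm_num)
  have hρ3 : ρ ^ 3 = R := by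
    rw [hρ, ← Real.rpow_natCast, ← Real.rpow_mul hR0.le]; norm_num
  have ha' : a ≤ ρ * X := by
    refine ha.trans (mul_le_mul_of_nonneg_right ?_ hX)
    rw [hρ]; exact Real.rpow_le_rpow_of_exponent_le hR (by linarith)
  have b1 : a ^ 2 ≤ R * X ^ 2 := by
    calc a ^ 2 ≤ (ρ * X) ^ 2 := pow_le_pow_left₀ n5 ha' 2
      _ = ρ ^ 2 * X ^ 2 := by ring
      _ ≤ R * X ^ 2 := by
        refine mul_le_mul_of_nonneg_right ?_ (by positivity)
        rw [← hρ3]; exact pow_le_pow_right₀ hρ1 (by norm_num)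
  have b2 : a ^ 3 ≤ R * X ^ 3 := by
    calc a ^ 3 ≤ (ρ * X) ^ 3 := pow_le_pow_left₀ n5 ha' 3
      _ = R * X ^ 3 := by rw [← hρ3]; ring
  have sq : (R ^ (1 / 2 : ℝ)) ^ 2 = R := by
    rw [← Real.rpow_natCast, ← Real.rpow_mul hR0.le]; norm_num
  have b3 : V2 ^ 2 ≤ l₁ ^ 2 * (R * y₁ ^ 2) := by
    refine (pow_le_pow_left₀ n1 a1 2).trans (le_of_eq ?_)
    rw [mul_pow, mul_pow, sq]
  have b4 : T2 ^ 2 ≤ l₂ ^ 2 * (R * y₂ ^ 2) := by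
    refine (pow_le_pow_left₀ n2 a2 2).trans (le_of_eq ?_)
    rw [mul_pow, mul_pow, sq]
  have flux : ∀ e Y F f y : ℝ, 0 ≤ Y → 0 ≤ f → 0 ≤ y → Y ≤ f * (R ^ e * y) →
      1 - 3 / p + α + 2 * e ≤ 1 → a * Y ^ 2 ≤ f ^ 2 * (R * (X * y ^ 2)) := by
    intro e Y _ f y hY hf hy h he
    have h1 := mul_le_mul ha (pow_le_pow_left₀ hY h 2) (by positivity) (by positivity)
    refine h1.trans ?_
    have h2 : R ^ (1 - 3 / p + α) * (R ^ e) ^ 2 ≤ R := by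
      rw [← Real.rpow_natCast (R ^ e), ← Real.rpow_mul hR0.le, ← Real.rpow_add hR0]
      have := Real.rpow_le_rpow_of_exponent_le hR he
      rw [Real.rpow_one] at this
      refine le_trans (le_of_eq ?_) this
      congr 1; push_cast; ring
    calc _ = (R ^ (1 - 3 / p + α) * (R ^ e) ^ 2) * (f ^ 2 * (X * y ^ 2)) := by ring
      _ ≤ R * (f ^ 2 * (X * y ^ 2)) := mul_le_mul_of_nonneg_right h2 (by positivity)
      _ = _ := by ring
  have b5 := flux e₁ Vs 0 f₁ y₅ n3 hf₁ z5 a5 c₁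
  have b6 := flux e₂ Ts 0 f₂ y₆ n4 hf₂ z6 a6 c₂
  have b7 : R * I ≤ (k₁ * k₂) * (R * (R ^ (ev + eθ) * (y₃ * y₄))) := by
    have h1 := mul_le_mul a3 a4 n2 (by positivity)
    rw [Real.rpow_add hR0]
    calc R * I ≤ R * (k₁ * (R ^ ev * y₃) * (k₂ * (R ^ eθ * y₄))) :=
          mul_le_mul_of_nonneg_left (a7.trans h1) hR0.le
      _ = _ := by ring
  have grow : ∀ c x : ℝ, 0 ≤ x → c ≤ B → c * (R * x) ≤ B * (R * x) := fun c x hx hc =>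
    mul_le_mul_of_nonneg_right hc (by positivity)
  have g1 := grow 1 (X ^ 2) (by positivity) (by linarith)
  have g2 := grow 1 (X ^ 3) (by positivity) (by linarith)
  have g3 := grow (l₁ ^ 2) (y₁ ^ 2) (by positivity) (by linarith)
  have g4 := grow (l₂ ^ 2) (y₂ ^ 2) (by positivity) (by linarith)
  have g5 := grow (f₁ ^ 2) (X * y₅ ^ 2) (by positivity) (by linarith)
  have g6 := grow (f₂ ^ 2) (X * y₆ ^ 2) (by positivity) (by linarith)
  have g7 := grow (k₁ * k₂) (R ^ (ev + eθ) * (y₃ * y₄)) (by positivity) (by linarith)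
  refine key.trans ?_
  rw [mul_assoc C B, mul_assoc C]
  refine mul_le_mul_of_nonneg_left ?_ hC
  calc a ^ 2 + a ^ 3 + V2 ^ 2 + T2 ^ 2 + a * (Vs ^ 2 + Ts ^ 2) + R * I
      = a ^ 2 + a ^ 3 + V2 ^ 2 + T2 ^ 2 + a * Vs ^ 2 + a * Ts ^ 2 + R * I := by ring
    _ ≤ B * (R * X ^ 2) + B * (R * X ^ 3) + B * (R * y₁ ^ 2) + B * (R * y₂ ^ 2) +
        B * (R * (X * y₅ ^ 2)) + B * (R * (X * y₆ ^ 2)) +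
        B * (R * (R ^ (ev + eθ) * (y₃ * y₄))) := by linarith
    _ = _ := by ring

/-! ### Absorption and limits -/

/-- A nonnegative function whose integrals over the balls `B_{R_j}` are bounded has vanishing
integrals over the annuli `B_{2R_j} \ B_{R_j}`. -/
lemma ann_tendsto {g : E3 → ℝ} (hg : Continuous g) (h0 : ∀ x, 0 ≤ g x) {R : ℕ → ℝ}
    (hR : Tendsto R atTop atTop) {D : ℝ}
    (hD : ∀ᶠ j in atTop, ∫ x in ball (0 : E3) (R j), g x ≤ D) :
    Tendsto (fun j => ∫ x in Ann (R j), g x) atTop (nhds 0) := by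
  have hi : ∀ ρ : ℝ, IntegrableOn g (ball (0 : E3) ρ) := fun ρ =>
    integrableOn_of_cont hg (BM_ball ρ).1
  have hm : Monotone fun ρ : ℝ => ∫ x in ball (0 : E3) ρ, g x := fun a b hab =>
    setIntegral_mono_set (hi b) (Eventually.of_forall h0) (ball_subset_ball hab).eventuallyLE
  have hb : BddAbove (Set.range fun ρ : ℝ => ∫ x in ball (0 : E3) ρ, g x) := by
    refine ⟨D, ?_⟩
    rintro _ ⟨ρ, rfl⟩
    obtain ⟨j, h1, h2⟩ := (hD.and (hR.eventually_ge_atTop ρ)).exists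
    exact (hm h2).trans h1
  have hl := tendsto_atTop_ciSup hm hb
  have hR2 : Tendsto (fun j => 2 * R j) atTop atTop := hR.const_mul_atTop two_pos
  have h3 := (hl.comp hR2).sub (hl.comp hR)
  rw [sub_self] at h3
  refine h3.congr' ?_
  filter_upwards [hR.eventually_ge_atTop 0] with j hj
  have hs : ball (0 : E3) (R j) ⊆ ball 0 (2 * R j) := ball_subset_ball (by linarith)
  simp only [Function.comp, Ann]
  rw [setIntegral_sdiff measurableSet_ball (hi _) hs]

/-- A nonnegative continuous function whose integrals over the balls `B_{R_j}` tend to zero vanishes. -/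
lemma dens_zero {g : E3 → ℝ} (hg : Continuous g) (h0 : ∀ x, 0 ≤ g x) {R d : ℕ → ℝ}
    (hR : Tendsto R atTop atTop) (hd : Tendsto d atTop (nhds 0))
    (h : ∀ᶠ j in atTop, ∫ x in ball (0 : E3) (R j), g x ≤ d j) (x : E3) : g x = 0 := by
  have hi : ∀ ρ : ℝ, IntegrableOn g (ball (0 : E3) ρ) := fun ρ =>
    integrableOn_of_cont hg (BM_ball ρ).1
  have hz : ∀ ρ : ℝ, ∫ x in ball (0 : E3) ρ, g x ≤ 0 := fun ρ => by
    refine ge_of_tendsto hd ?_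
    filter_upwards [h, hR.eventually_ge_atTop ρ] with j h1 h2
    exact (setIntegral_mono_set (hi _) (Eventually.of_forall h0)
      (ball_subset_ball h2).eventuallyLE).trans h1
  by_contra hx
  have hpos : 0 < ∫ y in ball (0 : E3) (‖x‖ + 1), g y := by
    rw [setIntegral_pos_iff_support_of_nonneg_ae (Eventually.of_forall h0) (hi _)]
    refine IsOpen.measure_pos volume (hg.isOpen_support.inter isOpen_ball) ⟨x, hx, ?_⟩
    rw [mem_ball_zero_iff]; linarith
  exact absurd (hz _) (not_le.2 hpos)

/-- The right-hand side of the scaled energy inequality. -/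
def rhs (X M s s' R e τ τ' t t' : ℝ) : ℝ :=
  X ^ 2 + X ^ 3 + ((1 + M) * s ^ (3 / 5 : ℝ)) ^ 2 + ((1 + M) * s' ^ (3 / 5 : ℝ)) ^ 2 +
    X * (((1 + M) * s ^ t) ^ 2 + ((1 + M) * s' ^ t') ^ 2) +
    R ^ e * (((1 + M) * s ^ τ) * ((1 + M) * s' ^ τ'))

/-- First pass: all powers of the dissipation on the right are at most `4/5`, so it is bounded. -/
lemma rhs_absorb {C M B e τ τ' t t' : ℝ} (hC : 0 ≤ C) (hM : 0 ≤ M) (hB : 1 ≤ B) (he : e ≤ 0)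
    (h1 : 0 ≤ τ) (h1' : τ ≤ 4 / 5) (h2 : 0 ≤ τ') (h2' : τ' ≤ 4 / 5)
    (h3 : 0 ≤ t) (h3' : t ≤ 4 / 5) (h4 : 0 ≤ t') (h4' : t' ≤ 4 / 5) :
    ∃ D, ∀ d X s s' R : ℝ, 0 ≤ d → 0 ≤ X → X ≤ 1 → 0 ≤ s → 0 ≤ s' → 1 ≤ R →
      s ≤ B * (1 + √d) → s' ≤ B * (1 + √d) → d ≤ C * rhs X M s s' R e τ τ' t t' → d ≤ D := by
  obtain ⟨G, hG⟩ : ∃ G, G = (1 + M) * (2 * B) := ⟨_, rfl⟩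
  obtain ⟨C', hC', H⟩ := absorb (t := 4 / 5) (by norm_num) (by norm_num)
    (C := 1 + C * (2 + 5 * G ^ 2)) (by positivity)
  refine ⟨C', fun d X s s' R hd hX hX1 hs hs' hR hsB hsB' h => ?_⟩
  obtain ⟨g, hg⟩ : ∃ g, g = (1 + d) ^ (2 / 5 : ℝ) := ⟨_, rfl⟩
  have hg1 : 1 ≤ g := by rw [hg]; exact Real.one_le_rpow (by linarith) (by norm_num)
  have hg2 : g ^ 2 = (1 + d) ^ (4 / 5 : ℝ) := by
    rw [hg, ← Real.rpow_natCast, ← Real.rpow_mul (by linarith)]; norm_num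
  have hsq : 1 + √d ≤ 2 * √(1 + d) := by
    have a1 : √d ≤ √(1 + d) := Real.sqrt_le_sqrt (by linarith)
    have a2 : 1 ≤ √(1 + d) := Real.one_le_sqrt.2 (by linarith)
    linarith
  have pw : ∀ x k : ℝ, 0 ≤ x → x ≤ B * (1 + √d) → 0 ≤ k → k ≤ 4 / 5 → (1 + M) * x ^ k ≤ G * g := by
    intro x k hx hxB hk hk'
    have b1 : x ≤ (2 * B) * √(1 + d) := by
      have := mul_le_mul_of_nonneg_left hsq (show 0 ≤ B by linarith)
      linarith
    have b2 : 1 ≤ (2 * B) * √(1 + d) := by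
      have a2 : 1 ≤ √(1 + d) := Real.one_le_sqrt.2 (by linarith)
      nlinarith
    have b3 : x ^ k ≤ (2 * B) * g := by
      calc x ^ k ≤ ((2 * B) * √(1 + d)) ^ k := Real.rpow_le_rpow hx b1 hk
        _ ≤ ((2 * B) * √(1 + d)) ^ (4 / 5 : ℝ) := Real.rpow_le_rpow_of_exponent_le b2 hk'
        _ = (2 * B) ^ (4 / 5 : ℝ) * g := by
          rw [Real.mul_rpow (by linarith) (Real.sqrt_nonneg _), Real.sqrt_eq_rpow,
            ← Real.rpow_mul (by linarith), hg]
          norm_num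
        _ ≤ (2 * B) * g := by
          refine mul_le_mul_of_nonneg_right ?_ (by linarith)
          have := Real.rpow_le_rpow_of_exponent_le (show 1 ≤ 2 * B by linarith)
            (show (4 / 5 : ℝ) ≤ 1 by norm_num)
          rwa [Real.rpow_one] at this
    calc (1 + M) * x ^ k ≤ (1 + M) * ((2 * B) * g) :=
          mul_le_mul_of_nonneg_left b3 (by linarith)
      _ = G * g := by rw [hG]; ring
  have hM1 : 0 ≤ 1 + M := by linarith
  have nn : ∀ x k : ℝ, 0 ≤ x → 0 ≤ (1 + M) * x ^ k := fun x k hx =>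
    mul_nonneg hM1 (Real.rpow_nonneg hx _)
  have sqb : ∀ x k : ℝ, 0 ≤ x → x ≤ B * (1 + √d) → 0 ≤ k → k ≤ 4 / 5 →
      ((1 + M) * x ^ k) ^ 2 ≤ G ^ 2 * g ^ 2 := by
    intro x k hx hxB hk hk'
    have := pow_le_pow_left₀ (nn x k hx) (pw x k hx hxB hk hk') 2
    rwa [mul_pow G] at this
  have k1 := sqb s (3 / 5) hs hsB (by norm_num) (by norm_num)
  have k2 := sqb s' (3 / 5) hs' hsB' (by norm_num) (by norm_num)
  have k3 := sqb s t hs hsB h3 h3'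
  have k4 := sqb s' t' hs' hsB' h4 h4'
  have k5 : R ^ e * (((1 + M) * s ^ τ) * ((1 + M) * s' ^ τ')) ≤ G ^ 2 * g ^ 2 := by
    have a1 : R ^ e ≤ 1 := Real.rpow_le_one_of_one_le_of_nonpos hR he
    have a2 := mul_le_mul (pw s τ hs hsB h1 h1') (pw s' τ' hs' hsB' h2 h2') (nn _ _ hs')
      ((nn s τ hs).trans (pw s τ hs hsB h1 h1'))
    calc _ ≤ 1 * (G * g * (G * g)) :=
          mul_le_mul a1 a2 (mul_nonneg (nn _ _ hs) (nn _ _ hs')) zero_le_one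
      _ = _ := by ring
  have k6 : X * (((1 + M) * s ^ t) ^ 2 + ((1 + M) * s' ^ t') ^ 2) ≤ 2 * (G ^ 2 * g ^ 2) := by
    calc _ ≤ 1 * (G ^ 2 * g ^ 2 + G ^ 2 * g ^ 2) :=
          mul_le_mul hX1 (add_le_add k3 k4) (by positivity) zero_le_one
      _ = _ := by ring
  have k7 : X ^ 2 ≤ 1 := pow_le_one₀ hX hX1
  have k8 : X ^ 3 ≤ 1 := pow_le_one₀ hX hX1
  have hgg : 1 ≤ g ^ 2 := one_le_pow₀ hg1
  have k9 : rhs X M s s' R e τ τ' t t' ≤ (2 + 5 * G ^ 2) * g ^ 2 := by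
    rw [rhs]; linarith
  have k10 : 1 + d ≤ (1 + C * (2 + 5 * G ^ 2)) * (0 + 1 ^ (1 - 4 / 5 : ℝ) * (1 + d) ^ (4 / 5 : ℝ)) := by
    rw [Real.one_rpow, ← hg2]
    have := h.trans (mul_le_mul_of_nonneg_left k9 hC)
    linarith
  have := H (1 + d) 0 1 (by linarith) le_rfl zero_le_one k10
  linarith

/-- Second pass: the right-hand side vanishes in the limit. -/
lemma rhs_tendsto {M e τ τ' t t' : ℝ} (he : e ≤ 0) (h1 : 0 ≤ τ) (h2 : 0 ≤ τ')
    (h3 : 0 ≤ t) (h4 : 0 ≤ t') (hc : 0 < τ ∨ 0 < τ' ∨ e < 0) {X s s' R : ℕ → ℝ}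
    (hX : Tendsto X atTop (nhds 0)) (hs : Tendsto s atTop (nhds 0)) (hs' : Tendsto s' atTop (nhds 0))
    (hR : Tendsto R atTop atTop) :
    Tendsto (fun j => rhs (X j) M (s j) (s' j) (R j) e τ τ' t t') atTop (nhds 0) := by
  have pw : ∀ (y : ℕ → ℝ) (k : ℝ), Tendsto y atTop (nhds 0) → 0 ≤ k →
      Tendsto (fun j => (1 + M) * y j ^ k) atTop (nhds ((1 + M) * (0 : ℝ) ^ k)) := fun y k hy hk =>
    (hy.rpow_const (Or.inr hk)).const_mul _
  have z : (0 : ℝ) ^ (3 / 5 : ℝ) = 0 := Real.zero_rpow (by norm_num)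
  have a1 := (pw s (3 / 5) hs (by norm_num)).pow 2
  have a2 := (pw s' (3 / 5) hs' (by norm_num)).pow 2
  have a3 := hX.mul (((pw s t hs h3).pow 2).add ((pw s' t' hs' h4).pow 2))
  have a4 := (pw s τ hs h1).mul (pw s' τ' hs' h2)
  have a5 : Tendsto (fun j => R j ^ e * (((1 + M) * s j ^ τ) * ((1 + M) * s' j ^ τ'))) atTop
      (nhds 0) := by
    rcases lt_or_ge e 0 with he' | he'
    · have a6 : Tendsto (fun j => R j ^ e) atTop (nhds 0) := by
        have := (tendsto_rpow_neg_atTop (y := -e) (by linarith)).comp hR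
        simpa [Function.comp_def] using this
      simpa using a6.mul a4
    · have e0 : e = 0 := le_antisymm he he'
      have l0 : (1 + M) * (0 : ℝ) ^ τ * ((1 + M) * (0 : ℝ) ^ τ') = 0 := by
        rcases hc with h | h | h
        · rw [Real.zero_rpow h.ne']; ring
        · rw [Real.zero_rpow h.ne']; ring
        · linarith
      rw [l0] at a4
      simpa [e0] using a4
  have := (((((hX.pow 2).add (hX.pow 3)).add a1).add a2).add a3).add a5
  simp only [rhs]
  simpa [z] using this

/-! ### Vanishing of the gradients -/

lemma nm_dil_mul {f : E3 → ℝ} (hf : Continuous f) {R r : ℝ} (hR : 0 < R) (hr : 0 < r) {S T : Set E3}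
    (hS : BM S) (hT : BM T) (h : ∀ x : E3, R • x ∈ T ↔ x ∈ S) :
    nm (fun x => R * f (R • x)) r S = R ^ (1 - 3 / r) * nm f r T := by
  rw [nm_smul R (fun x => f (R • x)), nm_dil hf hR hr hS hT h, abs_of_pos hR, ← mul_assoc]
  congr 1
  rw [show 1 - 3 / r = 1 + -3 / r by ring, Real.rpow_add hR, Real.rpow_one]

lemma nm_dil_sum {v : Fin 3 → E3 → ℝ} (hv : ∀ i, Continuous (v i)) {R r : ℝ} (hR : 0 < R)
    (hr : 0 < r) {S T : Set E3} (hS : BM S) (hT : BM T) (h : ∀ x : E3, R • x ∈ T ↔ x ∈ S) :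
    nm (fun x => ∑ i, |R * v i (R • x)|) r S = R ^ (1 - 3 / r) * nm (fun x => ∑ i, |v i x|) r T := by
  have cs : Continuous fun x => ∑ i, |v i x| := continuous_finsetSum _ fun i _ => (hv i).abs
  rw [← nm_dil_mul cs hR hr hS hT h]
  congr 1
  funext x
  simp only [abs_mul, abs_of_pos hR, Finset.mul_sum]

lemma nm_dil_grad {f : E3 → ℝ} (hf : Sm f) {R l : ℝ} (hR : 0 < R) (hl : 0 < l) :
    nm (fderiv ℝ fun x => R * f (R • x)) l (Ann 1) = R ^ (2 - 3 / l) * nm (fderiv ℝ f) l (Ann R) := by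
  have cf : Continuous fun x => ‖fderiv ℝ f x‖ := (hf.one.continuous_fderiv (by simp)).norm
  have k := nm_dil_mul cf hR hl (BM_Ann 1) (BM_Ann R) (smul_Ann hR)
  have e : (fun x => ‖fderiv ℝ (fun x => R * f (R • x)) x‖) =
      fun x => R * (R * ‖fderiv ℝ f (R • x)‖) := by
    funext x
    rw [fderiv_dil hf, norm_smul, Real.norm_of_nonneg (by positivity)]; ring
  rw [← nm_norm (fderiv ℝ fun x => R * f (R • x)) l (Ann 1), e,
    nm_smul R (fun x => R * ‖fderiv ℝ f (R • x)‖), k, nm_norm (fderiv ℝ f) l (Ann R), abs_of_pos hR,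
    ← mul_assoc]
  congr 1
  rw [show 2 - 3 / l = 1 + (1 - 3 / l) by ring, Real.rpow_add hR, Real.rpow_one]

lemma N0_sub_Ann : N0 ⊆ Ann 1 := fun x hx => by
  have h3 := hx.1
  have h4 := hx.2
  refine ⟨?_, ?_⟩
  · rw [mem_ball_zero_iff]; linarith
  · rw [mem_ball_zero_iff]; linarith

lemma N0_sub_ball : N0 ⊆ ball (0 : E3) 2 := fun x hx => by
  have h4 := hx.2
  rw [mem_ball_zero_iff]; linarith

/-- The two-pass argument: all gradients vanish. -/
lemma dens_eq_zero {φ : E3 → ℝ} {K : ℝ} (hφ : Cut 1.06 1.09 φ K) {u v : Fin 3 → E3 → ℝ}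
    {π θ : E3 → ℝ} (h : SolK 1 u π v θ) {p q r l α β γ : ℝ} (hp : 3 ≤ p) (hq : 1 ≤ q) (hr : 1 ≤ r)
    (hl : 1 ≤ l) (hrl : 1 / r = 1 / l - 1 / 3)
    (hα : α ≤ 3 / p - 2 / 3) (hβ : β ≤ 3 / q - 1 / 2) (hγ : γ ≤ 3 / r - 1 / 2)
    {ev τv eθ τθ e₁ t₁ e₂ t₂ : ℝ}
    (Ev : Est φ q β 2 ev τv) (Eθ : Est φ r γ 2 eθ τθ)
    (Fv : Est φ q β (2 * (p / (p - 1))) e₁ t₁) (Fθ : Est φ r γ (2 * (p / (p - 1))) e₂ t₂)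
    (c₁ : 1 - 3 / p + α + 2 * e₁ ≤ 1) (c₂ : 1 - 3 / p + α + 2 * e₂ ≤ 1) (ce : ev + eθ ≤ 0)
    (h1 : 0 ≤ τv) (h1' : τv ≤ 4 / 5) (h2 : 0 ≤ τθ) (h2' : τθ ≤ 4 / 5)
    (h3 : 0 ≤ t₁) (h3' : t₁ ≤ 4 / 5) (h4 : 0 ≤ t₂) (h4' : t₂ ≤ 4 / 5)
    (hc : 0 < τv ∨ 0 < τθ ∨ ev + eθ < 0) {R : ℕ → ℝ} (hR : Tendsto R atTop atTop)
    (hX : Tendsto (fun j => R j ^ (-α) * ∑ i, nm (u i) p (Ann (R j))) atTop (nhds 0)) {M₀ : ℝ}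
    (hM₀ : 0 ≤ M₀)
    (hY : ∀ᶠ j in atTop, nm (fun x => ∑ i, |v i x|) q (Ann (R j)) ≤ R j ^ β * M₀)
    (hZ : ∀ᶠ j in atTop, nm (fderiv ℝ θ) l (Ann (R j)) ≤ R j ^ γ * M₀) (x : E3) :
    dens u v θ x = 0 := by
  obtain ⟨C, hC, H⟩ := energy_scaled hφ hp hα (est_low hφ hq hβ) (est_low hφ hr hγ) Ev Eθ Fv Fθ c₁ c₂
  obtain ⟨P, hP, HP⟩ := poincareSobolev hl (show 0 < r by linarith) hrl
  obtain ⟨P₂, hP₂, HP₂⟩ := poincareSobolev (l := 2) (r := 6) (by norm_num) (by norm_num) (by norm_num)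
  obtain ⟨A, hA, HA⟩ := six_le_v hφ
  obtain ⟨A', hA', HA'⟩ := six_le hφ
  obtain ⟨w, hw⟩ : ∃ w, w = (volume N0).toReal ^ (1 / 1 - 1 / q) := ⟨_, rfl⟩
  obtain ⟨w', hw'⟩ : ∃ w, w = (volume N0).toReal ^ (1 / 1 - 1 / r) := ⟨_, rfl⟩
  have hw0 : 0 ≤ w := by rw [hw]; positivity
  have hw0' : 0 ≤ w' := by rw [hw']; positivity
  obtain ⟨M, hM⟩ : ∃ M, M = (1 + P) * M₀ := ⟨_, rfl⟩
  have hM0 : 0 ≤ M := by rw [hM]; positivity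
  have hMM : M₀ ≤ M := by rw [hM]; nlinarith
  have hPM : P * M₀ ≤ M := by rw [hM]; nlinarith
  obtain ⟨B, hB⟩ : ∃ B, B = 1 + A * (1 + w * M) + A' * (1 + w' * M) := ⟨_, rfl⟩
  have q1 : 0 ≤ A * (1 + w * M) := by positivity
  have q2 : 0 ≤ A' * (1 + w' * M) := by positivity
  have q3 : 0 ≤ A * (w * M) := by positivity
  have q4 : 0 ≤ A' * (w' * M) := by positivity
  obtain ⟨Dm, HD⟩ := rhs_absorb hC hM0 (show 1 ≤ B by rw [hB]; linarith) ce h1 h1' h2 h2' h3 h3'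
    h4 h4'
  have cv : Continuous fun x => ∑ i, |v i x| := continuous_finsetSum _ fun i _ => (h.sv i).cont.abs
  have cd := dens_cont h.su h.sv h.sθ
  -- the rescaled fields
  obtain ⟨ut, hut⟩ : ∃ f : ℕ → Fin 3 → E3 → ℝ, f = fun j i x => R j * u i (R j • x) := ⟨_, rfl⟩
  obtain ⟨vt, hvt⟩ : ∃ f : ℕ → Fin 3 → E3 → ℝ, f = fun j i x => R j * v i (R j • x) := ⟨_, rfl⟩
  obtain ⟨T, hT⟩ : ∃ f : ℕ → E3 → ℝ, f = fun j x => R j * θ (R j • x) := ⟨_, rfl⟩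
  obtain ⟨Tt, hTt⟩ : ∃ f : ℕ → E3 → ℝ, f = fun j x => T j x - mean (cap 1 0 1) (T j) := ⟨_, rfl⟩
  have sol : ∀ j, SolK (R j) (ut j) (fun x => R j ^ 2 * π (R j • x)) (vt j) (Tt j) := fun j => by
    have := (h.dil (R j)).shift (mean (cap 1 0 1) (T j))
    simpa only [hut, hvt, hTt, hT] using this
  have sT : ∀ j, Sm (T j) := fun j => by simpa only [hT] using sm_dil h.sθ (R j) (R j)
  obtain ⟨d, hd⟩ : ∃ d : ℕ → ℝ, d = fun j => (∫ x, φ x ^ 10 * dens (ut j) (vt j) (Tt j) x) / R j :=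
    ⟨_, rfl⟩
  have hDn : ∀ j, 0 ≤ ∫ x, φ x ^ 10 * dens (ut j) (vt j) (Tt j) x := fun j =>
    integral_nonneg fun x => mul_nonneg (pow_nonneg (hφ.nonneg x) _) (dens_nonneg _ _ _ _)
  obtain ⟨X, hXd⟩ : ∃ X : ℕ → ℝ, X = fun j => R j ^ (-α) * ∑ i, nm (u i) p (Ann (R j)) := ⟨_, rfl⟩
  rw [← hXd] at hX
  have hR1 := hR.eventually_ge_atTop 1
  have eD : ∀ j, 1 ≤ R j → ∫ x, φ x ^ 10 * dens (ut j) (vt j) (Tt j) x = R j * d j := fun j hj => by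
    rw [hd]; field_simp
  have hd0 : ∀ j, 1 ≤ R j → 0 ≤ d j := fun j hj => by
    rw [hd]; exact div_nonneg (hDn j) (by linarith)
  have hball : ∀ j, 1 ≤ R j → ∫ x in ball (0 : E3) (R j), dens u v θ x ≤ d j := fun j hj => by
    have k := dens_ball_le h hφ (R := R j) (c := mean (cap 1 0 1) (T j)) (by linarith)
    have k' : R j * ∫ x in ball (0 : E3) (R j), dens u v θ x ≤ R j * d j := by
      rw [← eD j hj]; simpa only [hut, hvt, hTt, hT] using k
    exact le_of_mul_le_mul_left k' (by linarith)
  have hX0 : ∀ j, 1 ≤ R j → 0 ≤ X j := fun j hj => by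
    rw [hXd]
    exact mul_nonneg (Real.rpow_nonneg (by linarith) _) (Finset.sum_nonneg fun i _ => nm_nonneg _ _ _)
  have fa : ∀ j, 1 ≤ R j → ∑ i, nm (ut j i) p (Ann 1) ≤ R j ^ (1 - 3 / p + α) * X j := fun j hj => by
    have hj0 : 0 < R j := by linarith
    have e : ∀ i, nm (ut j i) p (Ann 1) = R j ^ (1 - 3 / p) * nm (u i) p (Ann (R j)) := fun i => by
      rw [hut]
      exact nm_dil_mul (h.su i).cont hj0 (by linarith) (BM_Ann 1) (BM_Ann _) (smul_Ann hj0)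
    simp only [e]
    rw [← Finset.mul_sum, hXd, Real.rpow_add hj0, mul_assoc]
    refine le_of_eq (congrArg _ ?_)
    beta_reduce
    rw [← mul_assoc, ← Real.rpow_add hj0, add_neg_cancel, Real.rpow_zero, one_mul]
  have fb : ∀ᶠ j in atTop, nm (fun x => ∑ i, |vt j i x|) q N0 ≤ R j ^ (1 - 3 / q + β) * M := by
    filter_upwards [hR1, hY] with j hj hy
    have hj0 : 0 < R j := by linarith
    have cvt : Continuous fun x => ∑ i, |vt j i x| :=
      continuous_finsetSum _ fun i _ => ((sol j).sv i).cont.abs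
    refine (nm_mono_set cvt (BM_Ann 1) N0_sub_Ann).trans ?_
    have e : nm (fun x => ∑ i, |vt j i x|) q (Ann 1) =
        R j ^ (1 - 3 / q) * nm (fun x => ∑ i, |v i x|) q (Ann (R j)) := by
      rw [hvt]
      exact nm_dil_sum (fun i => (h.sv i).cont) hj0 (by linarith) (BM_Ann 1) (BM_Ann _) (smul_Ann hj0)
    rw [e, Real.rpow_add hj0, mul_assoc]
    exact mul_le_mul_of_nonneg_left (hy.trans (mul_le_mul_of_nonneg_left hMM (by positivity)))
      (by positivity)
  have fc : ∀ᶠ j in atTop, nm (fun x => |Tt j x|) r N0 ≤ R j ^ (1 - 3 / r + γ) * M := by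
    filter_upwards [hR1, hZ] with j hj hz
    have hj0 : 0 < R j := by linarith
    have k := HP (T j) (sT j)
    have e1 : nm (fun x => |Tt j x|) r N0 = nm (fun x => T j x - mean (cap 1 0 1) (T j)) r N0 := by
      rw [hTt]; exact nm_norm (fun x => T j x - mean (cap 1 0 1) (T j)) r N0
    have e2 : nm (fderiv ℝ (T j)) l (Ann 1) = R j ^ (2 - 3 / l) * nm (fderiv ℝ θ) l (Ann (R j)) := by
      rw [hT]; exact nm_dil_grad h.sθ hj0 (by linarith)
    have e3 : 2 - 3 / l = 1 - 3 / r := by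
      rw [show 3 / r = 3 * (1 / r) by ring, hrl]; ring
    rw [e1]
    refine k.trans ?_
    rw [e2, e3, Real.rpow_add hj0]
    calc P * (R j ^ (1 - 3 / r) * nm (fderiv ℝ θ) l (Ann (R j)))
        ≤ P * (R j ^ (1 - 3 / r) * (R j ^ γ * M₀)) := by gcongr
      _ = R j ^ (1 - 3 / r) * R j ^ γ * (P * M₀) := by ring
      _ ≤ _ := by gcongr
  have sqR : ∀ j, 1 ≤ R j → √(R j * d j) = R j ^ (1 / 2 : ℝ) * √(d j) := fun j hj => by
    rw [Real.sqrt_mul (by linarith), Real.sqrt_eq_rpow (R j)]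
  -- a priori control of the `L^6` norms by the dissipation
  have fv : ∀ᶠ j in atTop, nm (fun x => φ x ^ 5 * ∑ i, |vt j i x|) 6 (ball 0 2) ≤
      R j ^ (1 / 2 : ℝ) * (B * (1 + √(d j))) := by
    filter_upwards [hR1, fb] with j hj hb
    have hj0 : 0 < R j := by linarith
    have cvt : Continuous fun x => ∑ i, |vt j i x| :=
      continuous_finsetSum _ fun i _ => ((sol j).sv i).cont.abs
    have k := HA (ut j) (vt j) (Tt j) (sol j).su (sol j).sv (sol j).sθ
    have k2 := nm_exp_le cvt N0_BM (r₁ := 1) (r₂ := q) one_pos hq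
    rw [← hw] at k2
    have k3 : R j ^ (1 - 3 / q + β) ≤ R j ^ (1 / 2 : ℝ) :=
      Real.rpow_le_rpow_of_exponent_le hj (by linarith)
    have k4 : nm (fun x => ∑ i, |vt j i x|) 1 N0 ≤ R j ^ (1 / 2 : ℝ) * (w * M) := by
      refine k2.trans ((mul_le_mul_of_nonneg_right hb hw0).trans ?_)
      calc _ ≤ R j ^ (1 / 2 : ℝ) * M * w := by gcongr
        _ = _ := by ring
    rw [eD j hj, sqR j hj] at k
    have hs := Real.sqrt_nonneg (d j)
    refine k.trans ?_
    calc _ ≤ A * (R j ^ (1 / 2 : ℝ) * √(d j) + R j ^ (1 / 2 : ℝ) * (w * M)) := by gcongr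
      _ = R j ^ (1 / 2 : ℝ) * (A * (√(d j) + w * M)) := by ring
      _ ≤ _ := by
        refine mul_le_mul_of_nonneg_left ?_ (by positivity)
        rw [hB]
        have := mul_nonneg q3 hs
        have := mul_nonneg q2 hs
        linarith
  have fθ : ∀ᶠ j in atTop, nm (fun x => φ x ^ 5 * |Tt j x|) 6 (ball 0 2) ≤
      R j ^ (1 / 2 : ℝ) * (B * (1 + √(d j))) := by
    filter_upwards [hR1, fc] with j hj hb
    have hj0 : 0 < R j := by linarith
    have k := HA' (ut j) (vt j) (Tt j) (Tt j) (sol j).su (sol j).sv (sol j).sθ (sol j).sθ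
      (fderiv_sq_le_t _ _ _)
    have k2 := nm_exp_le (sol j).sθ.cont N0_BM (r₁ := 1) (r₂ := r) one_pos hr
    rw [← hw', ← nm_norm (Tt j) r N0] at k2
    have k3 : R j ^ (1 - 3 / r + γ) ≤ R j ^ (1 / 2 : ℝ) :=
      Real.rpow_le_rpow_of_exponent_le hj (by linarith)
    have k4 : nm (Tt j) 1 N0 ≤ R j ^ (1 / 2 : ℝ) * (w' * M) := by
      refine k2.trans ((mul_le_mul_of_nonneg_right hb hw0').trans ?_)
      calc _ ≤ R j ^ (1 / 2 : ℝ) * M * w' := by gcongr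
        _ = _ := by ring
    rw [eD j hj, sqR j hj] at k
    have hs := Real.sqrt_nonneg (d j)
    refine k.trans ?_
    calc _ ≤ A' * (R j ^ (1 / 2 : ℝ) * √(d j) + R j ^ (1 / 2 : ℝ) * (w' * M)) := by gcongr
      _ = R j ^ (1 / 2 : ℝ) * (A' * (√(d j) + w' * M)) := by ring
      _ ≤ _ := by
        refine mul_le_mul_of_nonneg_left ?_ (by positivity)
        rw [hB]
        have := mul_nonneg q4 hs
        have := mul_nonneg q1 hs
        linarith
  have c5v : ∀ j, Continuous fun x => φ x ^ 5 * ∑ i, |vt j i x| := fun j =>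
    (hφ.sm.cont.pow 5).mul (continuous_finsetSum _ fun i _ => ((sol j).sv i).cont.abs)
  have c5θ : ∀ j, Continuous fun x => φ x ^ 5 * |Tt j x| := fun j =>
    (hφ.sm.cont.pow 5).mul (sol j).sθ.cont.abs
  have en : ∀ j s s', 1 ≤ R j → 0 ≤ s → 0 ≤ s' →
      nm (fun x => ∑ i, |vt j i x|) q N0 ≤ R j ^ (1 - 3 / q + β) * M →
      nm (fun x => |Tt j x|) r N0 ≤ R j ^ (1 - 3 / r + γ) * M →
      nm (fun x => φ x ^ 5 * ∑ i, |vt j i x|) 6 N0 ≤ R j ^ (1 / 2 : ℝ) * s →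
      nm (fun x => φ x ^ 5 * |Tt j x|) 6 N0 ≤ R j ^ (1 / 2 : ℝ) * s' →
      d j ≤ C * rhs (X j) M s s' (R j) (ev + eθ) τv τθ t₁ t₂ := by
    intro j s s' hj hs hs' k1 k2 k3 k4
    have hj0 : 0 < R j := by linarith
    have k := H (R j) _ _ _ _ hj (sol j) (X j) M s s' (hX0 j hj) hM0 hs hs' (fa j hj) k1 k2 k3 k4
    rw [eD j hj] at k
    refine le_of_mul_le_mul_left (k.trans (le_of_eq ?_)) hj0
    rw [rhs]; ring
  -- first pass
  have hdb : ∀ᶠ j in atTop, d j ≤ Dm := by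
    filter_upwards [hR1, fb, fc, fv, fθ, hX.eventually_le_const zero_lt_one] with j hj k1 k2 k3 k4 k5
    have hs := Real.sqrt_nonneg (d j)
    have hB0 : 0 ≤ B * (1 + √(d j)) := mul_nonneg (by rw [hB]; linarith) (by linarith)
    exact HD (d j) (X j) _ _ (R j) (hd0 j hj) (hX0 j hj) k5 hB0 hB0 hj le_rfl le_rfl
      (en j _ _ hj hB0 hB0 k1 k2 ((nm_mono_set (c5v j) (BM_ball 2) N0_sub_ball).trans k3)
        ((nm_mono_set (c5θ j) (BM_ball 2) N0_sub_ball).trans k4))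
  -- second pass
  have tv : Tendsto (fun j => nm (fun x => ∑ i, |v i x|) 6 (Ann (R j))) atTop (nhds 0) := by
    have cg : Continuous fun x => ‖∑ i, |v i x|‖ ^ (6 : ℝ) := cv.norm.rpow_const fun _ => Or.inr (by norm_num)
    have k := ann_tendsto cg (fun x => by positivity) hR (D := (B * (1 + √Dm)) ^ (6 : ℝ)) ?_
    · have k' := k.rpow_const (p := 1 / 6) (Or.inr (by norm_num))
      rw [Real.zero_rpow (by norm_num)] at k'
      refine k'.congr fun j => ?_
      rw [nm_eq cv (BM_Ann _) (by norm_num)]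
    · filter_upwards [hR1, fv, hdb] with j hj k1 k2
      have hj0 : 0 < R j := by linarith
      rw [← nm_rpow cv (BM_ball _) (by norm_num)]
      refine Real.rpow_le_rpow (nm_nonneg _ _ _) ?_ (by norm_num)
      have e : nm (fun x => ∑ i, |vt j i x|) 6 (ball 0 1) =
          R j ^ (1 - 3 / 6 : ℝ) * nm (fun x => ∑ i, |v i x|) 6 (ball 0 (R j)) := by
        rw [hvt]
        refine nm_dil_sum (fun i => (h.sv i).cont) hj0 (by norm_num) (BM_ball 1) (BM_ball _) fun x => ?_
        rw [mem_ball_zero_iff, mem_ball_zero_iff, norm_smul, Real.norm_of_nonneg hj0.le,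
          mul_lt_iff_lt_one_right hj0]
      have e2 : nm (fun x => ∑ i, |vt j i x|) 6 (ball 0 1) ≤
          nm (fun x => φ x ^ 5 * ∑ i, |vt j i x|) 6 (ball 0 2) := by
        refine le_trans ?_ (nm_mono_set (c5v j) (BM_ball 2) (ball_subset_ball (by norm_num : (1:ℝ) ≤ 2)))
        refine nm_mono (c5v j) (BM_ball 1) fun x hx => ?_
        have := mem_ball_zero_iff.1 hx
        rw [hφ.one x (by linarith)]; simp
      rw [show (1 - 3 / 6 : ℝ) = 1 / 2 by norm_num] at e
      have e3 := (e.symm.le.trans e2).trans k1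
      have e4 := le_of_mul_le_mul_left e3 (by positivity)
      refine e4.trans (mul_le_mul_of_nonneg_left ?_ (by rw [hB]; linarith))
      have := Real.sqrt_le_sqrt k2
      linarith
  have tθ : Tendsto (fun j => P₂ * nm (fderiv ℝ θ) 2 (Ann (R j))) atTop (nhds 0) := by
    have cf : Continuous (fderiv ℝ θ) := h.sθ.one.continuous_fderiv (by simp)
    have cg : Continuous fun x => ‖fderiv ℝ θ x‖ ^ 2 := cf.norm.pow 2
    have k := ann_tendsto cg (fun x => by positivity) hR (D := Dm) ?_
    · have k' := (k.sqrt).const_mul P₂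
      rw [Real.sqrt_zero, mul_zero] at k'
      refine k'.congr fun j => ?_
      rw [← nm_sq cf (BM_Ann _), Real.sqrt_sq (nm_nonneg _ _ _)]
    · filter_upwards [hR1, hdb] with j hj k2
      refine le_trans ?_ ((hball j hj).trans k2)
      exact setIntegral_mono (integrableOn_of_cont cg (BM_ball _).1)
        (integrableOn_of_cont cd (BM_ball _).1) (fderiv_sq_le_t u v θ)
  have lim := (rhs_tendsto (M := M) ce h1 h2 h3 h4 hc hX tv tθ hR).const_mul C
  rw [mul_zero] at lim
  refine dens_zero cd (dens_nonneg u v θ) hR lim ?_ x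
  filter_upwards [hR1, fb, fc] with j hj k1 k2
  have hj0 : 0 < R j := by linarith
  refine (hball j hj).trans (en j _ _ hj (nm_nonneg _ _ _) (mul_nonneg hP₂ (nm_nonneg _ _ _)) k1 k2 ?_ ?_)
  · have cvt : Continuous fun x => ∑ i, |vt j i x| :=
      continuous_finsetSum _ fun i _ => ((sol j).sv i).cont.abs
    refine (nm_cut_le hφ cvt 5 6 N0_BM).trans ((nm_mono_set cvt (BM_Ann 1) N0_sub_Ann).trans ?_)
    have e : nm (fun x => ∑ i, |vt j i x|) 6 (Ann 1) =
        R j ^ (1 - 3 / 6 : ℝ) * nm (fun x => ∑ i, |v i x|) 6 (Ann (R j)) := by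
      rw [hvt]
      exact nm_dil_sum (fun i => (h.sv i).cont) hj0 (by norm_num) (BM_Ann 1) (BM_Ann _) (smul_Ann hj0)
    rw [e, show (1 - 3 / 6 : ℝ) = 1 / 2 by norm_num]
  · refine (nm_cut_le hφ (sol j).sθ.cont.abs 5 6 N0_BM).trans ?_
    have e1 : nm (fun x => |Tt j x|) 6 N0 = nm (fun x => T j x - mean (cap 1 0 1) (T j)) 6 N0 := by
      rw [hTt]; exact nm_norm (fun x => T j x - mean (cap 1 0 1) (T j)) 6 N0
    have e2 : nm (fderiv ℝ (T j)) 2 (Ann 1) =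
        R j ^ (2 - 3 / 2 : ℝ) * nm (fderiv ℝ θ) 2 (Ann (R j)) := by
      rw [hT]; exact nm_dil_grad h.sθ hj0 (by norm_num)
    have k := HP₂ (T j) (sT j)
    rw [e2, ← e1, show (2 - 3 / 2 : ℝ) = 1 / 2 by norm_num] at k
    refine le_trans k (le_of_eq ?_)
    ring

/-! ### Choosing the interpolation exponents -/

/-- Interpolation between `L^r` and `L⁶` down to `L²`, for `r < 2`. -/
lemma est_two {φ : E3 → ℝ} {K : ℝ} (hφ : Cut 1.06 1.09 φ K) {r β : ℝ} (h1 : 1 ≤ r) (h2 : r < 2) :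
    ∃ t, Est φ r β 2 (-(1 / 2) + 2 * r / (6 - r) * β) t ∧ 0 < t ∧ t ≤ 4 / 5 := by
  have h6 : 0 < 6 - r := by linarith
  have hr : 0 < r := by linarith
  have t0 : 0 < 1 - 2 * r / (6 - r) := by
    rw [sub_pos, div_lt_one h6]; linarith
  have t1 : 1 - 2 * r / (6 - r) ≤ 4 / 5 := by
    have : 1 / 5 ≤ 2 * r / (6 - r) := by rw [le_div_iff₀ h6]; linarith
    linarith
  refine ⟨1 - 2 * r / (6 - r), ?_, t0, t1⟩
  have k := est_interp (β := β) hφ hr (by norm_num : (0:ℝ) < 2) t0 t1 (by field_simp; ring)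
  convert k using 1
  field_simp; ring

/-- The estimate in `L^{2p'}`: interpolation if `r < 2p'`, Hölder otherwise. -/
lemma est_pp {φ : E3 → ℝ} {K : ℝ} (hφ : Cut 1.06 1.09 φ K) {p r α β : ℝ} (hp : 3 ≤ p) (h1 : 1 ≤ r)
    (h : (r < 2 * (p / (p - 1)) ∧ α + ((4 * p - 6) * r) / ((6 - r) * p) * β ≤ 1) ∨
      (2 * (p / (p - 1)) ≤ r ∧ α + 2 * β ≤ 3 / p + 6 / r - 2)) :
    ∃ e t, Est φ r β (2 * (p / (p - 1))) e t ∧ 1 - 3 / p + α + 2 * e ≤ 1 ∧ 0 ≤ t ∧ t ≤ 4 / 5 := by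
  have hr : 0 < r := by linarith
  have hp0 : 0 < p := by linarith
  have hp1 : 0 < p - 1 := by linarith
  have hs : 0 < 2 * (p / (p - 1)) := by positivity
  rcases h with ⟨h, hc⟩ | ⟨h, hc⟩
  · have h' : r * (p - 1) < 2 * p := by
      rwa [← mul_div_assoc, lt_div_iff₀ hp1] at h
    have h6 : 0 < 6 - r := by nlinarith
    have t0 : 0 < 1 - (2 * p - 3) * r / ((6 - r) * p) := by
      rw [sub_pos, div_lt_one (by positivity)]; nlinarith
    have t1 : 1 - (2 * p - 3) * r / ((6 - r) * p) ≤ 4 / 5 := by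
      have : 1 / 5 ≤ (2 * p - 3) * r / ((6 - r) * p) := by
        rw [le_div_iff₀ (by positivity)]; nlinarith
      linarith
    refine ⟨_, _, est_interp (β := β) hφ hr hs t0 t1 (by field_simp; ring), ?_, t0.le, t1⟩
    refine le_trans (le_of_eq ?_) hc
    field_simp; ring
  · refine ⟨_, 0, est_hold hφ hs h, ?_, le_rfl, by norm_num⟩
    have : 3 / r * 2 = 6 / r := by ring
    linarith

/-- The pair of `L²` estimates controlling the coupling term `∇θ · v`. -/
lemma est_pair {φ : E3 → ℝ} {K : ℝ} (hφ : Cut 1.06 1.09 φ K) {q r β γ : ℝ} (hq : 1 ≤ q) (hr : 1 ≤ r)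
    (h : (q < 2 ∧ r < 2 ∧ 2 * q / (6 - q) * β + 2 * r / (6 - r) * γ ≤ 1) ∨
      (q < 2 ∧ 2 ≤ r ∧ 2 * q / (6 - q) * β + γ ≤ 3 / r - 1 / 2) ∨
      (2 ≤ q ∧ r < 2 ∧ β + 2 * r / (6 - r) * γ ≤ 3 / q - 1 / 2) ∨
      (2 ≤ q ∧ 2 ≤ r ∧ β + γ < 3 / q + 3 / r - 2)) :
    ∃ ev τv eθ τθ, Est φ q β 2 ev τv ∧ Est φ r γ 2 eθ τθ ∧ ev + eθ ≤ 0 ∧ 0 ≤ τv ∧ τv ≤ 4 / 5 ∧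
      0 ≤ τθ ∧ τθ ≤ 4 / 5 ∧ (0 < τv ∨ 0 < τθ ∨ ev + eθ < 0) := by
  have z : (0 : ℝ) ≤ 4 / 5 := by norm_num
  rcases h with ⟨a, b, c⟩ | ⟨a, b, c⟩ | ⟨a, b, c⟩ | ⟨a, b, c⟩
  · obtain ⟨t, e, h0, h1⟩ := est_two (β := β) hφ hq a
    obtain ⟨s, e', h0', h1'⟩ := est_two (β := γ) hφ hr b
    exact ⟨_, _, _, _, e, e', by linarith, h0.le, h1, h0'.le, h1', .inl h0⟩
  · obtain ⟨t, e, h0, h1⟩ := est_two (β := β) hφ hq a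
    exact ⟨_, _, _, _, e, est_hold (β := γ) hφ (by norm_num) b, by linarith, h0.le, h1, le_rfl, z,
      .inl h0⟩
  · obtain ⟨s, e', h0', h1'⟩ := est_two (β := γ) hφ hr b
    exact ⟨_, _, _, _, est_hold (β := β) hφ (by norm_num) a, e', by linarith, le_rfl, z, h0'.le, h1',
      .inr (.inl h0')⟩
  · exact ⟨_, _, _, _, est_hold (β := β) hφ (by norm_num) a, est_hold (β := γ) hφ (by norm_num) b,
      by linarith, le_rfl, z, le_rfl, z, .inr (.inr (by linarith))⟩

/-! ### Constant fields -/

lemma nm_const_Ann {R p : ℝ} (hR : 0 < R) (hp : 0 < p) (c : ℝ) :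
    nm (fun _ : E3 => c) p (Ann R) = R ^ (3 / p) * nm (fun _ : E3 => c) p (Ann 1) := by
  have k := nm_dil (f := fun _ : E3 => c) continuous_const hR hp (BM_Ann 1) (BM_Ann R) (smul_Ann hR)
  rw [k, ← mul_assoc, ← Real.rpow_add hR, show 3 / p + -3 / p = 0 by ring, Real.rpow_zero, one_mul]

lemma vol_Ann_pos : 0 < (volume (Ann 1)).toReal := by
  refine ENNReal.toReal_pos ?_ (ne_top_of_le_ne_top measure_ball_lt_top.ne
    (measure_mono (Set.sdiff_subset (s := ball (0 : E3) (2 * 1)))))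
  have hsub : ball (EuclideanSpace.single 0 (3 / 2) : E3) (1 / 4) ⊆ Ann 1 := by
    intro x hx
    rw [mem_ball, dist_eq_norm] at hx
    have n : ‖(EuclideanSpace.single 0 (3 / 2) : E3)‖ = 3 / 2 := by simp
    have a := norm_sub_norm_le x (EuclideanSpace.single 0 (3 / 2) : E3)
    have b := norm_sub_norm_le (EuclideanSpace.single 0 (3 / 2) : E3) x
    rw [norm_sub_rev] at b
    rw [Ann, Set.mem_sdiff, mem_ball_zero_iff, mem_ball_zero_iff]
    constructor <;> linarith
  exact ((measure_ball_pos volume _ (by norm_num)).trans_le (measure_mono hsub)).ne'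

/-- A constant whose `L^p` norm over the annuli grows at most like `R^a` with `a < 3/p` is zero. -/
lemma const_zero {c p a M : ℝ} (hp : 0 < p) (ha : a < 3 / p) {R : ℕ → ℝ}
    (hR : Tendsto R atTop atTop)
    (h : ∀ᶠ j in atTop, nm (fun _ : E3 => c) p (Ann (R j)) ≤ R j ^ a * M) : c = 0 := by
  by_contra hc
  have hN : 0 < nm (fun _ : E3 => c) p (Ann 1) := by
    rw [nm_const hp]
    have := vol_Ann_pos
    have := abs_pos.2 hc
    positivity
  have t := ((tendsto_rpow_atTop (sub_pos.2 ha)).comp hR).atTop_mul_const hN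
  obtain ⟨j, j1, j2, j3⟩ := (h.and ((hR.eventually_gt_atTop 0).and (t.eventually_gt_atTop M))).exists
  rw [nm_const_Ann j2 hp, show 3 / p = a + (3 / p - a) by ring, Real.rpow_add j2, mul_assoc] at j1
  have := le_of_mul_le_mul_left j1 (Real.rpow_pos_of_pos j2 a)
  simp only [Function.comp] at j3
  linarith

/-! ### Translation of the hypotheses -/

lemma toReal_weight {R a : ℝ} (hR : 0 < R) (L : ℝ≥0∞) :
    (ENNReal.ofReal (R ^ (-a)) * L).toReal = R ^ (-a) * L.toReal := by
  rw [ENNReal.toReal_mul, ENNReal.toReal_ofReal (Real.rpow_nonneg hR.le _)]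

lemma le_of_weight {R a : ℝ} (hR : 0 < R) {L M : ℝ≥0∞} (hM : M < ⊤)
    (h : ENNReal.ofReal (R ^ (-a)) * L ≤ M) : L.toReal ≤ R ^ a * M.toReal := by
  have k := ENNReal.toReal_mono hM.ne h
  rw [toReal_weight hR, Real.rpow_neg hR.le] at k
  rwa [inv_mul_le_iff₀ (Real.rpow_pos_of_pos hR a)] at k

lemma solK_of {u : E3 → E3} {pr : E3 → ℝ} {v : E3 → E3} {θ : E3 → ℝ} (h : IsTCMSolution u pr v θ) :
    SolK 1 (fun i x => u x i) pr (fun i x => v x i) θ where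
  su i := contDiff_euclidean.1 h.smooth_u i
  sπ := h.smooth_pr
  sv i := contDiff_euclidean.1 h.smooth_v i
  sθ := h.smooth_θ
  eu := h.eq_u
  ev x i := by simpa using h.eq_v x i
  eθ x := by simpa using h.eq_θ x
  div := h.div_u

/-- The conclusion, with the nine cases rewritten as conditions on `q` and on the Sobolev conjugate
`r` of `lam`. -/
lemma liouville_of_conditions {u : E3 → E3} {pr : E3 → ℝ} {v : E3 → E3} {θ : E3 → ℝ}
    (hsol : IsTCMSolution u pr v θ) {p q lam r α β γ : ℝ}
    (hp3 : 3 ≤ p) (hq1 : 1 ≤ q) (hl1 : 1 ≤ lam) (hr1 : 1 ≤ r) (hrl : 1 / r = 1 / lam - 1 / 3)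
    (hα : α ≤ 3 / p - 2 / 3) (hβ : β ≤ 3 / q - 1 / 2) (hγ : γ ≤ 3 / r - 1 / 2)
    {Rseq : ℕ → ℝ} (htop : Tendsto Rseq atTop atTop)
    (hX : Tendsto (fun j => Xn u α p (Rseq j)) atTop (nhds 0))
    (hY : ∃ M : ℝ≥0∞, M < ⊤ ∧ ∀ j, Yn v β q (Rseq j) ≤ M)
    (hZ : ∃ M : ℝ≥0∞, M < ⊤ ∧ ∀ j, Zgradn θ γ lam (Rseq j) ≤ M)
    (FVc : (q < 2 * (p / (p - 1)) ∧ α + ((4 * p - 6) * q) / ((6 - q) * p) * β ≤ 1) ∨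
      (2 * (p / (p - 1)) ≤ q ∧ α + 2 * β ≤ 3 / p + 6 / q - 2))
    (FTc : (r < 2 * (p / (p - 1)) ∧ α + ((4 * p - 6) * r) / ((6 - r) * p) * γ ≤ 1) ∨
      (2 * (p / (p - 1)) ≤ r ∧ α + 2 * γ ≤ 3 / p + 6 / r - 2))
    (Ec : (q < 2 ∧ r < 2 ∧ 2 * q / (6 - q) * β + 2 * r / (6 - r) * γ ≤ 1) ∨
      (q < 2 ∧ 2 ≤ r ∧ 2 * q / (6 - q) * β + γ ≤ 3 / r - 1 / 2) ∨
      (2 ≤ q ∧ r < 2 ∧ β + 2 * r / (6 - r) * γ ≤ 3 / q - 1 / 2) ∨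
      (2 ≤ q ∧ 2 ≤ r ∧ β + γ < 3 / q + 3 / r - 2)) :
    (∀ x : E3, u x = 0) ∧ (∀ x : E3, v x = 0) ∧ ∃ c : ℝ, ∀ x : E3, θ x = c := by
  obtain ⟨φ, K, hφ⟩ := exists_cut (a := 1.06) (b := 1.09) (by norm_num) (by norm_num)
  have S := solK_of hsol
  have hp0 : 0 < p := by linarith
  have hq0 : 0 < q := by linarith
  obtain ⟨e₁, t₁, Fv, c₁, h3, h3'⟩ := est_pp hφ hp3 hq1 FVc
  obtain ⟨e₂, t₂, Fθ, c₂, h4, h4'⟩ := est_pp hφ hp3 hr1 FTc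
  obtain ⟨ev, τv, eθ, τθ, Ev, Eθ, ce, h1, h1', h2, h2', hc⟩ := est_pair hφ hq1 hr1 Ec
  have hRpos : ∀ᶠ j in atTop, 0 < Rseq j := htop.eventually_gt_atTop 0
  have cu : Continuous u := hsol.smooth_u.continuous
  have cv : Continuous v := hsol.smooth_v.continuous
  have hX0 : Tendsto (fun j => Rseq j ^ (-α) * nm u p (Ann (Rseq j))) atTop (nhds 0) := by
    have k := (ENNReal.tendsto_toReal ENNReal.zero_ne_top).comp hX
    rw [ENNReal.toReal_zero] at k
    refine k.congr' ?_
    filter_upwards [hRpos] with j hj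
    exact toReal_weight hj _
  have ui : ∀ i j, nm (fun x => u x i) p (Ann (Rseq j)) ≤ nm u p (Ann (Rseq j)) :=
    fun i j => nm_mono cu (BM_Ann _) fun x _ => abs_coord_le (u x) i
  have hX1 : Tendsto (fun j => Rseq j ^ (-α) * ∑ i, nm (fun x => u x i) p (Ann (Rseq j)))
      atTop (nhds 0) := by
    have k := hX0.const_mul 3
    rw [mul_zero] at k
    refine squeeze_zero' ?_ ?_ k
    · filter_upwards [hRpos] with j hj
      exact mul_nonneg (Real.rpow_nonneg hj.le _)
        (Finset.sum_nonneg fun i _ => nm_nonneg _ _ _)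
    · filter_upwards [hRpos] with j hj
      have a : ∑ i : Fin 3, nm (fun x => u x i) p (Ann (Rseq j)) ≤
          ∑ _i : Fin 3, nm u p (Ann (Rseq j)) := Finset.sum_le_sum fun i _ => ui i j
      rw [Finset.sum_const, Finset.card_univ, Fintype.card_fin, nsmul_eq_mul] at a
      have b := mul_le_mul_of_nonneg_left a (Real.rpow_nonneg hj.le (-α))
      push_cast at b
      linarith
  obtain ⟨MY, hMY, hY⟩ := hY
  obtain ⟨MZ, hMZ, hZ⟩ := hZ
  have hMY0 : 0 ≤ MY.toReal := ENNReal.toReal_nonneg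
  have hMZ0 : 0 ≤ MZ.toReal := ENNReal.toReal_nonneg
  have hY0 : ∀ᶠ j in atTop, nm v q (Ann (Rseq j)) ≤ Rseq j ^ β * MY.toReal := by
    filter_upwards [hRpos] with j hj
    exact le_of_weight hj hMY (hY j)
  have hY1 : ∀ᶠ j in atTop, nm (fun x => ∑ i, |v x i|) q (Ann (Rseq j)) ≤
      Rseq j ^ β * (3 * MY.toReal + MZ.toReal) := by
    filter_upwards [hRpos, hY0] with j hj k
    have c3 : Continuous fun x => 3 * ‖v x‖ := continuous_const.mul cv.norm
    have a : nm (fun x => ∑ i, |v x i|) q (Ann (Rseq j)) ≤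
        nm (fun x => 3 * ‖v x‖) q (Ann (Rseq j)) := by
      refine nm_mono c3 (BM_Ann _) fun x _ => ?_
      have n0 : 0 ≤ ∑ i, |v x i| := Finset.sum_nonneg fun i _ => abs_nonneg _
      rw [Real.norm_of_nonneg n0, Real.norm_of_nonneg (by positivity), Fin.sum_univ_three]
      linarith [abs_coord_le (v x) 0, abs_coord_le (v x) 1, abs_coord_le (v x) 2]
    rw [nm_smul 3 (fun x => ‖v x‖), nm_norm v, abs_of_pos (by norm_num : (0 : ℝ) < 3)] at a
    have := mul_nonneg (Real.rpow_nonneg hj.le β) hMZ0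
    linarith
  have hZ1 : ∀ᶠ j in atTop, nm (fderiv ℝ θ) lam (Ann (Rseq j)) ≤
      Rseq j ^ γ * (3 * MY.toReal + MZ.toReal) := by
    filter_upwards [hRpos] with j hj
    have k : nm (gradient θ) lam (Ann (Rseq j)) ≤ _ := le_of_weight hj hMZ (hZ j)
    have e : nm (gradient θ) lam (Ann (Rseq j)) = nm (fderiv ℝ θ) lam (Ann (Rseq j)) :=
      nm_congr (BM_Ann _) fun x _ => norm_gradient θ x
    rw [e] at k
    have := mul_nonneg (Real.rpow_nonneg hj.le γ) hMY0
    linarith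
  have D := dens_eq_zero hφ S hp3 hq1 hr1 hl1 hrl hα hβ hγ
    Ev Eθ Fv Fθ c₁ c₂ ce h1 h1' h2 h2' h3 h3' h4 h4' hc htop hX1 (by positivity) hY1 hZ1
  have zero_of : ∀ L : E3 →L[ℝ] ℝ, ‖L‖ ^ 2 ≤ 0 → L = 0 := fun L h =>
    norm_eq_zero.1 (pow_eq_zero_iff two_ne_zero |>.1 (le_antisymm h (by positivity)))
  have du : ∀ i x, fderiv ℝ (fun y => u y i) x = 0 := fun i x => by
    have k := fderiv_sq_le_u (fun i x => u x i) (fun i x => v x i) θ i x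
    rw [D x] at k
    exact zero_of _ k
  have dv : ∀ i x, fderiv ℝ (fun y => v y i) x = 0 := fun i x => by
    have k := fderiv_sq_le_v (fun i x => u x i) (fun i x => v x i) θ i x
    rw [D x] at k
    exact zero_of _ k
  have dθ : ∀ x, fderiv ℝ θ x = 0 := fun x => by
    have k := fderiv_sq_le_t (fun i x => u x i) (fun i x => v x i) θ x
    rw [D x] at k
    exact zero_of _ k
  have ku : ∀ i x y, u x i = u y i := fun i x y =>
    is_const_of_fderiv_eq_zero (f := fun y => u y i) (S.su i).diff (du i) x y
  have kv : ∀ i x y, v x i = v y i := fun i x y =>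
    is_const_of_fderiv_eq_zero (f := fun y => v y i) (S.sv i).diff (dv i) x y
  have kθ : ∀ x y, θ x = θ y := is_const_of_fderiv_eq_zero S.sθ.diff dθ
  refine ⟨fun x => ?_, fun x => ?_, θ 0, fun x => kθ x 0⟩
  · ext i
    refine const_zero (M := 1) (a := α) hp0 (by linarith) htop ?_
    filter_upwards [hRpos, hX0.eventually (eventually_le_nhds zero_lt_one)] with j hj k
    rw [Real.rpow_neg hj.le, inv_mul_le_iff₀ (Real.rpow_pos_of_pos hj α)] at k
    have e : (fun _ : E3 => u x i) = fun y => u y i := funext fun y => ku i x y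
    rw [e]
    exact (ui i j).trans k
  · ext i
    refine const_zero (M := MY.toReal) (a := β) hq0 (by linarith) htop ?_
    filter_upwards [hY0] with j k
    have e : (fun _ : E3 => v x i) = fun y => v y i := funext fun y => kv i x y
    rw [e]
    exact (nm_mono cv (BM_Ann _) fun x _ => abs_coord_le (v x) i).trans k

end TCM

theorem liouville_tcm_cor1
    (u : E3 → E3) (pr : E3 → ℝ) (v : E3 → E3) (θ : E3 → ℝ)
    (hsol : IsTCMSolution u pr v θ)
    (p q lam α β γ : ℝ)
    (hp : 3 ≤ p ∧ p ≤ 9 / 2) (hq : 1 ≤ q ∧ q ≤ 6) (hlam : 1 ≤ lam ∧ lam ≤ 2)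
    (hα : 0 ≤ α ∧ α ≤ 3 / p - 2 / 3) (hβ : 0 ≤ β ∧ β ≤ 3 / q - 1 / 2)
    (hγ : 0 ≤ γ ∧ γ ≤ 3 / lam - 3 / 2)
    (Rseq : ℕ → ℝ) (hmono : StrictMono Rseq) (htop : Tendsto Rseq atTop atTop)
    (hX : Tendsto (fun j => Xn u α p (Rseq j)) atTop (nhds 0))
    (hY : ∃ M : ℝ≥0∞, M < ⊤ ∧ ∀ j, Yn v β q (Rseq j) ≤ M)
    (hZ : ∃ M : ℝ≥0∞, M < ⊤ ∧ ∀ j, Zgradn θ γ lam (Rseq j) ≤ M)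
    (hA : ((1 ≤ q ∧ q < 2) ∧ (1 ≤ lam ∧ lam < 6 / 5) ∧
      α + ((4 * p - 6) * q) / ((6 - q) * p) * β ≤ 1 ∧
      α + ((4 * p - 6) * lam) / ((6 - 3 * lam) * p) * γ ≤ 1 ∧
      2 * q / (6 - q) * β + 2 * lam / (6 - 3 * lam) * γ ≤ 1) ∨
      ((1 ≤ q ∧ q < 2) ∧ (6 / 5 ≤ lam ∧ lam < 6 * p / (5 * p - 3)) ∧
      α + ((4 * p - 6) * q) / ((6 - q) * p) * β ≤ 1 ∧
      α + ((4 * p - 6) * lam) / ((6 - 3 * lam) * p) * γ ≤ 1 ∧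
      2 * q / (6 - q) * β + γ ≤ (6 - 3 * lam) / (2 * lam)) ∨
      ((1 ≤ q ∧ q < 2) ∧ (6 * p / (5 * p - 3) ≤ lam ∧ lam ≤ 2) ∧
      α + ((4 * p - 6) * q) / ((6 - q) * p) * β ≤ 1 ∧
      α + 2 * γ ≤ 3 / p + 6 / lam - 4 ∧
      2 * q / (6 - q) * β + γ ≤ (6 - 3 * lam) / (2 * lam)) ∨
      ((2 ≤ q ∧ q < 2 * (p / (p - 1))) ∧ (1 ≤ lam ∧ lam < 6 / 5) ∧
      α + ((4 * p - 6) * q) / ((6 - q) * p) * β ≤ 1 ∧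
      α + ((4 * p - 6) * lam) / ((6 - 3 * lam) * p) * γ ≤ 1 ∧
      β + 2 * lam / (6 - 3 * lam) * γ ≤ (6 - q) / (2 * q)) ∨
      ((2 ≤ q ∧ q < 2 * (p / (p - 1))) ∧ (6 / 5 ≤ lam ∧ lam < 6 * p / (5 * p - 3)) ∧
      α + ((4 * p - 6) * q) / ((6 - q) * p) * β ≤ 1 ∧
      α + ((4 * p - 6) * lam) / ((6 - 3 * lam) * p) * γ ≤ 1 ∧
      β + γ < 3 / q + 3 / lam - 3) ∨
      ((2 ≤ q ∧ q < 2 * (p / (p - 1))) ∧ (6 * p / (5 * p - 3) ≤ lam ∧ lam ≤ 2) ∧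
      α + ((4 * p - 6) * q) / ((6 - q) * p) * β ≤ 1 ∧
      α + 2 * γ ≤ 3 / p + 6 / lam - 4 ∧
      β + γ < 3 / q + 3 / lam - 3) ∨
      ((2 * (p / (p - 1)) ≤ q ∧ q ≤ 6) ∧ (1 ≤ lam ∧ lam < 6 / 5) ∧
      α + 2 * β ≤ 3 / p + 6 / q - 2 ∧
      α + ((4 * p - 6) * lam) / ((6 - 3 * lam) * p) * γ ≤ 1 ∧
      β + 2 * lam / (6 - 3 * lam) * γ ≤ (6 - q) / (2 * q)) ∨
      ((2 * (p / (p - 1)) ≤ q ∧ q ≤ 6) ∧ (6 / 5 ≤ lam ∧ lam < 6 * p / (5 * p - 3)) ∧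
      α + 2 * β ≤ 3 / p + 6 / q - 2 ∧
      α + ((4 * p - 6) * lam) / ((6 - 3 * lam) * p) * γ ≤ 1 ∧
      β + γ < 3 / q + 3 / lam - 3) ∨
      ((2 * (p / (p - 1)) ≤ q ∧ q ≤ 6) ∧ (6 * p / (5 * p - 3) ≤ lam ∧ lam ≤ 2) ∧
      α + 2 * β ≤ 3 / p + 6 / q - 2 ∧
      α + 2 * γ ≤ 3 / p + 6 / lam - 4 ∧
      β + γ < 3 / q + 3 / lam - 3)) :
    (∀ x : E3, u x = 0) ∧ (∀ x : E3, v x = 0) ∧ ∃ c : ℝ, ∀ x : E3, θ x = c := by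
  obtain ⟨hp3, hp9⟩ := hp
  obtain ⟨hq1, hq6⟩ := hq
  obtain ⟨hl1, hl2⟩ := hlam
  have hp0 : 0 < p := by linarith
  have hq0 : 0 < q := by linarith
  have hl0 : 0 < lam := by linarith
  have h3l : 0 < 3 - lam := by linarith
  have h5p : 0 < 5 * p - 3 := by linarith
  have hp1 : 0 < p - 1 := by linarith
  -- `r` is the Sobolev conjugate of `lam`; every condition on `lam` is one on `r`.
  obtain ⟨r, hrdef⟩ : ∃ r, r = 3 * lam / (3 - lam) := ⟨_, rfl⟩
  have hr1 : 1 ≤ r := by rw [hrdef, le_div_iff₀ h3l]; linarith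
  have hr0 : 0 < r := by linarith
  have hrl : 1 / r = 1 / lam - 1 / 3 := by rw [hrdef]; field_simp
  have h3r : 3 / r = 3 / lam - 1 := by
    have : 3 / r = 3 * (1 / r) := by ring
    rw [this, hrl]; ring
  have h6r : 6 / r = 6 / lam - 2 := by
    have : 6 / r = 2 * (3 / r) := by ring
    rw [this, h3r]; ring
  have r2 : lam < 6 / 5 → r < 2 := fun h => by rw [hrdef, div_lt_iff₀ h3l]; linarith
  have r2' : 6 / 5 ≤ lam → 2 ≤ r := fun h => by rw [hrdef, le_div_iff₀ h3l]; linarith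
  have rp : lam < 6 * p / (5 * p - 3) → r < 2 * (p / (p - 1)) := fun h => by
    rw [lt_div_iff₀ h5p] at h
    rw [hrdef, ← mul_div_assoc, div_lt_div_iff₀ h3l hp1]; nlinarith
  have rp' : 6 * p / (5 * p - 3) ≤ lam → 2 * (p / (p - 1)) ≤ r := fun h => by
    rw [div_le_iff₀ h5p] at h
    rw [hrdef, ← mul_div_assoc, div_le_div_iff₀ hp1 h3l]; nlinarith
  have two_pp : 2 ≤ 2 * (p / (p - 1)) := by
    have : 1 ≤ p / (p - 1) := by rw [le_div_iff₀ hp1]; linarith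
    linarith
  have l65 : 6 / 5 ≤ 6 * p / (5 * p - 3) := by
    rw [div_le_div_iff₀ (by norm_num) h5p]; linarith
  have w : (6 - 3 * lam) / (2 * lam) = 3 / r - 1 / 2 := by rw [h3r]; field_simp; ring
  have wq : (6 - q) / (2 * q) = 3 / q - 1 / 2 := by field_simp; ring
  have wl : 2 * lam / (6 - 3 * lam) = 2 * r / (6 - r) := by
    rw [hrdef, show 6 - 3 * lam / (3 - lam) = 3 * (6 - 3 * lam) / (3 - lam) by field_simp; ring]
    rcases eq_or_lt_of_le hl2 with h | h
    · rw [h]; norm_num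
    · have : 0 < 6 - 3 * lam := by linarith
      field_simp
  have wp : (4 * p - 6) * lam / ((6 - 3 * lam) * p) = (4 * p - 6) * r / ((6 - r) * p) := by
    have g : ∀ x B : ℝ, (4 * p - 6) * x / (B * p) = (4 * p - 6) / (2 * p) * (2 * x / B) := by
      intro x B
      rw [div_mul_div_comm, show (4 * p - 6) * (2 * x) = 2 * ((4 * p - 6) * x) by ring,
        show 2 * p * B = 2 * (B * p) by ring, mul_div_mul_left _ _ two_ne_zero]
    rw [g, g, wl]
  have FVc : (q < 2 * (p / (p - 1)) ∧ α + ((4 * p - 6) * q) / ((6 - q) * p) * β ≤ 1) ∨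
      (2 * (p / (p - 1)) ≤ q ∧ α + 2 * β ≤ 3 / p + 6 / q - 2) := by
    rcases hA with h | h | h | h | h | h | h | h | h
    iterate 3 exact .inl ⟨by linarith [h.1.2], h.2.2.1⟩
    iterate 3 exact .inl ⟨h.1.2, h.2.2.1⟩
    all_goals exact .inr ⟨h.1.1, h.2.2.1⟩
  have FTc : (r < 2 * (p / (p - 1)) ∧ α + ((4 * p - 6) * r) / ((6 - r) * p) * γ ≤ 1) ∨
      (2 * (p / (p - 1)) ≤ r ∧ α + 2 * γ ≤ 3 / p + 6 / r - 2) := by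
    rw [← wp, h6r]
    rcases hA with h | h | h | h | h | h | h | h | h
    · exact .inl ⟨rp (by linarith [h.2.1.2]), h.2.2.2.1⟩
    · exact .inl ⟨rp h.2.1.2, h.2.2.2.1⟩
    · exact .inr ⟨rp' h.2.1.1, by linarith [h.2.2.2.1]⟩
    · exact .inl ⟨rp (by linarith [h.2.1.2]), h.2.2.2.1⟩
    · exact .inl ⟨rp h.2.1.2, h.2.2.2.1⟩
    · exact .inr ⟨rp' h.2.1.1, by linarith [h.2.2.2.1]⟩
    · exact .inl ⟨rp (by linarith [h.2.1.2]), h.2.2.2.1⟩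
    · exact .inl ⟨rp h.2.1.2, h.2.2.2.1⟩
    · exact .inr ⟨rp' h.2.1.1, by linarith [h.2.2.2.1]⟩
  have Ec : (q < 2 ∧ r < 2 ∧ 2 * q / (6 - q) * β + 2 * r / (6 - r) * γ ≤ 1) ∨
      (q < 2 ∧ 2 ≤ r ∧ 2 * q / (6 - q) * β + γ ≤ 3 / r - 1 / 2) ∨
      (2 ≤ q ∧ r < 2 ∧ β + 2 * r / (6 - r) * γ ≤ 3 / q - 1 / 2) ∨
      (2 ≤ q ∧ 2 ≤ r ∧ β + γ < 3 / q + 3 / r - 2) := by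
    rw [w, wl, wq] at hA
    rw [h3r] at hA ⊢
    rcases hA with h | h | h | h | h | h | h | h | h
    · exact .inl ⟨h.1.2, r2 h.2.1.2, h.2.2.2.2⟩
    · exact .inr (.inl ⟨h.1.2, r2' h.2.1.1, h.2.2.2.2⟩)
    · exact .inr (.inl ⟨h.1.2, r2' (l65.trans h.2.1.1), h.2.2.2.2⟩)
    · exact .inr (.inr (.inl ⟨h.1.1, r2 h.2.1.2, h.2.2.2.2⟩))
    · exact .inr (.inr (.inr ⟨h.1.1, r2' h.2.1.1, by linarith [h.2.2.2.2]⟩))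
    · exact .inr (.inr (.inr ⟨h.1.1, r2' (l65.trans h.2.1.1), by linarith [h.2.2.2.2]⟩))
    · exact .inr (.inr (.inl ⟨two_pp.trans h.1.1, r2 h.2.1.2, h.2.2.2.2⟩))
    · exact .inr (.inr (.inr ⟨two_pp.trans h.1.1, r2' h.2.1.1, by linarith [h.2.2.2.2]⟩))
    · exact .inr (.inr (.inr ⟨two_pp.trans h.1.1, r2' (l65.trans h.2.1.1),
        by linarith [h.2.2.2.2]⟩))
  exact TCM.liouville_of_conditions hsol hp3 hq1 hl1 hr1 hrl hα.2 hβ.2 (by rw [h3r]; linarith [hγ.2])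
    htop hX hY hZ FVc FTc Ec
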